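/- Let P_o = {x ∈ ℝ³ : |x₁| + |x₂| + |x₃| ≤ 1} be the regular octahedron. Then the lattice packing density of P_o equals δ*(P_o) = 18/19, and it is attained by the packing lattice Λ* = 2·B·ℤ³ where B is the matrix with columns (1/3, 1/2, 1/6), (−1/6, −1/3, 1/2), (−1/2, 1/6, −1/3). -/

import Mathlib

/-!
The translates of the octahedron by a lattice form a packing exactly when every nonzero lattice
vector has `ℓ¹`-norm at least `2` (`lOne_of_isPacking`, `isPacking_of_lOne`). Taking half of each of
the four facet functionals (`facetCoords`) turns the lattice into a lattice of zero-sum vectors of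
`ℝ⁴` in which every nonzero vector has a coordinate of absolute value at least `1` (`Adm`). Its
covolume, measured on the first three coordinates, is `|det B| / 2`, and the volume of the octahedron
is `4/3`, so the upper bound `18/19` for the density is the claim that the covolume is at least
`19/27`. The lattice `Λ*` attains it, as `det octaB = -38/27`.

*Tips.* Minkowski's convex body theorem for the octahedron gives the weaker bound `2/3` for the
covolume (`four_thirds_le_det`). If the covolume is below `19/27`, the same theorem for the larger
body `bodyC` yields, for each coordinate `l`, a lattice vector whose coordinate `l` alone is at least
`1` in absolute value and with `nrm` less than `11/8`. The shortest such vectors are the four *tips*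
`P 0, …, P 3` (`Tip`, `exists_tip`, `Conf`).

*Relations modulo 2.* Among the sixteen sums of subsets of the tips, two agree modulo twice the
lattice, so the sum of some nonempty set of tips is twice a lattice vector (`exists_relation_four`).
Admissibility rules out sets of one or two tips. If the set consists of all four tips, either the
four tips add up to zero (`covol_ge_of_sum_zero`) or one is the sum of the other three
(`covol_ge_of_sum_eq`). If it has three members, either they add up to zero (`covol_ge_tri`), or half
of their sum is a nonzero lattice vector and the three tips span a sublattice of index two
(`covol_ge_of_half`). In each case the covolume is the absolute value of the determinant of three of
the tips, or half of it: this determinant is less than `(11/8)³` (`abs_det3_le`), hence the index of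
the sublattice is less than `4`, and divisibility of the index by `2` or `3` forces relations among
the tips (`exists_index`) that are checked by hand.

*Cubic inequalities.* There remains a lower bound for a `3 × 3` determinant under linear inequalities
on its entries. These come from admissibility and minimality of the tips, applied to sums and
differences of tips. For four tips with sum zero, each of the three perfect matchings of the four
indices provides such inequalities (`Conf.matching`, `det3_ge_short`). The cases in which the bound is
attained are proved by explicit identities (`cyc_pos`, `Conf.tri_posI_i`). Most of the others are
proved by certificates that the kernel evaluates (`Cubic.check`, `Cubic.nonneg_of_check`): up to a small
error, the difference of the two sides is a combination, with nonnegative integer coefficients, of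
products of three of the constraints and of products of a constraint and a square.
-/

open MeasureTheory

/-- The lattice `Bℤ³`. -/
def latticeOf (B : Matrix (Fin 3) (Fin 3) ℝ) : Set (Fin 3 → ℝ) :=
  {x | ∃ z : Fin 3 → ℤ, x = B.mulVec fun i => (z i : ℝ)}

/-- `Λ` is a packing lattice for `K`. -/
def IsPackingLattice (K Λ : Set (Fin 3 → ℝ)) : Prop :=
  ∀ x ∈ Λ, ∀ y ∈ Λ, x ≠ y →
    Disjoint (interior ((x + ·) '' K)) (interior ((y + ·) '' K))

/-- The lattice packing density `δ*(K)`. -/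
noncomputable def packDensity (K : Set (Fin 3 → ℝ)) : ℝ :=
  sSup {r | ∃ B : Matrix (Fin 3) (Fin 3) ℝ, IsUnit B.det ∧
    IsPackingLattice K (latticeOf B) ∧ r = (volume K).toReal / |B.det|}

/-- The regular octahedron. -/
def octa : Set (Fin 3 → ℝ) := {x | |x 0| + |x 1| + |x 2| ≤ 1}

/-- Basis matrix (columns as listed) of Minkowski's optimal lattice for the octahedron. -/
noncomputable def octaB : Matrix (Fin 3) (Fin 3) ℝ :=
  (2 : ℝ) • (Matrix.of
    ![![1/3, 1/2, 1/6], ![-1/6, -1/3, 1/2], ![-1/2, 1/6, -1/3]]).transpose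

open scoped Matrix

/-! ### The octahedron and the lattice `Λ*` -/

theorem volume_octa : (volume octa).toReal = 4 / 3 := by
  have h := MeasureTheory.volume_sum_rpow_le (ι := Fin 3) (p := 1) le_rfl 1
  have e : {x : Fin 3 → ℝ | (∑ i, |x i| ^ (1:ℝ)) ^ (1 / (1:ℝ)) ≤ 1} = octa := by
    ext x; simp [octa, Fin.sum_univ_three]
  rw [e] at h
  rw [h]
  have g2 : Real.Gamma 2 = 1 := by simp
  have g4 : Real.Gamma 4 = 6 := by
    rw [show (4 : ℝ) = ((3 : ℕ) : ℝ) + 1 by norm_num, Real.Gamma_nat_eq_factorial]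
    norm_num [Nat.factorial]
  norm_num [g2, g4]

theorem volume_lOne_lt : volume {x : Fin 3 → ℝ | |x 0| + |x 1| + |x 2| < 2} = ENNReal.ofReal (32 / 3) := by
  have h := MeasureTheory.volume_sum_rpow_lt (ι := Fin 3) (p := 1) le_rfl 2
  have e : {x : Fin 3 → ℝ | (∑ i, |x i| ^ (1:ℝ)) ^ (1 / (1:ℝ)) < 2} = {x : Fin 3 → ℝ | |x 0| + |x 1| + |x 2| < 2} := by
    ext x; simp [Fin.sum_univ_three]
  rw [e] at h
  rw [h]
  have g2 : Real.Gamma 2 = 1 := by simp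
  have g4 : Real.Gamma 4 = 6 := by
    rw [show (4 : ℝ) = ((3 : ℕ) : ℝ) + 1 by norm_num, Real.Gamma_nat_eq_factorial]
    norm_num [Nat.factorial]
  rw [← ENNReal.ofReal_pow (by norm_num), ← ENNReal.ofReal_mul (by norm_num)]
  congr 1
  norm_num [g2, g4]

theorem det_octaB : octaB.det = -(38 / 27) := by
  simp [octaB, Matrix.det_fin_three]
  norm_num

theorem octaB_mulVec (z : Fin 3 → ℤ) :
    octaB.mulVec (fun i => (z i : ℝ)) =
      ![(2 * z 0 - z 1 - 3 * z 2 : ℝ) / 3, (3 * z 0 - 2 * z 1 + z 2 : ℝ) / 3,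
        (z 0 + 3 * z 1 - 2 * z 2 : ℝ) / 3] := by
  ext i
  fin_cases i <;> simp [octaB, Matrix.mulVec, dotProduct, Fin.sum_univ_three] <;> ring

theorem lOne_octaB (z : Fin 3 → ℤ) (hz : z ≠ 0) (x : Fin 3 → ℝ)
    (hx : x = octaB.mulVec fun i => (z i : ℝ)) : 2 ≤ |x 0| + |x 1| + |x 2| := by
  rw [octaB_mulVec] at hx
  subst hx
  by_contra h
  push Not at h
  simp only [Matrix.cons_val_zero, Matrix.cons_val_one, Matrix.cons_val] at h
  have a0 := abs_le.1 (le_refl |((2 * z 0 - z 1 - 3 * z 2) / 3 : ℝ)|)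
  have a1 := abs_le.1 (le_refl |((3 * z 0 - 2 * z 1 + z 2) / 3 : ℝ)|)
  have a2 := abs_le.1 (le_refl |((z 0 + 3 * z 1 - 2 * z 2) / 3 : ℝ)|)
  have e1 : 6 * z 0 - 4 * z 2 < 6 := by
    have : ((6 * z 0 - 4 * z 2 : ℤ) : ℝ) < (6 : ℤ) := by push_cast; linarith
    exact_mod_cast this
  have e2 : -6 < 6 * z 0 - 4 * z 2 := by
    have : ((-6 : ℤ) : ℝ) < (6 * z 0 - 4 * z 2 : ℤ)  := by push_cast; linarith
    exact_mod_cast this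
  have e3 : 4 * z 0 - 6 * z 1 < 6 := by
    have : ((4 * z 0 - 6 * z 1 : ℤ) : ℝ) < (6 : ℤ) := by push_cast; linarith
    exact_mod_cast this
  have e4 : -6 < 4 * z 0 - 6 * z 1 := by
    have : ((-6 : ℤ) : ℝ) < (4 * z 0 - 6 * z 1 : ℤ)  := by push_cast; linarith
    exact_mod_cast this
  have e5 : 4 * z 1 - 6 * z 2 < 6 := by
    have : ((4 * z 1 - 6 * z 2 : ℤ) : ℝ) < (6 : ℤ) := by push_cast; linarith
    exact_mod_cast this
  have e6 : -6 < 4 * z 1 - 6 * z 2 := by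
    have : ((-6 : ℤ) : ℝ) < (4 * z 1 - 6 * z 2 : ℤ)  := by push_cast; linarith
    exact_mod_cast this
  have e7 : 2 * z 0 + 2 * z 1 + 2 * z 2 < 6 := by
    have : ((2 * z 0 + 2 * z 1 + 2 * z 2 : ℤ) : ℝ) < (6 : ℤ) := by push_cast; linarith
    exact_mod_cast this
  have e8 : -6 < 2 * z 0 + 2 * z 1 + 2 * z 2 := by
    have : ((-6 : ℤ) : ℝ) < (2 * z 0 + 2 * z 1 + 2 * z 2 : ℤ)  := by push_cast; linarith
    exact_mod_cast this
  have h2 : z 2 = 0 := by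
    have : z 2 = -2 ∨ z 2 = -1 ∨ z 2 = 0 ∨ z 2 = 1 ∨ z 2 = 2 := by omega
    rcases this with h | h | h | h | h <;> omega
  apply hz
  ext i
  fin_cases i <;> simp <;> omega

theorem isPacking_of_lOne (B : Matrix (Fin 3) (Fin 3) ℝ)
    (h : ∀ z : Fin 3 → ℤ, z ≠ 0 → ∀ x, x = B.mulVec (fun i => (z i : ℝ)) →
      2 ≤ |x 0| + |x 1| + |x 2|) : IsPackingLattice octa (latticeOf B) := by
  rintro x ⟨z, hz⟩ y ⟨z', hz'⟩ hxy
  rw [Set.disjoint_left]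
  intro p hp hq
  have hlt : |p 0 - x 0| + |p 1 - x 1| + |p 2 - x 2| < 1 := by
    have hc : Continuous fun t : ℝ => p + t • (p - x) := by fun_prop
    have hn : ∀ᶠ t : ℝ in nhds 0, p + t • (p - x) ∈ interior ((x + ·) '' octa) := by
      apply hc.continuousAt.eventually_mem
      exact isOpen_interior.mem_nhds (by simpa using hp)
    obtain ⟨t, ht, ht0⟩ :=
      ((hn.filter_mono nhdsWithin_le_nhds).and (self_mem_nhdsWithin (s := Set.Ioi (0:ℝ)))).exists
    obtain ⟨v, hv, hv'⟩ := interior_subset ht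
    have ht0 : 0 < t := ht0
    have e : ∀ i, v i = (1 + t) * (p i - x i) := by
      intro i
      have := congrFun hv' i
      simp at this
      linarith
    simp only [octa, Set.mem_ofPred_eq, e, abs_mul, abs_of_pos (show 0 < 1 + t by linarith)] at hv
    nlinarith [abs_nonneg (p 0 - x 0), abs_nonneg (p 1 - x 1), abs_nonneg (p 2 - x 2)]
  obtain ⟨v, hv, rfl⟩ := interior_subset hq
  simp only [octa, Set.mem_ofPred_eq, Pi.add_apply] at hv hlt
  have := h (z - z') (fun h0 => hxy (by rw [hz, hz', sub_eq_zero.1 h0])) (x - y) (by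
    rw [hz, hz', ← Matrix.mulVec_sub]; congr 1; ext i; simp)
  simp only [Pi.sub_apply] at this
  have t : ∀ a b c : ℝ, |a - b| ≤ |b + c - a| + |c| := fun a b c => by
    calc |a - b| = |-(b + c - a) + c| := by congr 1; ring
      _ ≤ _ := (abs_add_le _ _).trans_eq (by rw [abs_neg])
  linarith [t (x 0) (y 0) (v 0), t (x 1) (y 1) (v 1), t (x 2) (y 2) (v 2)]

theorem lOne_of_isPacking (B : Matrix (Fin 3) (Fin 3) ℝ) (hB : IsPackingLattice octa (latticeOf B))
    (z : Fin 3 → ℤ) (x : Fin 3 → ℝ) (hx0 : x ≠ 0)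
    (hx : x = B.mulVec fun i => (z i : ℝ)) : 2 ≤ |x 0| + |x 1| + |x 2| := by
  by_contra hlt
  push Not at hlt
  have := hB x ⟨z, hx⟩ 0 ⟨0, by simp [← Pi.zero_def]⟩ hx0
  refine Set.disjoint_left.1 this
    (show (1 / 2 : ℝ) • x ∈ interior ((x + ·) '' octa) from ?_)
    (show (1 / 2 : ℝ) • x ∈ interior (((0 : Fin 3 → ℝ) + ·) '' octa) from ?_)
  · have ho : IsOpen {p : Fin 3 → ℝ | |p 0 - x 0| + |p 1 - x 1| + |p 2 - x 2| < 1} :=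
      isOpen_lt (by fun_prop) continuous_const
    refine mem_interior.2 ⟨_, fun p hp => ⟨p - x, ?_, by simp⟩, ho, ?_⟩
    · exact le_of_lt (by simpa using hp)
    · have : ∀ i, |(1 / 2 : ℝ) * x i - x i| = |x i| / 2 := fun i => by
        rw [show (1 / 2 : ℝ) * x i - x i = -(x i / 2) by ring, abs_neg, abs_div]; simp
      simp only [Set.mem_ofPred_eq, Pi.smul_apply, smul_eq_mul, this]
      linarith
  · have ho : IsOpen {p : Fin 3 → ℝ | |p 0| + |p 1| + |p 2| < 1} :=
      isOpen_lt (by fun_prop) continuous_const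
    refine mem_interior.2 ⟨_, fun p hp => ⟨p, ?_, by simp⟩, ho, ?_⟩
    · exact le_of_lt (by simpa using hp)
    · have : ∀ i, |(1 / 2 : ℝ) * x i| = |x i| / 2 := fun i => by
        rw [show (1 / 2 : ℝ) * x i = (x i / 2) by ring, abs_div]; simp
      simp only [Set.mem_ofPred_eq, Pi.smul_apply, smul_eq_mul, this]
      linarith

/-! ### Minkowski's theorem and the volume of a polytope -/

/-- Minkowski's convex body theorem for the lattice `G ℤ³`. -/
theorem minkowski_fin_three (G : Matrix (Fin 3) (Fin 3) ℝ) (hG : G.det ≠ 0) (s : Set (Fin 3 → ℝ))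
    (hc : Convex ℝ s) (hs : ∀ x ∈ s, -x ∈ s) (hv : ENNReal.ofReal (8 * |G.det|) < volume s) :
    ∃ z : Fin 3 → ℤ, z ≠ 0 ∧ G.mulVec (fun i => (z i : ℝ)) ∈ s := by
  have hli : LinearIndependent ℝ Gᵀ :=
    Matrix.linearIndependent_rows_of_det_ne_zero (by rwa [Matrix.det_transpose])
  set bas := basisOfLinearIndependentOfCardEqFinrank hli (by simp) with hbas
  have hb : (bas : Fin 3 → Fin 3 → ℝ) = Gᵀ := coe_basisOfLinearIndependentOfCardEqFinrank _ _
  have key : volume (ZSpan.fundamentalDomain bas) * 2 ^ Module.finrank ℝ (Fin 3 → ℝ) < volume s := by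
    rw [ZSpan.volume_fundamentalDomain, hb]
    have : (Matrix.of Gᵀ).det = G.det := Matrix.det_transpose G
    rw [this]
    refine lt_of_le_of_lt (le_of_eq ?_) hv
    rw [mul_comm 8, ENNReal.ofReal_mul (abs_nonneg _)]
    simp only [Module.finrank_fin_fun]
    norm_num
  haveI : Countable (Submodule.span ℤ (Set.range bas)).toAddSubgroup :=
    inferInstanceAs (Countable (Submodule.span ℤ (Set.range bas)))
  obtain ⟨x, hx0, hxs⟩ := exists_ne_zero_mem_lattice_of_measure_mul_two_pow_lt_measure
    (ZSpan.isAddFundamentalDomain' bas volume) hs hc key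
  have hx := x.2
  rw [Submodule.mem_toAddSubgroup, Submodule.mem_span_range_iff_exists_fun] at hx
  obtain ⟨z, hz⟩ := hx
  have e : G.mulVec (fun i => (z i : ℝ)) = x := by
    rw [← hz, hb]
    ext i
    simp [Matrix.mulVec, dotProduct, mul_comm]
  refine ⟨z, ?_, by rw [e]; exact hxs⟩
  rintro rfl
  apply hx0
  ext i
  rw [← hz]
  simp

theorem volume_eq_iterated (S : Set (Fin 3 → ℝ)) (hS : MeasurableSet S) :
    volume S = ∫⁻ t : ℝ, ∫⁻ s : ℝ, volume {r : ℝ | ![r, s, t] ∈ S} := by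
  have h1 := (volume_preserving_piFinSuccAbove (fun _ : Fin 3 => ℝ) 2).symm
  rw [← h1.measure_preimage hS.nullMeasurableSet, Measure.volume_eq_prod, Measure.prod_apply
    ((MeasurableEquiv.measurable _) hS)]
  refine lintegral_congr fun t => ?_
  have h2 := (volume_preserving_piFinTwo (fun _ : Fin 2 => ℝ)).symm
  have hm : MeasurableSet ((Prod.mk t) ⁻¹'
      ((MeasurableEquiv.piFinSuccAbove (fun _ : Fin 3 => ℝ) 2).symm ⁻¹' S)) :=
    measurable_prodMk_left ((MeasurableEquiv.measurable _) hS)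
  rw [← h2.measure_preimage hm.nullMeasurableSet, Measure.volume_eq_prod,
    Measure.prod_apply_symm ((MeasurableEquiv.measurable _) hm)]
  refine lintegral_congr fun s => ?_
  congr 1
  ext r
  simp only [Set.mem_preimage, Set.mem_ofPred_eq]
  apply iff_of_eq
  congr 1
  ext i
  fin_cases i <;> rfl

theorem lintegral_Ioo_ge (a b p q r : ℝ) (hab : a ≤ b) (f : ℝ → ENNReal)
    (h0 : ∀ x ∈ Set.Ioo a b, 0 ≤ p + q * x + r * x ^ 2)
    (hf : ∀ x ∈ Set.Ioo a b, ENNReal.ofReal (p + q * x + r * x ^ 2) ≤ f x) :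
    ENNReal.ofReal (p * (b - a) + q * (b ^ 2 - a ^ 2) / 2 + r * (b ^ 3 - a ^ 3) / 3)
      ≤ ∫⁻ x in Set.Ioo a b, f x := by
  have hi : IntegrableOn (fun x : ℝ => p + q * x + r * x ^ 2) (Set.Ioo a b) :=
    ((by fun_prop : Continuous fun x : ℝ => p + q * x + r * x ^ 2).integrableOn_Icc).mono_set
      Set.Ioo_subset_Icc_self
  have e : ∫ x in Set.Ioo a b, (p + q * x + r * x ^ 2) =
      p * (b - a) + q * (b ^ 2 - a ^ 2) / 2 + r * (b ^ 3 - a ^ 3) / 3 := by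
    rw [← integral_Ioc_eq_integral_Ioo, ← intervalIntegral.integral_of_le hab]
    rw [intervalIntegral.integral_add, intervalIntegral.integral_add]
    · rw [intervalIntegral.integral_const_mul, intervalIntegral.integral_const_mul, integral_id]
      simp
      ring
    all_goals exact Continuous.intervalIntegrable (by fun_prop) _ _
  rw [← e, ofReal_integral_eq_lintegral_ofReal hi
    ((ae_restrict_iff' measurableSet_Ioo).2 (Filter.Eventually.of_forall h0))]
  exact setLIntegral_mono' measurableSet_Ioo hf

theorem lintegral_Ioo_add_le (a b c : ℝ) (hab : a ≤ b) (hbc : b ≤ c) (f : ℝ → ENNReal) :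
    (∫⁻ x in Set.Ioo a b, f x) + (∫⁻ x in Set.Ioo b c, f x) ≤ ∫⁻ x in Set.Ioo a c, f x := by
  have hd : Disjoint (Set.Ioo a b) (Set.Ioo b c) := by
    rw [Set.disjoint_left]
    intro x hx hx'
    exact lt_irrefl _ (hx.2.trans hx'.1)
  rw [← lintegral_union measurableSet_Ioo hd]
  refine lintegral_mono_set (Set.union_subset ?_ ?_)
  · exact Set.Ioo_subset_Ioo_right hbc
  · exact Set.Ioo_subset_Ioo_left hab

/-- The polytope of all `(c₀, c₁, c₂)` with `|cᵢ| < 1` whose pair sums and total sum are less than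
`11/8` in absolute value. It describes the zero-sum vectors with first three coordinates less than
`1` in absolute value and `nrm` less than `11/8`, see `nrm_lt_iff`. -/
def bodyC : Set (Fin 3 → ℝ) :=
  {c | |c 0| < 1 ∧ |c 1| < 1 ∧ |c 2| < 1 ∧ |c 0 + c 1| < 11 / 8 ∧ |c 0 + c 2| < 11 / 8 ∧
    |c 1 + c 2| < 11 / 8 ∧ |c 0 + c 1 + c 2| < 11 / 8}

theorem bodyC_symm (x : Fin 3 → ℝ) (hx : x ∈ bodyC) : -x ∈ bodyC := by
  simp only [bodyC, Set.mem_ofPred_eq, abs_lt, Pi.neg_apply] at hx ⊢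
  grind

theorem bodyC_convex : Convex ℝ bodyC := by
  have key : ∀ f : (Fin 3 → ℝ) →ₗ[ℝ] ℝ, ∀ r : ℝ, Convex ℝ {c | |f c| < r} := by
    intro f r
    have : {c | |f c| < r} = {c | f c < r} ∩ {c | -r < f c} := by
      ext c
      simp only [Set.mem_inter_iff, Set.mem_ofPred_eq, abs_lt]
      tauto
    rw [this]
    exact (convex_halfSpace_lt f.isLinear r).inter (convex_halfSpace_gt f.isLinear (-r))
  let p : Fin 3 → (Fin 3 → ℝ) →ₗ[ℝ] ℝ := fun i => LinearMap.proj i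
  have h := (key (p 0) 1).inter <| (key (p 1) 1).inter <| (key (p 2) 1).inter <|
    (key (p 0 + p 1) (11/8)).inter <| (key (p 0 + p 2) (11/8)).inter <|
    (key (p 1 + p 2) (11/8)).inter (key (p 0 + p 1 + p 2) (11/8))
  exact h

theorem bodyC_slice (t b k : ℝ) (ht : 0 < t) (ht1 : t < 1) (hb : b ≤ 1) (hbt : b ≤ 11 / 8 - t)
    (hk : k = 11 / 8 - b - t) (hk0 : 0 ≤ k) (hkb : k ≤ b) :
    ENNReal.ofReal ((b + 1) ^ 2 - 25 / 128 - (b - k) ^ 2 / 2) ≤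
      ∫⁻ s : ℝ, volume {r : ℝ | ![r, s, t] ∈ bodyC ∩ {c | 0 < c 2}} := by
  have sub : ∀ s lo hi : ℝ, -1 < s → s < b → -1 ≤ lo → -(11/8) - s ≤ lo → hi ≤ b →
      hi ≤ 11/8 - s - t → ENNReal.ofReal (hi - lo) ≤
        volume {r : ℝ | ![r, s, t] ∈ bodyC ∩ {c | 0 < c 2}} := by
    intro s lo hi h1 h2 h3 h4 h5 h6
    rw [← Real.volume_Ioo]
    apply measure_mono
    intro r hr
    obtain ⟨hr1, hr2⟩ := hr
    simp only [bodyC, Set.mem_inter_iff, Set.mem_ofPred_eq, abs_lt, Matrix.cons_val_zero,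
      Matrix.cons_val_one, Matrix.cons_val]
    refine ⟨⟨⟨?_, ?_⟩, ⟨?_, ?_⟩, ⟨?_, ?_⟩, ⟨?_, ?_⟩, ⟨?_, ?_⟩, ⟨?_, ?_⟩, ⟨?_, ?_⟩⟩, ht⟩ <;> linarith
  have p1 := lintegral_Ioo_ge (-1) (-(3/8)) (b + 11/8) 1 0 (by norm_num)
    (fun s => volume {r : ℝ | ![r, s, t] ∈ bodyC ∩ {c | 0 < c 2}})
    (by intro s hs; obtain ⟨h1, h2⟩ := hs; linarith)
    (by
      intro s hs
      obtain ⟨h1, h2⟩ := hs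
      convert sub s (-(11/8) - s) b h1 (by linarith) (by linarith) le_rfl le_rfl (by linarith)
        using 2
      ring)
  have p2 := lintegral_Ioo_ge (-(3/8)) k (b + 1) 0 0 (by linarith)
    (fun s => volume {r : ℝ | ![r, s, t] ∈ bodyC ∩ {c | 0 < c 2}})
    (by intro s hs; obtain ⟨h1, h2⟩ := hs; linarith)
    (by
      intro s hs
      obtain ⟨h1, h2⟩ := hs
      convert sub s (-1) b (by linarith) (by linarith) le_rfl (by linarith) le_rfl (by linarith)
        using 2
      ring)
  have p3 := lintegral_Ioo_ge k b (b + 1 + k) (-1) 0 hkb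
    (fun s => volume {r : ℝ | ![r, s, t] ∈ bodyC ∩ {c | 0 < c 2}})
    (by intro s hs; obtain ⟨h1, h2⟩ := hs; linarith)
    (by
      intro s hs
      obtain ⟨h1, h2⟩ := hs
      convert sub s (-1) (11/8 - s - t) (by linarith) (by linarith) le_rfl (by linarith)
        (by linarith) le_rfl using 2
      rw [hk]
      ring)
  have q1 := lintegral_Ioo_add_le (-(3/8)) k b (by linarith) hkb
    (fun s => volume {r : ℝ | ![r, s, t] ∈ bodyC ∩ {c | 0 < c 2}})
  have q2 := lintegral_Ioo_add_le (-1) (-(3/8)) b (by linarith) (by linarith)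
    (fun s => volume {r : ℝ | ![r, s, t] ∈ bodyC ∩ {c | 0 < c 2}})
  refine le_trans (le_trans ?_ (le_trans (add_le_add p1 (le_trans (add_le_add p2 p3) q1)) q2))
    (setLIntegral_le_lintegral _ _)
  rw [← ENNReal.ofReal_add, ← ENNReal.ofReal_add]
  · apply ENNReal.ofReal_le_ofReal
    apply le_of_eq
    ring
  all_goals nlinarith

theorem bodyC_measurable : MeasurableSet bodyC := by
  apply IsOpen.measurableSet
  simp only [bodyC, Set.ofPred_and]
  repeat' apply IsOpen.inter
  all_goals exact isOpen_lt (by fun_prop) (by fun_prop)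

theorem bodyC_half : ENNReal.ofReal (563 / 200) ≤ volume (bodyC ∩ {c | 0 < c 2}) := by
  rw [volume_eq_iterated _ (bodyC_measurable.inter
    (measurableSet_lt measurable_const (measurable_pi_apply 2)))]
  have p1 := lintegral_Ioo_ge 0 (3/8) (4 - 25/128 - 25/128) (-(5/8)) (-(1/2)) (by norm_num)
    (fun t => ∫⁻ s : ℝ, volume {r : ℝ | ![r, s, t] ∈ bodyC ∩ {c | 0 < c 2}})
    (by intro s hs; obtain ⟨h1, h2⟩ := hs; nlinarith)
    (by
      intro t hs
      obtain ⟨h1, h2⟩ := hs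
      convert bodyC_slice t 1 (3/8 - t) h1 (by linarith) le_rfl (by linarith) (by ring)
        (by linarith) (by linarith) using 2
      ring)
  have p2 := lintegral_Ioo_ge (3/8) 1 (361/64 - 25/128 - 121/128) (-(27/8)) (1/2) (by norm_num)
    (fun t => ∫⁻ s : ℝ, volume {r : ℝ | ![r, s, t] ∈ bodyC ∩ {c | 0 < c 2}})
    (by intro s hs; obtain ⟨h1, h2⟩ := hs; nlinarith)
    (by
      intro t hs
      obtain ⟨h1, h2⟩ := hs
      convert bodyC_slice t (11/8 - t) 0 (by linarith) h2 (by linarith) le_rfl (by ring)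
        le_rfl (by linarith) using 2
      ring)
  refine le_trans (le_trans ?_ (le_trans (add_le_add p1 p2) (lintegral_Ioo_add_le 0 (3/8) 1
    (by norm_num) (by norm_num) _))) (setLIntegral_le_lintegral _ _)
  rw [← ENNReal.ofReal_add (by norm_num) (by norm_num)]
  apply ENNReal.ofReal_le_ofReal
  norm_num

theorem bodyC_volume : ENNReal.ofReal (563 / 100) ≤ volume bodyC := by
  have hm : MeasurableSet {c : Fin 3 → ℝ | 0 < c 2} :=
    measurableSet_lt measurable_const (measurable_pi_apply 2)
  have h2 : volume (bodyC ∩ {c | 0 < c 2}) ≤ volume (bodyC \ {c | 0 < c 2}) := by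
    rw [← Measure.measure_neg volume (bodyC ∩ {c | 0 < c 2})]
    apply measure_mono
    intro x hx
    obtain ⟨h3, h4⟩ := hx
    refine ⟨by simpa using bodyC_symm _ h3, ?_⟩
    simp only [Set.mem_ofPred_eq, Pi.neg_apply] at h4 ⊢
    linarith
  rw [← measure_inter_add_diff bodyC hm, show (563 / 100 : ℝ) = 563 / 200 + 563 / 200 by norm_num,
    ENNReal.ofReal_add (by norm_num) (by norm_num)]
  exact add_le_add bodyC_half (bodyC_half.trans h2)

/-! ### Zero-sum coordinates, admissible lattices and tips -/

/-- Half the sum of the absolute values of the coordinates. -/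
noncomputable def nrm (y : Fin 4 → ℝ) : ℝ := (∑ i, |y i|) / 2

/-- The lattice generated by `b 0`, `b 1`, `b 2`. -/
def lat (b : Fin 3 → Fin 4 → ℝ) : Submodule ℤ (Fin 4 → ℝ) := Submodule.span ℤ (Set.range b)

/-- The determinant of the first three coordinates of `u`, `v`, `w`. -/
def det3 (u v w : Fin 4 → ℝ) : ℝ :=
  u 0 * (v 1 * w 2 - v 2 * w 1) - u 1 * (v 0 * w 2 - v 2 * w 0) + u 2 * (v 0 * w 1 - v 1 * w 0)

/-- The covolume of `lat b`, measured in the first three coordinates. -/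
def covol (b : Fin 3 → Fin 4 → ℝ) : ℝ := |det3 (b 0) (b 1) (b 2)|

theorem mem_lat {b : Fin 3 → Fin 4 → ℝ} {y : Fin 4 → ℝ} :
    y ∈ lat b ↔ ∃ z : Fin 3 → ℤ, y = fun j => z 0 * b 0 j + z 1 * b 1 j + z 2 * b 2 j := by
  rw [lat, Submodule.mem_span_range_iff_exists_fun]
  constructor
  · rintro ⟨z, rfl⟩
    exact ⟨z, by ext j; simp [Fin.sum_univ_three]⟩
  · rintro ⟨z, rfl⟩
    exact ⟨z, by ext j; simp [Fin.sum_univ_three]⟩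

theorem lat_sum_zero {b : Fin 3 → Fin 4 → ℝ} (hb : ∀ k, b k 0 + b k 1 + b k 2 + b k 3 = 0)
    {y : Fin 4 → ℝ} (hy : y ∈ lat b) : y 0 + y 1 + y 2 + y 3 = 0 := by
  obtain ⟨z, rfl⟩ := mem_lat.1 hy
  linear_combination (z 0 : ℝ) * hb 0 + z 1 * hb 1 + z 2 * hb 2

theorem nrm_perm (y : Fin 4 → ℝ) (e : Equiv.Perm (Fin 4)) : nrm (y ∘ e) = nrm y := by
  unfold nrm
  rw [← Equiv.sum_comp e (fun i => |y i|)]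
  rfl

theorem nrm_neg (y : Fin 4 → ℝ) : nrm (-y) = nrm y := by simp [nrm]

theorem mem_lat_perm {b : Fin 3 → Fin 4 → ℝ} {y : Fin 4 → ℝ} (e : Equiv.Perm (Fin 4)) :
    y ∘ e ∈ lat (fun k => b k ∘ e) ↔ y ∈ lat b := by
  rw [mem_lat, mem_lat]
  refine exists_congr fun z => ⟨fun h => ?_, fun h => ?_⟩
  · ext j
    have := congrFun h (e.symm j)
    simpa using this
  · rw [h]
    rfl

theorem mem_lat_perm' {b : Fin 3 → Fin 4 → ℝ} {y : Fin 4 → ℝ} (e : Equiv.Perm (Fin 4)) :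
    y ∈ lat (fun k => b k ∘ e) ↔ y ∘ e.symm ∈ lat b := by
  rw [← mem_lat_perm (b := b) (y := y ∘ e.symm) e, Function.comp_assoc]
  simp

theorem det3_eq (u v w : Fin 4 → ℝ) (hu : u 0 + u 1 + u 2 + u 3 = 0)
    (hv : v 0 + v 1 + v 2 + v 3 = 0) (hw : w 0 + w 1 + w 2 + w 3 = 0) :
    (Matrix.of ![u, v, w, 1]).det = 4 * det3 u v w := by
  have hu' : u 3 = -(u 0 + u 1 + u 2) := by linarith
  have hv' : v 3 = -(v 0 + v 1 + v 2) := by linarith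
  have hw' : w 3 = -(w 0 + w 1 + w 2) := by linarith
  simp [Matrix.det_succ_row_zero, Fin.sum_univ_succ, det3, Fin.succAbove, hu', hv', hw']
  ring

theorem abs_det3_perm (u v w : Fin 4 → ℝ) (hu : u 0 + u 1 + u 2 + u 3 = 0)
    (hv : v 0 + v 1 + v 2 + v 3 = 0) (hw : w 0 + w 1 + w 2 + w 3 = 0) (e : Equiv.Perm (Fin 4)) :
    |det3 (u ∘ e) (v ∘ e) (w ∘ e)| = |det3 u v w| := by
  have hs : ∀ x : Fin 4 → ℝ, x 0 + x 1 + x 2 + x 3 = 0 →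
      (x ∘ e) 0 + (x ∘ e) 1 + (x ∘ e) 2 + (x ∘ e) 3 = 0 := by
    intro x hx
    rw [← Fin.sum_univ_four] at hx ⊢
    rw [← hx]
    exact Equiv.sum_comp e x
  have h1 := det3_eq u v w hu hv hw
  have h2 := det3_eq _ _ _ (hs u hu) (hs v hv) (hs w hw)
  have h3 : Matrix.of ![u ∘ e, v ∘ e, w ∘ e, 1] = (Matrix.of ![u, v, w, 1]).submatrix id e := by
    ext i j
    fin_cases i <;> rfl
  rw [h3, Matrix.det_permute'] at h2
  have h4 := congrArg abs h2
  rw [abs_mul, h1, abs_mul, abs_mul] at h4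
  have h5 : |((Equiv.Perm.sign e : ℤ) : ℝ)| = 1 := by
    rcases Int.units_eq_one_or (Equiv.Perm.sign e) with h | h <;> simp [h]
  rw [h5] at h4
  norm_num at h4
  linarith

theorem covol_perm (b : Fin 3 → Fin 4 → ℝ) (hb : ∀ k, b k 0 + b k 1 + b k 2 + b k 3 = 0)
    (e : Equiv.Perm (Fin 4)) : covol (fun k => b k ∘ e) = covol b :=
  abs_det3_perm _ _ _ (hb 0) (hb 1) (hb 2) e

theorem sum_perm {y : Fin 4 → ℝ} (h : y 0 + y 1 + y 2 + y 3 = 0) (e : Equiv.Perm (Fin 4)) :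
    (y ∘ e) 0 + (y ∘ e) 1 + (y ∘ e) 2 + (y ∘ e) 3 = 0 := by
  rw [← Fin.sum_univ_four] at h ⊢
  rw [← h]
  exact Equiv.sum_comp e y

/-- `lat b` is an admissible lattice in the hyperplane of vectors with coordinate sum `0`: each
nonzero vector has a coordinate of absolute value at least `1`. -/
structure Adm (b : Fin 3 → Fin 4 → ℝ) : Prop where
  sum0 : ∀ k, b k 0 + b k 1 + b k 2 + b k 3 = 0
  adm : ∀ y ∈ lat b, y ≠ 0 → ∃ i, 1 ≤ |y i|

theorem Adm.perm {b : Fin 3 → Fin 4 → ℝ} (h : Adm b) (e : Equiv.Perm (Fin 4)) :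
    Adm (fun k => b k ∘ e) where
  sum0 k := sum_perm (h.sum0 k) e
  adm y hy h0 := by
    obtain ⟨i, hi⟩ := h.adm _ ((mem_lat_perm' e).1 hy) (by
      intro h1
      apply h0
      ext j
      simpa using congrFun h1 (e j))
    exact ⟨e.symm i, hi⟩

/-- `y` is a lattice vector with `nrm y < 11/8` whose coordinate `l` is at least `1` and whose other
coordinates are less than `1` in absolute value, and `nrm y` is minimal among the lattice vectors
for which coordinate `l` alone is at least `1` in absolute value. -/
structure Tip (b : Fin 3 → Fin 4 → ℝ) (l : Fin 4) (y : Fin 4 → ℝ) : Prop where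
  mem : y ∈ lat b
  diag : 1 ≤ y l
  lt : nrm y < 11 / 8
  off : ∀ j, j ≠ l → |y j| < 1
  rule : ∀ x ∈ lat b, 1 ≤ |x l| → (∀ j, j ≠ l → |x j| < 1) → nrm y ≤ nrm x

theorem Tip.perm {b : Fin 3 → Fin 4 → ℝ} {l : Fin 4} {y : Fin 4 → ℝ} (e : Equiv.Perm (Fin 4))
    (h : Tip b (e l) y) : Tip (fun k => b k ∘ e) l (y ∘ e) where
  mem := (mem_lat_perm e).2 h.mem
  diag := h.diag
  lt := by rw [nrm_perm]; exact h.lt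
  off j hj := h.off (e j) (by simpa using hj)
  rule x hx h1 h2 := by
    rw [nrm_perm, ← nrm_perm x e.symm]
    refine h.rule _ ((mem_lat_perm' e).1 hx) (by simpa using h1) fun j hj => ?_
    apply h2
    rintro rfl
    simp at hj

theorem nrm_lt_iff {y : Fin 4 → ℝ} (h : y 0 + y 1 + y 2 + y 3 = 0) (h0 : |y 0| < 1) (h1 : |y 1| < 1)
    (h2 : |y 2| < 1) : nrm y < 11 / 8 ↔ ![y 0, y 1, y 2] ∈ bodyC := by
  have h3 : y 3 = -(y 0 + y 1 + y 2) := by linarith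
  simp only [bodyC, Set.mem_ofPred_eq, Matrix.cons_val_zero, Matrix.cons_val_one, Matrix.cons_val,
    h0, h1, h2, true_and, nrm, Fin.sum_univ_four]
  rw [h3]
  constructor
  · intro h
    have a0 := abs_le.1 (le_refl |y 0|)
    have a1 := abs_le.1 (le_refl |y 1|)
    have a2 := abs_le.1 (le_refl |y 2|)
    have a3 := abs_le.1 (le_refl |-(y 0 + y 1 + y 2)|)
    refine ⟨?_, ?_, ?_, ?_⟩ <;> rw [abs_lt] <;> constructor <;> linarith
  · rintro ⟨a, b, c, d⟩
    rw [abs_lt] at *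
    rcases abs_cases (y 0) with ⟨e0, _⟩ | ⟨e0, _⟩ <;> rcases abs_cases (y 1) with ⟨e1, _⟩ | ⟨e1, _⟩ <;>
    rcases abs_cases (y 2) with ⟨e2, _⟩ | ⟨e2, _⟩ <;>
    rcases abs_cases (-(y 0 + y 1 + y 2)) with ⟨e3, _⟩ | ⟨e3, _⟩ <;>
    rw [e0, e1, e2, e3] <;> linarith

/-- Since `bodyC` has volume greater than `8 * (19/27)`, Minkowski's theorem gives a nonzero lattice
vector whose first three coordinates form a point of `bodyC`. By admissibility its last coordinate is
large, and a shortest vector of this kind is a tip. -/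
theorem exists_tip_three {b : Fin 3 → Fin 4 → ℝ} (h : Adm b) (h0 : covol b ≠ 0)
    (h1 : covol b < 19 / 27) : ∃ y, Tip b 3 y := by
  set G : Matrix (Fin 3) (Fin 3) ℝ := Matrix.of fun i k => b k i.castSucc with hG
  have hdet : |G.det| = covol b := by
    rw [← Matrix.det_transpose, covol, det3, Matrix.det_fin_three]
    congr 1
    simp [hG]
    ring
  have hG0 : G.det ≠ 0 := by
    intro h2
    rw [h2, abs_zero] at hdet
    exact h0 hdet.symm
  -- the first three coordinates of a lattice vector
  have hvec : ∀ z : Fin 3 → ℤ, G.mulVec (fun i => (z i : ℝ)) =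
      fun i => z 0 * b 0 i.castSucc + z 1 * b 1 i.castSucc + z 2 * b 2 i.castSucc := by
    intro z
    ext i
    simp [Matrix.mulVec, dotProduct, Fin.sum_univ_three, hG, mul_comm]
  set pr : (Fin 4 → ℝ) → Fin 3 → ℝ := fun y => ![y 0, y 1, y 2] with hpr
  set S : Set (Fin 4 → ℝ) := {y | y ∈ lat b ∧ pr y ∈ bodyC ∧ 1 ≤ |y 3|} with hS
  have hfin : S.Finite := by
    have hli : LinearIndependent ℝ Gᵀ :=
      Matrix.linearIndependent_rows_of_det_ne_zero (by rwa [Matrix.det_transpose])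
    set bas := basisOfLinearIndependentOfCardEqFinrank hli (by simp) with hbas
    have hb : (bas : Fin 3 → Fin 3 → ℝ) = Gᵀ := coe_basisOfLinearIndependentOfCardEqFinrank _ _
    have hbd : Bornology.IsBounded bodyC := by
      refine (Metric.isBounded_closedBall (x := (0 : Fin 3 → ℝ)) (r := 1)).subset ?_
      intro c hc
      rw [mem_closedBall_zero_iff, pi_norm_le_iff_of_nonneg zero_le_one]
      intro i
      obtain ⟨c0, c1, c2, -⟩ := hc
      fin_cases i
      exacts [c0.le, c1.le, c2.le]
    have hf := ZSpan.setFinite_inter bas hbd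
    refine Set.Finite.of_finite_image (f := pr) (hf.subset ?_) ?_
    · rintro _ ⟨y, ⟨hy, hy1, -⟩, rfl⟩
      refine ⟨hy1, ?_⟩
      obtain ⟨z, rfl⟩ := mem_lat.1 hy
      rw [SetLike.mem_coe, Submodule.mem_span_range_iff_exists_fun]
      refine ⟨z, ?_⟩
      rw [hb]
      ext i
      fin_cases i <;> simp [Fin.sum_univ_three, hG, hpr]
    · intro y hy x hx hxy
      have s1 := lat_sum_zero h.sum0 hy.1
      have s2 := lat_sum_zero h.sum0 hx.1
      have e0 : y 0 = x 0 := congrFun hxy 0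
      have e1 : y 1 = x 1 := congrFun hxy 1
      have e2 : y 2 = x 2 := congrFun hxy 2
      ext i
      fin_cases i
      exacts [e0, e1, e2, by simp; linarith]
  have hne : S.Nonempty := by
    obtain ⟨z, hz0, hz⟩ := minkowski_fin_three G hG0 bodyC bodyC_convex bodyC_symm (by
      refine lt_of_lt_of_le ?_ bodyC_volume
      rw [ENNReal.ofReal_lt_ofReal_iff (by norm_num), hdet]
      linarith)
    set y : Fin 4 → ℝ := fun j => z 0 * b 0 j + z 1 * b 1 j + z 2 * b 2 j with hy
    have hyl : y ∈ lat b := mem_lat.2 ⟨z, rfl⟩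
    have hpy : pr y = G.mulVec (fun i => (z i : ℝ)) := by
      rw [hvec]
      ext i
      fin_cases i <;> rfl
    have hyb : pr y ∈ bodyC := by rw [hpy]; exact hz
    have hy0 : y ≠ 0 := by
      intro h2
      have h3 : G.mulVec (fun i => (z i : ℝ)) = 0 := by
        rw [← hpy, h2]
        ext i
        fin_cases i <;> rfl
      have h4 := Matrix.eq_zero_of_mulVec_eq_zero hG0 h3
      apply hz0
      ext i
      simpa using congrFun h4 i
    obtain ⟨i, hi⟩ := h.adm y hyl hy0
    refine ⟨y, hyl, hyb, ?_⟩
    obtain ⟨c0, c1, c2, -⟩ := hyb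
    fin_cases i
    exacts [absurd hi (not_le.2 c0), absurd hi (not_le.2 c1), absurd hi (not_le.2 c2), hi]
  obtain ⟨y, ⟨hy, hyb, hy3⟩, hmin⟩ := Set.exists_min_image S nrm hfin hne
  obtain ⟨c0, c1, c2, -⟩ := id hyb
  have hlt := (nrm_lt_iff (lat_sum_zero h.sum0 hy) c0 c1 c2).2 hyb
  have hoff : ∀ j, j ≠ 3 → |y j| < 1 := by
    intro j hj
    fin_cases j
    exacts [c0, c1, c2, absurd rfl hj]
  have hrule : ∀ x ∈ lat b, 1 ≤ |x 3| → (∀ j, j ≠ 3 → |x j| < 1) → nrm y ≤ nrm x := by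
    intro x hx h3 hj
    by_cases hN : nrm x < 11 / 8
    · exact hmin x ⟨hx, (nrm_lt_iff (lat_sum_zero h.sum0 hx) (hj 0 (by decide)) (hj 1 (by decide))
        (hj 2 (by decide))).1 hN, h3⟩
    · linarith
  rcases le_abs.1 hy3 with h3 | h3
  · exact ⟨y, hy, h3, hlt, hoff, hrule⟩
  · refine ⟨-y, neg_mem hy, h3, by rwa [nrm_neg], fun j hj => ?_, fun x hx h4 h5 => ?_⟩
    · rw [Pi.neg_apply, abs_neg]
      exact hoff j hj
    · rw [nrm_neg]
      exact hrule x hx h4 h5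

theorem exists_tip {b : Fin 3 → Fin 4 → ℝ} (h : Adm b) (h0 : covol b ≠ 0)
    (h1 : covol b < 19 / 27) (l : Fin 4) : ∃ y, Tip b l y := by
  have hc := covol_perm b h.sum0 (Equiv.swap l 3)
  obtain ⟨y, hy⟩ := exists_tip_three (h.perm (Equiv.swap l 3)) (by rwa [hc]) (by rwa [hc])
  have h2 := Tip.perm (b := fun k => b k ∘ Equiv.swap l 3) (l := l) (Equiv.swap l 3)
    (y := y) (by simpa using hy)
  refine ⟨y ∘ Equiv.swap l 3, ?_⟩
  convert h2 using 1
  ext k j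
  simp

/-- An admissible lattice of covolume at least `2/3` together with a choice of a tip in each
coordinate. -/
structure Conf (b : Fin 3 → Fin 4 → ℝ) (P : Fin 4 → Fin 4 → ℝ) : Prop where
  adm : Adm b
  tip : ∀ i, Tip b i (P i)
  vol : 2 / 3 ≤ covol b

theorem Conf.perm {b : Fin 3 → Fin 4 → ℝ} {P : Fin 4 → Fin 4 → ℝ} (h : Conf b P)
    (e : Equiv.Perm (Fin 4)) : Conf (fun k => b k ∘ e) (fun i => P (e i) ∘ e) where
  adm := h.adm.perm e
  tip i := (h.tip (e i)).perm e
  vol := by rw [covol_perm b h.adm.sum0]; exact h.vol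

/-! ### Indices of sublattices -/

/-- A linear functional whose coefficients differ pairwise by at most `M` is bounded by
`M * nrm v` on the vectors `v` with coordinate sum zero. -/
theorem abs_functional_le (f v : Fin 4 → ℝ) (M : ℝ) (hv : v 0 + v 1 + v 2 + v 3 = 0)
    (hf : ∀ i j, i < j → |f i - f j| ≤ M) :
    |f 0 * v 0 + f 1 * v 1 + f 2 * v 2 + f 3 * v 3| ≤ M * nrm v := by
  have hM : 0 ≤ M := (abs_nonneg _).trans (hf 0 1 (by decide))
  have hf' : ∀ i j, f i - f j ≤ M := by
    intro i j
    rcases lt_trichotomy i j with h | h | h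
    · exact (abs_le.1 (hf i j h)).2
    · rw [h]; simpa using hM
    · have := (abs_le.1 (hf j i h)).1
      linarith
  obtain ⟨i, -, hi⟩ := Finset.exists_max_image Finset.univ f Finset.univ_nonempty
  obtain ⟨k, -, hk⟩ := Finset.exists_min_image Finset.univ f Finset.univ_nonempty
  -- subtract the midpoint of the range of the coefficients
  have hg : ∀ j, |(f j - (f i + f k) / 2) * v j| ≤ M / 2 * |v j| := by
    intro j
    rw [abs_mul]
    refine mul_le_mul_of_nonneg_right ?_ (abs_nonneg _)
    have h1 := hi j (Finset.mem_univ _)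
    have h2 := hk j (Finset.mem_univ _)
    have h3 := hf' i k
    rw [abs_le]
    constructor <;> linarith
  have h0 := abs_le.1 (hg 0)
  have h1 := abs_le.1 (hg 1)
  have h2 := abs_le.1 (hg 2)
  have h3 := abs_le.1 (hg 3)
  have e : f 0 * v 0 + f 1 * v 1 + f 2 * v 2 + f 3 * v 3 =
      (f 0 - (f i + f k) / 2) * v 0 + (f 1 - (f i + f k) / 2) * v 1 +
      (f 2 - (f i + f k) / 2) * v 2 + (f 3 - (f i + f k) / 2) * v 3 := by
    linear_combination (f i + f k) / 2 * hv
  rw [e, abs_le, nrm, Fin.sum_univ_four]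
  constructor <;> linarith [h0.1, h0.2]

/-- The `2 × 2` minors of `v`, `w` and their differences are bounded by the product of the norms:
each is a linear functional in `v` to which `abs_functional_le` applies. -/
theorem abs_minor_le (v w : Fin 4 → ℝ) (hv : v 0 + v 1 + v 2 + v 3 = 0)
    (hw : w 0 + w 1 + w 2 + w 3 = 0) :
    |v 1 * w 2 - v 2 * w 1| ≤ nrm w * nrm v ∧ |v 0 * w 2 - v 2 * w 0| ≤ nrm w * nrm v ∧
    |v 0 * w 1 - v 1 * w 0| ≤ nrm w * nrm v ∧
    |(v 0 + v 1) * w 2 - v 2 * (w 0 + w 1)| ≤ nrm w * nrm v ∧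
    |v 1 * (w 0 + w 2) - (v 0 + v 2) * w 1| ≤ nrm w * nrm v ∧
    |w 0 * (v 1 + v 2) - v 0 * (w 1 + w 2)| ≤ nrm w * nrm v := by
  have key : ∀ f : Fin 4 → ℝ, (∀ i j, i < j → |f i - f j| ≤ nrm w) →
      |f 0 * v 0 + f 1 * v 1 + f 2 * v 2 + f 3 * v 3| ≤ nrm w * nrm v :=
    fun f hf => abs_functional_le f v _ hv hf
  have a0 := abs_le.1 (le_refl |w 0|)
  have a1 := abs_le.1 (le_refl |w 1|)
  have a2 := abs_le.1 (le_refl |w 2|)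
  have a3 := abs_le.1 (le_refl |w 3|)
  refine ⟨?_, ?_, ?_, ?_, ?_, ?_⟩
  · convert key ![0, w 2, -w 1, 0] ?_ using 2
    · simp; ring
    · intro i j hij
      rw [abs_le]
      fin_cases i <;> fin_cases j <;> first
        | exact absurd hij (by decide)
        | constructor <;> simp [nrm, Fin.sum_univ_four] <;> linarith
  · convert key ![w 2, 0, -w 0, 0] ?_ using 2
    · simp; ring
    · intro i j hij
      rw [abs_le]
      fin_cases i <;> fin_cases j <;> first
        | exact absurd hij (by decide)
        | constructor <;> simp [nrm, Fin.sum_univ_four] <;> linarith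
  · convert key ![w 1, -w 0, 0, 0] ?_ using 2
    · simp; ring
    · intro i j hij
      rw [abs_le]
      fin_cases i <;> fin_cases j <;> first
        | exact absurd hij (by decide)
        | constructor <;> simp [nrm, Fin.sum_univ_four] <;> linarith
  · convert key ![w 2, w 2, -(w 0 + w 1), 0] ?_ using 2
    · simp; ring
    · intro i j hij
      rw [abs_le]
      fin_cases i <;> fin_cases j <;> first
        | exact absurd hij (by decide)
        | constructor <;> simp [nrm, Fin.sum_univ_four] <;> linarith
  · convert key ![-w 1, w 0 + w 2, -w 1, 0] ?_ using 2
    · simp; ring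
    · intro i j hij
      rw [abs_le]
      fin_cases i <;> fin_cases j <;> first
        | exact absurd hij (by decide)
        | constructor <;> simp [nrm, Fin.sum_univ_four] <;> linarith
  · convert key ![-(w 1 + w 2), w 0, w 0, 0] ?_ using 2
    · simp; ring
    · intro i j hij
      rw [abs_le]
      fin_cases i <;> fin_cases j <;> first
        | exact absurd hij (by decide)
        | constructor <;> simp [nrm, Fin.sum_univ_four] <;> linarith

/-- A Hadamard-type inequality for `nrm`. -/
theorem abs_det3_le (u v w : Fin 4 → ℝ) (hu : u 0 + u 1 + u 2 + u 3 = 0)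
    (hv : v 0 + v 1 + v 2 + v 3 = 0) (hw : w 0 + w 1 + w 2 + w 3 = 0) :
    |det3 u v w| ≤ nrm w * nrm v * nrm u := by
  obtain ⟨h1, h2, h3, h4, h5, h6⟩ := abs_minor_le v w hv hw
  convert abs_functional_le ![v 1 * w 2 - v 2 * w 1, -(v 0 * w 2 - v 2 * w 0),
    v 0 * w 1 - v 1 * w 0, 0] u (nrm w * nrm v) hu ?_ using 2
  · simp [det3]; ring
  · intro i j hij
    rw [abs_le] at *
    fin_cases i <;> fin_cases j <;> first
      | exact absurd hij (by decide)
      | constructor <;> simp <;> linarith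

/-- `x` is `n` times a lattice vector. -/
def InMul (b : Fin 3 → Fin 4 → ℝ) (n : ℝ) (x : Fin 4 → ℝ) : Prop :=
  ∃ t ∈ lat b, ∀ j, x j = n * t j

/-- If the index of three lattice vectors is divisible by the prime `p`, then a nontrivial
combination of them with coefficients modulo `p` is divisible by `p`. -/
theorem exists_relation (p : ℕ) [Fact p.Prime] (lift : ZMod p → ℤ)
    (hl : ∀ c, ((lift c : ℤ) : ZMod p) = c) (Z : Matrix (Fin 3) (Fin 3) ℤ)
    (hZ : (p : ℤ) ∣ Z.det) (b : Fin 3 → Fin 4 → ℝ) :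
    ∃ c : Fin 3 → ZMod p, c ≠ 0 ∧
      InMul b p (fun j => ∑ i, (lift (c i) : ℝ) *
        (Z i 0 * b 0 j + Z i 1 * b 1 j + Z i 2 * b 2 j)) := by
  have h0 : (Z.map (Int.castRingHom (ZMod p))).det = 0 := by
    have := Int.cast_det (R := ZMod p) Z
    rw [← RingHom.mapMatrix_apply, ← RingHom.map_det]
    simpa using (ZMod.intCast_zmod_eq_zero_iff_dvd _ p).2 hZ
  obtain ⟨c, hc0, hc⟩ := Matrix.exists_vecMul_eq_zero_iff.2 h0
  refine ⟨c, hc0, ?_⟩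
  have hd : ∀ k, ∃ t : ℤ, lift (c 0) * Z 0 k + lift (c 1) * Z 1 k + lift (c 2) * Z 2 k = p * t := by
    intro k
    have h1 := congrFun hc k
    simp only [Matrix.vecMul, dotProduct, Fin.sum_univ_three, Matrix.map_apply, Pi.zero_apply] at h1
    have h2 : ((lift (c 0) * Z 0 k + lift (c 1) * Z 1 k + lift (c 2) * Z 2 k : ℤ) : ZMod p) = 0 := by
      push_cast
      rw [hl, hl, hl]
      exact h1
    exact (ZMod.intCast_zmod_eq_zero_iff_dvd _ p).1 h2
  choose t ht using hd
  refine ⟨_, mem_lat.2 ⟨t, rfl⟩, fun j => ?_⟩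
  have q : ∀ k, (lift (c 0) * Z 0 k + lift (c 1) * Z 1 k + lift (c 2) * Z 2 k : ℝ) = p * t k := by
    intro k
    exact_mod_cast ht k
  simp only [Fin.sum_univ_three]
  linear_combination b 0 j * q 0 + b 1 j * q 1 + b 2 j * q 2

/-- `|m|` is the index of the sublattice spanned by `u`, `v`, `w`. If `2` or `3` divides it, the three
vectors are linearly dependent modulo `2` or `3`. -/
theorem exists_index {b : Fin 3 → Fin 4 → ℝ} {u v w : Fin 4 → ℝ} (hu : u ∈ lat b) (hv : v ∈ lat b)
    (hw : w ∈ lat b) : ∃ m : ℤ, det3 u v w = m * det3 (b 0) (b 1) (b 2) ∧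
      (2 ∣ m → InMul b 2 u ∨ InMul b 2 v ∨ InMul b 2 w ∨ InMul b 2 (fun j => u j + v j) ∨
        InMul b 2 (fun j => u j + w j) ∨ InMul b 2 (fun j => v j + w j) ∨
        InMul b 2 (fun j => u j + v j + w j)) ∧
      (3 ∣ m → InMul b 3 u ∨ InMul b 3 v ∨ InMul b 3 w ∨ InMul b 3 (fun j => u j + v j) ∨
        InMul b 3 (fun j => u j - v j) ∨ InMul b 3 (fun j => u j + w j) ∨
        InMul b 3 (fun j => u j - w j) ∨ InMul b 3 (fun j => v j + w j) ∨
        InMul b 3 (fun j => v j - w j) ∨ InMul b 3 (fun j => u j + v j + w j) ∨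
        InMul b 3 (fun j => u j + v j - w j) ∨ InMul b 3 (fun j => u j - v j + w j) ∨
        InMul b 3 (fun j => u j - v j - w j)) := by
  obtain ⟨x, hx⟩ := mem_lat.1 hu
  obtain ⟨y, hy⟩ := mem_lat.1 hv
  obtain ⟨z, hz⟩ := mem_lat.1 hw
  refine ⟨(Matrix.of ![x, y, z]).det, ?_, fun h => ?_, fun h => ?_⟩
  · rw [Matrix.det_fin_three, hx, hy, hz]
    simp [det3]
    ring
  · obtain ⟨c, hc, t, ht, h⟩ := exists_relation 2 (fun c => if c = 0 then 0 else 1) (by decide) _ h b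
    simp only [Fin.sum_univ_three, Matrix.of_apply, Matrix.cons_val_zero, Matrix.cons_val_one,
      Matrix.cons_val] at h
    simp only [fun j => (congrFun hx j).symm, fun j => (congrFun hy j).symm,
      fun j => (congrFun hz j).symm] at h
    have hc' : c 0 ≠ 0 ∨ c 1 ≠ 0 ∨ c 2 ≠ 0 := by
      by_contra h'
      push Not at h'
      apply hc
      funext i
      fin_cases i
      exacts [h'.1, h'.2.1, h'.2.2]
    by_cases h0 : c 0 = 0 <;> by_cases h1 : c 1 = 0 <;> by_cases h2 : c 2 = 0 <;>
      simp only [h0, h1, h2, if_true, if_false, Int.cast_zero, Int.cast_one, zero_mul, one_mul,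
        zero_add, add_zero, ne_eq, not_true_eq_false, or_false, Nat.cast_ofNat] at h hc'
    · exact Or.inr (Or.inr (Or.inl ⟨t, ht, h⟩))
    · exact Or.inr (Or.inl ⟨t, ht, h⟩)
    · exact Or.inr (Or.inr (Or.inr (Or.inr (Or.inr (Or.inl ⟨t, ht, h⟩)))))
    · exact Or.inl ⟨t, ht, h⟩
    · exact Or.inr (Or.inr (Or.inr (Or.inr (Or.inl ⟨t, ht, h⟩))))
    · exact Or.inr (Or.inr (Or.inr (Or.inl ⟨t, ht, h⟩)))
    · exact Or.inr (Or.inr (Or.inr (Or.inr (Or.inr (Or.inr ⟨t, ht, h⟩)))))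
  · obtain ⟨c, hc, t, ht, h⟩ := exists_relation 3
      (fun c => if c = 0 then 0 else if c = 1 then 1 else -1) (by decide) _ h b
    simp only [Fin.sum_univ_three, Matrix.of_apply, Matrix.cons_val_zero, Matrix.cons_val_one,
      Matrix.cons_val] at h
    simp only [fun j => (congrFun hx j).symm, fun j => (congrFun hy j).symm,
      fun j => (congrFun hz j).symm] at h
    have hc' : c 0 ≠ 0 ∨ c 1 ≠ 0 ∨ c 2 ≠ 0 := by
      by_contra h'
      push Not at h'
      apply hc
      funext i
      fin_cases i
      exacts [h'.1, h'.2.1, h'.2.2]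
    have hv : ∀ d : ZMod 3, (if d = 0 then (0 : ℤ) else if d = 1 then 1 else -1) = 0 ∧ d = 0 ∨
        (if d = 0 then (0 : ℤ) else if d = 1 then 1 else -1) = 1 ∨
        (if d = 0 then (0 : ℤ) else if d = 1 then 1 else -1) = -1 := by decide
    have ht' := neg_mem ht
    rcases hv (c 0) with ⟨h0, g0⟩ | h0 | h0 <;> rcases hv (c 1) with ⟨h1, g1⟩ | h1 | h1 <;>
      rcases hv (c 2) with ⟨h2, g2⟩ | h2 | h2 <;> simp only [h0, h1, h2] at h <;> push_cast at h
    · exact absurd hc' (by simp [g0, g1, g2])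
    all_goals
      have hp : ∀ x : Fin 4 → ℝ, (∀ j, x j = 3 * t j) → InMul b 3 x := fun x hx => ⟨t, ht, hx⟩
      have hn : ∀ x : Fin 4 → ℝ, (∀ j, x j = -(3 * t j)) → InMul b 3 x := fun x hx =>
        ⟨-t, ht', fun j => by rw [hx, Pi.neg_apply]; ring⟩
      first
      | exact Or.inl <| hp _ fun j => by linear_combination h j
      | exact Or.inl <| hn _ fun j => by linear_combination -h j
      | exact Or.inr <| Or.inl <| hp _ fun j => by linear_combination h j
      | exact Or.inr <| Or.inl <| hn _ fun j => by linear_combination -h j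
      | exact Or.inr <| Or.inr <| Or.inl <| hp _ fun j => by linear_combination h j
      | exact Or.inr <| Or.inr <| Or.inl <| hn _ fun j => by linear_combination -h j
      | exact Or.inr <| Or.inr <| Or.inr <| Or.inl <| hp _ fun j => by linear_combination h j
      | exact Or.inr <| Or.inr <| Or.inr <| Or.inl <| hn _ fun j => by linear_combination -h j
      | exact Or.inr <| Or.inr <| Or.inr <| Or.inr <| Or.inl <| hp _ fun j => by linear_combination h j
      | exact Or.inr <| Or.inr <| Or.inr <| Or.inr <| Or.inl <| hn _ fun j => by linear_combination -h j
      | exact Or.inr <| Or.inr <| Or.inr <| Or.inr <| Or.inr <| Or.inl <| hp _ fun j => by linear_combination h j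
      | exact Or.inr <| Or.inr <| Or.inr <| Or.inr <| Or.inr <| Or.inl <| hn _ fun j => by linear_combination -h j
      | exact Or.inr <| Or.inr <| Or.inr <| Or.inr <| Or.inr <| Or.inr <| Or.inl <| hp _ fun j => by linear_combination h j
      | exact Or.inr <| Or.inr <| Or.inr <| Or.inr <| Or.inr <| Or.inr <| Or.inl <| hn _ fun j => by linear_combination -h j
      | exact Or.inr <| Or.inr <| Or.inr <| Or.inr <| Or.inr <| Or.inr <| Or.inr <| Or.inl <| hp _ fun j => by linear_combination h j
      | exact Or.inr <| Or.inr <| Or.inr <| Or.inr <| Or.inr <| Or.inr <| Or.inr <| Or.inl <| hn _ fun j => by linear_combination -h j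
      | exact Or.inr <| Or.inr <| Or.inr <| Or.inr <| Or.inr <| Or.inr <| Or.inr <| Or.inr <| Or.inl <| hp _ fun j => by linear_combination h j
      | exact Or.inr <| Or.inr <| Or.inr <| Or.inr <| Or.inr <| Or.inr <| Or.inr <| Or.inr <| Or.inl <| hn _ fun j => by linear_combination -h j
      | exact Or.inr <| Or.inr <| Or.inr <| Or.inr <| Or.inr <| Or.inr <| Or.inr <| Or.inr <| Or.inr <| Or.inl <| hp _ fun j => by linear_combination h j
      | exact Or.inr <| Or.inr <| Or.inr <| Or.inr <| Or.inr <| Or.inr <| Or.inr <| Or.inr <| Or.inr <| Or.inl <| hn _ fun j => by linear_combination -h j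
      | exact Or.inr <| Or.inr <| Or.inr <| Or.inr <| Or.inr <| Or.inr <| Or.inr <| Or.inr <| Or.inr <| Or.inr <| Or.inl <| hp _ fun j => by linear_combination h j
      | exact Or.inr <| Or.inr <| Or.inr <| Or.inr <| Or.inr <| Or.inr <| Or.inr <| Or.inr <| Or.inr <| Or.inr <| Or.inl <| hn _ fun j => by linear_combination -h j
      | exact Or.inr <| Or.inr <| Or.inr <| Or.inr <| Or.inr <| Or.inr <| Or.inr <| Or.inr <| Or.inr <| Or.inr <| Or.inr <| Or.inl <| hp _ fun j => by linear_combination h j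
      | exact Or.inr <| Or.inr <| Or.inr <| Or.inr <| Or.inr <| Or.inr <| Or.inr <| Or.inr <| Or.inr <| Or.inr <| Or.inr <| Or.inl <| hn _ fun j => by linear_combination -h j
      | exact Or.inr <| Or.inr <| Or.inr <| Or.inr <| Or.inr <| Or.inr <| Or.inr <| Or.inr <| Or.inr <| Or.inr <| Or.inr <| Or.inr <| hp _ fun j => by linear_combination h j
      | exact Or.inr <| Or.inr <| Or.inr <| Or.inr <| Or.inr <| Or.inr <| Or.inr <| Or.inr <| Or.inr <| Or.inr <| Or.inr <| Or.inr <| hn _ fun j => by linear_combination -h j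

/-- There are sixteen subsets of `{P 0, …, P 3}` and only eight classes modulo twice the lattice. -/
theorem exists_relation_four {b : Fin 3 → Fin 4 → ℝ} {P : Fin 4 → Fin 4 → ℝ}
    (hP : ∀ i, P i ∈ lat b) : ∃ c : Fin 4 → Bool, (∃ i, c i = true) ∧
      InMul b 2 (fun j => ∑ i, if c i then P i j else 0) := by
  choose Z hZ using fun i => mem_lat.1 (hP i)
  obtain ⟨c, c', hne, hcc⟩ := Fintype.exists_ne_map_eq_of_card_lt
    (fun (c : Fin 4 → Bool) (k : Fin 3) => ∑ i, if c i then (Z i k : ZMod 2) else 0)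
    (by simp [Fintype.card_fun, ZMod.card])
  refine ⟨fun i => xor (c i) (c' i), ?_, ?_⟩
  · by_contra h
    push Not at h
    apply hne
    ext i
    simpa using h i
  · have hd : ∀ k, ∃ t : ℤ, (∑ i, if xor (c i) (c' i) then Z i k else 0) = 2 * t := by
      intro k
      apply (ZMod.intCast_zmod_eq_zero_iff_dvd _ 2).1
      have h1 := congrFun hcc k
      have h2 : ∀ i, (if xor (c i) (c' i) then (Z i k : ZMod 2) else 0) =
          (if c i then (Z i k : ZMod 2) else 0) + (if c' i then (Z i k : ZMod 2) else 0) := by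
        intro i
        cases c i <;> cases c' i <;> simp [CharTwo.add_self_eq_zero]
      push_cast
      rw [Finset.sum_congr rfl fun i _ => h2 i, Finset.sum_add_distrib, h1]
      exact CharTwo.add_self_eq_zero _
    choose t ht using hd
    refine ⟨_, mem_lat.2 ⟨t, rfl⟩, fun j => ?_⟩
    have q : ∀ k, (∑ i, if xor (c i) (c' i) then (Z i k : ℝ) else 0) = 2 * t k := by
      intro k
      exact_mod_cast ht k
    have e : ∀ i, (if xor (c i) (c' i) then P i j else 0) =
        (if xor (c i) (c' i) then (Z i 0 : ℝ) else 0) * b 0 j +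
        (if xor (c i) (c' i) then (Z i 1 : ℝ) else 0) * b 1 j +
        (if xor (c i) (c' i) then (Z i 2 : ℝ) else 0) * b 2 j := by
      intro i
      rw [hZ i]
      split_ifs <;> ring
    simp only [e]
    rw [Finset.sum_add_distrib, Finset.sum_add_distrib,
      ← Finset.sum_mul, ← Finset.sum_mul, ← Finset.sum_mul, q, q, q]
    ring

/-! ### Reduction to configurations of tips -/

/-- Half of the values of the four facet functionals of the octahedron (one of each opposite
pair) at the columns of `B`. -/
noncomputable def facetCoords (B : Matrix (Fin 3) (Fin 3) ℝ) : Fin 3 → Fin 4 → ℝ := fun k =>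
  ![-(B 0 k + B 1 k + B 2 k) / 2, (-B 0 k + B 1 k + B 2 k) / 2, (B 0 k - B 1 k + B 2 k) / 2,
    (B 0 k + B 1 k - B 2 k) / 2]

theorem covol_facetCoords (B : Matrix (Fin 3) (Fin 3) ℝ) :
    covol (facetCoords B) = |B.det| / 2 := by
  have h : det3 (facetCoords B 0) (facetCoords B 1) (facetCoords B 2) = -B.det / 2 := by
    rw [Matrix.det_fin_three]
    simp [det3, facetCoords]
    ring
  rw [covol, h, abs_div, abs_neg]
  norm_num

theorem adm_facetCoords (B : Matrix (Fin 3) (Fin 3) ℝ) (hB : IsPackingLattice octa (latticeOf B)) :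
    Adm (facetCoords B) where
  sum0 k := by
    simp [facetCoords]
    ring
  adm y hy hy0 := by
    obtain ⟨z, rfl⟩ := mem_lat.1 hy
    set x := B.mulVec fun i => (z i : ℝ) with hx
    have hxi : ∀ i, x i = B i 0 * z 0 + B i 1 * z 1 + B i 2 * z 2 := by
      intro i
      simp [hx, Matrix.mulVec, dotProduct, Fin.sum_univ_three]
    have h0 : z 0 * facetCoords B 0 0 + z 1 * facetCoords B 1 0 + z 2 * facetCoords B 2 0 =
        -(x 0 + x 1 + x 2) / 2 := by
      simp [hxi, facetCoords]; ring
    have h1 : z 0 * facetCoords B 0 1 + z 1 * facetCoords B 1 1 + z 2 * facetCoords B 2 1 =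
        (-x 0 + x 1 + x 2) / 2 := by
      simp [hxi, facetCoords]; ring
    have h2 : z 0 * facetCoords B 0 2 + z 1 * facetCoords B 1 2 + z 2 * facetCoords B 2 2 =
        (x 0 - x 1 + x 2) / 2 := by
      simp [hxi, facetCoords]; ring
    have h3 : z 0 * facetCoords B 0 3 + z 1 * facetCoords B 1 3 + z 2 * facetCoords B 2 3 =
        (x 0 + x 1 - x 2) / 2 := by
      simp [hxi, facetCoords]; ring
    have hx0 : x ≠ 0 := by
      intro hx0
      apply hy0
      have e : ∀ i, x i = 0 := fun i => congrFun hx0 i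
      ext j
      fin_cases j
      · exact h0.trans (by simp [e])
      · exact h1.trans (by simp [e])
      · exact h2.trans (by simp [e])
      · exact h3.trans (by simp [e])
    have hl := lOne_of_isPacking B hB z x hx0 hx
    by_contra hcon
    push Not at hcon
    have c0 := abs_lt.1 (hcon 0)
    have c1 := abs_lt.1 (hcon 1)
    have c2 := abs_lt.1 (hcon 2)
    have c3 := abs_lt.1 (hcon 3)
    simp only [h0] at c0
    simp only [h1] at c1
    simp only [h2] at c2
    simp only [h3] at c3
    rcases abs_cases (x 0) with ⟨e0, _⟩ | ⟨e0, _⟩ <;> rcases abs_cases (x 1) with ⟨e1, _⟩ | ⟨e1, _⟩ <;>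
    rcases abs_cases (x 2) with ⟨e2, _⟩ | ⟨e2, _⟩ <;> rw [e0, e1, e2] at hl <;> linarith

/-- Minkowski's convex body theorem applied to the octahedron: the density of a packing is at most
`1`. -/
theorem four_thirds_le_det (B : Matrix (Fin 3) (Fin 3) ℝ) (hdet : B.det ≠ 0)
    (hB : IsPackingLattice octa (latticeOf B)) : 4 / 3 ≤ |B.det| := by
  by_contra hcon
  push Not at hcon
  obtain ⟨z, hz0, hz⟩ := minkowski_fin_three B hdet {x | |x 0| + |x 1| + |x 2| < 2} (by
      intro x hx y hy a c ha hc hac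
      simp only [Set.mem_ofPred_eq, Pi.add_apply, Pi.smul_apply, smul_eq_mul] at *
      have q : ∀ i, |a * x i + c * y i| ≤ a * |x i| + c * |y i| := by
        intro i
        refine (abs_add_le _ _).trans ?_
        rw [abs_mul, abs_mul, abs_of_nonneg ha, abs_of_nonneg hc]
      have q0 := q 0
      have q1 := q 1
      have q2 := q 2
      rcases ha.eq_or_lt with h | h
      · subst h
        have : c = 1 := by linarith
        subst this
        linarith
      · nlinarith) (by
      intro x hx
      simpa using hx) (by
      rw [volume_lOne_lt, ENNReal.ofReal_lt_ofReal_iff (by norm_num)]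
      linarith)
  have h0 : B.mulVec (fun i => (z i : ℝ)) ≠ 0 := by
    intro h
    have h4 := Matrix.eq_zero_of_mulVec_eq_zero hdet h
    apply hz0
    ext i
    simpa using congrFun h4 i
  have := lOne_of_isPacking B hB z _ h0 rfl
  simp only [Set.mem_ofPred_eq] at hz
  linarith

/-- The theorem follows from the covolume bound for configurations of tips: an admissible lattice of
covolume less than `19/27` has a tip in every coordinate. -/
theorem main_of_core (core : ∀ b P, Conf b P → 19 / 27 ≤ covol b) :
    packDensity octa = 18 / 19 ∧
    IsUnit octaB.det ∧
    IsPackingLattice octa (latticeOf octaB) ∧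
    (volume octa).toReal / |octaB.det| = 18 / 19 := by
  have hU : IsUnit octaB.det := by
    rw [det_octaB, isUnit_iff_ne_zero]
    norm_num
  have hP : IsPackingLattice octa (latticeOf octaB) :=
    isPacking_of_lOne octaB fun z hz x hx => lOne_octaB z hz x hx
  have hD : (volume octa).toReal / |octaB.det| = 18 / 19 := by
    rw [volume_octa, det_octaB]
    norm_num
  refine ⟨?_, hU, hP, hD⟩
  have hmax : IsGreatest {r | ∃ B : Matrix (Fin 3) (Fin 3) ℝ, IsUnit B.det ∧
      IsPackingLattice octa (latticeOf B) ∧ r = (volume octa).toReal / |B.det|} (18 / 19) := by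
    refine ⟨⟨octaB, hU, hP, hD.symm⟩, ?_⟩
    rintro r ⟨B, hBU, hB, rfl⟩
    have hdet : B.det ≠ 0 := hBU.ne_zero
    have h43 := four_thirds_le_det B hdet hB
    have hcov := covol_facetCoords B
    have hmain : 19 / 27 ≤ covol (facetCoords B) := by
      by_contra hcon
      push Not at hcon
      have hadm := adm_facetCoords B hB
      choose P hPt using exists_tip hadm (by rw [hcov]; linarith) hcon
      exact absurd (core _ P ⟨hadm, hPt, by rw [hcov]; linarith⟩) (not_le.2 hcon)
    rw [volume_octa, div_le_div_iff₀ (by linarith) (by norm_num)]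
    linarith
  exact hmax.csSup_eq

/-! ### Checked certificates for cubic inequalities -/

namespace Cubic

/-- Value of the linear form with integer coefficients `l` at the vector `y`. -/
def evL : List ℤ → List ℝ → ℝ
  | [], _ => 0
  | _ :: _, [] => 0
  | a :: l, y :: ys => a * y + evL l ys

/-- Value of a quadratic form; the head collects the monomials divisible by the first variable. -/
def evQ : List (List ℤ) → List ℝ → ℝ
  | [], _ => 0
  | _ :: _, [] => 0
  | q :: Q, y :: ys => y * evL q (y :: ys) + evQ Q ys

/-- Value of a cubic form, encoded in the same triangular way as quadratic forms. -/
def evC : List (List (List ℤ)) → List ℝ → ℝ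
  | [], _ => 0
  | _ :: _, [] => 0
  | q :: C, y :: ys => y * evQ q (y :: ys) + evC C ys

/-- Sum of linear forms. -/
def addL : List ℤ → List ℤ → List ℤ
  | [], m => m
  | a :: l, [] => a :: l
  | a :: l, b :: m => (a + b) :: addL l m

/-- Sum of quadratic forms. -/
def addQ : List (List ℤ) → List (List ℤ) → List (List ℤ)
  | [], m => m
  | a :: l, [] => a :: l
  | a :: l, b :: m => addL a b :: addQ l m

/-- Sum of cubic forms. -/
def addC : List (List (List ℤ)) → List (List (List ℤ)) → List (List (List ℤ))
  | [], m => m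
  | a :: l, [] => a :: l
  | a :: l, b :: m => addQ a b :: addC l m

/-- Integer multiple of a linear form. -/
def smulL (c : ℤ) : List ℤ → List ℤ
  | [] => []
  | a :: l => (c * a) :: smulL c l

/-- Integer multiple of a quadratic form. -/
def smulQ (c : ℤ) : List (List ℤ) → List (List ℤ)
  | [] => []
  | a :: l => smulL c a :: smulQ c l

/-- Product of two linear forms. -/
def mulLL : List ℤ → List ℤ → List (List ℤ)
  | [], _ => []
  | _ :: _, [] => []
  | a :: l, b :: m => (a * b :: addL (smulL a m) (smulL b l)) :: mulLL l m

/-- Product of a linear and a quadratic form. -/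
def mulLQ : List ℤ → List (List ℤ) → List (List (List ℤ))
  | [], _ => []
  | _ :: _, [] => []
  | a :: l, q :: Q => addQ (mulLL (a :: l) q) ([] :: smulQ a Q) :: mulLQ l Q

theorem evL_nil (l : List ℤ) : evL l [] = 0 := by cases l <;> rfl
theorem evQ_nil (l : List (List ℤ)) : evQ l [] = 0 := by cases l <;> rfl
theorem evC_nil (l : List (List (List ℤ))) : evC l [] = 0 := by cases l <;> rfl

theorem evL_add (l m : List ℤ) (y : List ℝ) : evL (addL l m) y = evL l y + evL m y := by
  induction l generalizing m y with
  | nil => simp [addL, evL]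
  | cons a l ih =>
    cases m with
    | nil => simp [addL, evL]
    | cons b m =>
      cases y with
      | nil => simp [evL_nil]
      | cons v y => simp only [addL, evL, ih]; push_cast; ring

theorem evQ_add (l m : List (List ℤ)) (y : List ℝ) : evQ (addQ l m) y = evQ l y + evQ m y := by
  induction l generalizing m y with
  | nil => simp [addQ, evQ]
  | cons a l ih =>
    cases m with
    | nil => simp [addQ, evQ]
    | cons b m =>
      cases y with
      | nil => simp [evQ_nil]
      | cons v y => simp only [addQ, evQ, ih, evL_add]; ring

theorem evC_add (l m : List (List (List ℤ))) (y : List ℝ) :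
    evC (addC l m) y = evC l y + evC m y := by
  induction l generalizing m y with
  | nil => simp [addC, evC]
  | cons a l ih =>
    cases m with
    | nil => simp [addC, evC]
    | cons b m =>
      cases y with
      | nil => simp [evC_nil]
      | cons v y => simp only [addC, evC, ih, evQ_add]; ring

theorem evL_smul (c : ℤ) (l : List ℤ) (y : List ℝ) : evL (smulL c l) y = c * evL l y := by
  induction l generalizing y with
  | nil => simp [smulL, evL]
  | cons a l ih =>
    cases y with
    | nil => simp [evL_nil]
    | cons v y => simp only [smulL, evL, ih]; push_cast; ring

theorem evQ_smul (c : ℤ) (l : List (List ℤ)) (y : List ℝ) :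
    evQ (smulQ c l) y = c * evQ l y := by
  induction l generalizing y with
  | nil => simp [smulQ, evQ]
  | cons a l ih =>
    cases y with
    | nil => simp [evQ_nil]
    | cons v y => simp only [smulQ, evQ, ih, evL_smul]; ring

theorem evQ_mul (l m : List ℤ) (y : List ℝ) : evQ (mulLL l m) y = evL l y * evL m y := by
  induction l generalizing m y with
  | nil => simp [mulLL, evQ, evL]
  | cons a l ih =>
    cases m with
    | nil => simp [mulLL, evQ, evL]
    | cons b m =>
      cases y with
      | nil => simp [evL_nil, evQ_nil]
      | cons v y =>
        simp only [mulLL, evQ, evL, ih, evL_add, evL_smul]; push_cast; ring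

theorem evC_mul (l : List ℤ) (q : List (List ℤ)) (y : List ℝ) :
    evC (mulLQ l q) y = evL l y * evQ q y := by
  induction l generalizing q y with
  | nil => simp [mulLQ, evC, evL]
  | cons a l ih =>
    cases q with
    | nil => simp [mulLQ, evC, evQ]
    | cons b q =>
      cases y with
      | nil => simp [evL_nil, evC_nil]
      | cons v y =>
        simp only [mulLQ, evC, evQ, ih, evQ_add, evQ_mul, evQ_smul, evL]; ring

/-- Sum of the absolute values of the coefficients of a linear form. -/
def absL : List ℤ → ℕ
  | [] => 0
  | a :: l => a.natAbs + absL l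

/-- Sum of the absolute values of the coefficients of a quadratic form. -/
def absQ : List (List ℤ) → ℕ
  | [] => 0
  | a :: l => absL a + absQ l

/-- Sum of the absolute values of the coefficients. -/
def absC : List (List (List ℤ)) → ℕ
  | [] => 0
  | a :: l => absQ a + absC l

theorem abs_evL_le (l : List ℤ) (y : List ℝ) (hy : ∀ v ∈ y, |v| ≤ 2) :
    |evL l y| ≤ 2 * absL l := by
  induction l generalizing y with
  | nil => simp [absL, evL]
  | cons a l ih =>
    cases y with
    | nil => rw [evL_nil, abs_zero]; positivity
    | cons v y =>
      have h1 := ih y (fun u hu => hy u (List.mem_cons_of_mem _ hu))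
      have h2 : |v| ≤ 2 := hy v List.mem_cons_self
      have h3 : |(a : ℝ) * v| ≤ 2 * (a.natAbs : ℝ) := by
        rw [abs_mul, Nat.cast_natAbs, Int.cast_abs, mul_comm]
        exact mul_le_mul_of_nonneg_right h2 (abs_nonneg _)
      simp only [evL, absL]
      push_cast at *
      have := abs_add_le ((a : ℝ) * v) (evL l y)
      linarith

theorem abs_evQ_le (l : List (List ℤ)) (y : List ℝ) (hy : ∀ v ∈ y, |v| ≤ 2) :
    |evQ l y| ≤ 4 * absQ l := by
  induction l generalizing y with
  | nil => simp [absQ, evQ]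
  | cons a l ih =>
    cases y with
    | nil => rw [evQ_nil, abs_zero]; positivity
    | cons v y =>
      have h1 := ih y (fun u hu => hy u (List.mem_cons_of_mem _ hu))
      have h2 : |v| ≤ 2 := hy v List.mem_cons_self
      have h3 : |v * evL a (v :: y)| ≤ 2 * (2 * (absL a : ℝ)) := by
        rw [abs_mul]
        exact mul_le_mul h2 (abs_evL_le a _ hy) (abs_nonneg _) (by norm_num)
      simp only [evQ, absQ]
      push_cast
      have := abs_add_le (v * evL a (v :: y)) (evQ l y)
      linarith

theorem abs_evC_le (l : List (List (List ℤ))) (y : List ℝ) (hy : ∀ v ∈ y, |v| ≤ 2) :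
    |evC l y| ≤ 8 * absC l := by
  induction l generalizing y with
  | nil => simp [absC, evC]
  | cons a l ih =>
    cases y with
    | nil => rw [evC_nil, abs_zero]; positivity
    | cons v y =>
      have h1 := ih y (fun u hu => hy u (List.mem_cons_of_mem _ hu))
      have h2 : |v| ≤ 2 := hy v List.mem_cons_self
      have h3 : |v * evQ a (v :: y)| ≤ 2 * (4 * (absQ a : ℝ)) := by
        rw [abs_mul]
        exact mul_le_mul h2 (abs_evQ_le a _ hy) (abs_nonneg _) (by norm_num)
      simp only [evC, absC]
      push_cast
      have := abs_add_le (v * evQ a (v :: y)) (evC l y)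
      linarith

/-- `∑ c • L[i]` over the listed pairs `(i, c)`. -/
def combL (L : List (List ℤ)) : List (ℕ × ℕ) → List ℤ
  | [] => []
  | t :: ts => addL (smulL t.2 (L.getD t.1 [])) (combL L ts)

/-- Nonnegative combination of products of two of the forms in `L`, grouped by factors. -/
def combQ (L : List (List ℤ)) : List (ℕ × List (ℕ × ℕ)) → List (List ℤ)
  | [] => []
  | t :: ts => addQ (mulLL (L.getD t.1 []) (combL L t.2)) (combQ L ts)

/-- Nonnegative combination of triple products of the forms in `L`, grouped by factors. -/
def combC (L : List (List ℤ)) : List (ℕ × List (ℕ × List (ℕ × ℕ))) → List (List (List ℤ))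
  | [] => []
  | t :: ts => addC (mulLQ (L.getD t.1 []) (combQ L t.2)) (combC L ts)

/-- `∑ c • L[k] s²` over the listed triples `(s, k, c)`. -/
def combS (L : List (List ℤ)) : List (List ℤ × ℕ × ℕ) → List (List (List ℤ))
  | [] => []
  | t :: ts => addC (mulLQ (smulL t.2.2 (L.getD t.2.1 [])) (mulLL t.1 t.1)) (combS L ts)

/-- `∑ c • p q r` over the listed quadruples `(c, p, q, r)`. -/
def sumC : List (ℤ × List ℤ × List ℤ × List ℤ) → List (List (List ℤ))
  | [] => []
  | t :: ts => addC (mulLQ (smulL t.1 t.2.1) (mulLL t.2.2.1 t.2.2.2)) (sumC ts)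

/-- Value of a sum of multiples of products of three linear forms. -/
def evS : List (ℤ × List ℤ × List ℤ × List ℤ) → List ℝ → ℝ
  | [], _ => 0
  | t :: ts, y => t.1 * evL t.2.1 y * evL t.2.2.1 y * evL t.2.2.2 y + evS ts y

/-- Negative of a linear form. -/
def negL : List ℤ → List ℤ
  | [] => []
  | a :: l => -a :: negL l

/-- Negative of a quadratic form. -/
def negQ : List (List ℤ) → List (List ℤ)
  | [] => []
  | a :: l => negL a :: negQ l

/-- Negative of a cubic form. -/
def negC : List (List (List ℤ)) → List (List (List ℤ))
  | [] => []
  | a :: l => negQ a :: negC l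

theorem evL_neg (l : List ℤ) (y : List ℝ) : evL (negL l) y = -evL l y := by
  induction l generalizing y with
  | nil => simp [negL, evL]
  | cons a l ih =>
    cases y with
    | nil => simp [evL_nil]
    | cons v y => simp only [negL, evL, ih]; push_cast; ring

theorem evQ_neg (l : List (List ℤ)) (y : List ℝ) : evQ (negQ l) y = -evQ l y := by
  induction l generalizing y with
  | nil => simp [negQ, evQ]
  | cons a l ih =>
    cases y with
    | nil => simp [evQ_nil]
    | cons v y => simp only [negQ, evQ, ih, evL_neg]; ring

theorem evC_neg (l : List (List (List ℤ))) (y : List ℝ) : evC (negC l) y = -evC l y := by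
  induction l generalizing y with
  | nil => simp [negC, evC]
  | cons a l ih =>
    cases y with
    | nil => simp [evC_nil]
    | cons v y => simp only [negC, evC, ih, evQ_neg]; ring

theorem getD_nonneg {L : List (List ℤ)} {y : List ℝ} (hL : ∀ l ∈ L, 0 ≤ evL l y) (i : ℕ) :
    0 ≤ evL (L.getD i []) y := by
  rw [List.getD_eq_getElem?_getD]
  cases h : L[i]? with
  | none => simp [evL]
  | some l => exact hL l (List.mem_of_getElem? h)

theorem combL_nonneg {L : List (List ℤ)} {y : List ℝ} (hL : ∀ l ∈ L, 0 ≤ evL l y)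
    (c : List (ℕ × ℕ)) : 0 ≤ evL (combL L c) y := by
  induction c with
  | nil => simp [combL, evL]
  | cons t ts ih =>
    rw [combL, evL_add, evL_smul]
    have := getD_nonneg hL t.1
    have : (0 : ℝ) ≤ ((t.2 : ℤ) : ℝ) := by exact_mod_cast Nat.zero_le _
    positivity

theorem combQ_nonneg {L : List (List ℤ)} {y : List ℝ} (hL : ∀ l ∈ L, 0 ≤ evL l y)
    (c : List (ℕ × List (ℕ × ℕ))) : 0 ≤ evQ (combQ L c) y := by
  induction c with
  | nil => simp [combQ, evQ]
  | cons t ts ih =>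
    rw [combQ, evQ_add, evQ_mul]
    have := getD_nonneg hL t.1
    have := combL_nonneg hL t.2
    positivity

theorem combC_nonneg {L : List (List ℤ)} {y : List ℝ} (hL : ∀ l ∈ L, 0 ≤ evL l y)
    (c : List (ℕ × List (ℕ × List (ℕ × ℕ)))) : 0 ≤ evC (combC L c) y := by
  induction c with
  | nil => simp [combC, evC]
  | cons t ts ih =>
    rw [combC, evC_add, evC_mul]
    have := getD_nonneg hL t.1
    have := combQ_nonneg hL t.2
    positivity

theorem combS_nonneg {L : List (List ℤ)} {y : List ℝ} (hL : ∀ l ∈ L, 0 ≤ evL l y)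
    (c : List (List ℤ × ℕ × ℕ)) : 0 ≤ evC (combS L c) y := by
  induction c with
  | nil => simp [combS, evC]
  | cons t ts ih =>
    rw [combS, evC_add, evC_mul, evQ_mul, evL_smul]
    have := getD_nonneg hL t.2.1
    have : (0 : ℝ) ≤ ((t.2.2 : ℤ) : ℝ) := by exact_mod_cast Nat.zero_le _
    have := mul_self_nonneg (evL t.1 y)
    positivity

theorem evC_sumC (g : List (ℤ × List ℤ × List ℤ × List ℤ)) (y : List ℝ) :
    evC (sumC g) y = evS g y := by
  induction g with
  | nil => simp [sumC, evC, evS]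
  | cons t ts ih => rw [sumC, evC_add, evC_mul, evQ_mul, evL_smul, ih, evS]; ring

/-- Certificate for `0 ≤ ∑ c p q r`: up to a cubic form whose coefficients are
too small to matter against the constant `e`, the sum is `e` plus a nonnegative
combination of products of forms from `L`. -/
def check (L : List (List ℤ)) (g : List (ℤ × List ℤ × List ℤ × List ℤ))
    (c : List (ℕ × List (ℕ × List (ℕ × ℕ)))) (s : List (List ℤ × ℕ × ℕ)) (e : ℕ) : Bool :=
  (8 * absC (addC (sumC ((-(e : ℤ), [1], [1], [1]) :: g))
    (negC (addC (combC L c) (combS L s))))).ble e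

/-- A successful check proves nonnegativity wherever the forms in `L` are nonnegative and the
variables are at most `2` in absolute value. Each cubic monomial is then at most `8`, so the
coefficients by which the certificate misses the goal contribute an error that the slack `e` absorbs. -/
theorem nonneg_of_check {L : List (List ℤ)} {g : List (ℤ × List ℤ × List ℤ × List ℤ)}
    {c : List (ℕ × List (ℕ × List (ℕ × ℕ)))} {s : List (List ℤ × ℕ × ℕ)} {e : ℕ} {x : List ℝ}
    (h : check L g c s e = true) (hL : ∀ l ∈ L, 0 ≤ evL l (1 :: x)) (hx : ∀ v ∈ x, |v| ≤ 2) :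
    0 ≤ evS g (1 :: x) := by
  have hy : ∀ v ∈ (1 :: x : List ℝ), |v| ≤ 2 := by
    intro v hv
    rcases List.mem_cons.1 hv with rfl | hv
    · norm_num
    · exact hx v hv
  have h1 := Nat.le_of_ble_eq_true h
  have h2 := abs_evC_le (addC (sumC ((-(e : ℤ), [1], [1], [1]) :: g))
    (negC (addC (combC L c) (combS L s)))) (1 :: x) hy
  have h2 := h2.trans (show _ ≤ (e : ℝ) by exact_mod_cast h1)
  rw [evC_add, evC_neg, evC_add, evC_sumC] at h2
  have h3 := combC_nonneg hL c
  have h4 := combS_nonneg hL s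
  have h5 := (abs_le.1 h2).1
  simp only [evS, evL] at h5
  push_cast at h5
  linarith

end Cubic

/-! ### Zero-sum matrices -/

/-- A `4 × 4` matrix with vanishing row and column sums, diagonal entries at least `1` and
off-diagonal entries at least `-1`. Its rows play the part of a superbase of a lattice. -/
structure ZeroSumMat (Q : Fin 4 → Fin 4 → ℝ) : Prop where
  row : ∀ i, Q i 0 + Q i 1 + Q i 2 + Q i 3 = 0
  col : ∀ j, Q 0 j + Q 1 j + Q 2 j + Q 3 j = 0
  diag : ∀ i, 1 ≤ Q i i
  low : ∀ i j, i ≠ j → -1 ≤ Q i j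

/-- Adding row `i` to row `j` leaves the entry in column `j` at least `1`. -/
def Light (Q : Fin 4 → Fin 4 → ℝ) (i j : Fin 4) : Prop := 1 ≤ Q j j + Q i j

/-- `Light Q i j` together with the consequences of `nrm (Q j) ≤ nrm (Q i + Q j)`. -/
def Reduced (Q : Fin 4 → Fin 4 → ℝ) (i j : Fin 4) : Prop :=
  Light Q i j ∧ 0 ≤ Q i i + Q i j + Q j i ∧
    ∀ k, k ≠ i → k ≠ j → Q j k ≤ Q i i + Q i j + Q j i

/-- The off-diagonal entries are nonpositive. -/
def Nonpos (Q : Fin 4 → Fin 4 → ℝ) : Prop := ∀ i j, i ≠ j → Q i j ≤ 0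

/-- A consequence of every row having `nrm` at most `11/8`. -/
def Short (Q : Fin 4 → Fin 4 → ℝ) : Prop := ∀ i j, i ≠ j → Q i i + Q i j ≤ 11 / 8

theorem det3_eq_det {Q : Fin 4 → Fin 4 → ℝ} (row : ∀ i, Q i 0 + Q i 1 + Q i 2 + Q i 3 = 0)
    (col : ∀ j, Q 0 j + Q 1 j + Q 2 j + Q 3 j = 0) :
    (Matrix.of fun i j => Q i j + 1).det = 16 * det3 (Q 0) (Q 1) (Q 2) := by
  have r0 : Q 0 3 = -(Q 0 0 + Q 0 1 + Q 0 2) := by linarith [row 0]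
  have r1 : Q 1 3 = -(Q 1 0 + Q 1 1 + Q 1 2) := by linarith [row 1]
  have r2 : Q 2 3 = -(Q 2 0 + Q 2 1 + Q 2 2) := by linarith [row 2]
  have c0 : Q 3 0 = -(Q 0 0 + Q 1 0 + Q 2 0) := by linarith [col 0]
  have c1 : Q 3 1 = -(Q 0 1 + Q 1 1 + Q 2 1) := by linarith [col 1]
  have c2 : Q 3 2 = -(Q 0 2 + Q 1 2 + Q 2 2) := by linarith [col 2]
  have c3 : Q 3 3 = -(Q 0 3 + Q 1 3 + Q 2 3) := by linarith [col 3]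
  simp only [Matrix.det_succ_row_zero, Fin.sum_univ_succ, det3]
  simp [Fin.succAbove, c3]
  rw [r0, r1, r2, c0, c1, c2]
  ring

namespace ZeroSumMat

variable {Q : Fin 4 → Fin 4 → ℝ}

theorem perm (h : ZeroSumMat Q) (e : Equiv.Perm (Fin 4)) : ZeroSumMat (fun i => Q (e i) ∘ e) where
  row i := sum_perm (h.row (e i)) e
  col j := sum_perm (y := fun i => Q i (e j)) (h.col (e j)) e
  diag i := h.diag (e i)
  low i j hij := h.low (e i) (e j) (e.injective.ne hij)

theorem det3_perm (h : ZeroSumMat Q) (e : Equiv.Perm (Fin 4)) :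
    det3 (Q (e 0) ∘ e) (Q (e 1) ∘ e) (Q (e 2) ∘ e) = det3 (Q 0) (Q 1) (Q 2) := by
  have h1 := det3_eq_det h.row h.col
  have h2 := det3_eq_det (h.perm e).row (h.perm e).col
  have h3 := Matrix.det_submatrix_equiv_self e (Matrix.of fun i j => Q i j + 1)
  have h4 : (Matrix.of fun i j => Q i j + 1).submatrix e e =
      Matrix.of fun i j => (Q (e i) ∘ e) j + 1 := rfl
  rw [h4] at h3
  linarith

end ZeroSumMat

/-- The negated off-diagonal entries of the first three rows. -/
def entries (Q : Fin 4 → Fin 4 → ℝ) : List ℝ :=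
  [-Q 0 1, -Q 0 2, -Q 0 3, -Q 1 0, -Q 1 2, -Q 1 3, -Q 2 0, -Q 2 1, -Q 2 3]

/-- The cubic `M * det3 - T` in terms of `entries`, the diagonal being eliminated by the row sums. -/
def detGoal (M T : ℕ) : List (ℤ × List ℤ × List ℤ × List ℤ) :=
  [(-(T : ℤ), [1], [1], [1]),
    ((M : ℤ), [0, 1, 1, 1], [0, 0, 0, 0, 1, 1, 1], [0, 0, 0, 0, 0, 0, 0, 1, 1, 1]),
    (-(M : ℤ), [0, 0, 0, 0, 1, 1, 1], [0, 0, 0, 0, 0, 0, 0, 1], [0, 0, 1]),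
    (-(M : ℤ), [0, 0, 0, 0, 0, 0, 0, 1, 1, 1], [0, 1], [0, 0, 0, 0, 1]),
    (-(M : ℤ), [0, 1, 1, 1], [0, 0, 0, 0, 0, 1], [0, 0, 0, 0, 0, 0, 0, 0, 1]),
    (-(M : ℤ), [0, 0, 0, 0, 1], [0, 0, 0, 0, 0, 0, 0, 0, 1], [0, 0, 1]),
    (-(M : ℤ), [0, 0, 0, 0, 0, 0, 0, 1], [0, 1], [0, 0, 0, 0, 0, 1])]

theorem evS_detGoal {Q : Fin 4 → Fin 4 → ℝ} (row : ∀ i, Q i 0 + Q i 1 + Q i 2 + Q i 3 = 0)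
    (M T : ℕ) : Cubic.evS (detGoal M T) (1 :: entries Q) = M * det3 (Q 0) (Q 1) (Q 2) - T := by
  have r0 : Q 0 0 = -(Q 0 1 + Q 0 2 + Q 0 3) := by linarith [row 0]
  have r1 : Q 1 1 = -(Q 1 0 + Q 1 2 + Q 1 3) := by linarith [row 1]
  have r2 : Q 2 2 = -(Q 2 0 + Q 2 1 + Q 2 3) := by linarith [row 2]
  simp only [Cubic.evS, detGoal, entries, Cubic.evL, det3, r0, r1, r2]
  push_cast
  ring

/-- A certificate for `T ≤ M * det`, where `T / M` is at least `19/27`. -/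
theorem det3_ge_of_check {Q : Fin 4 → Fin 4 → ℝ} (row : ∀ i, Q i 0 + Q i 1 + Q i 2 + Q i 3 = 0)
    (hQ : ∀ i j, i ≠ j → |Q i j| ≤ 2) {L : List (List ℤ)}
    (c : List (ℕ × List (ℕ × List (ℕ × ℕ)))) (s : List (List ℤ × ℕ × ℕ)) (e : ℕ) (M T : ℕ)
    (h : Cubic.check L (detGoal M T) c s e = true) (hM : 0 < M) (hT : 19 * M ≤ 27 * T)
    (hL : ∀ l ∈ L, 0 ≤ Cubic.evL l (1 :: entries Q)) :
    19 / 27 ≤ det3 (Q 0) (Q 1) (Q 2) := by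
  have key := Cubic.nonneg_of_check h hL (by
    simp only [entries, List.forall_mem_cons, abs_neg]
    refine ⟨hQ _ _ ?_, hQ _ _ ?_, hQ _ _ ?_, hQ _ _ ?_, hQ _ _ ?_, hQ _ _ ?_, hQ _ _ ?_, hQ _ _ ?_,
      hQ _ _ ?_, by simp⟩ <;> decide)
  rw [evS_detGoal row] at key
  have hM' : (0 : ℝ) < M := by exact_mod_cast hM
  have hT' : (19 : ℝ) * M ≤ 27 * T := by exact_mod_cast hT
  have : (M : ℝ) * (19 / 27) ≤ M * det3 (Q 0) (Q 1) (Q 2) := by linarith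
  exact le_of_mul_le_mul_left this hM'

theorem ZeroSumMat.abs_le_two {Q : Fin 4 → Fin 4 → ℝ} (h : ZeroSumMat Q) (hs : Short Q)
    (i j : Fin 4) (hij : i ≠ j) : |Q i j| ≤ 2 := by
  have h1 := h.low i j hij
  have h2 := hs i j hij
  have h3 := h.diag i
  rw [abs_le]
  constructor <;> linarith

theorem ZeroSumMat.abs_le_two' {Q : Fin 4 → Fin 4 → ℝ} (h : ZeroSumMat Q) (hs : Nonpos Q)
    (i j : Fin 4) (hij : i ≠ j) : |Q i j| ≤ 2 := by
  have h1 := h.low i j hij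
  have h2 := hs i j hij
  rw [abs_le]
  constructor <;> linarith

/-! ### Elementary consequences of the configuration axioms -/

theorem exists_fin_four {p : Fin 4 → Prop} : (∃ j, p j) ↔ p 0 ∨ p 1 ∨ p 2 ∨ p 3 := by
  simp [Fin.exists_fin_succ]

theorem forall_fin_four {p : Fin 4 → Prop} : (∀ j, p j) ↔ p 0 ∧ p 1 ∧ p 2 ∧ p 3 := by
  simp [Fin.forall_fin_succ]

theorem nrm_eq (y : Fin 4 → ℝ) : nrm y = (|y 0| + |y 1| + |y 2| + |y 3|) / 2 := by
  rw [nrm, Fin.sum_univ_four]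

theorem le_nrm {y : Fin 4 → ℝ} (h : y 0 + y 1 + y 2 + y 3 = 0) (i : Fin 4) : y i ≤ nrm y := by
  rw [nrm_eq]
  have h0 := abs_le.1 (le_refl |y 0|)
  have h1 := abs_le.1 (le_refl |y 1|)
  have h2 := abs_le.1 (le_refl |y 2|)
  have h3 := abs_le.1 (le_refl |y 3|)
  fin_cases i <;> simp only [Fin.zero_eta, Fin.mk_one, Fin.reduceFinMk] <;> linarith

theorem add_le_nrm {y : Fin 4 → ℝ} (h : y 0 + y 1 + y 2 + y 3 = 0) (i j : Fin 4) (hij : i ≠ j) :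
    y i + y j ≤ nrm y := by
  rw [nrm_eq]
  have h0 := abs_le.1 (le_refl |y 0|)
  have h1 := abs_le.1 (le_refl |y 1|)
  have h2 := abs_le.1 (le_refl |y 2|)
  have h3 := abs_le.1 (le_refl |y 3|)
  fin_cases i <;> fin_cases j <;>
    simp only [Fin.zero_eta, Fin.mk_one, Fin.reduceFinMk, ne_eq, not_true_eq_false] at hij ⊢ <;>
    linarith

/-- The alternative for a vector `x` of `n • lat b`: it is zero or has a coordinate of absolute
value at least `n`. -/
theorem Adm.inMul {b : Fin 3 → Fin 4 → ℝ} (h : Adm b) {n : ℝ} (hn : 0 < n) {x : Fin 4 → ℝ}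
    (hx : InMul b n x) : (∀ j, x j = 0) ∨ ∃ j, n ≤ |x j| := by
  obtain ⟨t, ht, hxt⟩ := hx
  by_cases h0 : t = 0
  · left
    intro j
    rw [hxt, h0]
    simp
  · right
    obtain ⟨i, hi⟩ := h.adm t ht h0
    refine ⟨i, ?_⟩
    rw [hxt, abs_mul, abs_of_pos hn]
    nlinarith

theorem Adm.not_inMul {b : Fin 3 → Fin 4 → ℝ} (h : Adm b) {n : ℝ} (hn : 0 < n) {x : Fin 4 → ℝ}
    (hlt : ∀ j, |x j| < n) (j : Fin 4) (hj : x j ≠ 0) : ¬ InMul b n x := by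
  intro hx
  rcases h.inMul hn hx with h0 | ⟨i, hi⟩
  · exact hj (h0 j)
  · linarith [hlt i]

theorem InMul.congr {b : Fin 3 → Fin 4 → ℝ} {n : ℝ} {x y z : Fin 4 → ℝ} (hx : InMul b n x)
    (hz : z ∈ lat b) (h : ∀ j, y j = x j + n * z j) : InMul b n y := by
  obtain ⟨t, ht, hxt⟩ := hx
  refine ⟨t + z, add_mem ht hz, fun j => ?_⟩
  rw [h, hxt, Pi.add_apply]
  ring

theorem InMul.neg {b : Fin 3 → Fin 4 → ℝ} {n : ℝ} {x y : Fin 4 → ℝ} (hx : InMul b n x)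
    (h : ∀ j, y j = -x j) : InMul b n y := by
  obtain ⟨t, ht, hxt⟩ := hx
  refine ⟨-t, neg_mem ht, fun j => ?_⟩
  rw [h, hxt, Pi.neg_apply]
  ring

theorem InMul.perm {b : Fin 3 → Fin 4 → ℝ} {n : ℝ} {x : Fin 4 → ℝ} (hx : InMul b n x)
    (e : Equiv.Perm (Fin 4)) : InMul (fun k => b k ∘ e) n (x ∘ e) := by
  obtain ⟨t, ht, hxt⟩ := hx
  exact ⟨t ∘ e, (mem_lat_perm e).2 ht, fun j => hxt (e j)⟩

namespace Conf

variable {b : Fin 3 → Fin 4 → ℝ} {P : Fin 4 → Fin 4 → ℝ}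

theorem mem (h : Conf b P) (i : Fin 4) : P i ∈ lat b := (h.tip i).mem

theorem row (h : Conf b P) (i : Fin 4) : P i 0 + P i 1 + P i 2 + P i 3 = 0 :=
  lat_sum_zero h.adm.sum0 (h.mem i)

theorem diag (h : Conf b P) (i : Fin 4) : 1 ≤ P i i := (h.tip i).diag

theorem diag_lt (h : Conf b P) (i : Fin 4) : P i i < 11 / 8 :=
  (le_nrm (h.row i) i).trans_lt (h.tip i).lt

theorem pair (h : Conf b P) (i j : Fin 4) (hij : i ≠ j) : P i i + P i j < 11 / 8 :=
  (add_le_nrm (h.row i) i j hij).trans_lt (h.tip i).lt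

theorem low (h : Conf b P) (i j : Fin 4) (hij : i ≠ j) : -1 < P i j :=
  (abs_lt.1 ((h.tip i).off j hij.symm)).1

theorem up (h : Conf b P) (i j : Fin 4) (hij : i ≠ j) : P i j < 3 / 8 := by
  linarith [h.pair i j hij, h.diag i]

theorem not_inMul_single (h : Conf b P) {n : ℝ} (hn : 2 ≤ n) (i : Fin 4) : ¬ InMul b n (P i) := by
  refine h.adm.not_inMul (by linarith) (fun j => ?_) i (by linarith [h.diag i])
  rw [abs_lt]
  by_cases hij : i = j
  · subst hij
    constructor <;> linarith [h.diag i, h.diag_lt i]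
  · constructor <;> linarith [h.low i j hij, h.up i j hij]

theorem not_inMul_add (h : Conf b P) {n : ℝ} (hn : 2 ≤ n) (i j : Fin 4) (hij : i ≠ j) :
    ¬ InMul b n (fun k => P i k + P j k) := by
  refine h.adm.not_inMul (by linarith) (fun k => ?_) i
    (by linarith [h.diag i, h.low j i hij.symm])
  simp only [abs_lt]
  by_cases hik : i = k
  · subst hik
    constructor <;> linarith [h.diag i, h.diag_lt i, h.low j i hij.symm, h.up j i hij.symm]
  by_cases hjk : j = k
  · subst hjk
    constructor <;> linarith [h.diag j, h.diag_lt j, h.low i j hij, h.up i j hij]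
  · constructor <;> linarith [h.low i k hik, h.up i k hik, h.low j k hjk, h.up j k hjk]

theorem not_inMul_two_sub (h : Conf b P) (i j : Fin 4) (hij : i ≠ j) :
    ¬ InMul b 2 (fun k => P i k - P j k) := fun hx =>
  h.not_inMul_add le_rfl i j hij (hx.congr (h.mem j) fun k => by ring)

theorem not_inMul_three_sub (h : Conf b P) (i j : Fin 4) (hij : i ≠ j) :
    ¬ InMul b 3 (fun k => P i k - P j k) := by
  refine h.adm.not_inMul (by norm_num) (fun k => ?_) i
    (by linarith [h.diag i, h.up j i hij.symm])
  simp only [abs_lt]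
  by_cases hik : i = k
  · subst hik
    constructor <;> linarith [h.diag i, h.diag_lt i, h.low j i hij.symm, h.up j i hij.symm]
  by_cases hjk : j = k
  · subst hjk
    constructor <;> linarith [h.diag j, h.diag_lt j, h.low i j hij, h.up i j hij]
  · constructor <;> linarith [h.low i k hik, h.up i k hik, h.low j k hjk, h.up j k hjk]

/-- Three short lattice vectors satisfying no relation modulo `2` or modulo `3` form a basis: their
index is at most `3`, since `(11/8)³ < 4 · (2/3)`. -/
theorem covol_eq (h : Conf b P) {u v w : Fin 4 → ℝ} (hu : u ∈ lat b) (hv : v ∈ lat b)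
    (hw : w ∈ lat b) (nu : nrm u < 11 / 8) (nv : nrm v < 11 / 8) (nw : nrm w < 11 / 8)
    (h2 : ¬ (InMul b 2 u ∨ InMul b 2 v ∨ InMul b 2 w ∨ InMul b 2 (fun j => u j + v j) ∨
        InMul b 2 (fun j => u j + w j) ∨ InMul b 2 (fun j => v j + w j) ∨
        InMul b 2 (fun j => u j + v j + w j)))
    (h3 : ¬ (InMul b 3 u ∨ InMul b 3 v ∨ InMul b 3 w ∨ InMul b 3 (fun j => u j + v j) ∨
        InMul b 3 (fun j => u j - v j) ∨ InMul b 3 (fun j => u j + w j) ∨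
        InMul b 3 (fun j => u j - w j) ∨ InMul b 3 (fun j => v j + w j) ∨
        InMul b 3 (fun j => v j - w j) ∨ InMul b 3 (fun j => u j + v j + w j) ∨
        InMul b 3 (fun j => u j + v j - w j) ∨ InMul b 3 (fun j => u j - v j + w j) ∨
        InMul b 3 (fun j => u j - v j - w j))) : covol b = |det3 u v w| := by
  obtain ⟨m, hm, m2, m3⟩ := exists_index hu hv hw
  have k2 : ¬ 2 ∣ m := fun k => h2 (m2 k)
  have k3 : ¬ 3 ∣ m := fun k => h3 (m3 k)
  have hle := abs_det3_le (u := u) (v := v) (w := w) (lat_sum_zero h.adm.sum0 hu)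
    (lat_sum_zero h.adm.sum0 hv) (lat_sum_zero h.adm.sum0 hw)
  have hn : ∀ x, 0 ≤ nrm x := fun x => div_nonneg (Finset.sum_nonneg fun _ _ => abs_nonneg _) two_pos.le
  have hlt : |det3 u v w| < 8 / 3 := by
    have h1 : nrm w * nrm v ≤ 11 / 8 * (11 / 8) := mul_le_mul nw.le nv.le (hn _) (by norm_num)
    have h4 : nrm w * nrm v * nrm u ≤ 11 / 8 * (11 / 8) * (11 / 8) :=
      mul_le_mul h1 nu.le (hn _) (by norm_num)
    have h5 : (11 : ℝ) / 8 * (11 / 8) * (11 / 8) < 8 / 3 := by norm_num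
    linarith
  have habs : |det3 u v w| = (|m| : ℤ) * covol b := by
    rw [hm, abs_mul, covol, Int.cast_abs]
  have hm4 : (|m| : ℤ) < 4 := by
    by_contra hc
    push Not at hc
    have hc' : (4 : ℝ) ≤ (|m| : ℤ) := by exact_mod_cast hc
    have := h.vol
    rw [habs] at hlt
    nlinarith
  have hm1 : |m| = 1 := by
    rw [abs_lt] at hm4
    obtain ⟨h5, h6⟩ := hm4
    interval_cases m <;> simp_all <;> omega
  rw [habs]
  have : ((|m| : ℤ) : ℝ) = 1 := by exact_mod_cast hm1
  rw [this, one_mul]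

end Conf

/-! ### The cyclic pattern -/

/-- The case of equality in the main estimate lives here: it is attained at `d1 = d2 = d3 = 1`,
`x = y = z = 2/3`, `α = β = γ = 0`. -/
theorem cyc_pos (d1 d2 d3 x y z α β γ : ℝ)
    (h_l1 : 0 ≤ d1 - γ - 1)
    (h_l2 : 0 ≤ d2 - α - 1)
    (h_l3 : 0 ≤ d3 - β - 1)
    (h_S : 0 ≤ d1 + d2 + d3 - x - y - z - α - β - γ - 1)
    (h_ux : 0 ≤ -x + 1)
    (h_uy : 0 ≤ -y + 1)
    (h_uz : 0 ≤ -z + 1)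
    (h_x : 0 ≤ x)
    (h_y : 0 ≤ y)
    (h_z : 0 ≤ z)
    (h_be : 0 ≤ β)
    (h_ga : 0 ≤ γ)
    (h_al : 0 ≤ α) :
    19 / 27 ≤ d1*d2*d3 - d1*y*β - d2*z*γ - d3*x*α - x*y*z - α*β*γ := by
  linarith [
    mul_nonneg h_l3 h_ux, mul_nonneg (mul_nonneg h_l2 h_uz) h_x,
    mul_nonneg (mul_nonneg h_S h_x) h_z, mul_nonneg h_l1 h_l2,
    mul_nonneg (mul_nonneg h_l1 h_l2) h_be, mul_nonneg (mul_nonneg h_l2 h_uz) h_ga,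
    sq_nonneg (z - x), mul_nonneg (mul_nonneg h_l1 h_l2) h_l3,
    mul_nonneg (mul_nonneg h_ux h_be) h_al, mul_nonneg h_l2 h_ux, mul_nonneg h_l2 h_be,
    mul_nonneg (mul_nonneg h_l3 h_ux) h_al, mul_nonneg (mul_nonneg h_l1 h_uy) h_be,
    mul_nonneg h_uz h_ga, mul_nonneg h_S h_x, mul_nonneg h_l3 h_ga, h_l2,
    mul_nonneg (mul_nonneg h_l3 h_ga) h_al, mul_nonneg h_l2 h_uz, h_l1, sq_nonneg (x - y),
    mul_nonneg (mul_nonneg h_l1 h_l3) h_al, mul_nonneg (mul_nonneg h_S h_x) h_y, h_S,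
    mul_nonneg (mul_nonneg h_l2 h_l3) h_ga, mul_nonneg h_l1 h_ux, mul_nonneg h_uy h_be,
    mul_nonneg (mul_nonneg h_l1 h_uy) h_x, mul_nonneg (mul_nonneg h_l3 h_uz) h_x,
    mul_nonneg h_l1 h_al, mul_nonneg h_l3 h_uz, mul_nonneg (mul_nonneg h_l3 h_uy) h_z,
    mul_nonneg (mul_nonneg h_l2 h_uy) h_x, mul_nonneg (mul_nonneg h_l1 h_be) h_al,
    mul_nonneg h_l2 h_l3, mul_nonneg h_l1 h_uy, mul_nonneg h_l1 h_uz, mul_nonneg h_ux h_al,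
    mul_nonneg (mul_nonneg h_l1 h_uz) h_y, mul_nonneg (mul_nonneg h_uz h_ga) h_al,
    mul_nonneg h_l1 h_l3, mul_nonneg (mul_nonneg h_l2 h_be) h_ga,
    mul_nonneg (sq_nonneg (x - y)) h_z, mul_nonneg h_l2 h_uy, mul_nonneg h_S h_z,
    mul_nonneg (mul_nonneg h_S h_y) h_z, mul_nonneg (mul_nonneg h_l1 h_ux) h_z, sq_nonneg (y - z),
    mul_nonneg (sq_nonneg (z - x)) h_y, mul_nonneg h_l3 h_uy,
    mul_nonneg (mul_nonneg h_l2 h_uz) h_y, mul_nonneg h_S h_y,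
    mul_nonneg (mul_nonneg h_uy h_be) h_ga, mul_nonneg (sq_nonneg (y - z)) h_x, h_l3,
    mul_nonneg (mul_nonneg h_l3 h_ux) h_y]

/-- The variant of `cyc_pos` with `α ≤ 0 ≤ β, γ`. -/
theorem cyc_neg (d1 d2 d3 x y z α β γ : ℝ)
    (h_e2 : 0 ≤ d2 - 1)
    (h_l1 : 0 ≤ d1 - γ - 1)
    (h_l3 : 0 ≤ d3 - β - 1)
    (h_S : 0 ≤ d1 + d2 + d3 - x - y - z - α - β - γ - 1)
    (h_uy : 0 ≤ -y + 1)
    (h_x : 0 ≤ x)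
    (h_y : 0 ≤ y)
    (h_z : 0 ≤ z)
    (h_be : 0 ≤ β)
    (h_ga : 0 ≤ γ)
    (h_ma : 0 ≤ -α)
    (h_w14 : 0 ≤ d1 - z - α)
    (h_w41 : 0 ≤ d1 - x - γ)
    (h_w43 : 0 ≤ d3 - z - β)
    (h_nal : 0 ≤ -d1 + α + 11/8) :
    19/27 ≤ d1*d2*d3 - d1*y*β - d2*z*γ - d3*x*α - x*y*z - α*β*γ := by
  linarith [
    h_l1, mul_nonneg (mul_nonneg h_l1 h_y) h_ma, mul_nonneg (mul_nonneg h_S h_x) h_z,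
    mul_nonneg (sq_nonneg (x - 2/3)) h_w41, mul_nonneg (mul_nonneg h_x h_x) h_ma,
    mul_nonneg h_ga h_w43, mul_nonneg h_e2 h_be, mul_nonneg (mul_nonneg h_x h_ma) h_w43,
    mul_nonneg h_l1 h_ma, mul_nonneg (mul_nonneg h_e2 h_l1) h_l3,
    mul_nonneg (mul_nonneg h_l1 h_ma) h_w41, mul_nonneg (mul_nonneg h_e2 h_l1) h_be,
    mul_nonneg (mul_nonneg h_e2 h_ga) h_w43, mul_nonneg (mul_nonneg h_l1 h_z) h_ma,
    mul_nonneg h_l1 h_w41, mul_nonneg (mul_nonneg h_e2 h_l3) h_w41,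
    mul_nonneg (mul_nonneg h_uy h_x) h_ma, h_e2, mul_nonneg h_l3 h_w41,
    mul_nonneg (mul_nonneg h_l1 h_x) h_ga, mul_nonneg (mul_nonneg h_x h_be) h_ma,
    mul_nonneg (mul_nonneg h_l3 h_x) h_ma, h_l3, mul_nonneg (mul_nonneg h_e2 h_uy) h_x,
    mul_nonneg (mul_nonneg h_l3 h_w41) h_w41, mul_nonneg (mul_nonneg h_l1 h_x) h_nal,
    mul_nonneg (mul_nonneg h_l3 h_uy) h_x, mul_nonneg h_S h_x,
    mul_nonneg (mul_nonneg h_S h_x) h_w41, mul_nonneg (mul_nonneg h_l1 h_S) h_ma,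
    mul_nonneg (mul_nonneg h_l3 h_x) h_nal, mul_nonneg (mul_nonneg h_e2 h_be) h_ga,
    mul_nonneg (mul_nonneg h_l1 h_w41) h_w41, mul_nonneg (sq_nonneg (x - 2/3)) h_l3,
    mul_nonneg (mul_nonneg h_l1 h_y) h_nal, mul_nonneg h_uy h_be,
    mul_nonneg (mul_nonneg h_e2 h_w41) h_w41, mul_nonneg (mul_nonneg h_uy h_be) h_ga,
    mul_nonneg (mul_nonneg h_l3 h_x) h_w14, mul_nonneg (mul_nonneg h_l1 h_z) h_ga,
    mul_nonneg (mul_nonneg h_be h_ga) h_ma, mul_nonneg (mul_nonneg h_e2 h_x) h_x,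
    mul_nonneg (sq_nonneg (y - z)) h_x, mul_nonneg (mul_nonneg h_S h_x) h_y,
    mul_nonneg (sq_nonneg (x - 2/3)) h_e2, mul_nonneg (mul_nonneg h_l1 h_S) h_ga,
    mul_nonneg (sq_nonneg (x - 2/3)) h_l1, mul_nonneg (mul_nonneg h_l1 h_uy) h_be,
    mul_nonneg (mul_nonneg h_l1 h_S) h_nal, sq_nonneg (x - 2/3), mul_nonneg h_e2 h_w41,
    mul_nonneg h_e2 h_l3, mul_nonneg (mul_nonneg h_l1 h_z) h_nal, mul_nonneg h_l1 h_nal,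
    mul_nonneg (mul_nonneg h_l1 h_y) h_ga, mul_nonneg (mul_nonneg h_l3 h_x) h_x,
    mul_nonneg h_l1 h_ga, mul_nonneg (mul_nonneg h_e2 h_x) h_w43]

/-- The linear inequalities satisfied by a zero-sum matrix with the cyclic light pattern
`0 → 1 → 2 → 0`, written in terms of its diagonal entries `d1`, `d2`, `d3` and the negated
off-diagonal entries `x`, `y`, `z` at `(1,0)`, `(2,1)`, `(0,2)` and `α`, `β`, `γ` at `(0,1)`, `(1,2)`,
`(2,0)`. -/
structure Cyc (d1 d2 d3 x y z α β γ : ℝ) : Prop where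
  e1 : 1 ≤ d1
  e2 : 1 ≤ d2
  e3 : 1 ≤ d3
  l1 : 1 ≤ d1 - γ
  l2 : 1 ≤ d2 - α
  l3 : 1 ≤ d3 - β
  S : 1 ≤ d1 + d2 + d3 - x - y - z - α - β - γ
  x0 : 0 ≤ x
  y0 : 0 ≤ y
  z0 : 0 ≤ z
  x1 : x ≤ 1
  y1 : y ≤ 1
  z1 : z ≤ 1
  w14 : 0 ≤ d1 - z - α
  w24 : 0 ≤ d2 - x - β
  w34 : 0 ≤ d3 - y - γ
  w41 : 0 ≤ d1 - x - γ
  w42 : 0 ≤ d2 - y - α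
  w43 : 0 ≤ d3 - z - β
  n1 : d1 - α ≤ 11 / 8
  n2 : d2 - β ≤ 11 / 8
  n3 : d3 - γ ≤ 11 / 8
  ya : 0 ≤ y + α
  zb : 0 ≤ z + β
  xc : 0 ≤ x + γ

namespace Cyc

variable {d1 d2 d3 x y z α β γ : ℝ}

theorem rot (h : Cyc d1 d2 d3 x y z α β γ) : Cyc d2 d3 d1 y z x β γ α := by
  obtain ⟨e1, e2, e3, l1, l2, l3, S, x0, y0, z0, x1, y1, z1, w14, w24, w34, w41, w42, w43, n1, n2, n3,
    ya, zb, xc⟩ := h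
  constructor <;> linarith

/-- Shifting a negative `α` into `y` keeps all the inequalities and, if also `β ≤ 0`, does not
increase the determinant. -/
theorem shift (h : Cyc d1 d2 d3 x y z α β γ) (ha : α ≤ 0) : Cyc d1 d2 d3 x (y + α) z 0 β γ := by
  obtain ⟨e1, e2, e3, l1, l2, l3, S, x0, y0, z0, x1, y1, z1, w14, w24, w34, w41, w42, w43, n1, n2, n3,
    ya, zb, xc⟩ := h
  constructor <;> linarith

theorem shift_le (h : Cyc d1 d2 d3 x y z α β γ) (ha : α ≤ 0) (hb : β ≤ 0)
    (h' : 19 / 27 ≤ d1*d2*d3 - d1*(y + α)*β - d2*z*γ - d3*x*0 - x*(y + α)*z - 0*β*γ) :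
    19 / 27 ≤ d1*d2*d3 - d1*y*β - d2*z*γ - d3*x*α - x*y*z - α*β*γ := by
  have h1 : 0 ≤ -β * (d1 - γ) := mul_nonneg (by linarith) (by linarith [h.l1])
  have h2 : 0 ≤ x * (d3 - z) := mul_nonneg h.x0 (by linarith [h.e3, h.z1])
  have h3 : 0 ≤ -α * (-β * (d1 - γ) + x * (d3 - z)) := mul_nonneg (by linarith) (by linarith)
  linarith

theorem aux (h : Cyc d1 d2 d3 x y z α β γ) (hb : 0 ≤ β) (hc : 0 ≤ γ) :
    19 / 27 ≤ d1*d2*d3 - d1*y*β - d2*z*γ - d3*x*α - x*y*z - α*β*γ := by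
  obtain ⟨e1, e2, e3, l1, l2, l3, S, x0, y0, z0, x1, y1, z1, w14, w24, w34, w41, w42, w43, n1, n2, n3,
    ya, zb, xc⟩ := h
  by_cases ha : 0 ≤ α
  · apply cyc_pos <;> linarith
  · apply cyc_neg <;> linarith

theorem aux' (h : Cyc d1 d2 d3 x y z α β γ) (ha : 0 ≤ α) :
    19 / 27 ≤ d1*d2*d3 - d1*y*β - d2*z*γ - d3*x*α - x*y*z - α*β*γ := by
  by_cases hb : 0 ≤ β
  · have := h.rot.rot.aux ha hb
    linarith
  by_cases hc : 0 ≤ γ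
  · have := h.rot.aux hc ha
    linarith
  push Not at hb hc
  have h1 := (h.rot.shift hb.le).rot.rot.rot.rot.aux ha (le_refl 0)
  have h2 := h.rot.shift_le hb.le hc.le (by linarith)
  linarith

theorem det_ge (h : Cyc d1 d2 d3 x y z α β γ) :
    19 / 27 ≤ d1*d2*d3 - d1*y*β - d2*z*γ - d3*x*α - x*y*z - α*β*γ := by
  by_cases ha : 0 ≤ α
  · exact h.aux' ha
  by_cases hb : 0 ≤ β
  · have := h.rot.aux' hb
    linarith
  push Not at ha hb
  have h1 := (h.shift ha.le).aux' (le_refl 0)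
  exact h.shift_le ha.le hb.le h1

end Cyc

/-! ### Certificates for zero-sum matrices -/

/-- The constant form `1` followed by the inequalities defining `ZeroSumMat` and `Short`, as affine forms in `entries`. -/
def shortForms : List (List ℤ) :=
    [[1], [-1,1,1,1], [-1,0,0,0,1,1,1], [-1,0,0,0,0,0,0,1,1,1], [-1,0,0,1,0,0,1,0,0,1], [1,-1],
    [1,0,-1], [1,0,0,-1], [1,0,0,0,-1], [1,0,0,0,0,-1], [1,0,0,0,0,0,-1], [1,0,0,0,0,0,0,-1],
    [1,0,0,0,0,0,0,0,-1], [1,0,0,0,0,0,0,0,0,-1], [1,-1,-1,-1,1,0,0,1], [1,1,0,0,-1,-1,-1,0,1],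
    [1,0,1,0,0,1,0,-1,-1,-1], [11,0,-8,-8], [11,-8,0,-8], [11,-8,-8], [11,0,0,0,0,-8,-8],
    [11,0,0,0,-8,0,-8], [11,0,0,0,-8,-8], [11,0,0,0,0,0,0,0,-8,-8], [11,0,0,0,0,0,0,-8,0,-8],
    [11,0,0,0,0,0,0,-8,-8], [11,8,8,0,-8,0,-8,-8,0,-8], [11,-8,0,-8,8,8,0,0,-8,-8],
    [11,0,-8,-8,0,-8,-8,8,8]]

theorem shortForms_nonneg {Q : Fin 4 → Fin 4 → ℝ} (h : ZeroSumMat Q) (hs : Short Q) :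
    ∀ l ∈ shortForms, 0 ≤ Cubic.evL l (1 :: entries Q) := by
  have r0 := h.row 0
  have r1 := h.row 1
  have r2 := h.row 2
  have c0 := h.col 0
  have c1 := h.col 1
  have c2 := h.col 2
  have c3 := h.col 3
  unfold shortForms
  simp only [entries, List.forall_mem_cons, Cubic.evL, Int.cast_neg, Int.cast_one,
    Int.cast_zero, Int.cast_ofNat]
  exact ⟨by norm_num, by linarith [h.diag 0], by linarith [h.diag 1], by linarith [h.diag 2],
    by linarith [h.diag 3], by linarith [h.low 0 1 (by decide)],
    by linarith [h.low 0 2 (by decide)], by linarith [h.low 0 3 (by decide)],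
    by linarith [h.low 1 0 (by decide)], by linarith [h.low 1 2 (by decide)],
    by linarith [h.low 1 3 (by decide)], by linarith [h.low 2 0 (by decide)],
    by linarith [h.low 2 1 (by decide)], by linarith [h.low 2 3 (by decide)],
    by linarith [h.low 3 0 (by decide)], by linarith [h.low 3 1 (by decide)],
    by linarith [h.low 3 2 (by decide)], by linarith [hs 0 1 (by decide)],
    by linarith [hs 0 2 (by decide)], by linarith [hs 0 3 (by decide)],
    by linarith [hs 1 0 (by decide)], by linarith [hs 1 2 (by decide)],
    by linarith [hs 1 3 (by decide)], by linarith [hs 2 0 (by decide)],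
    by linarith [hs 2 1 (by decide)], by linarith [hs 2 3 (by decide)],
    by linarith [hs 3 0 (by decide)], by linarith [hs 3 1 (by decide)],
    by linarith [hs 3 2 (by decide)], by simp⟩

/-- The constant form `1` followed by the inequalities defining `ZeroSumMat` and `Nonpos`, as affine forms in `entries`. -/
def nonposForms : List (List ℤ) :=
    [[1], [-1,1,1,1], [-1,0,0,0,1,1,1], [-1,0,0,0,0,0,0,1,1,1], [-1,0,0,1,0,0,1,0,0,1], [1,-1],
    [1,0,-1], [1,0,0,-1], [1,0,0,0,-1], [1,0,0,0,0,-1], [1,0,0,0,0,0,-1], [1,0,0,0,0,0,0,-1],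
    [1,0,0,0,0,0,0,0,-1], [1,0,0,0,0,0,0,0,0,-1], [1,-1,-1,-1,1,0,0,1], [1,1,0,0,-1,-1,-1,0,1],
    [1,0,1,0,0,1,0,-1,-1,-1], [0,1], [0,0,1], [0,0,0,1], [0,0,0,0,1], [0,0,0,0,0,1],
    [0,0,0,0,0,0,1], [0,0,0,0,0,0,0,1], [0,0,0,0,0,0,0,0,1], [0,0,0,0,0,0,0,0,0,1],
    [0,1,1,1,-1,0,0,-1], [0,-1,0,0,1,1,1,0,-1], [0,0,-1,0,0,-1,0,1,1,1]]

theorem nonposForms_nonneg {Q : Fin 4 → Fin 4 → ℝ} (h : ZeroSumMat Q) (hp : Nonpos Q) :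
    ∀ l ∈ nonposForms, 0 ≤ Cubic.evL l (1 :: entries Q) := by
  have r0 := h.row 0
  have r1 := h.row 1
  have r2 := h.row 2
  have c0 := h.col 0
  have c1 := h.col 1
  have c2 := h.col 2
  have c3 := h.col 3
  unfold nonposForms
  simp only [entries, List.forall_mem_cons, Cubic.evL, Int.cast_neg, Int.cast_one,
    Int.cast_zero, Int.cast_ofNat]
  exact ⟨by norm_num, by linarith [h.diag 0], by linarith [h.diag 1], by linarith [h.diag 2],
    by linarith [h.diag 3], by linarith [h.low 0 1 (by decide)],
    by linarith [h.low 0 2 (by decide)], by linarith [h.low 0 3 (by decide)],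
    by linarith [h.low 1 0 (by decide)], by linarith [h.low 1 2 (by decide)],
    by linarith [h.low 1 3 (by decide)], by linarith [h.low 2 0 (by decide)],
    by linarith [h.low 2 1 (by decide)], by linarith [h.low 2 3 (by decide)],
    by linarith [h.low 3 0 (by decide)], by linarith [h.low 3 1 (by decide)],
    by linarith [h.low 3 2 (by decide)], by linarith [hp 0 1 (by decide)],
    by linarith [hp 0 2 (by decide)], by linarith [hp 0 3 (by decide)],
    by linarith [hp 1 0 (by decide)], by linarith [hp 1 2 (by decide)],
    by linarith [hp 1 3 (by decide)], by linarith [hp 2 0 (by decide)],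
    by linarith [hp 2 1 (by decide)], by linarith [hp 2 3 (by decide)],
    by linarith [hp 3 0 (by decide)], by linarith [hp 3 1 (by decide)],
    by linarith [hp 3 2 (by decide)], by simp⟩

/-!
The lists of numbers below are certificates in the format of `Cubic.check`, rounded from a numerical
solution of a linear program; the forms are referred to by their position in `L`.

With an arrow from `i` to `j` for `Light Q i j` (for `Reduced Q i j` in the lemmas `det3_ge_short_*`),
the suffixes `m0`, `m1`, `m3`, `m7` stand for the star at `3` with none, one, two or three of its edges
pointing away from `3`, and `tr` for the transitive triangle on `0`, `1`, `2`. In `det3_ge_cyc_ij` the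
triangle is cyclic and the entry `(i, j)` is nonnegative. In `det3_ge_double_ij_kl` the pairs `(0, 1)`
and `(2, 3)` are light, as are `(i, j)` and `(k, l)`, and the sum of the rows `0` and `1` is short.
-/

theorem det3_ge_nonpos_m0 {Q : Fin 4 → Fin 4 → ℝ} (h : ZeroSumMat Q) (hp : Nonpos Q)
    (l03 : Light Q 0 3) (l13 : Light Q 1 3) (l23 : Light Q 2 3) :
    19 / 27 ≤ det3 (Q 0) (Q 1) (Q 2) := by
  have r0 := h.row 0
  have r1 := h.row 1
  have r2 := h.row 2
  have c0 := h.col 0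
  have c1 := h.col 1
  have c2 := h.col 2
  have c3 := h.col 3
  unfold Light at l03 l13 l23
  refine det3_ge_of_check h.row (h.abs_le_two' hp) (L :=
    nonposForms ++ [[-1,0,0,0,0,0,1,0,0,1], [-1,0,0,1,0,0,0,0,0,1], [-1,0,0,1,0,0,1]])
    [(1,[(21,[(15,12), (16,12), (30,936), (31,1704), (29,444), (5,465), (6,12), (11,2125)]),
    (29,[(26,12), (1,2125), (13,480), (11,468), (12,2303)]), (31,[(15,2474), (30,645), (11,764),
    (24,1068), (25,2583)]), (7,[(14,3993), (1,909), (7,6393), (17,493)]), (8,[(15,454), (30,3348),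
    (24,4415), (20,12)]), (16,[(30,141), (11,947), (10,2137)]), (2,[(14,12), (1,12)]),
    (23,[(10,601), (20,2170)]), (24,[(30,1823), (6,947)]), (13,[(17,2137)])]), (3,[(20,[(28,464),
    (26,53), (29,1188), (12,1296), (6,1235), (20,53)]), (31,[(3,1637), (2,994), (29,53), (5,755),
    (8,819), (11,910)]), (13,[(16,3247), (3,779), (13,4280), (5,1939), (23,795)]), (9,[(15,832),
    (6,588), (17,3573), (21,53)]), (14,[(30,5224), (6,947), (10,316), (21,411)]), (17,[(30,755),
    (11,947), (25,781)]), (29,[(15,2370), (6,1031), (19,781)]), (2,[(16,411), (24,53)]),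
    (7,[(24,1637)]), (18,[(21,2484)]), (22,[(30,1812)])]), (2,[(30,[(27,583), (26,815), (30,360),
    (31,1822), (6,84), (20,1531), (17,2765)]), (10,[(15,1753), (9,20), (10,4995), (17,1602),
    (24,3535)]), (5,[(14,454), (29,989), (12,2095), (23,1781)]), (18,[(31,2266), (8,454),
    (12,1882)]), (29,[(16,3512), (13,944), (23,1531)]), (14,[(31,3304), (13,1299)]),
    (7,[(21,583)]), (9,[(23,1190)]), (12,[(16,1190)]), (17,[(24,2721)])]), (29,[(21,[(15,5285),
    (30,3375), (17,4838)]), (24,[(16,4838), (31,3374), (18,5285)]), (17,[(31,3374)]),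
    (18,[(30,3374)])]), (30,[(14,[(31,3374), (18,3225)]), (23,[(16,6897), (21,3226)]),
    (18,[(20,6898)])]), (31,[(17,[(14,5065), (23,5057)]), (20,[(15,5057), (24,5066)])]),
    (17,[(21,[(23,10123)])]), (18,[(20,[(24,10123)])])]
    [([-1,0,0,0,0,0,0,0,0,2],16,1687), ([-1,0,0,2],14,1687), ([-1,0,0,0,0,0,2],15,1687),
    ([-1,0,0,0,0,0,0,0,0,2],31,844), ([-1,0,0,0,0,0,2],30,843), ([-1,0,0,2],29,843)]
    467 10123 7124 (by decide +kernel) (by norm_num) (by norm_num)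
    (List.forall_mem_append.2 ⟨nonposForms_nonneg h hp, ?_⟩)
  simp only [entries, List.forall_mem_cons, Cubic.evL, Int.cast_neg, Int.cast_one,
    Int.cast_zero, Int.cast_ofNat]
  exact ⟨by linarith [l03], by linarith [l13], by linarith [l23], by simp⟩

theorem det3_ge_nonpos_m1 {Q : Fin 4 → Fin 4 → ℝ} (h : ZeroSumMat Q) (hp : Nonpos Q)
    (l30 : Light Q 3 0) (l13 : Light Q 1 3) (l23 : Light Q 2 3) :
    19 / 27 ≤ det3 (Q 0) (Q 1) (Q 2) := by
  have r0 := h.row 0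
  have r1 := h.row 1
  have r2 := h.row 2
  have c0 := h.col 0
  have c1 := h.col 1
  have c2 := h.col 2
  have c3 := h.col 3
  unfold Light at l30 l13 l23
  refine det3_ge_of_check h.row (h.abs_le_two' hp) (L :=
    nonposForms ++ [[-1,0,0,0,1,0,0,1], [-1,0,0,1,0,0,0,0,0,1], [-1,0,0,1,0,0,1]])
    [(2,[(18,[(28,1588), (27,3615), (4,10567), (12,6184), (18,1320)]), (31,[(14,8707), (2,2240),
    (9,11584), (17,3982), (23,5086)]), (1,[(15,217), (29,3298), (12,415), (7,10872)]),
    (3,[(26,8245), (27,813), (3,2594), (13,3518)]), (8,[(16,6159), (2,2432), (9,8504),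
    (19,5126)]), (5,[(21,218), (17,2469), (23,1952)]), (22,[(2,938), (12,118), (19,2896)]),
    (25,[(16,12488), (29,3750), (13,1661)]), (6,[(23,14294), (21,486)]), (28,[(16,1432),
    (30,2006)]), (29,[(15,2960), (29,6660)]), (2,[(21,89)]), (4,[(4,1536)]), (9,[(9,791)]),
    (12,[(24,3601)]), (23,[(23,11447)]), (26,[(30,6306)])]), (3,[(11,[(16,1012), (15,2540),
    (1,5296), (19,3762), (23,5029)]), (20,[(5,16731), (6,9550), (25,4099), (20,5054), (24,1142)]),
    (9,[(16,2670), (29,2594), (9,113), (17,8324)]), (30,[(16,11941), (14,7622), (3,6526),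
    (22,9013)]), (31,[(26,6016), (3,3735), (31,378), (10,1418)]), (17,[(15,14), (4,15890),
    (5,8)]), (6,[(24,17), (25,3559)]), (12,[(26,585), (4,1894)]), (16,[(28,15), (25,1978)]),
    (29,[(3,3847), (29,1790)]), (1,[(5,11)]), (7,[(7,618)]), (15,[(22,15783)]), (19,[(27,32)]),
    (24,[(24,15)]), (26,[(26,5)])]), (29,[(24,[(16,7546), (26,5743), (1,2674), (9,3708), (6,4703),
    (24,3044)]), (8,[(28,8639), (29,1139), (12,2748), (21,6102)]), (6,[(26,3674), (5,3674),
    (6,1475)]), (30,[(16,6902), (15,2938), (29,8559)]), (10,[(31,2418), (17,327)]),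
    (11,[(27,8746), (11,3202)]), (4,[(4,2635)]), (5,[(31,2766)]), (14,[(23,328)]),
    (16,[(16,2001)]), (21,[(21,1194)]), (25,[(25,1637)]), (28,[(28,199)])]), (30,[(16,[(14,1365),
    (28,1648), (13,6953), (12,13068), (22,10269)]), (18,[(4,9479), (6,4368), (9,3268), (5,3649)]),
    (21,[(15,12307), (12,9098), (8,1093), (19,7802)]), (31,[(14,15209), (4,8004), (6,9517),
    (20,2227)]), (24,[(27,4472), (10,488), (17,229)]), (30,[(14,487), (8,1297), (17,321)])]),
    (31,[(15,[(27,11491), (26,4577), (7,5630), (6,5928), (9,16224), (10,6133)]), (17,[(28,2385),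
    (25,2277), (17,698)]), (21,[(14,1041), (8,151), (22,2955)]), (31,[(28,383), (8,810),
    (25,1400)]), (24,[(20,5893), (24,3314)]), (1,[(5,11)])]), (7,[(26,[(14,9737), (10,1504),
    (8,10008), (17,5878), (18,5117)]), (1,[(10,6681), (7,2842), (9,3971)]), (21,[(15,16997),
    (21,2595), (17,4079)]), (18,[(24,11305)])]), (22,[(24,[(16,11821), (24,2594)]),
    (26,[(28,2762), (11,4598)]), (1,[(15,6226)])]), (4,[(18,[(26,282), (24,15767)]),
    (12,[(26,89)]), (17,[(21,17818)])]), (25,[(1,[(16,9468), (1,3), (20,74)]), (14,[(26,2371)])])]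
    [([-1,-2,0,0,2,2,2,0,-2],2,138), ([-1,2,2,2,-2,0,0,-2],2,425),
    ([-1,-2,0,0,2,2,2,0,-2],30,592), ([-1,0,-2,0,0,-2,0,2,2,2],31,620),
    ([-1,0,0,0,0,0,0,2],15,2138), ([-1,0,0,0,0,0,0,2],16,1835), ([-1,0,0,0,2],15,1050),
    ([-1,0,0,0,0,2],26,385), ([-1,0,0,0,0,0,0,0,2],26,143), ([-1,0,2],3,2),
    ([-1,0,0,0,0,0,2],30,196), ([-1,0,0,0,0,0,2],31,23), ([-1,0,0,0,0,0,0,0,0,2],30,526),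
    ([-1,0,0,0,0,0,0,2],7,348), ([-1,0,0,0,0,0,0,2],8,421), ([-1,0,0,2],7,1222),
    ([-1,0,0,0,0,0,0,2],5,2281), ([-1,0,0,0,0,0,0,2],12,1388), ([-1,0,0,0,2],6,2363),
    ([-1,0,0,0,2],5,1435), ([-1,0,0,0,2],20,455)]
    1801 38892 27369 (by decide +kernel) (by norm_num) (by norm_num)
    (List.forall_mem_append.2 ⟨nonposForms_nonneg h hp, ?_⟩)
  simp only [entries, List.forall_mem_cons, Cubic.evL, Int.cast_neg, Int.cast_one,
    Int.cast_zero, Int.cast_ofNat]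
  exact ⟨by linarith [l30], by linarith [l13], by linarith [l23], by simp⟩

theorem det3_ge_nonpos_m3 {Q : Fin 4 → Fin 4 → ℝ} (h : ZeroSumMat Q) (hp : Nonpos Q)
    (l30 : Light Q 3 0) (l31 : Light Q 3 1) (l23 : Light Q 2 3) :
    19 / 27 ≤ det3 (Q 0) (Q 1) (Q 2) := by
  have r0 := h.row 0
  have r1 := h.row 1
  have r2 := h.row 2
  have c0 := h.col 0
  have c1 := h.col 1
  have c2 := h.col 2
  have c3 := h.col 3
  unfold Light at l30 l31 l23
  refine det3_ge_of_check h.row (h.abs_le_two' hp) (L :=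
    nonposForms ++ [[-1,0,0,0,1,0,0,1], [-1,1,0,0,0,0,0,0,1], [-1,0,0,1,0,0,1]])
    [(3,[(12,[(16,429), (3,3085), (4,8629), (10,2221), (9,8329), (17,7697)]), (2,[(28,1502),
    (1,5743), (4,6649), (11,5530), (22,456)]), (6,[(16,2745), (4,8113), (29,433), (6,1372),
    (22,1911)]), (11,[(14,3204), (11,4348), (5,7092), (10,6011)]), (7,[(28,747), (26,4430),
    (17,4465)]), (9,[(26,5831), (9,585), (13,41)]), (17,[(1,1048), (21,4900)]), (20,[(28,4103),
    (20,1320)]), (25,[(3,1694), (5,13854)]), (27,[(27,917), (31,11681)]), (4,[(4,2169)]),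
    (8,[(30,14348)]), (19,[(29,14138)]), (26,[(26,1372)])]), (31,[(7,[(15,787), (1,4898),
    (11,6135), (7,616)]), (10,[(29,513), (11,1149), (10,1154), (24,13614)]), (2,[(14,6007),
    (8,3474), (12,4824)]), (4,[(4,1001), (6,2572), (9,782)]), (15,[(30,8463), (24,815),
    (25,9088)]), (23,[(1,3898), (12,2339), (6,5974)]), (31,[(14,3647), (30,12666), (31,2408)]),
    (5,[(26,8023), (18,9483)]), (9,[(14,2893), (21,739)]), (28,[(28,5962), (20,4942)]),
    (1,[(1,4525)]), (6,[(6,41)]), (8,[(29,3922)]), (12,[(12,7011)]), (18,[(30,21606)])]),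
    (29,[(6,[(16,624), (13,444), (8,4037), (21,1611), (17,79)]), (5,[(1,3547), (5,4080),
    (21,12616)]), (22,[(28,1674), (19,1941), (18,33)]), (24,[(15,8016), (28,4297), (24,657)]),
    (26,[(26,625), (7,785), (21,3708)]), (29,[(14,102), (30,5463), (8,3795)]), (2,[(4,3565),
    (2,561)]), (1,[(21,1781)]), (7,[(9,297)]), (11,[(19,6893)]), (15,[(15,370)]),
    (30,[(30,963)])]), (30,[(18,[(2,871), (30,961), (9,5033), (6,857), (25,13251)]), (8,[(6,1638),
    (8,514), (9,13120)]), (16,[(16,429), (27,473), (23,10316)]), (9,[(10,314), (21,2254)]),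
    (11,[(30,49), (23,6090)]), (12,[(27,2460), (19,2061)]), (28,[(28,904), (19,3547)]),
    (10,[(22,1610)]), (14,[(23,8462)])]), (25,[(13,[(14,863), (2,406), (8,1841), (18,505),
    (24,3737)]), (16,[(16,12499), (14,1970), (10,5512), (25,4587), (17,1483)]), (1,[(2,25276),
    (8,14641), (24,8002)]), (15,[(24,123), (21,7275)]), (2,[(5,6637)]), (18,[(20,14041)]),
    (19,[(21,980)]), (25,[(25,504)])]), (4,[(9,[(27,315), (16,346), (5,4307)]), (1,[(4,315),
    (18,328)]), (7,[(23,12081), (19,320)]), (16,[(14,10856), (4,12279)]), (21,[(18,2762),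
    (17,11933)]), (26,[(27,1734), (23,874)]), (2,[(15,4563)]), (5,[(19,3975)]), (8,[(12,1150)])]),
    (26,[(22,[(27,1627), (11,2244), (10,576)]), (2,[(5,603), (6,476)]), (7,[(24,7833)]),
    (15,[(27,1051)])]), (1,[(27,[(28,1628), (11,1024)]), (5,[(7,1033)]), (22,[(24,22424)])]),
    (10,[(22,[(16,2056), (18,46)]), (23,[(27,25397)])]), (19,[(2,[(23,9288)]), (7,[(21,48)])])]
    [([-1,-2,0,0,2,2,2,0,-2],29,174), ([-1,-2,0,0,2,2,2,0,-2],30,112),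
    ([-1,0,0,0,0,0,0,2],16,752), ([-1,2],14,379), ([-1,0,0,0,2],16,219),
    ([-1,0,0,0,0,0,0,0,2],16,1108), ([-1,2],16,112), ([-1,0,2],27,526), ([-1,0,0,0,2],27,98),
    ([-1,0,0,0,0,2],26,670), ([-1,2],15,552), ([-1,0,0,0,0,0,0,2],14,1263), ([-1,0,0,0,2],6,748),
    ([-1,0,0,0,0,0,0,2],11,1322), ([-1,0,0,0,2],9,729), ([-1,0,0,0,0,0,0,0,2],6,472),
    ([-1,0,0,0,0,0,0,0,2],9,1258), ([-1,0,0,0,0,0,0,2],9,276), ([-1,0,0,0,0,0,0,2],10,33),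
    ([-1,0,0,0,0,0,0,2],8,763), ([-1,0,0,0,0,0,0,0,2],8,411), ([-1,2],5,22), ([-1,2],7,425),
    ([-1,2],8,1037), ([-1,2],12,1411), ([-1,0,0,0,0,0,0,0,2],24,364), ([-1,0,0,0,2],24,871),
    ([-1,0,0,0,2],19,1434)]
    1800 38892 27369 (by decide +kernel) (by norm_num) (by norm_num)
    (List.forall_mem_append.2 ⟨nonposForms_nonneg h hp, ?_⟩)
  simp only [entries, List.forall_mem_cons, Cubic.evL, Int.cast_neg, Int.cast_one,
    Int.cast_zero, Int.cast_ofNat]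
  exact ⟨by linarith [l30], by linarith [l31], by linarith [l23], by simp⟩

theorem det3_ge_nonpos_m7 {Q : Fin 4 → Fin 4 → ℝ} (h : ZeroSumMat Q) (hp : Nonpos Q)
    (l30 : Light Q 3 0) (l31 : Light Q 3 1) (l32 : Light Q 3 2) :
    19 / 27 ≤ det3 (Q 0) (Q 1) (Q 2) := by
  have r0 := h.row 0
  have r1 := h.row 1
  have r2 := h.row 2
  have c0 := h.col 0
  have c1 := h.col 1
  have c2 := h.col 2
  have c3 := h.col 3
  unfold Light at l30 l31 l32
  refine det3_ge_of_check h.row (h.abs_le_two' hp) (L :=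
    nonposForms ++ [[-1,0,0,0,1,0,0,1], [-1,1,0,0,0,0,0,0,1], [-1,0,1,0,0,1]])
    [(30,[(0,[(28,132), (26,156), (4,360), (29,924), (31,840), (9,336), (8,168), (22,156),
    (0,66)]), (9,[(26,24), (28,24), (4,540), (8,168), (5,228), (25,96), (22,180)]), (5,[(28,132),
    (30,48), (5,48), (19,108)]), (8,[(27,84), (4,192), (10,36), (19,96)]), (22,[(28,36), (26,648),
    (10,12), (25,24)]), (31,[(27,228), (4,732), (25,120), (19,120)]), (29,[(27,126), (4,972),
    (10,216)]), (17,[(17,60), (25,24)]), (28,[(27,84), (19,852)]), (25,[(26,972)])]),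
    (27,[(9,[(28,192), (4,120), (29,18), (31,336), (25,516), (19,156)]), (8,[(26,144), (4,276),
    (29,354), (10,156), (19,360)]), (10,[(26,48), (28,48), (29,954), (0,168)]), (27,[(28,84),
    (26,84), (29,210), (31,144)]), (4,[(29,888), (0,312), (22,24)]), (5,[(28,96), (31,96),
    (19,72)]), (17,[(26,144), (29,12), (25,72)]), (19,[(28,936), (31,936)]), (25,[(26,888),
    (31,936)])]), (31,[(17,[(28,12), (26,12), (4,84), (8,132), (9,132), (0,96), (22,108)]),
    (9,[(4,144), (19,336), (25,336), (0,288)]), (10,[(4,144), (19,96), (25,240)]), (26,[(22,144),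
    (0,144)])]), (29,[(5,[(28,96), (26,96), (8,132), (9,132), (22,108), (0,12)]), (8,[(4,144),
    (19,336), (25,336), (0,288)]), (10,[(4,144), (25,96), (19,240)]), (28,[(0,144), (22,144)])]),
    (4,[(10,[(8,132), (9,132), (22,60), (0,60)]), (5,[(9,384), (5,48)]), (17,[(8,384), (17,48)]),
    (0,[(0,600)])]), (22,[(5,[(26,768), (25,192)]), (10,[(10,36), (0,96)]), (17,[(28,768),
    (19,192)]), (26,[(28,144)])]), (19,[(28,[(10,240), (9,480), (17,96)]), (10,[(25,144)])]),
    (26,[(25,[(8,480), (5,96), (10,240)]), (0,[(28,144)])]), (5,[(5,[(9,240)])]),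
    (8,[(17,[(17,240)])])]
    [([-1,0,0,0,0,2],27,21), ([-1,0,0,0,2],27,21), ([-1,0,0,0,2],4,48), ([-1,0,0,0,0,2],4,48),
    ([-1,0,0,0,2],10,9), ([-1,0,0,0,0,2],8,42), ([-1,0,0,0,2],9,42), ([-1,0,0,0,0,2],10,9),
    ([-1,0,0,0,0,2],5,12), ([-1,0,0,0,2],17,12), ([-1,0,0,0,2],19,24), ([-1,0,0,0,0,2],25,24),
    ([-1,0,0,0,2],0,30), ([-1,0,0,0,0,2],0,30)]
    2 1344 946 (by decide +kernel) (by norm_num) (by norm_num)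
    (List.forall_mem_append.2 ⟨nonposForms_nonneg h hp, ?_⟩)
  simp only [entries, List.forall_mem_cons, Cubic.evL, Int.cast_neg, Int.cast_one,
    Int.cast_zero, Int.cast_ofNat]
  exact ⟨by linarith [l30], by linarith [l31], by linarith [l32], by simp⟩

theorem det3_ge_nonpos_tr {Q : Fin 4 → Fin 4 → ℝ} (h : ZeroSumMat Q) (hp : Nonpos Q)
    (l01 : Light Q 0 1) (l12 : Light Q 1 2) (l02 : Light Q 0 2) :
    19 / 27 ≤ det3 (Q 0) (Q 1) (Q 2) := by
  have r0 := h.row 0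
  have r1 := h.row 1
  have r2 := h.row 2
  have c0 := h.col 0
  have c1 := h.col 1
  have c2 := h.col 2
  have c3 := h.col 3
  unfold Light at l01 l12 l02
  refine det3_ge_of_check h.row (h.abs_le_two' hp) (L :=
    nonposForms ++ [[-1,-1,0,0,1,1,1], [-1,0,0,0,0,-1,0,1,1,1], [-1,0,-1,0,0,0,0,1,1,1]])
    [(4,[(16,[(16,25246), (15,8710), (14,14362), (4,12442), (8,35), (6,1991), (19,1188)]),
    (13,[(26,437), (13,189), (20,693), (19,265)]), (31,[(12,2226), (25,1292), (23,976),
    (18,1026)]), (1,[(1,783), (8,12507), (10,2002)]), (4,[(29,386), (4,29), (8,85)]),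
    (11,[(30,13548), (11,415), (17,922)]), (27,[(6,439), (5,679), (24,219)]), (2,[(21,5731),
    (23,6267)]), (14,[(26,328), (10,257)]), (15,[(7,4278), (22,400)]), (18,[(26,2028),
    (19,1350)]), (3,[(30,894)]), (8,[(20,43)]), (9,[(21,1481)]), (17,[(19,2205)]),
    (23,[(23,132)]), (24,[(29,6029)])]), (1,[(31,[(26,1684), (31,2454), (1,2481), (13,3225),
    (5,14862), (20,4831)]), (14,[(14,473), (12,1999), (11,418), (8,9476), (19,4853)]),
    (2,[(28,24456), (3,3257), (25,7558)]), (7,[(27,2121), (6,7071), (7,3727)]), (9,[(15,16179),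
    (9,1489), (19,2727)]), (10,[(27,8809), (5,18), (22,1052)]), (1,[(6,2070), (22,2481)]),
    (12,[(3,11291), (24,3799)]), (20,[(15,3152), (8,193)]), (25,[(25,165), (21,169)]),
    (29,[(30,27699), (29,7757)]), (11,[(11,1080)]), (23,[(27,664)]), (28,[(28,3549)]),
    (30,[(30,4825)])]), (29,[(10,[(15,3888), (14,1001), (3,1584), (10,675), (19,3348)]),
    (11,[(30,19275), (21,1134), (19,4892), (20,2624)]), (17,[(15,2896), (26,13995), (5,734),
    (20,8704)]), (6,[(28,4694), (13,3053), (18,2390)]), (12,[(14,1326), (12,550), (9,4826)]),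
    (31,[(14,8067), (7,2910), (5,9902)]), (15,[(29,4954), (23,3655)]), (19,[(30,1659), (19,448)]),
    (20,[(14,11262), (8,3174)]), (25,[(2,997), (25,1122)]), (9,[(30,3702)]), (13,[(26,1597)])]),
    (17,[(8,[(3,503), (7,3143), (6,11812), (20,631)]), (22,[(31,3647), (13,17), (17,263),
    (23,1089)]), (23,[(30,2124), (2,3149), (11,6046)]), (26,[(26,4268), (3,29512), (5,2119)]),
    (30,[(28,3334), (10,140)]), (3,[(3,12)]), (5,[(5,824)]), (9,[(19,1418)]), (16,[(21,2052)]),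
    (31,[(31,163)])]), (2,[(19,[(2,1460), (6,2905), (23,7577), (25,4038)]), (26,[(14,4269),
    (16,16977), (11,5778), (24,270)]), (30,[(13,2861), (8,15153), (6,1111)]), (31,[(13,3241),
    (12,10033), (23,4770)]), (8,[(15,7361)]), (10,[(11,102)])]), (30,[(26,[(14,4737), (12,3204),
    (11,5304), (13,15544), (18,13730), (21,11688)]), (11,[(12,629), (19,6355), (23,806)]),
    (20,[(8,298), (13,1647)]), (22,[(31,3855)])]), (27,[(20,[(26,6226), (22,31), (18,18390),
    (23,6227)]), (31,[(15,7743), (6,3873), (22,8187)])]), (12,[(31,[(3,4314), (5,18665),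
    (13,4297), (12,7743)]), (18,[(20,8016)])])]
    [([-1,0,-2,0,0,-2,0,2,2,2],28,30), ([-1,0,-2,0,0,-2,0,2,2,2],31,30),
    ([-1,-2,0,0,2,2,2,0,-2],30,166), ([-1,0,-2,0,0,-2,0,2,2,2],13,3862),
    ([-1,0,-2,0,0,-2,0,2,2,2],8,1969), ([-1,0,-2,0,0,-2,0,2,2,2],10,3832),
    ([-1,0,-2,0,0,-2,0,2,2,2],7,1880), ([-1,0,0,2],26,42), ([-1,0,0,0,0,2],27,478),
    ([-1,0,0,0,0,0,2],30,688), ([-1,0,0,0,0,0,0,0,2],30,853), ([-1,0,0,0,0,2],2,307),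
    ([-1,0,0,0,0,0,2],2,94), ([-1,0,0,0,0,0,0,0,0,2],2,1133), ([-1,0,0,0,0,2],30,276),
    ([-1,0,2],11,757), ([-1,0,0,0,0,0,2],12,1564), ([-1,0,0,2],11,1243),
    ([-1,0,0,0,0,0,0,0,0,2],17,140)]
    1800 38892 27369 (by decide +kernel) (by norm_num) (by norm_num)
    (List.forall_mem_append.2 ⟨nonposForms_nonneg h hp, ?_⟩)
  simp only [entries, List.forall_mem_cons, Cubic.evL, Int.cast_neg, Int.cast_one,
    Int.cast_zero, Int.cast_ofNat]
  exact ⟨by linarith [l01], by linarith [l12], by linarith [l02], by simp⟩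

theorem det3_ge_short_m0 {Q : Fin 4 → Fin 4 → ℝ} (h : ZeroSumMat Q) (hs : Short Q)
    (h03 : Reduced Q 0 3) (h13 : Reduced Q 1 3) (h23 : Reduced Q 2 3) :
    19 / 27 ≤ det3 (Q 0) (Q 1) (Q 2) := by
  have r0 := h.row 0
  have r1 := h.row 1
  have r2 := h.row 2
  have c0 := h.col 0
  have c1 := h.col 1
  have c2 := h.col 2
  have c3 := h.col 3
  have l03 : 1 ≤ Q 3 3 + Q 0 3 := h03.1
  have l13 : 1 ≤ Q 3 3 + Q 1 3 := h13.1
  have l23 : 1 ≤ Q 3 3 + Q 2 3 := h23.1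
  refine det3_ge_of_check h.row (h.abs_le_two hs) (L :=
    shortForms ++ [[-1,0,0,0,0,0,1,0,0,1], [0,0,0,-1,1,0,0,1], [-1,0,0,1,0,0,0,0,0,1],
    [0,1,0,0,0,0,-1,0,1], [-1,0,0,1,0,0,1], [0,0,1,0,0,1,0,0,0,-1]])
    [(33,[(3,[(25,28884), (1,943314), (2,1126876), (30,354067), (32,159154), (11,262319),
    (10,1135858), (9,375707), (0,419007)]), (33,[(17,28500), (2,923527), (1,64802), (32,98073),
    (30,659771), (33,355831), (31,113297), (0,597603)]), (21,[(25,2369), (21,2661), (17,14021),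
    (1,42059), (2,151926), (29,24816), (31,83462)]), (30,[(17,105474), (2,617755), (34,69923),
    (32,162878), (10,27418), (0,265637)]), (1,[(17,101689), (34,365754), (29,243112), (9,502275),
    (11,162878)]), (9,[(2,60723), (32,658254), (29,180236), (11,1366171)]), (17,[(17,6997),
    (2,48039), (31,30307)]), (29,[(34,95233), (29,109712), (11,3635)]), (34,[(25,819),
    (32,52601)]), (2,[(10,1032712)])]), (34,[(31,[(25,33257), (21,14415), (17,15321), (2,115348),
    (1,122573), (30,222027), (31,96981), (10,509598), (0,414106)]), (0,[(25,27422), (2,66092),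
    (1,158143), (32,507873), (29,483043), (30,233984), (0,262165)]), (2,[(25,36612), (3,464351),
    (32,56219), (30,172269), (11,59660), (10,200086)]), (11,[(1,418358), (34,282061), (30,57448),
    (29,922959), (9,648937)]), (3,[(25,13474), (17,21433), (1,1109894), (30,57452)]),
    (21,[(17,1272), (21,1405), (30,9567)]), (32,[(30,418357), (29,111502), (9,199740)]),
    (9,[(29,46406)])]), (3,[(31,[(2,566544), (3,832), (32,7424), (11,228298), (9,252376),
    (10,999939)]), (1,[(17,166816), (21,43395), (29,1102473), (9,784141), (0,24276)]),
    (25,[(21,3907), (17,1684), (2,28723), (11,62), (0,659)]), (30,[(21,23206), (3,3840),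
    (10,950687), (11,535487)]), (9,[(2,482547), (11,420282), (9,311094)]), (17,[(21,7272),
    (17,6189)]), (29,[(29,96149), (0,3566)]), (2,[(10,105746)])]), (29,[(2,[(25,9051), (1,645524),
    (32,182564), (29,173469), (11,25598), (0,6160)]), (1,[(21,36575), (31,15349), (11,146962),
    (10,192304)]), (17,[(21,9514), (30,11252), (29,49868), (9,36757)]), (32,[(21,63613),
    (29,96153), (30,146964), (0,390814)]), (25,[(31,23348), (10,89734), (11,40537)]),
    (29,[(11,144892), (0,584085)]), (9,[(21,9637)]), (30,[(30,55514)])]), (31,[(2,[(1,577755),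
    (32,95746), (30,315790), (9,481933), (10,308176), (0,928381)]), (9,[(31,51324), (11,663755),
    (10,620260), (9,120092)]), (10,[(30,139976), (10,398930), (0,244182)]), (1,[(21,3164),
    (31,122573)]), (25,[(21,4141), (31,34619)]), (11,[(30,259640)]), (17,[(32,1185)])]),
    (21,[(2,[(21,7923), (1,31708), (30,89978), (9,38401), (10,32533), (0,26474)]), (17,[(17,201),
    (1,334), (32,3195)]), (21,[(1,1063), (30,113), (32,2901)]), (11,[(30,60356)]),
    (25,[(32,10514)])]), (30,[(9,[(2,479486), (32,220932), (30,1806), (11,1075548)]),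
    (2,[(30,201195), (0,766513)]), (10,[(11,191562)]), (17,[(32,87552)]), (30,[(30,4334)])]),
    (17,[(32,[(25,3510), (9,17939), (10,198)]), (1,[(11,87551), (0,19771)])]),
    (1,[(2,[(25,40718)]), (9,[(11,220932)])]), (9,[(9,[(32,143520)])])]
    [([-1,0,0,0,0,0,0,0,2],17,10646), ([-1,0,0,0,0,0,0,0,2],21,28704),
    ([-1,0,0,0,0,0,0,0,2],2,55383), ([-1,0,0,0,0,0,0,2],3,131705),
    ([-1,0,0,0,0,0,0,0,2],34,29012), ([-1,0,0,0,0,0,0,0,2],33,18939),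
    ([-1,0,0,0,0,0,0,0,2],11,1082), ([-1,0,0,0,0,0,0,2],9,339410)]
    32723 2204940 1551625 (by decide +kernel) (by norm_num) (by norm_num)
    (List.forall_mem_append.2 ⟨shortForms_nonneg h hs, ?_⟩)
  simp only [entries, List.forall_mem_cons, Cubic.evL, Int.cast_neg, Int.cast_one,
    Int.cast_zero, Int.cast_ofNat]
  exact ⟨by linarith [l03], by linarith [h03.2.1], by linarith [l13], by linarith [h13.2.1],
    by linarith [l23], by linarith [h23.2.1], by simp⟩

theorem det3_ge_short_m1 {Q : Fin 4 → Fin 4 → ℝ} (h : ZeroSumMat Q) (hs : Short Q)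
    (h30 : Reduced Q 3 0) (h13 : Reduced Q 1 3) (h23 : Reduced Q 2 3) :
    19 / 27 ≤ det3 (Q 0) (Q 1) (Q 2) := by
  have r0 := h.row 0
  have r1 := h.row 1
  have r2 := h.row 2
  have c0 := h.col 0
  have c1 := h.col 1
  have c2 := h.col 2
  have c3 := h.col 3
  have l30 : 1 ≤ Q 0 0 + Q 3 0 := h30.1
  have l13 : 1 ≤ Q 3 3 + Q 1 3 := h13.1
  have l23 : 1 ≤ Q 3 3 + Q 2 3 := h23.1
  refine det3_ge_of_check h.row (h.abs_le_two hs) (L :=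
    shortForms ++ [[-1,0,0,0,1,0,0,1], [0,0,-1,-1,1,0,1,1,0,1], [0,-1,0,-1,1,0,1,1,0,1],
    [-1,0,0,1,0,0,0,0,0,1], [0,1,0,0,0,0,-1,0,1], [0,2,1,1,-1,0,-1,-1,1],
    [0,1,-1,0,0,-1,-1,1,2,1], [-1,0,0,1,0,0,1], [0,0,1,0,0,1,0,0,0,-1], [0,1,2,1,-1,1,0,-1,0,-1],
    [0,-1,1,0,1,2,1,0,-1,-1]])
    [(3,[(23,[(25,663), (30,2609), (31,1125), (2,21422), (4,6561), (9,1628)]), (34,[(24,4867),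
    (25,2169), (38,31574), (31,5687), (30,90737), (4,78951)]), (35,[(27,2938), (25,2701),
    (19,905), (35,932), (31,23540), (2,33097)]), (19,[(19,53), (25,949), (2,29), (29,23008)]),
    (30,[(25,4133), (30,40060), (1,91776), (36,112152)]), (9,[(38,30913), (31,37182), (14,5551)]),
    (29,[(38,50306), (31,8013), (29,117188)]), (11,[(20,24102), (39,112598)]), (24,[(3,4237),
    (36,26871)]), (4,[(4,69889)]), (5,[(32,47067)]), (20,[(20,219)]), (36,[(39,37706)])]),
    (36,[(35,[(20,3383), (35,21137), (30,24986), (31,14290), (1,160828), (32,6675), (11,1816)]),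
    (36,[(26,12864), (25,1071), (24,10239), (39,3895), (31,499), (30,15543), (1,42951)]),
    (34,[(23,2540), (18,19578), (39,1157), (4,7554), (29,85104)]), (29,[(19,8560), (39,5332),
    (31,16492)]), (30,[(21,4243), (30,11933), (2,42861)]), (17,[(23,1642), (17,280)]),
    (20,[(24,1367), (20,201)]), (25,[(32,2371), (8,3380)]), (2,[(19,18738)]), (4,[(4,31804)]),
    (10,[(33,42239)]), (22,[(32,4059)]), (23,[(23,9)])]), (2,[(31,[(20,2637), (24,1607), (22,255),
    (34,42787), (38,56440), (31,67696), (32,234366)]), (22,[(25,481), (22,1314), (35,3543),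
    (39,10158), (1,6260)]), (21,[(21,962), (19,1255), (30,1565), (4,5139)]), (29,[(19,18014),
    (39,38583), (32,133707), (29,15806)]), (30,[(23,8187), (39,31133), (30,140)]), (35,[(35,61),
    (38,3600), (32,33457)]), (1,[(19,2596), (34,42036)]), (38,[(24,1915), (32,136989)]),
    (2,[(26,8634)]), (12,[(34,91089)]), (23,[(23,1114)])]), (32,[(32,[(27,290), (22,3017),
    (30,34807), (1,177140), (37,51037), (11,19254), (6,39907)]), (39,[(25,1912), (23,4062),
    (22,2648), (21,5725), (35,5390), (31,10931), (30,15842)]), (29,[(19,9300), (38,46759),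
    (31,22919)]), (30,[(26,5258), (37,12061), (5,361)]), (18,[(20,1919), (31,5084)]),
    (35,[(24,975), (37,4414)]), (1,[(27,16384)]), (6,[(8,71200)]), (21,[(25,144)]),
    (23,[(38,14457)])]), (38,[(30,[(19,118), (38,949), (35,1838), (30,568), (29,39470),
    (11,26051)]), (1,[(19,239), (24,321), (38,6421), (35,6360)]), (7,[(38,19833), (34,22581),
    (9,46917)]), (31,[(34,11466), (31,4167), (11,23985)]), (29,[(19,433), (8,30833)]),
    (4,[(34,63712)])]), (34,[(30,[(31,1007), (30,3679), (39,1650), (8,31750)]), (1,[(34,6385),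
    (39,7923), (35,455)]), (29,[(18,7315), (29,4263)]), (31,[(21,1141), (33,6453)]),
    (7,[(12,63750)])]), (29,[(33,[(20,3584), (35,20425)]), (8,[(8,113257)]), (11,[(35,21717)]),
    (17,[(24,172)]), (18,[(21,750)]), (19,[(19,985)]), (37,[(39,24619)])]), (1,[(1,[(18,1519),
    (17,3189)]), (4,[(19,5300), (37,25064)]), (7,[(19,22845)]), (17,[(25,539)]),
    (18,[(31,2319)])]), (31,[(4,[(37,22555)]), (8,[(33,13555)]), (18,[(31,137)])]),
    (30,[(37,[(37,3108)])])]
    [([-1,-2,0,0,2,2,2,0,-2],20,181), ([-1,-2,0,0,2,2,2,0,-2],34,613),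
    ([-1,0,-2,0,0,-2,0,2,2,2],39,252), ([-1,0,-2,0,0,-2,0,2,2,2],35,79),
    ([-1,0,0,0,0,0,0,0,2],17,4037), ([-1,0,0,0,0,2],18,3220), ([-1,0,0,0,2],25,945),
    ([-1,0,0,0,0,0,0,2],22,3904), ([-1,0,0,0,0,0,0,2],21,877), ([-1,0,0,0,0,0,0,2],19,694),
    ([-1,0,0,0,2],17,2917), ([-1,0,0,0,2],21,1795), ([-1,0,0,0,0,0,0,0,2],19,9),
    ([-1,0,0,0,2],22,3996), ([-1,0,0,0,0,2],24,705), ([-1,0,0,0,0,2],38,12166),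
    ([-1,0,0,0,0,0,0,0,2],34,6984), ([-1,0,0,0,2],39,2564), ([-1,0,0,0,0,0,0,2],39,13786),
    ([-1,0,0,0,0,2],2,973), ([-1,0,0,0,0,0,0,0,2],33,7852), ([-1,0,0,0,0,2],37,1291),
    ([-1,0,0,0,0,2],32,8420), ([-1,0,0,0,0,0,0,2],32,16014), ([-1,2],36,10248),
    ([-1,0,0,0,0,2],36,8874), ([-1,0,0,0,0,0,2],29,17451), ([-1,0,0,0,0,0,0,0,2],32,16098),
    ([-1,0,2],32,9219), ([-1,0,0,0,2],11,38247), ([-1,0,0,0,0,0,0,2],11,7089)]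
    26536 573964 403901 (by decide +kernel) (by norm_num) (by norm_num)
    (List.forall_mem_append.2 ⟨shortForms_nonneg h hs, ?_⟩)
  simp only [entries, List.forall_mem_cons, Cubic.evL, Int.cast_neg, Int.cast_one,
    Int.cast_zero, Int.cast_ofNat]
  exact ⟨by linarith [l30], by linarith [h30.2.2 1 (by decide) (by decide)],
    by linarith [h30.2.2 2 (by decide) (by decide)], by linarith [l13], by linarith [h13.2.1],
    by linarith [h13.2.2 0 (by decide) (by decide)],
    by linarith [h13.2.2 2 (by decide) (by decide)], by linarith [l23], by linarith [h23.2.1],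
    by linarith [h23.2.2 0 (by decide) (by decide)],
    by linarith [h23.2.2 1 (by decide) (by decide)], by simp⟩

theorem det3_ge_short_m3 {Q : Fin 4 → Fin 4 → ℝ} (h : ZeroSumMat Q) (hs : Short Q)
    (h30 : Reduced Q 3 0) (h31 : Reduced Q 3 1) (h23 : Reduced Q 2 3) :
    19 / 27 ≤ det3 (Q 0) (Q 1) (Q 2) := by
  have r0 := h.row 0
  have r1 := h.row 1
  have r2 := h.row 2
  have c0 := h.col 0
  have c1 := h.col 1
  have c2 := h.col 2
  have c3 := h.col 3
  have l30 : 1 ≤ Q 0 0 + Q 3 0 := h30.1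
  have l31 : 1 ≤ Q 1 1 + Q 3 1 := h31.1
  have l23 : 1 ≤ Q 3 3 + Q 2 3 := h23.1
  refine det3_ge_of_check h.row (h.abs_le_two hs) (L :=
    shortForms ++ [[-1,0,0,0,1,0,0,1], [0,-1,-1,-1,1,0,1,1,0,1], [0,0,-1,-1,1,0,1,1,0,1],
    [0,-1,0,-1,1,0,1,1,0,1], [-1,1,0,0,0,0,0,0,1], [0,1,0,1,-1,-1,-1,0,1,1],
    [0,1,0,1,0,-1,-1,0,1,1], [0,1,0,1,-1,0,-1,0,1,1], [-1,0,0,1,0,0,1], [0,0,1,0,0,1,0,0,0,-1],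
    [0,1,2,1,-1,1,0,-1,0,-1], [0,-1,1,0,1,2,1,0,-1,-1]])
    [(37,[(35,[(28,788), (35,38745), (3,80986), (33,123758), (9,30760)]), (37,[(26,4565),
    (24,797), (25,3519), (40,60149), (31,37966)]), (22,[(25,433), (39,553), (34,7270),
    (33,33252)]), (40,[(30,28560), (3,94353), (29,82493), (8,13188)]), (18,[(26,1889), (1,7029),
    (5,50)]), (28,[(25,1339), (2,12343), (29,29829)]), (31,[(19,1761), (31,36277), (36,5469)]),
    (32,[(32,1740), (36,34143), (4,18532)]), (24,[(34,4598), (3,4679)]), (33,[(39,36980),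
    (33,2571)]), (4,[(36,12763)]), (6,[(6,19690)]), (8,[(29,249997)]), (17,[(17,1171)])]),
    (4,[(40,[(25,1887), (23,4920), (40,15282), (39,50965), (36,12845), (35,116621), (32,29301)]),
    (31,[(21,2985), (39,127412), (31,40148), (3,85856), (29,64389)]), (36,[(25,5440), (23,10023),
    (39,56583), (36,17888), (35,33098)]), (32,[(25,1597), (24,8529), (32,8331)]), (33,[(35,66023),
    (3,134650), (29,564809)]), (4,[(28,2691), (29,58457)]), (19,[(28,141), (22,1120)]),
    (5,[(9,128045)]), (8,[(23,7998)]), (24,[(38,10342)]), (26,[(26,231)]), (35,[(35,6922)])]),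
    (3,[(25,[(24,919), (22,1972), (25,528), (40,27143), (36,6046), (31,14112), (35,18818)]),
    (31,[(23,857), (22,6686), (24,2252), (39,67394)]), (35,[(40,118588), (36,3232), (35,38272),
    (30,75657)]), (39,[(24,1090), (39,52380), (40,5484)]), (1,[(23,7134), (32,102323)]),
    (19,[(19,73), (36,736)]), (40,[(40,65618), (32,12840)]), (23,[(26,423)]), (24,[(33,7205)]),
    (30,[(36,53036)])]), (29,[(19,[(19,1870), (35,374), (36,17499), (31,2127), (32,6993),
    (2,4134), (29,7347)]), (40,[(17,5169), (40,15466), (36,138616), (32,17784), (29,46177)]),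
    (39,[(25,1776), (17,2702), (29,6097), (10,8988)]), (18,[(28,613), (36,6004), (31,7930)]),
    (29,[(25,1027), (32,49263)]), (36,[(36,13077), (32,49719)]), (2,[(2,50949)]),
    (11,[(23,3635)]), (17,[(24,83)]), (28,[(33,49956)])]), (33,[(39,[(19,1139), (22,3818),
    (39,31442), (32,95577), (35,37215), (33,29221)]), (22,[(22,1907), (31,347), (32,15382),
    (36,7781)]), (21,[(24,153), (31,7663), (35,13919)]), (32,[(40,11494), (36,79965), (7,68185)]),
    (33,[(28,2470), (23,754), (36,13558)]), (5,[(40,276)]), (9,[(36,14774)]), (20,[(20,68)]),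
    (25,[(26,69)]), (28,[(28,11)])]), (2,[(22,[(19,12), (31,82), (36,8052), (2,3781)]),
    (39,[(25,4963), (30,33179), (34,20587), (36,6712)]), (21,[(21,454), (19,866), (31,4845)]),
    (1,[(35,59332), (31,16197)]), (8,[(36,133156)]), (25,[(32,4945)]), (31,[(35,260)])]),
    (1,[(19,[(32,8996), (35,291), (1,2632)]), (5,[(22,4710), (32,39648)]), (11,[(32,138775),
    (11,19081)]), (18,[(22,882), (35,1167)]), (40,[(25,7331), (30,4421)]), (21,[(39,56)])]),
    (40,[(12,[(35,10268), (36,25302)]), (34,[(40,754), (31,16401)]), (30,[(35,4417)])]),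
    (39,[(18,[(18,43)]), (25,[(36,256)]), (30,[(35,9029)]), (32,[(34,4252)])]),
    (16,[(16,[(25,20932), (30,23364)]), (7,[(35,11596)])])]
    [([-1,2],28,1712), ([-1,0,0,0,2],28,999), ([-1,2],18,2804), ([-1,0,0,0,0,0,0,0,2],22,697),
    ([-1,0,0,0,2],19,1361), ([-1,0,0,0,2],22,2697), ([-1,0,0,0,0,0,0,2],25,193),
    ([-1,0,2],40,12209), ([-1,0,0,0,0,2],39,13465), ([-1,0,0,0,0,0,0,0,2],30,6093),
    ([-1,0,0,0,0,0,0,0,2],35,11024), ([-1,0,0,0,0,0,0,0,2],36,5650), ([-1,2],36,8072),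
    ([-1,0,0,0,0,0,0,2],31,21682), ([-1,0,0,0,0,0,0,2],35,10126), ([-1,0,0,0,2],36,12539),
    ([-1,0,0,0,0,0,0,2],32,14746), ([-1,2],31,12375), ([-1,0,0,0,2],35,8615), ([-1,2],35,10230),
    ([-1,0,0,0,0,0,0,0,2],4,2756), ([-1,0,0,0,0,2],37,20438), ([-1,0,0,0,0,0,0,0,2],6,23256),
    ([-1,0,0,0,0,0,0,0,2],12,1028), ([-1,0,0,0,0,0,0,2],9,7422)]
    37143 803549 565461 (by decide +kernel) (by norm_num) (by norm_num)
    (List.forall_mem_append.2 ⟨shortForms_nonneg h hs, ?_⟩)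
  simp only [entries, List.forall_mem_cons, Cubic.evL, Int.cast_neg, Int.cast_one,
    Int.cast_zero, Int.cast_ofNat]
  exact ⟨by linarith [l30], by linarith [h30.2.1],
    by linarith [h30.2.2 1 (by decide) (by decide)],
    by linarith [h30.2.2 2 (by decide) (by decide)], by linarith [l31], by linarith [h31.2.1],
    by linarith [h31.2.2 0 (by decide) (by decide)],
    by linarith [h31.2.2 2 (by decide) (by decide)], by linarith [l23], by linarith [h23.2.1],
    by linarith [h23.2.2 0 (by decide) (by decide)],
    by linarith [h23.2.2 1 (by decide) (by decide)], by simp⟩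

theorem det3_ge_short_m7 {Q : Fin 4 → Fin 4 → ℝ} (h : ZeroSumMat Q) (hs : Short Q)
    (h30 : Reduced Q 3 0) (h31 : Reduced Q 3 1) (h32 : Reduced Q 3 2) :
    19 / 27 ≤ det3 (Q 0) (Q 1) (Q 2) := by
  have r0 := h.row 0
  have r1 := h.row 1
  have r2 := h.row 2
  have c0 := h.col 0
  have c1 := h.col 1
  have c2 := h.col 2
  have c3 := h.col 3
  have l30 : 1 ≤ Q 0 0 + Q 3 0 := h30.1
  have l31 : 1 ≤ Q 1 1 + Q 3 1 := h31.1
  have l32 : 1 ≤ Q 2 2 + Q 3 2 := h32.1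
  refine det3_ge_of_check h.row (h.abs_le_two hs) (L :=
    shortForms ++ [[-1,0,0,0,1,0,0,1], [0,-1,-1,-1,1,0,1,1,0,1], [0,0,-1,-1,1,0,1,1,0,1],
    [0,-1,0,-1,1,0,1,1,0,1], [-1,1,0,0,0,0,0,0,1], [0,1,0,1,-1,-1,-1,0,1,1],
    [0,1,0,1,0,-1,-1,0,1,1], [0,1,0,1,-1,0,-1,0,1,1], [-1,0,1,0,0,1], [0,0,1,1,0,1,1,-1,-1,-1],
    [0,0,1,1,0,1,1,0,-1,-1], [0,0,1,1,0,1,1,-1,0,-1]])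
    [(4,[(32,[(26,11619), (28,433), (22,1265), (32,19722), (31,37965), (35,33792), (40,103164),
    (29,120263)]), (35,[(25,1413), (18,10855), (19,4703), (35,15426), (40,54887), (39,30182)]),
    (27,[(31,2142), (39,1041), (4,535), (33,3061), (29,11220)]), (36,[(26,12868), (36,33227),
    (31,66918), (2,105390), (29,139556)]), (40,[(26,4149), (40,24980), (33,54223), (29,239743)]),
    (19,[(25,2995), (19,189), (22,2269)]), (28,[(28,165), (39,2111), (16,8733)]), (37,[(24,19072),
    (4,163258), (12,223174)]), (22,[(25,2082), (2,17933)]), (31,[(29,26806), (12,64212)]),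
    (6,[(39,125504)]), (8,[(8,116989)]), (18,[(24,974)]), (23,[(23,661)]), (25,[(25,25)]),
    (26,[(26,266)])]), (33,[(31,[(27,1309), (25,58), (31,3988), (32,1889), (34,101022),
    (33,35826), (6,25287)]), (22,[(22,844), (39,18811), (32,5680), (36,8807), (33,11195),
    (11,12070)]), (40,[(34,31839), (35,45006), (32,20457), (15,56653), (37,72353), (11,6751)]),
    (39,[(28,133), (17,2355), (30,198179), (35,58576), (11,10790)]), (25,[(25,292), (36,2913),
    (32,7312)]), (37,[(36,51458), (32,1514), (35,27466)]), (19,[(19,275), (23,246)]),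
    (1,[(3,139895)]), (5,[(24,5969)]), (8,[(17,1830)]), (9,[(20,2227)]), (12,[(12,5143)]),
    (21,[(21,227)]), (26,[(32,584)]), (27,[(33,8833)]), (30,[(34,98747)]), (36,[(38,26723)])]),
    (29,[(19,[(21,750), (25,293), (19,1008), (39,997), (35,4325), (40,3349), (31,5030),
    (32,7478)]), (29,[(27,1085), (18,19235), (39,47399), (31,25472), (36,71515), (2,8879),
    (29,73931)]), (31,[(22,2220), (31,745), (34,48117), (40,16255)]), (36,[(25,4762), (30,113727),
    (40,77324), (39,31796)]), (28,[(24,2288), (38,13379), (11,1875)]), (35,[(24,1702), (39,4275),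
    (2,52517)]), (5,[(34,86478), (37,114448)]), (18,[(25,698), (9,11088)]), (39,[(17,13996),
    (3,46877)]), (2,[(22,2881)]), (21,[(37,9606)]), (25,[(25,475)]), (30,[(40,2315)])]),
    (37,[(36,[(25,5548), (23,6578), (19,780), (35,1559), (38,51428), (32,1276), (2,68618),
    (8,70808)]), (22,[(28,705), (27,366), (19,29), (30,2216), (40,457), (11,5322)]),
    (40,[(39,1854), (32,47085), (1,45375), (12,4617), (11,12797)]), (25,[(25,543), (32,8204),
    (35,11161), (39,9596)]), (31,[(26,7921), (31,4494), (1,29640), (37,19721)]), (35,[(27,15582),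
    (30,121661), (37,43219)]), (37,[(39,27637), (32,17482)]), (19,[(19,22)]), (20,[(39,4514)]),
    (23,[(23,104)]), (30,[(38,124466)])]), (30,[(1,[(25,13823), (22,13823), (30,41357)]),
    (34,[(19,11338), (22,11338), (3,31305)]), (38,[(19,11339), (25,11339), (2,31307)]),
    (8,[(8,44899)]), (9,[(25,1371)]), (11,[(11,44896)]), (12,[(22,1371)])]), (34,[(2,[(25,13823),
    (19,13825), (34,41359)]), (38,[(22,11338), (25,11339), (1,31306)]), (5,[(5,44899)]),
    (6,[(25,1371)]), (11,[(19,1372)]), (12,[(12,44899)])]), (38,[(3,[(22,13824), (19,13823),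
    (38,41359)]), (5,[(22,1371)]), (6,[(6,44900)]), (8,[(19,1372)]), (9,[(9,44897)])]),
    (19,[(19,[(19,40)]), (22,[(25,300)])]), (17,[(21,[(23,291)])]), (18,[(20,[(24,291)])]),
    (22,[(22,[(22,40)])]), (25,[(25,[(25,40)])])]
    []
    95659 573964 403901 (by decide +kernel) (by norm_num) (by norm_num)
    (List.forall_mem_append.2 ⟨shortForms_nonneg h hs, ?_⟩)
  simp only [entries, List.forall_mem_cons, Cubic.evL, Int.cast_neg, Int.cast_one,
    Int.cast_zero, Int.cast_ofNat]
  exact ⟨by linarith [l30], by linarith [h30.2.1],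
    by linarith [h30.2.2 1 (by decide) (by decide)],
    by linarith [h30.2.2 2 (by decide) (by decide)], by linarith [l31], by linarith [h31.2.1],
    by linarith [h31.2.2 0 (by decide) (by decide)],
    by linarith [h31.2.2 2 (by decide) (by decide)], by linarith [l32], by linarith [h32.2.1],
    by linarith [h32.2.2 0 (by decide) (by decide)],
    by linarith [h32.2.2 1 (by decide) (by decide)], by simp⟩

theorem det3_ge_short_tr {Q : Fin 4 → Fin 4 → ℝ} (h : ZeroSumMat Q) (hs : Short Q)
    (h01 : Reduced Q 0 1) (h12 : Reduced Q 1 2) (h02 : Reduced Q 0 2) :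
    19 / 27 ≤ det3 (Q 0) (Q 1) (Q 2) := by
  have r0 := h.row 0
  have r1 := h.row 1
  have r2 := h.row 2
  have c0 := h.col 0
  have c1 := h.col 1
  have c2 := h.col 2
  have c3 := h.col 3
  have l01 : 1 ≤ Q 1 1 + Q 0 1 := h01.1
  have l12 : 1 ≤ Q 2 2 + Q 1 2 := h12.1
  have l02 : 1 ≤ Q 2 2 + Q 0 2 := h02.1
  refine det3_ge_of_check h.row (h.abs_le_two hs) (L :=
    shortForms ++ [[-1,-1,0,0,1,1,1], [0,0,1,1,-1], [0,0,1,1,-1,1], [0,0,1,1,-1,0,1],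
    [-1,0,0,0,0,-1,0,1,1,1], [0,0,0,0,1,0,1,0,-1], [0,0,0,0,1,0,1,1,-1], [0,0,0,0,1,0,1,0,-1,1],
    [-1,0,-1,0,0,0,0,1,1,1], [0,1,0,1,0,0,0,-1], [0,1,0,1,0,0,0,-1,1], [0,1,0,1,0,0,0,-1,0,1]])
    [(1,[(39,[(28,40387), (19,25), (17,32583), (33,89160), (36,235199), (35,8333), (32,307887),
    (37,230130)]), (18,[(17,2014), (33,520), (37,32953), (36,24622), (32,7800), (2,15741)]),
    (32,[(28,25504), (17,944), (32,96755), (7,66057), (0,113259)]), (2,[(19,5174), (40,467188),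
    (3,259905), (5,80657)]), (14,[(19,12084), (14,75434), (3,208528), (0,419030)]),
    (31,[(27,12978), (19,27654), (31,240898), (36,526104)]), (3,[(19,28688), (36,309918)]),
    (35,[(5,1309), (10,291)]), (40,[(27,21263), (23,129)]), (0,[(36,565812)]), (17,[(17,134)]),
    (20,[(20,29)])]), (29,[(20,[(20,1880), (40,39431), (4,34873), (3,76089), (5,30443)]),
    (10,[(14,575927), (35,527900), (3,241592), (31,324676)]), (27,[(37,2842), (35,614), (32,1817),
    (31,10716)]), (29,[(28,12073), (15,27767), (33,734), (32,179880)]), (14,[(14,87790),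
    (37,104774), (31,19915)]), (34,[(39,263266), (32,97359), (7,2853)]), (36,[(18,31365),
    (36,58522), (11,87016)]), (19,[(28,1064), (26,91)]), (33,[(4,176597), (40,122090)]),
    (7,[(16,110512)]), (9,[(40,157733)]), (17,[(24,1130)]), (28,[(38,43798)]),
    (39,[(39,78397)])]), (37,[(35,[(25,1362), (19,16127), (31,213182), (35,270726), (39,288185),
    (32,7096), (13,142579)]), (36,[(21,11609), (23,8223), (36,22615), (8,218792)]),
    (39,[(27,14301), (28,21908), (31,14128), (13,127293)]), (19,[(27,816), (14,10903),
    (10,10586)]), (37,[(18,147), (24,96), (16,2549)]), (13,[(14,305506), (2,271007)]),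
    (32,[(32,2845), (12,322346)]), (5,[(10,227605)]), (7,[(15,278935)]), (8,[(17,19024)]),
    (22,[(22,78)]), (31,[(31,111475)]), (40,[(40,13591)])]), (33,[(20,[(19,4425), (20,1385),
    (36,28), (35,192), (38,21273), (34,2354)]), (23,[(26,806), (17,830), (39,25056), (2,55990),
    (7,4395)]), (32,[(26,49324), (33,208342), (32,6971), (39,277330), (2,276048)]),
    (39,[(34,115233), (38,375009), (13,380157)]), (4,[(19,2033), (11,119719)]), (10,[(25,21881),
    (36,128892)]), (27,[(27,10), (34,417)]), (31,[(22,154), (33,1884)]), (25,[(25,1221)]),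
    (35,[(35,104637)])]), (4,[(7,[(26,20469), (35,235710), (40,60306), (7,417049), (0,578479)]),
    (2,[(27,57218), (35,191206), (3,950207), (31,612888)]), (32,[(32,5366), (35,10956),
    (36,55751), (8,2514)]), (3,[(26,20297), (28,51696), (39,478272)]), (13,[(16,224447),
    (36,1235)]), (35,[(35,9189), (8,7)]), (0,[(26,30910)]), (16,[(39,68738)]),
    (17,[(31,11293)])]), (38,[(19,[(23,2824), (38,5010), (13,10183)]), (32,[(27,9241), (16,62717),
    (36,12986)]), (35,[(31,1141), (35,26017), (7,119285)]), (23,[(28,662), (39,22528)]),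
    (36,[(2,76), (36,2497)]), (38,[(38,170901), (13,57962)]), (7,[(31,27837)]), (20,[(24,26)])]),
    (34,[(30,[(18,14174), (31,24648), (3,89656), (10,29137)]), (32,[(19,4359), (14,164015),
    (35,6804)]), (13,[(23,15208), (35,1338)]), (26,[(20,3177), (19,2600)]), (15,[(23,8594)]),
    (36,[(39,1219)])]), (2,[(32,[(15,104066), (39,211347), (3,281159), (7,3939)]),
    (31,[(26,26987), (40,133531), (2,29827)]), (2,[(2,2985)]), (7,[(26,66024)]),
    (15,[(30,232927)]), (23,[(23,9517)])]), (36,[(21,[(21,7), (25,20)]), (40,[(16,148569),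
    (3,191627)]), (10,[(25,411)]), (32,[(32,7327)])]), (10,[(12,[(21,29437), (12,686910)]),
    (25,[(25,32), (10,306)])]), (7,[(26,[(8,15264), (7,73667)]), (32,[(32,1625)])]),
    (13,[(23,[(28,181), (24,3228)])]), (16,[(16,[(25,10148), (40,83371)])]), (32,[(8,[(32,227)]),
    (26,[(26,1773)])]), (20,[(20,[(20,54)])]), (24,[(35,[(35,368)])])]
    []
    80296 3086917 2172275 (by decide +kernel) (by norm_num) (by norm_num)
    (List.forall_mem_append.2 ⟨shortForms_nonneg h hs, ?_⟩)
  simp only [entries, List.forall_mem_cons, Cubic.evL, Int.cast_neg, Int.cast_one,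
    Int.cast_zero, Int.cast_ofNat]
  exact ⟨by linarith [l01], by linarith [h01.2.1],
    by linarith [h01.2.2 2 (by decide) (by decide)],
    by linarith [h01.2.2 3 (by decide) (by decide)], by linarith [l12], by linarith [h12.2.1],
    by linarith [h12.2.2 0 (by decide) (by decide)],
    by linarith [h12.2.2 3 (by decide) (by decide)], by linarith [l02], by linarith [h02.2.1],
    by linarith [h02.2.2 1 (by decide) (by decide)],
    by linarith [h02.2.2 3 (by decide) (by decide)], by simp⟩

theorem det3_ge_cyc_10 {Q : Fin 4 → Fin 4 → ℝ} (h : ZeroSumMat Q) (hs : Short Q)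
    (h01 : Reduced Q 0 1) (h12 : Reduced Q 1 2) (h20 : Reduced Q 2 0) (hm : 0 ≤ Q 1 0) :
    19 / 27 ≤ det3 (Q 0) (Q 1) (Q 2) := by
  have r0 := h.row 0
  have r1 := h.row 1
  have r2 := h.row 2
  have c0 := h.col 0
  have c1 := h.col 1
  have c2 := h.col 2
  have c3 := h.col 3
  have l01 : 1 ≤ Q 1 1 + Q 0 1 := h01.1
  have l12 : 1 ≤ Q 2 2 + Q 1 2 := h12.1
  have l20 : 1 ≤ Q 0 0 + Q 2 0 := h20.1
  refine det3_ge_of_check h.row (h.abs_le_two hs) (L :=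
    shortForms ++ [[-1,0,0,0,0,-1,0,1,1,1], [-1,1,1,1,0,0,0,-1], [0,0,-1,0,0,0,0,0,1,1],
    [0,1,-1,0,0,0,0,0,1,1], [0,0,0,0,-1], [0,0,0,0,1,1], [0,0,0,0,1,0,1]])
    [(33,[(0,[(27,32616), (23,1197), (29,391021), (30,711887), (32,343699), (2,275640),
    (35,168230), (33,440803)]), (23,[(27,1636), (24,1456), (29,11646), (4,36604), (35,11433),
    (12,11645), (33,11430)]), (33,[(27,17718), (29,91470), (30,93172), (32,42871), (35,91467),
    (33,91469)]), (34,[(27,7214), (30,1712), (4,170095), (2,202660), (35,106483), (12,415578)]),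
    (29,[(27,6070), (32,42872), (35,184644)]), (30,[(30,93172), (2,91470), (31,93172)]),
    (24,[(27,4575), (32,5358)]), (2,[(31,91466)]), (12,[(32,42872)])]), (34,[(2,[(23,9990),
    (30,79923), (29,79922), (31,111193), (34,79865), (0,153033)]), (29,[(27,6071), (4,292836),
    (32,79866), (35,106483), (0,24280)]), (12,[(30,292838), (32,79866), (34,79864), (0,183024)]),
    (23,[(27,1636), (4,36605), (35,13310)]), (30,[(30,93174), (31,93175), (35,106484)]),
    (34,[(27,6292), (4,212977), (31,48592)]), (0,[(27,7269)]), (24,[(32,9983)]),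
    (31,[(35,75212)])]), (0,[(29,[(24,3036), (23,16125), (29,48562), (30,212396), (32,24282),
    (4,24278), (2,418299), (0,310675)]), (30,[(27,23513), (30,94940), (2,189680), (31,94944),
    (35,322789), (0,47266)]), (2,[(27,260), (31,71203), (0,169300)]), (23,[(23,1637),
    (31,13089)]), (31,[(35,38605)])]), (27,[(2,[(23,1484), (24,785), (30,11646), (29,213),
    (12,6284)]), (35,[(27,1483), (24,878), (30,220), (31,11867), (12,7020)])]),
    (23,[(2,[(23,3120), (29,24957), (31,24957)]), (35,[(23,1455), (29,23294), (31,11646)])]),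
    (29,[(35,[(29,93176), (31,93176)]), (2,[(30,93176)])])]
    []
    16604 292838 206072 (by decide +kernel) (by norm_num) (by norm_num)
    (List.forall_mem_append.2 ⟨shortForms_nonneg h hs, ?_⟩)
  simp only [entries, List.forall_mem_cons, Cubic.evL, Int.cast_neg, Int.cast_one,
    Int.cast_zero, Int.cast_ofNat]
  exact ⟨by linarith [l12], by linarith [l20], by linarith [h20.2.1],
    by linarith [h20.2.2 1 (by decide) (by decide)], by linarith [hm],
    by linarith [h.diag 1, h.low 1 3 (by decide)], by linarith [h.diag 1, h.low 1 2 (by decide)],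
    by simp⟩

theorem det3_ge_cyc_03 {Q : Fin 4 → Fin 4 → ℝ} (h : ZeroSumMat Q) (hs : Short Q)
    (h01 : Reduced Q 0 1) (h12 : Reduced Q 1 2) (h20 : Reduced Q 2 0) (hm : 0 ≤ Q 0 3) :
    19 / 27 ≤ det3 (Q 0) (Q 1) (Q 2) := by
  have r0 := h.row 0
  have r1 := h.row 1
  have r2 := h.row 2
  have c0 := h.col 0
  have c1 := h.col 1
  have c2 := h.col 2
  have c3 := h.col 3
  have l01 : 1 ≤ Q 1 1 + Q 0 1 := h01.1
  have l12 : 1 ≤ Q 2 2 + Q 1 2 := h12.1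
  have l20 : 1 ≤ Q 0 0 + Q 2 0 := h20.1
  refine det3_ge_of_check h.row (h.abs_le_two hs) (L :=
    shortForms ++ [[-1,-1,0,0,1,1,1], [0,0,1,1,-1], [0,0,1,1,-1,1], [0,0,1,1,-1,0,1],
    [-1,0,0,0,0,-1,0,1,1,1], [0,0,0,0,1,0,1,1,-1], [0,0,0,0,1,0,1,0,-1,1], [-1,1,1,1,0,0,0,-1],
    [0,0,-1,0,0,0,0,0,1,1], [0,1,-1,0,0,0,0,0,1,1], [0,0,-1,1,0,0,0,0,1,1], [0,0,0,-1], [0,1,0,1],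
    [0,0,0,1,0,0,1], [0,0,1,1], [0,0,0,1,0,0,0,0,0,1]])
    [(38,[(38,[(29,17741), (33,16550), (36,7636), (4,56670), (31,27767), (35,92), (1,75699),
    (30,45272), (40,84153)]), (31,[(36,84612), (29,112595), (3,18129), (4,111227), (35,47224)]),
    (1,[(18,3152), (32,165347), (39,97418), (35,138190)]), (40,[(26,23014), (32,46234),
    (39,52302), (35,85534)]), (3,[(22,16279), (33,13434), (13,107354)]), (4,[(27,10755),
    (28,12338), (26,10106)]), (21,[(23,901), (21,62), (39,861)]), (29,[(27,3981), (20,18795)]),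
    (10,[(12,10508)]), (11,[(24,64)]), (23,[(23,173)]), (32,[(32,34)]), (33,[(42,14415)])]),
    (29,[(29,[(26,2998), (21,27896), (22,2731), (33,10141), (34,5110), (35,3510)]),
    (39,[(26,4069), (27,11147), (39,9579), (42,79164), (43,85455)]), (32,[(27,2722), (21,24559),
    (18,427), (36,219208)]), (35,[(26,22818), (20,2847), (36,106677), (35,24911)]), (28,[(28,146),
    (21,2911), (20,699)]), (24,[(24,12), (33,24905)]), (31,[(26,10453), (31,1097)]),
    (3,[(14,98655)]), (7,[(18,2357)]), (19,[(34,16670)]), (25,[(25,765)]), (33,[(44,542965)]),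
    (41,[(41,155418)])]), (3,[(34,[(27,2037), (24,5388), (34,12102), (32,44855), (43,233456)]),
    (28,[(23,1482), (32,3621), (39,7095)]), (35,[(36,59069), (2,70436), (35,725)]),
    (3,[(39,25952), (3,18296)]), (18,[(23,2552), (31,2375)]), (19,[(26,266), (20,1234)]),
    (24,[(24,272), (1,14112)]), (32,[(33,25375), (32,69771)]), (4,[(27,36686)]),
    (16,[(16,38357)]), (20,[(20,25)]), (21,[(21,883)]), (22,[(22,92)]), (31,[(31,13409)])]),
    (36,[(36,[(22,8367), (36,33997), (16,45009), (35,1149), (41,46844)]), (31,[(27,11404),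
    (19,4578), (35,23197), (31,32814)]), (33,[(33,16287), (32,211146), (2,27922), (39,137835)]),
    (34,[(26,5060), (20,14900), (24,1470), (35,7765)]), (18,[(18,1305), (2,37357)]),
    (4,[(27,24458)]), (9,[(9,28665)]), (13,[(40,17073)]), (32,[(32,87475)]), (35,[(35,40909)]),
    (39,[(39,11725)])]), (4,[(28,[(28,974), (26,457), (35,5273), (32,10520), (34,872),
    (43,20711)]), (26,[(26,884), (34,5428), (43,29370)]), (35,[(35,158), (31,35337), (39,91833)]),
    (24,[(24,13), (31,5503)]), (2,[(34,168450)]), (20,[(20,926)]), (22,[(22,212)]),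
    (27,[(27,1468)]), (39,[(39,14950)])]), (1,[(19,[(27,522), (20,768), (32,10663)]),
    (35,[(27,12332), (18,7037), (31,144467)]), (17,[(27,217), (1,13596)]), (24,[(28,2051),
    (21,2211)]), (34,[(39,2210), (7,40003)]), (2,[(20,12982)]), (15,[(32,76593)]),
    (18,[(31,4279)]), (26,[(26,163)]), (28,[(28,178)]), (44,[(44,19310)])]), (39,[(31,[(34,43506),
    (32,2144), (31,3724), (12,40430), (40,30275)]), (34,[(20,1802), (34,31495), (32,30956),
    (40,70799)]), (32,[(23,1611), (40,41547)]), (2,[(2,87863)]), (33,[(33,9747)]), (39,[(39,84)]),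
    (44,[(44,5634)])]), (40,[(16,[(16,129651), (43,103045)]), (18,[(31,13440), (40,7473)]),
    (10,[(44,121656)]), (15,[(31,304791)]), (20,[(34,1096)]), (25,[(35,9288)]),
    (32,[(32,9909)])]), (41,[(41,[(33,89480), (32,11192), (41,82005)]), (31,[(20,4110),
    (31,96760)]), (6,[(28,33349)]), (10,[(16,17619)]), (12,[(32,2953)]), (34,[(34,3744)])]),
    (2,[(21,[(21,3168), (16,6315), (34,3024)]), (33,[(27,4794), (32,168194)]),
    (31,[(35,80953)])]), (27,[(34,[(37,1782)])])]
    [([-1,-2,0,0,2,2,2,0,-2],27,5318), ([-1,-2,0,0,2,2,2,0,-2],20,4844),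
    ([-1,-2,0,0,2,2,2,0,-2],18,1901), ([-1,0,0,0,0,0,2],27,7650),
    ([-1,-2,0,0,2,2,2,0,-2],32,27295), ([-1,0,0,0,0,0,2],20,3634),
    ([-1,0,0,0,0,0,0,0,0,2],33,37492), ([-1,0,0,0,0,0,0,0,0,2],35,9923),
    ([-1,0,0,0,0,0,0,0,2],31,20876), ([-1,0,0,0,0,0,2],35,2288), ([-1,0,0,0,0,0,2],32,37537),
    ([-1,0,0,0,0,0,0,0,2],32,10944), ([-1,0,0,0,0,0,2],3,31339),
    ([-1,0,0,0,0,0,0,0,0,2],13,23568)]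
    52068 1124969 791645 (by decide +kernel) (by norm_num) (by norm_num)
    (List.forall_mem_append.2 ⟨shortForms_nonneg h hs, ?_⟩)
  simp only [entries, List.forall_mem_cons, Cubic.evL, Int.cast_neg, Int.cast_one,
    Int.cast_zero, Int.cast_ofNat]
  exact ⟨by linarith [l01], by linarith [h01.2.1],
    by linarith [h01.2.2 2 (by decide) (by decide)],
    by linarith [h01.2.2 3 (by decide) (by decide)], by linarith [l12],
    by linarith [h12.2.2 0 (by decide) (by decide)],
    by linarith [h12.2.2 3 (by decide) (by decide)], by linarith [l20], by linarith [h20.2.1],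
    by linarith [h20.2.2 1 (by decide) (by decide)],
    by linarith [h20.2.2 3 (by decide) (by decide)], by linarith [hm],
    by linarith [h.diag 0, h.low 0 2 (by decide)], by linarith [h.diag 3, h.low 2 3 (by decide)],
    by linarith [h.diag 0, h.low 0 1 (by decide)], by linarith [h.diag 3, h.low 1 3 (by decide)],
    by simp⟩

theorem det3_ge_cyc_30 {Q : Fin 4 → Fin 4 → ℝ} (h : ZeroSumMat Q) (hs : Short Q)
    (h01 : Reduced Q 0 1) (h12 : Reduced Q 1 2) (h20 : Reduced Q 2 0) (hm : 0 ≤ Q 3 0) :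
    19 / 27 ≤ det3 (Q 0) (Q 1) (Q 2) := by
  have r0 := h.row 0
  have r1 := h.row 1
  have r2 := h.row 2
  have c0 := h.col 0
  have c1 := h.col 1
  have c2 := h.col 2
  have c3 := h.col 3
  have l01 : 1 ≤ Q 1 1 + Q 0 1 := h01.1
  have l12 : 1 ≤ Q 2 2 + Q 1 2 := h12.1
  have l20 : 1 ≤ Q 0 0 + Q 2 0 := h20.1
  refine det3_ge_of_check h.row (h.abs_le_two hs) (L :=
    shortForms ++ [[-1,-1,0,0,1,1,1], [0,0,1,1,-1,1], [0,0,1,1,-1,0,1], [-1,0,0,0,0,-1,0,1,1,1],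
    [0,0,0,0,1,0,1,1,-1], [0,0,0,0,1,0,1,0,-1,1], [-1,1,1,1,0,0,0,-1], [0,0,-1,0,0,0,0,0,1,1],
    [0,1,-1,0,0,0,0,0,1,1], [0,0,-1,1,0,0,0,0,1,1], [0,-1,-1,-1,1,0,0,1], [0,0,1,1,0,1,1,-1,-1],
    [0,1,1,1,0,0,0,-1], [0,1,0,1,-1,-1,0,0,1,1], [0,1,1,1,-1]])
    [(30,[(37,[(25,9226), (32,178704), (31,113204), (30,27173), (33,1507), (38,88284),
    (5,32592)]), (29,[(28,9301), (18,4747), (42,103650), (29,38032), (30,47440)]),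
    (32,[(23,13961), (20,3704), (16,42680), (31,23991), (38,23015)]), (33,[(35,63756), (33,23675),
    (4,469), (38,15761), (9,4622)]), (30,[(20,45), (39,237807), (30,22158), (7,77291)]),
    (34,[(35,185859), (39,69302), (34,33570), (3,109409)]), (3,[(24,886), (41,84440)]),
    (4,[(38,30696), (13,290101)]), (18,[(35,18206), (39,32431)]), (21,[(23,2923), (40,22074)]),
    (1,[(25,26561)]), (2,[(20,1904)]), (10,[(35,111789)]), (17,[(17,3402)]), (22,[(22,3433)]),
    (26,[(26,576)]), (38,[(41,2254)])]), (31,[(37,[(27,1652), (26,3118), (20,385), (31,11174),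
    (38,19175), (33,73239)]), (34,[(39,199985), (32,999), (4,109157), (36,84558), (8,128612)]),
    (35,[(28,14552), (18,29120), (31,67431), (38,240137)]), (26,[(3,19340), (4,24002), (2,1260)]),
    (31,[(43,16688), (4,20451)]), (32,[(27,16413), (33,1266)]), (1,[(1,25295)]), (3,[(3,83912)]),
    (17,[(24,730)]), (19,[(39,49950)]), (21,[(21,1532)]), (22,[(22,69)]), (29,[(43,196856)])]),
    (32,[(29,[(27,8522), (29,8718), (38,283610), (41,76068), (34,211229)]), (32,[(23,8554),
    (24,5612), (1,64217), (7,7176)]), (37,[(28,2239), (23,10853), (37,25618), (33,40602)]),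
    (20,[(39,16471), (2,8134)]), (24,[(35,27581), (33,11342)]), (4,[(28,18235)]),
    (13,[(13,114460)]), (18,[(34,264)]), (19,[(19,67)]), (25,[(25,385)]), (26,[(38,4463)]),
    (33,[(35,118762)])]), (38,[(2,[(27,7700), (38,39881), (33,172852), (1,115374), (34,3830)]),
    (35,[(18,10581), (38,27661), (41,22119), (34,149845)]), (29,[(28,10541), (21,4791),
    (38,21729)]), (1,[(28,2686), (38,21004)]), (3,[(33,131882), (10,14555)]), (33,[(43,11223)]),
    (38,[(39,14811)])]), (37,[(37,[(39,18451), (2,10771), (43,28740), (8,19364)]), (1,[(18,12429),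
    (19,6741), (13,72488)]), (2,[(24,6391), (34,34817)]), (4,[(26,25480), (33,70721)]),
    (29,[(27,1272), (29,6848)]), (35,[(14,362458), (41,88810)]), (39,[(19,45545), (13,173787)])]),
    (33,[(33,[(35,104990), (1,3211), (2,39618), (3,174788), (8,24051)]), (18,[(35,20073),
    (43,2592)]), (29,[(21,30593), (3,155175)]), (2,[(20,2636)]), (4,[(27,10229)]),
    (8,[(28,33784)]), (24,[(39,25994)])]), (34,[(2,[(28,80), (1,77552)]), (4,[(26,3034),
    (24,1466)]), (8,[(19,29456), (34,50650)]), (35,[(18,44467), (41,141249)]), (3,[(23,3903)]),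
    (29,[(29,18726)]), (34,[(39,83085)])]), (4,[(18,[(28,1136), (18,610)]), (19,[(24,1036)]),
    (26,[(41,17681)]), (27,[(27,3401)]), (28,[(28,1947)]), (29,[(29,40028)])]),
    (35,[(20,[(23,2226), (20,2298)]), (29,[(14,253063), (29,51952)]), (18,[(27,1704)]),
    (19,[(28,2552)]), (41,[(41,52851)])]), (39,[(10,[(20,60340)]), (14,[(27,39944)]),
    (18,[(18,121)]), (23,[(29,4965)]), (25,[(25,3433)]), (41,[(41,147442)])]), (1,[(1,[(17,15488),
    (41,5830), (13,115836)]), (18,[(18,193), (2,414)])]), (3,[(27,[(25,4091), (20,447)]),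
    (19,[(19,679)]), (22,[(29,8160)]), (24,[(24,247)])]), (8,[(27,[(27,480), (41,33402)]),
    (19,[(19,189)]), (24,[(24,927)]), (28,[(28,2656)])]), (2,[(2,[(22,4515)]), (16,[(25,446)]),
    (20,[(20,76)]), (21,[(24,427)])]), (29,[(7,[(23,4218)]), (21,[(29,3270)])]),
    (43,[(15,[(15,24977)]), (19,[(25,65)])])]
    [([-1,0,-2,0,0,-2,0,2,2,2],28,2423), ([-1,0,-2,0,0,-2,0,2,2,2],24,8138),
    ([-1,-2,0,0,2,2,2,0,-2],24,6023), ([-1,0,0,0,0,0,0,0,2],26,1624),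
    ([-1,-2,0,0,2,2,2,0,-2],34,3603), ([-1,0,-2,0,0,-2,0,2,2,2],34,62672), ([-1,0,0,2],25,729),
    ([-1,0,0,2],24,211), ([-1,0,0,0,0,0,0,0,0,2],20,1385), ([-1,0,0,2],37,6145),
    ([-1,0,0,0,0,0,0,0,0,2],34,3707), ([-1,0,0,0,0,0,0,0,0,2],38,32067),
    ([-1,0,0,0,0,0,0,0,0,2],33,23064), ([-1,0,0,0,0,0,0,0,2],34,5174),
    ([-1,0,0,0,0,0,2],31,12274), ([-1,0,0,2],33,6041), ([-1,0,0,2],10,3929), ([-1,0,0,2],7,19370)]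
    52132 1124969 791645 (by decide +kernel) (by norm_num) (by norm_num)
    (List.forall_mem_append.2 ⟨shortForms_nonneg h hs, ?_⟩)
  simp only [entries, List.forall_mem_cons, Cubic.evL, Int.cast_neg, Int.cast_one,
    Int.cast_zero, Int.cast_ofNat]
  exact ⟨by linarith [l01], by linarith [h01.2.2 2 (by decide) (by decide)],
    by linarith [h01.2.2 3 (by decide) (by decide)], by linarith [l12],
    by linarith [h12.2.2 0 (by decide) (by decide)],
    by linarith [h12.2.2 3 (by decide) (by decide)], by linarith [l20], by linarith [h20.2.1],
    by linarith [h20.2.2 1 (by decide) (by decide)],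
    by linarith [h20.2.2 3 (by decide) (by decide)], by linarith [hm],
    by linarith [h.diag 3, h.low 3 2 (by decide)], by linarith [h.diag 0, h.low 2 0 (by decide)],
    by linarith [h.diag 3, h.low 3 1 (by decide)], by linarith [h.diag 0, h.low 1 0 (by decide)],
    by simp⟩

theorem det3_ge_double_02_03 {Q : Fin 4 → Fin 4 → ℝ} (h : ZeroSumMat Q) (hs : Short Q)
    (l01 : Light Q 0 1) (l23 : Light Q 2 3) (l02 : Light Q 0 2) (l03 : Light Q 0 3)
    (hy : Q 0 0 + Q 1 1 + Q 0 1 + Q 1 0 ≤ 11 / 8) :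
    19 / 27 ≤ det3 (Q 0) (Q 1) (Q 2) := by
  have r0 := h.row 0
  have r1 := h.row 1
  have r2 := h.row 2
  have c0 := h.col 0
  have c1 := h.col 1
  have c2 := h.col 2
  have c3 := h.col 3
  unfold Light at l01 l23 l02 l03
  refine det3_ge_of_check h.row (h.abs_le_two hs) (L :=
    shortForms ++ [[-1,-1,0,0,1,1,1], [-1,0,0,1,0,0,1], [-1,0,-1,0,0,0,0,1,1,1],
    [-1,0,0,0,0,0,1,0,0,1], [11,0,-8,-8,0,-8,-8], [11,0,0,-8,0,0,-8], [11,0,-8,0,0,-8]])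
    [(1,[(24,[(27,685), (28,1169), (24,3617), (22,8482), (1,68236), (3,229069)]),
    (25,[(16,100032), (14,26367), (3,209313), (4,90486), (30,38455), (5,38762)]), (1,[(27,171130),
    (17,154922), (1,1330108), (3,2175597)]), (26,[(26,1207), (33,8759), (17,1590), (32,135604)]),
    (19,[(19,1304), (20,4987), (2,297053)]), (22,[(28,17037), (22,1508), (4,45117)]),
    (7,[(4,387810), (7,952518)]), (17,[(32,46066), (5,123817)]), (18,[(14,148886), (10,196104)]),
    (21,[(28,2885), (21,915)]), (27,[(27,1695), (6,87021)]), (31,[(3,1834809), (9,112212)]),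
    (2,[(2,807656)]), (15,[(30,974310)]), (20,[(20,3103)]), (23,[(32,56323)]), (33,[(33,6420)])]),
    (3,[(2,[(18,100677), (21,89797), (2,837086), (4,2479868)]), (20,[(20,3280), (15,6075),
    (29,235184), (31,40521)]), (24,[(24,3452), (22,5311), (35,5307), (31,64829)]), (25,[(21,3410),
    (18,6492), (25,3912), (16,10692)]), (4,[(23,65758), (4,1043224), (3,315340)]), (28,[(28,1868),
    (21,845), (31,19731)]), (10,[(22,44026), (31,899989)]), (15,[(15,152058), (32,1808643)]),
    (8,[(8,40255)]), (14,[(26,39435)]), (17,[(17,3903)]), (21,[(23,2404)])]), (30,[(2,[(28,13354),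
    (20,66844), (21,26413), (6,30053)]), (26,[(22,12763), (20,8316), (14,60082), (30,19736)]),
    (17,[(23,3338), (22,4776), (32,124932)]), (27,[(27,11429), (25,5898), (35,4698)]),
    (21,[(33,817), (23,5066)]), (28,[(28,11078), (32,59168)]), (31,[(14,660654), (31,229302)]),
    (35,[(35,238), (29,161871)]), (9,[(9,743401)]), (13,[(19,5648)]), (20,[(20,88)]),
    (23,[(23,4478)]), (25,[(30,41481)]), (32,[(32,5913)]), (34,[(34,2080)])]),
    (29,[(29,[(28,73517), (21,85496), (17,32554), (29,757936), (4,482106)]), (11,[(22,112293),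
    (21,3084), (18,122893)]), (19,[(28,1565), (27,9838), (33,21083)]), (26,[(33,5840), (14,59966),
    (2,3859)]), (18,[(23,16488), (31,105905)]), (20,[(20,12703), (32,134734)]), (25,[(27,4352),
    (28,3773)]), (5,[(6,226742)]), (8,[(28,45950)]), (9,[(12,468010)]), (15,[(23,60898)]),
    (17,[(27,3354)]), (22,[(22,4077)])]), (23,[(23,[(33,862), (21,24), (20,90), (24,808),
    (31,5248)]), (26,[(26,114), (28,167), (33,2152), (20,287), (2,770)]), (31,[(2,161852),
    (10,70135), (9,161845)]), (32,[(27,3040), (35,7415), (7,7512)]), (21,[(21,770), (2,9081)]),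
    (14,[(27,1088)]), (18,[(33,393)])]), (27,[(21,[(27,11), (19,73), (21,1238), (2,10307)]),
    (27,[(33,1323), (22,153), (5,3564)]), (4,[(26,8665), (31,92211)]), (16,[(25,7031),
    (16,45704)]), (8,[(35,2685)]), (11,[(11,4)]), (20,[(32,2464)]), (24,[(31,1259)]),
    (33,[(33,105)])]), (32,[(8,[(19,45757), (25,49272), (21,32732), (15,421076), (32,49576)]),
    (16,[(28,2828), (19,31386), (17,103688), (14,239230), (11,1321941)]), (22,[(28,10102),
    (35,286), (2,20967)]), (32,[(18,6193), (21,3)])]), (18,[(33,[(21,738), (20,1012), (17,2714),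
    (18,878)]), (7,[(26,1591), (21,1384), (5,16089)]), (28,[(21,1198), (31,2870)]),
    (13,[(26,7560)])]), (22,[(33,[(33,1145), (19,1213), (22,1151), (12,995)]), (7,[(26,8796),
    (22,607)]), (13,[(21,6747), (2,71)]), (28,[(26,221), (22,33)])])]
    [([-1,-2,0,0,2,2,2,0,-2],27,8918), ([-1,0,0,0,0,0,2],23,8515),
    ([-1,0,0,0,0,0,0,0,0,2],23,3903)]
    481266 3086917 2172275 (by decide +kernel) (by norm_num) (by norm_num)
    (List.forall_mem_append.2 ⟨shortForms_nonneg h hs, ?_⟩)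
  simp only [entries, List.forall_mem_cons, Cubic.evL, Int.cast_neg, Int.cast_one,
    Int.cast_zero, Int.cast_ofNat]
  exact ⟨by linarith [l01], by linarith [l23], by linarith [l02], by linarith [l03],
    by linarith [hy], by linarith [hy, h.low 3 2 (by decide), h.diag 2],
    by linarith [hy, h.low 2 3 (by decide), h.diag 3], by simp⟩

theorem det3_ge_double_02_30 {Q : Fin 4 → Fin 4 → ℝ} (h : ZeroSumMat Q) (hs : Short Q)
    (l01 : Light Q 0 1) (l23 : Light Q 2 3) (l02 : Light Q 0 2) (l30 : Light Q 3 0)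
    (hy : Q 0 0 + Q 1 1 + Q 0 1 + Q 1 0 ≤ 11 / 8) :
    19 / 27 ≤ det3 (Q 0) (Q 1) (Q 2) := by
  have r0 := h.row 0
  have r1 := h.row 1
  have r2 := h.row 2
  have c0 := h.col 0
  have c1 := h.col 1
  have c2 := h.col 2
  have c3 := h.col 3
  unfold Light at l01 l23 l02 l30
  refine det3_ge_of_check h.row (h.abs_le_two hs) (L :=
    shortForms ++ [[-1,-1,0,0,1,1,1], [-1,0,0,1,0,0,1], [-1,0,-1,0,0,0,0,1,1,1],
    [-1,0,0,0,1,0,0,1], [11,0,-8,-8,0,-8,-8], [11,0,0,-8,0,0,-8], [11,0,-8,0,0,-8]])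
    [(1,[(1,[(27,152871), (17,177615), (22,182872), (1,1138350), (11,1405026)]), (24,[(33,15605),
    (22,18349), (18,27865), (24,6790), (4,67684)]), (19,[(19,635), (31,97847), (32,260902),
    (7,100378)]), (2,[(23,7820), (31,2082706), (2,1415169)]), (4,[(28,51430), (4,1228483),
    (10,2967562)]), (3,[(14,1418364), (3,3624138)]), (17,[(35,1870), (5,111535)]),
    (18,[(25,26940), (18,8871)]), (20,[(28,1764), (32,50886)]), (22,[(22,14445), (31,356071)]),
    (7,[(27,6286)]), (12,[(34,71818)]), (21,[(33,22097)])]), (4,[(4,[(26,74845), (18,119858),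
    (17,46526), (4,231014)]), (20,[(27,1847), (29,281248), (31,24656), (8,74195)]),
    (2,[(2,582120), (32,991579), (8,2131970)]), (23,[(18,386), (3,142404), (8,19482)]),
    (26,[(26,2846), (27,7014), (9,106474)]), (7,[(19,2252), (9,917353)]), (16,[(28,22745),
    (17,253896)]), (21,[(21,10729), (12,66101)]), (22,[(22,1708), (31,145783)]), (3,[(24,78320)]),
    (19,[(29,105239)]), (31,[(31,438225)]), (33,[(33,24126)])]), (33,[(33,[(33,51), (19,1292),
    (23,564), (21,2852), (15,21981), (10,9645)]), (22,[(27,282), (22,1648), (25,1333), (3,24430),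
    (11,8530)]), (26,[(26,1079), (28,657), (2,7386), (6,9908)]), (3,[(21,51691), (20,16423),
    (6,149256)]), (27,[(29,14774), (7,14847)]), (30,[(21,42534), (19,30886)]), (9,[(9,3444)]),
    (11,[(29,124987)]), (18,[(18,26)]), (20,[(20,111)]), (24,[(24,135)]), (32,[(32,35235)])]),
    (32,[(26,[(15,16023), (32,37101), (10,34085), (13,15202)]), (2,[(24,32564), (18,131682),
    (14,258371)]), (21,[(23,9392), (21,16007), (29,312162)]), (25,[(19,8320), (18,1488),
    (8,54600)]), (31,[(28,78153), (19,160957), (7,777642)]), (17,[(17,6207), (30,150269)]),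
    (7,[(32,242660)]), (8,[(8,27427)]), (11,[(11,106403)]), (16,[(16,96753)]), (23,[(29,61944)]),
    (24,[(30,99658)]), (27,[(27,973)]), (34,[(34,1505)])]), (29,[(22,[(25,3736), (21,9591),
    (17,48), (19,2134), (15,13969)]), (3,[(20,174463), (25,5714), (29,532278), (3,1162203)]),
    (26,[(26,294), (24,6600), (23,1284), (18,1951)]), (20,[(23,1035), (20,22986), (29,1813)]),
    (28,[(28,7169), (21,3132), (31,176186)]), (29,[(23,131334), (29,1133844)]),
    (7,[(11,1539342)]), (15,[(27,4821)])]), (30,[(30,[(18,79232), (19,116083), (25,106356),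
    (21,97980)]), (2,[(28,152185), (21,38098), (20,66088)]), (3,[(14,1673866), (10,1408252)]),
    (7,[(19,48249), (7,979984)]), (17,[(22,228), (17,4218)]), (26,[(18,26835), (10,7828)]),
    (9,[(9,513753)]), (11,[(11,418796)]), (13,[(24,4974)]), (15,[(15,926088)]),
    (19,[(31,23522)])]), (31,[(21,[(24,202), (21,2956), (22,6000), (25,6193), (16,84900)]),
    (23,[(27,1242), (26,2957), (23,5891), (2,52786)]), (17,[(22,16987), (8,66687), (12,4527)]),
    (16,[(28,60507), (25,15371)]), (18,[(24,734), (31,96647)]), (12,[(24,33141)]),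
    (22,[(22,7028)]), (31,[(31,874872)])]), (3,[(3,[(26,17558), (17,254881), (23,39489),
    (18,160423), (25,113111)]), (2,[(26,175539), (25,433818), (19,84855), (9,370261)]),
    (9,[(26,79626), (25,153316)]), (15,[(23,47688), (15,631997)]), (11,[(19,38673)])]),
    (7,[(21,[(23,2672), (21,326), (15,53560)]), (16,[(20,44915), (16,745679)]), (24,[(18,607),
    (8,84524)]), (26,[(26,1373), (7,223413)]), (14,[(22,13)]), (25,[(25,1075)])]),
    (2,[(2,[(21,68284), (12,108108)]), (20,[(22,497), (20,124)]), (19,[(21,183)]),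
    (22,[(24,666)])])]
    [([-1,-2,0,0,2,2,2,0,-2],1,116369), ([-1,2],33,14316), ([-1,0,0,0,0,0,0,0,2],33,5097),
    ([-1,2],31,124016), ([-1,0,0,0,0,0,0,0,2],4,46400), ([-1,0,0,0,2],30,114606),
    ([-1,0,0,0,0,0,0,0,0,2],32,15591), ([-1,0,0,0,0,0,0,0,2],30,38767),
    ([-1,0,0,0,0,0,2],7,83933), ([-1,2],7,42520)]
    267829 4321684 3041186 (by decide +kernel) (by norm_num) (by norm_num)
    (List.forall_mem_append.2 ⟨shortForms_nonneg h hs, ?_⟩)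
  simp only [entries, List.forall_mem_cons, Cubic.evL, Int.cast_neg, Int.cast_one,
    Int.cast_zero, Int.cast_ofNat]
  exact ⟨by linarith [l01], by linarith [l23], by linarith [l02], by linarith [l30],
    by linarith [hy], by linarith [hy, h.low 3 2 (by decide), h.diag 2],
    by linarith [hy, h.low 2 3 (by decide), h.diag 3], by simp⟩

theorem det3_ge_double_02_12 {Q : Fin 4 → Fin 4 → ℝ} (h : ZeroSumMat Q) (hs : Short Q)
    (l01 : Light Q 0 1) (l23 : Light Q 2 3) (l02 : Light Q 0 2) (l12 : Light Q 1 2)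
    (hy : Q 0 0 + Q 1 1 + Q 0 1 + Q 1 0 ≤ 11 / 8) :
    19 / 27 ≤ det3 (Q 0) (Q 1) (Q 2) := by
  have r0 := h.row 0
  have r1 := h.row 1
  have r2 := h.row 2
  have c0 := h.col 0
  have c1 := h.col 1
  have c2 := h.col 2
  have c3 := h.col 3
  unfold Light at l01 l23 l02 l12
  refine det3_ge_of_check h.row (h.abs_le_two hs) (L :=
    shortForms ++ [[-1,-1,0,0,1,1,1], [-1,0,0,1,0,0,1], [-1,0,-1,0,0,0,0,1,1,1],
    [-1,0,0,0,0,-1,0,1,1,1], [11,0,-8,-8,0,-8,-8], [11,0,0,-8,0,0,-8], [11,0,-8,0,0,-8]])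
    [(1,[(1,[(25,61065), (14,831212), (15,127619), (1,31729), (30,807171)]), (2,[(18,214734),
    (2,1210312), (10,819903), (12,475521)]), (4,[(28,117896), (21,112085), (4,934269),
    (7,685339)]), (24,[(33,21608), (22,3598), (24,1989), (32,42210)]), (14,[(28,15100),
    (23,16803), (21,99036)]), (18,[(18,4426), (20,5513), (12,72788)]), (30,[(28,126957),
    (30,773375), (7,932422)]), (35,[(32,33706), (29,78781), (3,180835)]), (17,[(32,49756),
    (31,92022)]), (26,[(25,4774), (31,13076)]), (33,[(33,10655), (21,7299)]), (3,[(3,1284730)]),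
    (10,[(10,37838)]), (11,[(23,65236)]), (19,[(29,100064)]), (22,[(27,8728)])]),
    (31,[(31,[(33,52251), (18,74905), (17,57304), (31,116747), (12,242315)]), (23,[(23,2207),
    (18,2392), (2,168393), (10,61076)]), (24,[(33,8817), (32,55349), (12,38300), (13,1709)]),
    (27,[(20,7646), (16,4624), (3,78349), (4,11557)]), (28,[(29,82112), (4,66223), (30,85451),
    (10,4630)]), (25,[(26,1363), (32,10683), (30,26671)]), (7,[(26,25175), (7,121922)]),
    (20,[(33,3700), (20,330)]), (21,[(2,20331), (6,15162)]), (22,[(22,1145), (12,140747)]),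
    (5,[(29,694576)]), (8,[(8,88654)]), (9,[(9,89249)]), (17,[(32,53517)])]),
    (32,[(32,[(26,32161), (33,101915), (21,14460), (32,38615), (8,348596)]), (17,[(21,7654),
    (24,3800), (15,11045), (30,84362)]), (20,[(25,678), (20,519), (29,110732)]), (24,[(24,2493),
    (21,752), (4,110887)]), (26,[(27,3897), (13,41471), (11,32416)]), (12,[(33,222414),
    (29,886785)]), (18,[(18,3), (6,27823)]), (22,[(23,177), (2,14757)]), (25,[(25,1728),
    (13,44300)]), (4,[(27,24293)]), (7,[(7,222787)]), (9,[(30,364361)]), (19,[(33,3357)]),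
    (28,[(28,210)])]), (33,[(33,[(28,151), (26,1280), (20,347), (19,419), (18,387), (25,596)]),
    (27,[(27,135), (26,831), (2,9361), (5,1342), (7,3752)]), (22,[(25,55), (29,8232), (30,6848),
    (10,5259)]), (21,[(21,422), (5,6767), (12,50)]), (30,[(26,10862), (17,1437), (20,13894)]),
    (24,[(26,104), (29,15180)]), (4,[(8,52961)]), (23,[(23,406)]), (28,[(28,10)])]),
    (2,[(2,[(26,43692), (21,26768), (29,244339), (4,460661)]), (11,[(21,56863), (16,523255),
    (3,910657), (8,414868)]), (3,[(18,22796), (12,56026)]), (10,[(16,148031), (4,177558)]),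
    (26,[(26,518), (15,30981)]), (28,[(28,40), (16,3632)]), (30,[(24,106003), (14,500596)]),
    (7,[(7,214123)]), (8,[(8,406613)]), (23,[(23,839)])]), (29,[(23,[(21,13474), (22,3468),
    (29,78942)]), (4,[(28,21197), (10,385396)]), (11,[(14,466334), (11,10148)]), (12,[(26,36246),
    (14,262130)]), (15,[(19,4583), (29,601243)]), (18,[(27,748), (29,62049)]), (20,[(20,4074),
    (22,2007)]), (5,[(5,272742)]), (25,[(25,2601)]), (27,[(27,3639)]), (35,[(35,928)])]),
    (30,[(21,[(21,1354), (20,1685), (22,2927), (30,46890)]), (30,[(22,27853), (20,41575),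
    (11,318866)]), (14,[(14,14900), (7,429295)]), (10,[(26,64359)]), (12,[(17,51755)]),
    (13,[(23,17293)]), (15,[(27,15430)]), (19,[(28,677)]), (20,[(24,789)]), (25,[(25,1638)]),
    (34,[(34,941)])]), (4,[(26,[(26,2550), (4,8612), (13,2049), (12,19847)]), (7,[(27,38909),
    (4,11882), (7,171797)]), (3,[(4,958196), (3,343858)]), (11,[(19,421), (8,23805)]),
    (21,[(28,612), (27,3238)]), (35,[(27,427), (16,85174)]), (18,[(18,4651)])]),
    (12,[(7,[(26,32522), (18,25879), (21,13167)]), (8,[(25,7643), (19,441)]), (16,[(28,68679),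
    (10,393018)]), (24,[(27,142), (24,36)]), (12,[(21,9316)]), (23,[(23,106)]), (25,[(25,715)])])]
    []
    317256 2204940 1551625 (by decide +kernel) (by norm_num) (by norm_num)
    (List.forall_mem_append.2 ⟨shortForms_nonneg h hs, ?_⟩)
  simp only [entries, List.forall_mem_cons, Cubic.evL, Int.cast_neg, Int.cast_one,
    Int.cast_zero, Int.cast_ofNat]
  exact ⟨by linarith [l01], by linarith [l23], by linarith [l02], by linarith [l12],
    by linarith [hy], by linarith [hy, h.low 3 2 (by decide), h.diag 2],
    by linarith [hy, h.low 2 3 (by decide), h.diag 3], by simp⟩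

theorem det3_ge_double_02_21 {Q : Fin 4 → Fin 4 → ℝ} (h : ZeroSumMat Q) (hs : Short Q)
    (l01 : Light Q 0 1) (l23 : Light Q 2 3) (l02 : Light Q 0 2) (l21 : Light Q 2 1)
    (hy : Q 0 0 + Q 1 1 + Q 0 1 + Q 1 0 ≤ 11 / 8) :
    19 / 27 ≤ det3 (Q 0) (Q 1) (Q 2) := by
  have r0 := h.row 0
  have r1 := h.row 1
  have r2 := h.row 2
  have c0 := h.col 0
  have c1 := h.col 1
  have c2 := h.col 2
  have c3 := h.col 3
  unfold Light at l01 l23 l02 l21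
  refine det3_ge_of_check h.row (h.abs_le_two hs) (L :=
    shortForms ++ [[-1,-1,0,0,1,1,1], [-1,0,0,1,0,0,1], [-1,0,-1,0,0,0,0,1,1,1],
    [-1,0,0,0,1,1,1,0,-1], [11,0,-8,-8,0,-8,-8], [11,0,-8,0,0,-8]])
    [(1,[(1,[(33,146522), (21,50234), (14,666960), (15,507012), (11,877647)]), (2,[(22,49394),
    (24,141062), (23,12163), (4,3358121), (3,3422512)]), (28,[(26,851), (33,18324), (22,15121),
    (25,201), (29,272766)]), (23,[(26,1262), (23,1865), (3,183463), (9,93762)]), (4,[(26,43578),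
    (18,294288), (10,1175783)]), (19,[(25,453), (3,105000), (7,12062)]), (20,[(22,3622),
    (20,1946), (31,11395)]), (32,[(17,25251), (16,676864), (10,1117001)]), (5,[(5,1135010),
    (13,265842)]), (8,[(33,252976), (6,308368)]), (11,[(31,965992), (29,782506)]), (27,[(27,6550),
    (25,8214)]), (12,[(24,39390)]), (18,[(18,1676)]), (21,[(21,938)]), (22,[(31,8871)]),
    (26,[(26,10777)]), (30,[(30,1240007)]), (34,[(34,485)])]), (3,[(26,[(24,914), (25,16511),
    (29,169756), (14,215209), (8,504198), (9,419368)]), (31,[(27,324853), (28,122031),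
    (22,142687), (20,4421), (4,986293), (11,432795)]), (33,[(27,43635), (33,16298), (17,11676),
    (19,22523), (22,29180)]), (3,[(23,37785), (25,50237), (21,35647), (14,464939)]),
    (4,[(22,115096), (14,1856309), (2,418522), (4,1856308)]), (7,[(21,2091), (14,525967),
    (32,194646), (30,1570230)]), (29,[(25,73988), (19,229720), (29,1970362)]), (30,[(20,67507),
    (22,159335), (6,2438947)]), (32,[(21,7902), (24,160966), (25,45246)]), (2,[(10,422847)]),
    (11,[(21,57268)]), (18,[(18,18098)])]), (30,[(20,[(26,8399), (33,7390), (11,14651), (7,72536),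
    (6,1576)]), (2,[(33,166492), (23,117725), (32,518923), (13,577034)]), (27,[(31,251109),
    (15,67881), (4,13008), (7,1619)]), (30,[(21,15348), (25,170356), (14,715840), (30,1075927)]),
    (22,[(26,17679), (22,16633), (31,241105)]), (18,[(24,3796), (18,13506)]), (23,[(26,24656),
    (33,44852)]), (28,[(29,20210), (31,136443)]), (4,[(21,52907)]), (13,[(13,27249)]),
    (19,[(26,1372)]), (29,[(33,164538)]), (32,[(34,24458)])]), (29,[(22,[(28,1500), (22,9822),
    (21,4087), (20,8420), (11,117260)]), (29,[(19,198143), (15,463652), (16,216792), (4,946775)]),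
    (33,[(21,21759), (24,7710), (14,171226), (4,148700)]), (20,[(26,590), (28,7452),
    (12,129223)]), (7,[(7,61335), (11,122977)]), (21,[(27,103), (9,53567)]), (24,[(24,748),
    (18,1484)]), (4,[(26,56273)]), (14,[(14,76791)]), (23,[(31,255233)]), (25,[(32,46894)])]),
    (32,[(23,[(26,2066), (33,11195), (22,274), (21,2066), (31,59597), (32,16524), (11,1296)]),
    (8,[(20,25413), (15,1328966), (31,941263), (2,511501), (4,1396574)]), (16,[(28,8448),
    (21,36198), (20,2329), (11,1053748)]), (22,[(33,4786), (17,94), (32,1610), (10,33222)]),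
    (5,[(32,4)]), (14,[(27,1296)]), (18,[(18,4152)])]), (33,[(23,[(26,5564), (33,5564), (23,7),
    (25,8), (31,9201)]), (22,[(33,320), (22,3002), (21,2755), (4,1558)]), (18,[(26,1337),
    (21,247)]), (7,[(27,3777)])]), (4,[(18,[(28,731), (27,469), (26,10591), (18,4465),
    (2,153590)]), (22,[(28,541), (26,21637), (11,13932), (10,35725)])]), (18,[(5,[(5,30859),
    (12,88617)]), (12,[(12,9146)]), (26,[(26,1457)])]), (31,[(20,[(27,2082), (23,21891)]),
    (12,[(27,194075)])]), (22,[(26,[(26,2562)])])]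
    []
    481505 3086917 2172275 (by decide +kernel) (by norm_num) (by norm_num)
    (List.forall_mem_append.2 ⟨shortForms_nonneg h hs, ?_⟩)
  simp only [entries, List.forall_mem_cons, Cubic.evL, Int.cast_neg, Int.cast_one,
    Int.cast_zero, Int.cast_ofNat]
  exact ⟨by linarith [l01], by linarith [l23], by linarith [l02], by linarith [l21],
    by linarith [hy], by linarith [hy, h.low 2 3 (by decide), h.diag 3], by simp⟩

theorem det3_ge_double_13_03 {Q : Fin 4 → Fin 4 → ℝ} (h : ZeroSumMat Q) (hs : Short Q)
    (l01 : Light Q 0 1) (l23 : Light Q 2 3) (l13 : Light Q 1 3) (l03 : Light Q 0 3)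
    (hy : Q 0 0 + Q 1 1 + Q 0 1 + Q 1 0 ≤ 11 / 8) :
    19 / 27 ≤ det3 (Q 0) (Q 1) (Q 2) := by
  have r0 := h.row 0
  have r1 := h.row 1
  have r2 := h.row 2
  have c0 := h.col 0
  have c1 := h.col 1
  have c2 := h.col 2
  have c3 := h.col 3
  unfold Light at l01 l23 l13 l03
  refine det3_ge_of_check h.row (h.abs_le_two hs) (L :=
    shortForms ++ [[-1,-1,0,0,1,1,1], [-1,0,0,1,0,0,1], [-1,0,0,1,0,0,0,0,0,1],
    [-1,0,0,0,0,0,1,0,0,1], [11,0,-8,-8,0,-8,-8], [11,0,0,-8,0,0,-8], [11,0,-8,0,0,-8]])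
    [(32,[(26,[(27,5314), (28,13348), (21,2720), (22,13637), (31,67690), (6,51658)]),
    (32,[(28,28229), (27,39590), (18,64349), (17,24504), (24,49535), (31,195073)]),
    (21,[(19,6131), (23,4787), (2,119326), (9,13998)]), (1,[(25,290350), (3,2887798),
    (10,692056)]), (27,[(27,418), (33,25744), (24,1912)]), (30,[(22,74986), (20,60015),
    (12,878703)]), (31,[(31,161839), (8,510340), (6,55548)]), (2,[(16,892225), (2,189566)]),
    (3,[(7,2262121), (6,804049)]), (17,[(33,1269), (35,389)]), (29,[(20,272535), (18,217622)]),
    (8,[(8,372579)]), (11,[(16,1409443)]), (13,[(23,276)]), (22,[(33,25066)])]),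
    (1,[(1,[(28,14946), (22,167065), (17,120885), (24,11924), (1,342246), (31,2456107)]),
    (2,[(26,229444), (27,344008), (2,869809), (3,5427696), (9,1040936)]), (19,[(27,5407),
    (3,186418), (4,290464), (11,54220)]), (28,[(22,10613), (23,7941), (16,53402), (31,147555)]),
    (3,[(3,630342), (9,2213325)]), (11,[(27,58181), (11,230823)]), (24,[(24,9557), (8,46368)]),
    (26,[(31,170419), (12,141799)]), (33,[(33,26927), (23,33395)]), (6,[(6,370847)]),
    (9,[(9,13505)]), (15,[(15,873456)]), (17,[(21,3759)]), (18,[(18,7221)]), (25,[(30,38998)]),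
    (27,[(31,408258)])]), (3,[(2,[(25,30948), (30,2132367), (5,2543589), (6,3736990)]),
    (3,[(18,27937), (25,44714), (21,83168), (24,47782)]), (18,[(18,2867), (35,4550), (31,71152)]),
    (21,[(31,43256), (8,802), (6,45333)]), (24,[(20,11527), (22,16421), (12,46035)]),
    (4,[(23,184454), (4,1195354)]), (15,[(27,45877), (22,71918)]), (26,[(17,5761), (11,9059)]),
    (8,[(27,12125)]), (10,[(12,1035625)]), (13,[(28,8569)]), (19,[(20,6890)]), (23,[(23,2584)]),
    (31,[(33,56240)])]), (33,[(26,[(26,739), (19,1185), (13,5673), (10,2367)]), (29,[(23,28671),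
    (16,47653), (29,208319), (6,82528)]), (33,[(33,2357), (23,695), (18,341), (8,17848)]),
    (15,[(27,2415), (21,5576)]), (18,[(14,4816), (6,2998)]), (20,[(20,88), (23,16)]),
    (22,[(22,2252), (31,27703)]), (28,[(16,102), (30,21668)]), (5,[(5,12244)]), (11,[(21,5145)]),
    (31,[(31,6174)]), (35,[(35,1)])]), (30,[(9,[(27,18406), (2,1326600), (30,1093432),
    (9,577520)]), (34,[(2,6791), (30,28146), (31,38044)]), (6,[(6,10063), (11,4445)]),
    (18,[(18,5932), (15,139086)]), (23,[(24,1574), (8,8153)]), (2,[(2,1046237)]),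
    (14,[(19,16680)]), (20,[(26,12634)]), (21,[(21,10414)]), (24,[(30,11463)]), (27,[(29,23891)]),
    (28,[(28,1267)])]), (31,[(27,[(17,10256), (24,147), (21,12462), (22,2046), (16,132330)]),
    (29,[(28,204292), (25,24668), (23,183636), (9,721693)]), (22,[(28,3345), (2,91294),
    (10,4854)]), (21,[(26,704), (21,199)]), (23,[(23,2143), (8,106443)]), (6,[(6,720)]),
    (18,[(18,4600)]), (31,[(31,19439)])]), (26,[(18,[(26,1318), (25,526), (18,252), (2,18065)]),
    (26,[(26,114), (28,17), (22,10)]), (27,[(27,746), (25,14), (9,1635)]), (21,[(29,5008),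
    (11,173)]), (2,[(2,2859)]), (5,[(20,718)]), (19,[(29,3082)]), (23,[(24,860)])]),
    (29,[(24,[(28,5720), (24,5036), (20,1337), (22,16377)]), (29,[(21,306791), (29,2095900),
    (12,452458)]), (2,[(27,212530)]), (9,[(12,43261)]), (18,[(18,305)]), (20,[(20,24180)]),
    (28,[(34,19594)])]), (2,[(23,[(23,8980), (20,3578), (8,162466)]), (22,[(14,107059),
    (2,42210)]), (27,[(6,77286), (5,16015)]), (12,[(16,471689)]), (21,[(28,699)])])]
    [([-1,0,0,0,0,2],26,47923), ([-1,0,-2,0,0,-2,0,2,2,2],3,139828), ([-1,0,0,0,0,2],33,34409),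
    ([-1,0,-2,0,0,-2,0,2,2,2],30,14954), ([-1,0,2],23,36570), ([-1,0,2],18,1543),
    ([-1,0,0,0,0,2],3,13637), ([-1,0,0,0,0,0,0,2],3,39449), ([-1,0,0,0,0,2],2,96773),
    ([-1,0,0,0,0,2],31,144647), ([-1,2],32,60499), ([-1,2],30,95774)]
    536689 4321684 3041186 (by decide +kernel) (by norm_num) (by norm_num)
    (List.forall_mem_append.2 ⟨shortForms_nonneg h hs, ?_⟩)
  simp only [entries, List.forall_mem_cons, Cubic.evL, Int.cast_neg, Int.cast_one,
    Int.cast_zero, Int.cast_ofNat]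
  exact ⟨by linarith [l01], by linarith [l23], by linarith [l13], by linarith [l03],
    by linarith [hy], by linarith [hy, h.low 3 2 (by decide), h.diag 2],
    by linarith [hy, h.low 2 3 (by decide), h.diag 3], by simp⟩

theorem det3_ge_double_13_30 {Q : Fin 4 → Fin 4 → ℝ} (h : ZeroSumMat Q) (hs : Short Q)
    (l01 : Light Q 0 1) (l23 : Light Q 2 3) (l13 : Light Q 1 3) (l30 : Light Q 3 0)
    (hy : Q 0 0 + Q 1 1 + Q 0 1 + Q 1 0 ≤ 11 / 8) :
    19 / 27 ≤ det3 (Q 0) (Q 1) (Q 2) := by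
  have r0 := h.row 0
  have r1 := h.row 1
  have r2 := h.row 2
  have c0 := h.col 0
  have c1 := h.col 1
  have c2 := h.col 2
  have c3 := h.col 3
  unfold Light at l01 l23 l13 l30
  refine det3_ge_of_check h.row (h.abs_le_two hs) (L :=
    shortForms ++ [[-1,-1,0,0,1,1,1], [-1,0,0,1,0,0,1], [-1,0,0,1,0,0,0,0,0,1],
    [-1,0,0,0,1,0,0,1], [11,0,-8,-8,0,-8,-8], [11,0,0,-8,0,0,-8], [11,0,-8,0,0,-8]])
    [(3,[(2,[(27,62323), (25,182034), (35,175933), (21,18970), (1,4487248), (3,1726727)]),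
    (3,[(33,81287), (25,123040), (24,48522), (1,828107), (7,1149941)]), (4,[(28,140569),
    (23,245759), (4,903983), (1,3054527)]), (19,[(21,2406), (29,337858), (1,189115), (30,17224)]),
    (22,[(17,4012), (22,3340), (11,178191)]), (23,[(24,6014), (14,4626), (1,148996)]),
    (5,[(17,88315), (32,2289903)]), (6,[(16,138269), (6,466622)]), (9,[(26,209557), (20,47457)]),
    (15,[(21,17689), (15,17655)]), (25,[(25,5375), (16,59668)]), (33,[(27,37357), (33,26936)]),
    (8,[(8,70802)]), (11,[(11,119019)]), (20,[(31,68124)]), (26,[(26,2377)]), (28,[(28,2270)])]),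
    (33,[(33,[(26,2762), (27,3452), (33,1550), (21,1250), (22,1273), (6,5646)]), (26,[(26,1556),
    (18,1881), (19,1195), (2,17336)]), (1,[(23,19284), (21,41331), (24,27444)]), (20,[(20,227),
    (30,15074), (32,191)]), (29,[(23,32788), (19,50796), (9,14033)]), (7,[(27,22818),
    (8,211482)]), (22,[(22,810), (31,11783)]), (28,[(28,119), (9,1207)]), (32,[(18,9250),
    (32,14156)]), (4,[(27,3277)]), (6,[(6,318)]), (15,[(15,70117)]), (19,[(31,16917)]),
    (21,[(30,26522)])]), (31,[(22,[(19,1378), (22,10038), (31,82924), (32,230740)]),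
    (23,[(26,13987), (21,8928), (23,2077), (2,156465)]), (31,[(27,9579), (20,4466), (21,14286)]),
    (4,[(28,11985), (19,12176)]), (7,[(28,23302), (24,21257)]), (8,[(25,166961), (8,1866989)]),
    (18,[(17,3842), (18,1380)]), (1,[(25,72767)]), (2,[(26,82351)]), (11,[(11,52097)]),
    (12,[(32,1262638)]), (14,[(29,1888933)]), (16,[(16,551828)]), (19,[(21,124)]),
    (24,[(24,149)])]), (1,[(4,[(27,198815), (26,73026), (17,92850), (24,364017), (4,1611961)]),
    (19,[(19,6), (18,285), (29,425694), (1,190671), (11,1609)]), (18,[(26,13918), (18,1725),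
    (11,107699)]), (1,[(27,16692), (1,29144)]), (22,[(28,3017), (17,10618)]), (24,[(24,2462),
    (7,103378)]), (2,[(12,2033784)]), (15,[(28,36444)]), (20,[(29,49882)]), (26,[(26,23200)])]),
    (30,[(26,[(26,36644), (28,9254), (30,172140), (6,1606)]), (17,[(28,9316), (17,19749),
    (10,18359)]), (19,[(29,152277), (2,112474), (32,28563)]), (7,[(28,87907), (7,813973)]),
    (9,[(21,3477), (15,2083486)]), (12,[(30,1322904), (12,505700)]), (6,[(22,18163)]),
    (21,[(23,4417)]), (24,[(24,7822)]), (27,[(30,3200)]), (28,[(32,191623)]), (34,[(34,8405)])]),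
    (2,[(2,[(26,60615), (18,1618), (21,45108), (16,1168538), (7,487619), (8,750236)]),
    (12,[(21,113822), (14,577872), (4,603271)]), (22,[(27,6478), (19,4702), (23,2348)]),
    (32,[(17,46877), (24,304407), (32,341539)]), (8,[(5,1067208), (6,711580)]), (9,[(9,12943)]),
    (16,[(18,63354)]), (26,[(26,6068)])]), (29,[(29,[(27,14794), (21,14512), (17,86265),
    (19,238415)]), (4,[(20,169062), (4,936445)]), (15,[(35,13796), (11,637230)]), (18,[(25,7242),
    (18,7393)]), (22,[(24,10595), (22,2265)]), (32,[(27,29952), (17,36996)]), (26,[(28,14623)])]),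
    (32,[(21,[(27,8797), (21,12819), (32,25528), (8,25601)]), (26,[(23,3091), (4,130964),
    (9,152061)]), (32,[(28,16833), (27,15285), (18,44601)]), (8,[(22,39678)]), (17,[(24,3424)])]),
    (7,[(26,[(26,17710), (27,10798), (8,287057), (7,3143), (9,55282)]), (18,[(18,954),
    (4,57648)]), (7,[(7,31146)]), (8,[(17,132205)]), (11,[(16,149194)])]), (4,[(4,[(27,2367),
    (26,179219)]), (11,[(20,49)])])]
    [([-1,2,2,2,-2,0,0,-2],2,30148), ([-1,0,0,0,0,2],33,10780), ([-1,0,0,0,0,0,0,0,2],33,14181),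
    ([-1,-2,0,0,2,2,2,0,-2],32,18889), ([-1,0,0,0,0,0,0,2],29,83263),
    ([-1,0,0,0,0,0,0,0,2],2,91597), ([-1,0,0,0,0,0,0,0,2],31,166755), ([-1,0,2],32,168694),
    ([-1,0,0,0,0,0,0,0,0,2],32,147407), ([-1,0,0,0,0,0,0,0,0,2],31,213270),
    ([-1,0,0,0,0,0,0,0,2],7,51272), ([-1,0,2],7,2311), ([-1,0,0,0,0,0,0,2],7,552127)]
    267303 4321684 3041186 (by decide +kernel) (by norm_num) (by norm_num)
    (List.forall_mem_append.2 ⟨shortForms_nonneg h hs, ?_⟩)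
  simp only [entries, List.forall_mem_cons, Cubic.evL, Int.cast_neg, Int.cast_one,
    Int.cast_zero, Int.cast_ofNat]
  exact ⟨by linarith [l01], by linarith [l23], by linarith [l13], by linarith [l30],
    by linarith [hy], by linarith [hy, h.low 3 2 (by decide), h.diag 2],
    by linarith [hy, h.low 2 3 (by decide), h.diag 3], by simp⟩

theorem det3_ge_double_13_12 {Q : Fin 4 → Fin 4 → ℝ} (h : ZeroSumMat Q) (hs : Short Q)
    (l01 : Light Q 0 1) (l23 : Light Q 2 3) (l13 : Light Q 1 3) (l12 : Light Q 1 2)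
    (hy : Q 0 0 + Q 1 1 + Q 0 1 + Q 1 0 ≤ 11 / 8) :
    19 / 27 ≤ det3 (Q 0) (Q 1) (Q 2) := by
  have r0 := h.row 0
  have r1 := h.row 1
  have r2 := h.row 2
  have c0 := h.col 0
  have c1 := h.col 1
  have c2 := h.col 2
  have c3 := h.col 3
  unfold Light at l01 l23 l13 l12
  refine det3_ge_of_check h.row (h.abs_le_two hs) (L :=
    shortForms ++ [[-1,-1,0,0,1,1,1], [-1,0,0,1,0,0,1], [-1,0,0,1,0,0,0,0,0,1],
    [-1,0,0,0,0,-1,0,1,1,1], [11,0,-8,-8,0,-8,-8], [11,0,0,-8,0,0,-8], [11,0,-8,0,0,-8]])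
    [(1,[(3,[(18,156922), (20,61784), (19,103092), (3,641346), (2,4473683), (31,350562)]),
    (26,[(33,15068), (20,3811), (22,18064), (18,8401), (31,78180)]), (27,[(27,4824), (23,321),
    (17,1023), (21,4955), (31,121557)]), (1,[(28,10699), (21,88300), (17,146795), (1,770024)]),
    (25,[(28,6361), (21,6258), (29,89435), (31,98752)]), (11,[(2,1942783), (30,387324),
    (11,82439)]), (19,[(17,21535), (31,32797), (8,2288)]), (23,[(33,163), (29,114667),
    (6,107329)]), (22,[(2,133971), (31,50548)]), (30,[(28,142997), (34,37641)]), (33,[(33,12513),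
    (18,7812)]), (4,[(4,379651)]), (21,[(21,3530)]), (24,[(32,78922)]), (29,[(35,118559)])]),
    (2,[(32,[(26,34410), (27,188042), (28,54780), (19,85386), (22,99698), (4,1577357)]),
    (2,[(2,114697), (30,525534), (12,925631), (5,109359)]), (8,[(25,165978), (22,76601),
    (3,2441605), (6,500762)]), (24,[(27,3646), (17,2242), (24,1505), (29,149141)]),
    (20,[(26,3024), (33,1878), (31,97010)]), (21,[(35,2064), (19,2277), (29,113377)]),
    (30,[(19,82980), (18,38190), (10,945357)]), (17,[(27,3786), (25,467)]), (23,[(26,6557),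
    (35,5948)]), (3,[(11,1928311)]), (6,[(6,13495)]), (12,[(12,171351)]), (13,[(28,6318)]),
    (14,[(14,10769)]), (16,[(25,195116)]), (26,[(33,2820)]), (27,[(31,49579)])]),
    (26,[(32,[(23,10414), (24,1647), (19,17657), (8,121983), (9,122113)]), (31,[(25,1947),
    (23,11595), (14,14961), (31,20897)]), (12,[(26,1899), (33,48), (24,316)]), (4,[(24,1371),
    (4,52169)]), (7,[(24,52), (7,160971)]), (8,[(26,581), (18,5609)]), (29,[(9,103529),
    (6,2095)]), (33,[(33,124), (10,7137)]), (16,[(16,22649)]), (19,[(19,1)]), (25,[(25,4)]),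
    (26,[(30,12199)])]), (30,[(27,[(27,78), (19,3028), (17,2689), (21,4583), (15,58947)]),
    (28,[(28,5634), (34,4728), (31,60392)]), (30,[(6,313989), (9,464994), (10,198804)]),
    (3,[(34,9410), (9,629228)]), (15,[(23,19864), (18,20270)]), (32,[(19,67409), (11,790539)]),
    (33,[(24,12509), (14,43530)]), (5,[(5,35204)]), (13,[(13,450566)]), (17,[(17,6694)]),
    (23,[(23,158)])]), (31,[(29,[(28,80982), (27,59217), (20,114213), (19,14513)]),
    (32,[(21,20076), (20,173784), (13,829244)]), (12,[(12,242345), (5,319742)]), (23,[(19,3623),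
    (31,10303)]), (27,[(3,40088), (11,2064)]), (28,[(28,120), (31,2628)]), (4,[(22,12285)]),
    (7,[(7,927108)]), (8,[(20,42407)]), (9,[(21,48496)]), (18,[(18,3451)]), (25,[(25,783)])]),
    (3,[(3,[(22,6509), (19,13972), (21,10605), (25,46447), (18,13288)]), (12,[(19,53368),
    (6,563330), (12,5687)]), (27,[(27,8205), (24,372)]), (33,[(5,66880), (11,45996)]),
    (4,[(4,422666)]), (6,[(14,1076264)]), (7,[(25,5811)]), (8,[(8,215239)]), (15,[(15,9242)]),
    (21,[(21,1380)]), (23,[(35,8158)])]), (29,[(29,[(22,38147), (6,1045693), (7,1219730)]),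
    (11,[(32,1524951), (4,286529)]), (28,[(28,3374), (21,15156)]), (33,[(17,26667), (9,91684)]),
    (8,[(20,19068)]), (12,[(24,8111)]), (14,[(32,279549)]), (19,[(27,701)]), (22,[(22,224)]),
    (25,[(25,6076)])]), (33,[(27,[(33,391), (19,629), (15,542)]), (23,[(23,449), (25,85)]),
    (28,[(28,444), (21,603)]), (33,[(33,457), (6,9898)]), (4,[(4,690)]), (12,[(18,649)]),
    (17,[(17,33)])]), (32,[(32,[(21,22813), (17,79187), (23,123496), (32,304108), (5,1126147)]),
    (25,[(21,111), (25,4485), (12,5225)]), (4,[(4,108623)]), (7,[(7,458149)]), (18,[(18,307)])])]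
    [([-1,2,2,2,-2,0,0,-2],26,4431), ([-1,-2,0,0,2,2,2,0,-2],32,46636),
    ([-1,2,2,2,-2,0,0,-2],29,159643), ([-1,0,0,0,0,0,0,0,2],33,11926), ([-1,0,0,0,2],33,4710),
    ([-1,0,0,2],33,22868), ([-1,-2,0,0,2,2,2,0,-2],31,50643), ([-1,0,0,2],29,109964),
    ([-1,0,0,0,0,2],29,23048), ([-1,0,0,0,0,0,0,2],31,15542)]
    299529 3086917 2172275 (by decide +kernel) (by norm_num) (by norm_num)
    (List.forall_mem_append.2 ⟨shortForms_nonneg h hs, ?_⟩)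
  simp only [entries, List.forall_mem_cons, Cubic.evL, Int.cast_neg, Int.cast_one,
    Int.cast_zero, Int.cast_ofNat]
  exact ⟨by linarith [l01], by linarith [l23], by linarith [l13], by linarith [l12],
    by linarith [hy], by linarith [hy, h.low 3 2 (by decide), h.diag 2],
    by linarith [hy, h.low 2 3 (by decide), h.diag 3], by simp⟩

theorem det3_ge_double_13_21 {Q : Fin 4 → Fin 4 → ℝ} (h : ZeroSumMat Q) (hs : Short Q)
    (l01 : Light Q 0 1) (l23 : Light Q 2 3) (l13 : Light Q 1 3) (l21 : Light Q 2 1)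
    (hy : Q 0 0 + Q 1 1 + Q 0 1 + Q 1 0 ≤ 11 / 8) :
    19 / 27 ≤ det3 (Q 0) (Q 1) (Q 2) := by
  have r0 := h.row 0
  have r1 := h.row 1
  have r2 := h.row 2
  have c0 := h.col 0
  have c1 := h.col 1
  have c2 := h.col 2
  have c3 := h.col 3
  unfold Light at l01 l23 l13 l21
  refine det3_ge_of_check h.row (h.abs_le_two hs) (L :=
    shortForms ++ [[-1,-1,0,0,1,1,1], [-1,0,0,1,0,0,1], [-1,0,0,1,0,0,0,0,0,1],
    [-1,0,0,0,1,1,1,0,-1], [11,0,-8,-8,0,-8,-8], [11,0,0,-8,0,0,-8], [11,0,-8,0,0,-8]])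
    [(1,[(3,[(22,41253), (24,43381), (14,733791), (1,1213343), (6,1193229)]), (2,[(25,87160),
    (21,37963), (14,430283), (2,715816)]), (26,[(25,8999), (17,2300), (14,70250), (31,23425)]),
    (27,[(17,4461), (14,31921), (31,173605), (9,220)]), (1,[(15,267720), (30,1049324),
    (11,119767)]), (28,[(28,1294), (22,10584), (29,121862)]), (4,[(34,134025), (4,1151566)]),
    (6,[(30,1416399), (6,2632)]), (9,[(19,12637), (9,31729)]), (21,[(21,1044), (32,46250)]),
    (24,[(31,25829), (11,41018)]), (33,[(33,5948), (31,90443)]), (5,[(17,18858)]),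
    (7,[(7,340084)]), (8,[(29,153383)]), (10,[(10,11543)]), (14,[(19,30380)]), (15,[(32,200795)]),
    (22,[(22,82)]), (23,[(23,187)])]), (3,[(3,[(33,24208), (25,175266), (2,1105499), (3,491806)]),
    (7,[(26,27709), (25,20830), (7,289018), (8,265526)]), (4,[(24,84404), (16,963980),
    (4,902695)]), (26,[(25,15967), (14,41293), (6,533)]), (27,[(27,7231), (20,5562), (11,72681)]),
    (28,[(28,2040), (5,18498), (8,101993)]), (19,[(23,571), (32,118879)]), (21,[(22,1508),
    (21,1628)]), (35,[(35,11389), (29,110311)]), (2,[(2,248253)]), (6,[(6,21972)]),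
    (9,[(9,69331)]), (11,[(22,32028)]), (14,[(31,610643)]), (15,[(15,27207)]), (17,[(23,18632)]),
    (20,[(33,1768)]), (24,[(24,1378)]), (25,[(32,60608)]), (30,[(34,130221)])]),
    (30,[(24,[(33,5043), (18,2595), (14,21087), (9,18788)]), (17,[(23,15138), (14,76593),
    (29,93768)]), (21,[(26,367), (20,441), (32,40210)]), (25,[(27,969), (22,3730), (13,2775)]),
    (28,[(28,3294), (2,5084), (10,3298)]), (18,[(18,2371), (4,80721)]), (19,[(23,6558),
    (32,63712)]), (33,[(33,5736), (10,8780)]), (7,[(7,209717)]), (9,[(9,39031)]),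
    (14,[(14,213282)]), (15,[(22,53090)]), (26,[(31,23152)]), (27,[(27,3052)])]),
    (29,[(18,[(25,8510), (32,33120), (6,1058), (7,153213)]), (21,[(28,16505), (27,9349),
    (23,7381), (29,40388)]), (26,[(33,7016), (32,105330), (6,528)]), (29,[(28,50145), (20,16546),
    (24,41858)]), (11,[(22,12865), (32,57669)]), (27,[(27,183), (19,3006)]), (2,[(14,90806)]),
    (4,[(20,95423)]), (9,[(9,680023)]), (13,[(28,30731)]), (17,[(33,1560)]), (22,[(22,3285)]),
    (23,[(25,646)]), (32,[(32,593357)])]), (32,[(8,[(26,30862), (21,11303), (17,50010),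
    (25,38825), (11,404359)]), (16,[(28,79037), (26,36875), (19,38703), (25,107951)]),
    (18,[(26,6910), (33,7308), (20,3161), (11,39950)]), (23,[(28,4868), (21,6392), (23,1027)]),
    (27,[(27,1540), (32,13890), (31,21248)]), (22,[(28,1393), (32,3932)])]), (33,[(23,[(26,1515),
    (23,313), (25,394), (2,1483), (6,3327)]), (18,[(26,71), (33,796), (18,2019), (12,6879)]),
    (27,[(27,282), (28,700), (5,1077), (6,12167)]), (22,[(22,1359), (31,5663)])]),
    (22,[(26,[(22,280), (24,1442), (18,1709), (14,5801)]), (31,[(27,1170), (24,6822), (2,35050)]),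
    (7,[(4,18945), (7,56406)]), (18,[(22,113), (6,35)]), (22,[(22,225)])]), (31,[(18,[(18,4179),
    (12,24746), (11,23468), (9,44330)]), (27,[(27,15), (25,471), (2,24126)]), (23,[(28,456),
    (19,224)])]), (26,[(23,[(23,542), (24,58), (14,426)]), (18,[(11,13811), (6,94)]),
    (27,[(21,116), (20,262)])]), (21,[(21,[(27,333), (23,930)]), (23,[(28,249)])])]
    []
    343246 2204940 1551625 (by decide +kernel) (by norm_num) (by norm_num)
    (List.forall_mem_append.2 ⟨shortForms_nonneg h hs, ?_⟩)
  simp only [entries, List.forall_mem_cons, Cubic.evL, Int.cast_neg, Int.cast_one,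
    Int.cast_zero, Int.cast_ofNat]
  exact ⟨by linarith [l01], by linarith [l23], by linarith [l13], by linarith [l21],
    by linarith [hy], by linarith [hy, h.low 3 2 (by decide), h.diag 2],
    by linarith [hy, h.low 2 3 (by decide), h.diag 3], by simp⟩

/-! ### Lower bounds for determinants of zero-sum matrices -/

theorem Reduced.perm {Q : Fin 4 → Fin 4 → ℝ} {e : Equiv.Perm (Fin 4)} {i j : Fin 4}
    (h : Reduced Q (e i) (e j)) : Reduced (fun i => Q (e i) ∘ e) i j :=
  ⟨h.1, h.2.1, fun k hi hj => h.2.2 (e k) (e.injective.ne hi) (e.injective.ne hj)⟩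

theorem Short.perm {Q : Fin 4 → Fin 4 → ℝ} (h : Short Q) (e : Equiv.Perm (Fin 4)) :
    Short (fun i => Q (e i) ∘ e) := fun i j hij => h (e i) (e j) (e.injective.ne hij)

theorem Nonpos.perm {Q : Fin 4 → Fin 4 → ℝ} (h : Nonpos Q) (e : Equiv.Perm (Fin 4)) :
    Nonpos (fun i => Q (e i) ∘ e) := fun i j hij => h (e i) (e j) (e.injective.ne hij)

theorem exists_perm : ∀ i j k l : Fin 4, i ≠ j → i ≠ k → i ≠ l → j ≠ k → j ≠ l → k ≠ l →
    ∃ e : Equiv.Perm (Fin 4), e 0 = i ∧ e 1 = j ∧ e 2 = k ∧ e 3 = l := by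
  decide +kernel

/-- A choice of an oriented edge in each of the three perfect matchings of `K₄` is, up to relabelling,
one of six patterns: a star (with `0` to `3` of its edges reversed), a transitive triangle or a
cyclic triangle. -/
theorem exists_pattern : ∀ a ∈ [((0, 1) : Fin 4 × Fin 4), (1, 0), (2, 3), (3, 2)],
    ∀ b ∈ [((0, 2) : Fin 4 × Fin 4), (2, 0), (1, 3), (3, 1)],
    ∀ c ∈ [((0, 3) : Fin 4 × Fin 4), (3, 0), (1, 2), (2, 1)],
    ∃ e : Equiv.Perm (Fin 4), ∃ p ∈ [[((0, 3) : Fin 4 × Fin 4), (1, 3), (2, 3)],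
      [(3, 0), (1, 3), (2, 3)], [(3, 0), (3, 1), (2, 3)], [(3, 0), (3, 1), (3, 2)],
      [(0, 1), (1, 2), (0, 2)], [(0, 1), (1, 2), (2, 0)]],
      ∀ q ∈ p, (e q.1, e q.2) = a ∨ (e q.1, e q.2) = b ∨ (e q.1, e q.2) = c := by
  decide +kernel

theorem exists_pattern' (R : Fin 4 → Fin 4 → Prop) (h1 : R 0 1 ∨ R 1 0 ∨ R 2 3 ∨ R 3 2)
    (h2 : R 0 2 ∨ R 2 0 ∨ R 1 3 ∨ R 3 1) (h3 : R 0 3 ∨ R 3 0 ∨ R 1 2 ∨ R 2 1) :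
    ∃ e : Equiv.Perm (Fin 4),
      (R (e 0) (e 3) ∧ R (e 1) (e 3) ∧ R (e 2) (e 3)) ∨
      (R (e 3) (e 0) ∧ R (e 1) (e 3) ∧ R (e 2) (e 3)) ∨
      (R (e 3) (e 0) ∧ R (e 3) (e 1) ∧ R (e 2) (e 3)) ∨
      (R (e 3) (e 0) ∧ R (e 3) (e 1) ∧ R (e 3) (e 2)) ∨
      (R (e 0) (e 1) ∧ R (e 1) (e 2) ∧ R (e 0) (e 2)) ∨
      (R (e 0) (e 1) ∧ R (e 1) (e 2) ∧ R (e 2) (e 0)) := by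
  obtain ⟨a, ha, Ra⟩ : ∃ a ∈ [((0, 1) : Fin 4 × Fin 4), (1, 0), (2, 3), (3, 2)], R a.1 a.2 := by
    simpa using h1
  obtain ⟨b, hb, Rb⟩ : ∃ a ∈ [((0, 2) : Fin 4 × Fin 4), (2, 0), (1, 3), (3, 1)], R a.1 a.2 := by
    simpa using h2
  obtain ⟨c, hc, Rc⟩ : ∃ a ∈ [((0, 3) : Fin 4 × Fin 4), (3, 0), (1, 2), (2, 1)], R a.1 a.2 := by
    simpa using h3
  obtain ⟨e, p, hp, hq⟩ := exists_pattern a ha b hb c hc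
  have hR : ∀ q ∈ p, R (e q.1) (e q.2) := by
    intro q hqp
    rcases hq q hqp with h | h | h
    · rw [← h] at Ra
      exact Ra
    · rw [← h] at Rb
      exact Rb
    · rw [← h] at Rc
      exact Rc
  refine ⟨e, ?_⟩
  simp only [List.mem_cons, List.not_mem_nil, or_false] at hp
  rcases hp with rfl | rfl | rfl | rfl | rfl | rfl
  · exact Or.inl ⟨hR (0, 3) (by simp), hR (1, 3) (by simp), hR (2, 3) (by simp)⟩
  · exact Or.inr (Or.inl ⟨hR (3, 0) (by simp), hR (1, 3) (by simp), hR (2, 3) (by simp)⟩)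
  · exact Or.inr (Or.inr (Or.inl ⟨hR (3, 0) (by simp), hR (3, 1) (by simp), hR (2, 3) (by simp)⟩))
  · exact Or.inr (Or.inr (Or.inr (Or.inl
      ⟨hR (3, 0) (by simp), hR (3, 1) (by simp), hR (3, 2) (by simp)⟩)))
  · exact Or.inr (Or.inr (Or.inr (Or.inr (Or.inl
      ⟨hR (0, 1) (by simp), hR (1, 2) (by simp), hR (0, 2) (by simp)⟩))))
  · exact Or.inr (Or.inr (Or.inr (Or.inr (Or.inr
      ⟨hR (0, 1) (by simp), hR (1, 2) (by simp), hR (2, 0) (by simp)⟩))))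

theorem det3_eq_cyc (Q : Fin 4 → Fin 4 → ℝ) : det3 (Q 0) (Q 1) (Q 2) =
    Q 0 0 * Q 1 1 * Q 2 2 - Q 0 0 * -Q 2 1 * -Q 1 2 - Q 1 1 * -Q 0 2 * -Q 2 0 -
      Q 2 2 * -Q 1 0 * -Q 0 1 - -Q 1 0 * -Q 2 1 * -Q 0 2 - -Q 0 1 * -Q 1 2 * -Q 2 0 := by
  unfold det3
  ring

theorem det3_ge_nonpos_cy {Q : Fin 4 → Fin 4 → ℝ} (h : ZeroSumMat Q) (hp : Nonpos Q)
    (h01 : Light Q 0 1) (h12 : Light Q 1 2) (h20 : Light Q 2 0) :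
    19 / 27 ≤ det3 (Q 0) (Q 1) (Q 2) := by
  unfold Light at h01 h12 h20
  rw [det3_eq_cyc]
  have r0 := h.row 0
  have r1 := h.row 1
  have r2 := h.row 2
  have c3 := h.col 3
  have d3 := h.diag 3
  have m1 := h.low 1 0 (by decide)
  have m2 := h.low 2 1 (by decide)
  have m3 := h.low 0 2 (by decide)
  have p1 := hp 1 0 (by decide)
  have p2 := hp 2 1 (by decide)
  have p3 := hp 0 2 (by decide)
  have p4 := hp 0 1 (by decide)
  have p5 := hp 1 2 (by decide)
  have p6 := hp 2 0 (by decide)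
  apply cyc_pos <;> linarith

/-- If all the off-diagonal entries are nonpositive, one light pair in each matching suffices. -/
theorem det3_ge_nonpos {Q : Fin 4 → Fin 4 → ℝ} (h : ZeroSumMat Q) (hp : Nonpos Q)
    (h1 : Light Q 0 1 ∨ Light Q 1 0 ∨ Light Q 2 3 ∨ Light Q 3 2)
    (h2 : Light Q 0 2 ∨ Light Q 2 0 ∨ Light Q 1 3 ∨ Light Q 3 1)
    (h3 : Light Q 0 3 ∨ Light Q 3 0 ∨ Light Q 1 2 ∨ Light Q 2 1) :
    19 / 27 ≤ det3 (Q 0) (Q 1) (Q 2) := by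
  obtain ⟨e, he⟩ := exists_pattern' (Light Q) h1 h2 h3
  rw [← h.det3_perm e]
  rcases he with ⟨ha, hb, hc⟩ | ⟨ha, hb, hc⟩ | ⟨ha, hb, hc⟩ | ⟨ha, hb, hc⟩ | ⟨ha, hb, hc⟩ | ⟨ha, hb, hc⟩
  · exact det3_ge_nonpos_m0 (h.perm e) (hp.perm e) ha hb hc
  · exact det3_ge_nonpos_m1 (h.perm e) (hp.perm e) ha hb hc
  · exact det3_ge_nonpos_m3 (h.perm e) (hp.perm e) ha hb hc
  · exact det3_ge_nonpos_m7 (h.perm e) (hp.perm e) ha hb hc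
  · exact det3_ge_nonpos_tr (h.perm e) (hp.perm e) ha hb hc
  · exact det3_ge_nonpos_cy (h.perm e) (hp.perm e) ha hb hc

theorem det3_ge_cyc_or {Q : Fin 4 → Fin 4 → ℝ} (h : ZeroSumMat Q) (hs : Short Q)
    (h01 : Reduced Q 0 1) (h12 : Reduced Q 1 2) (h20 : Reduced Q 2 0) :
    19 / 27 ≤ det3 (Q 0) (Q 1) (Q 2) ∨ (Q 1 0 ≤ 0 ∧ Q 0 3 ≤ 0 ∧ Q 3 0 ≤ 0) := by
  by_cases ha : 0 ≤ Q 1 0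
  · exact Or.inl (det3_ge_cyc_10 h hs h01 h12 h20 ha)
  by_cases hb : 0 ≤ Q 0 3
  · exact Or.inl (det3_ge_cyc_03 h hs h01 h12 h20 hb)
  by_cases hc : 0 ≤ Q 3 0
  · exact Or.inl (det3_ge_cyc_30 h hs h01 h12 h20 hc)
  · exact Or.inr ⟨by linarith, by linarith, by linarith⟩

/-- The cyclic triangle. Unless a certificate applies, all off-diagonal entries are nonpositive. -/
theorem det3_ge_short_cy {Q : Fin 4 → Fin 4 → ℝ} (h : ZeroSumMat Q) (hs : Short Q)
    (h01 : Reduced Q 0 1) (h12 : Reduced Q 1 2) (h20 : Reduced Q 2 0) :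
    19 / 27 ≤ det3 (Q 0) (Q 1) (Q 2) := by
  rcases det3_ge_cyc_or h hs h01 h12 h20 with hd | ⟨a1, a2, a3⟩
  · exact hd
  obtain ⟨e, e0, e1, e2, e3⟩ := exists_perm 1 2 0 3 (by decide) (by decide) (by decide) (by decide)
    (by decide) (by decide)
  rcases det3_ge_cyc_or (h.perm e) (hs.perm e) (.perm (by rwa [e0, e1])) (.perm (by rwa [e1, e2]))
    (.perm (by rwa [e2, e0])) with hd | ⟨b1, b2, b3⟩
  · rwa [h.det3_perm e] at hd
  simp only [Function.comp_apply, e0, e1, e3] at b1 b2 b3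
  obtain ⟨f, f0, f1, f2, f3⟩ := exists_perm 2 0 1 3 (by decide) (by decide) (by decide) (by decide)
    (by decide) (by decide)
  rcases det3_ge_cyc_or (h.perm f) (hs.perm f) (.perm (by rwa [f0, f1])) (.perm (by rwa [f1, f2]))
    (.perm (by rwa [f2, f0])) with hd | ⟨c1, c2, c3⟩
  · rwa [h.det3_perm f] at hd
  simp only [Function.comp_apply, f0, f1, f3] at c1 c2 c3
  have l1 : 1 ≤ Q 1 1 + Q 0 1 := h01.1
  have l2 : 1 ≤ Q 2 2 + Q 1 2 := h12.1
  have l3 : 1 ≤ Q 0 0 + Q 2 0 := h20.1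
  have s1 := hs 0 1 (by decide)
  have s2 := hs 1 2 (by decide)
  have s3 := hs 2 0 (by decide)
  have r0 := h.row 0
  have r1 := h.row 1
  have r2 := h.row 2
  have k0 := h.col 0
  have k1 := h.col 1
  have k2 := h.col 2
  have k3 := h.col 3
  have d0 := h.diag 0
  have d1 := h.diag 1
  have d2 := h.diag 2
  have d3 := h.diag 3
  have u0 := h.low 3 0 (by decide)
  have u1 := h.low 3 1 (by decide)
  have u2 := h.low 3 2 (by decide)
  have v0 := h.low 1 0 (by decide)
  have v1 := h.low 2 1 (by decide)
  have v2 := h.low 0 2 (by decide)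
  rw [det3_eq_cyc]
  apply Cyc.det_ge
  constructor <;> linarith

/-- The rows `i`, `j` have a short sum, with a light pair on each side of the matching. -/
def Dbl (Q : Fin 4 → Fin 4 → ℝ) (i j k l : Fin 4) : Prop :=
  Q i i + Q j j + Q i j + Q j i ≤ 11 / 8 ∧ (Light Q i j ∨ Light Q j i) ∧ (Light Q k l ∨ Light Q l k)

/-- What is known about the sum of the rows `i` and `j`, which is minus the sum of the rows `k`, `l`:
either one of the pairs is reduced, or the sum is short and there is a light pair on both sides. -/
def Matching (Q : Fin 4 → Fin 4 → ℝ) (i j k l : Fin 4) : Prop :=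
  (Reduced Q i j ∨ Reduced Q j i ∨ Reduced Q k l ∨ Reduced Q l k) ∨ Dbl Q i j k l

theorem Matching.light {Q : Fin 4 → Fin 4 → ℝ} {i j k l : Fin 4} (h : Matching Q i j k l) :
    Light Q i j ∨ Light Q j i ∨ Light Q k l ∨ Light Q l k := by
  rcases h with (h | h | h | h) | ⟨-, h, -⟩
  · exact Or.inl h.1
  · exact Or.inr (Or.inl h.1)
  · exact Or.inr (Or.inr (Or.inl h.1))
  · exact Or.inr (Or.inr (Or.inr h.1))
  · tauto

theorem det3_ge_double_aux {Q : Fin 4 → Fin 4 → ℝ} (h : ZeroSumMat Q) (hs : Short Q)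
    (h01 : Light Q 0 1) (h23 : Light Q 2 3) (hy : Q 0 0 + Q 1 1 + Q 0 1 + Q 1 0 ≤ 11 / 8)
    (hA : Light Q 0 2 ∨ Light Q 1 3) (hB : Light Q 0 3 ∨ Light Q 3 0 ∨ Light Q 1 2 ∨ Light Q 2 1) :
    19 / 27 ≤ det3 (Q 0) (Q 1) (Q 2) := by
  rcases hA with hA | hA <;> rcases hB with hB | hB | hB | hB
  · exact det3_ge_double_02_03 h hs h01 h23 hA hB hy
  · exact det3_ge_double_02_30 h hs h01 h23 hA hB hy
  · exact det3_ge_double_02_12 h hs h01 h23 hA hB hy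
  · exact det3_ge_double_02_21 h hs h01 h23 hA hB hy
  · exact det3_ge_double_13_03 h hs h01 h23 hA hB hy
  · exact det3_ge_double_13_30 h hs h01 h23 hA hB hy
  · exact det3_ge_double_13_12 h hs h01 h23 hA hB hy
  · exact det3_ge_double_13_21 h hs h01 h23 hA hB hy

theorem ZeroSumMat.block_eq {Q : Fin 4 → Fin 4 → ℝ} (h : ZeroSumMat Q) :
    Q 2 2 + Q 3 3 + Q 2 3 + Q 3 2 = Q 0 0 + Q 1 1 + Q 0 1 + Q 1 0 := by
  linarith [h.row 0, h.row 1, h.col 2, h.col 3]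

theorem det3_ge_double_aux' {Q : Fin 4 → Fin 4 → ℝ} (h : ZeroSumMat Q) (hs : Short Q)
    (h01 : Light Q 0 1) (h23 : Light Q 2 3) (hy : Q 0 0 + Q 1 1 + Q 0 1 + Q 1 0 ≤ 11 / 8)
    (hA : Light Q 0 2 ∨ Light Q 2 0 ∨ Light Q 1 3 ∨ Light Q 3 1)
    (hB : Light Q 0 3 ∨ Light Q 3 0 ∨ Light Q 1 2 ∨ Light Q 2 1) :
    19 / 27 ≤ det3 (Q 0) (Q 1) (Q 2) := by
  by_cases hA' : Light Q 0 2 ∨ Light Q 1 3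
  · exact det3_ge_double_aux h hs h01 h23 hy hA' hB
  · obtain ⟨e, e0, e1, e2, e3⟩ := exists_perm 2 3 0 1 (by decide) (by decide) (by decide) (by decide)
      (by decide) (by decide)
    rw [← h.det3_perm e]
    apply det3_ge_double_aux (h.perm e) (hs.perm e) <;>
      simp only [Light, Function.comp_apply, e0, e1, e2, e3] at * <;> try tauto
    linarith [h.block_eq]

theorem det3_ge_double {Q : Fin 4 → Fin 4 → ℝ} (h : ZeroSumMat Q) (hs : Short Q) {i j k l : Fin 4}
    (hij : i ≠ j) (hik : i ≠ k) (hil : i ≠ l) (hjk : j ≠ k) (hjl : j ≠ l) (hkl : k ≠ l)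
    (hD : Dbl Q i j k l)
    (hA : Light Q i k ∨ Light Q k i ∨ Light Q j l ∨ Light Q l j)
    (hB : Light Q i l ∨ Light Q l i ∨ Light Q j k ∨ Light Q k j) :
    19 / 27 ≤ det3 (Q 0) (Q 1) (Q 2) := by
  have key : ∀ i j k l, i ≠ j → i ≠ k → i ≠ l → j ≠ k → j ≠ l → k ≠ l →
      Q i i + Q j j + Q i j + Q j i ≤ 11 / 8 → Light Q i j → Light Q k l →
      (Light Q i k ∨ Light Q k i ∨ Light Q j l ∨ Light Q l j) →
      (Light Q i l ∨ Light Q l i ∨ Light Q j k ∨ Light Q k j) →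
      19 / 27 ≤ det3 (Q 0) (Q 1) (Q 2) := by
    intro i j k l hij hik hil hjk hjl hkl hy h1 h2 hA hB
    obtain ⟨e, rfl, rfl, rfl, rfl⟩ := exists_perm i j k l hij hik hil hjk hjl hkl
    rw [← h.det3_perm e]
    exact det3_ge_double_aux' (h.perm e) (hs.perm e) h1 h2 hy hA hB
  obtain ⟨hy, h1 | h1, h2 | h2⟩ := hD
  · exact key i j k l hij hik hil hjk hjl hkl hy h1 h2 hA hB
  · exact key i j l k hij hil hik hjl hjk hkl.symm hy h1 h2 hB hA
  · exact key j i k l hij.symm hjk hjl hik hil hkl (by linarith) h1 h2 (by tauto) (by tauto)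
  · exact key j i l k hij.symm hjl hjk hil hik hkl.symm (by linarith) h1 h2 (by tauto) (by tauto)

theorem or_swap_last {a b c d : Prop} (h : a ∨ b ∨ c ∨ d) : a ∨ b ∨ d ∨ c := by
  rcases h with h | h | h | h <;> simp [h]

theorem or_swap_pairs {a b c d : Prop} (h : a ∨ b ∨ c ∨ d) : c ∨ d ∨ a ∨ b := by
  rcases h with h | h | h | h <;> simp [h]

/-- The determinant bound for a superbase of short vectors. -/
theorem det3_ge_short {Q : Fin 4 → Fin 4 → ℝ} (h : ZeroSumMat Q) (hs : Short Q)
    (h1 : Matching Q 0 1 2 3) (h2 : Matching Q 0 2 1 3) (h3 : Matching Q 0 3 1 2) :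
    19 / 27 ≤ det3 (Q 0) (Q 1) (Q 2) := by
  have l1 := h1.light
  have l2 := h2.light
  have l3 := h3.light
  rcases h1 with h1 | h1
  swap
  · exact det3_ge_double h hs (by decide) (by decide) (by decide) (by decide) (by decide) (by decide)
      h1 l2 l3
  rcases h2 with h2 | h2
  swap
  · exact det3_ge_double h hs (by decide) (by decide) (by decide) (by decide) (by decide) (by decide)
      h2 l1 (or_swap_last l3)
  rcases h3 with h3 | h3
  swap
  · exact det3_ge_double h hs (by decide) (by decide) (by decide) (by decide) (by decide) (by decide)
      h3 (or_swap_last l1) (or_swap_last l2)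
  obtain ⟨e, he⟩ := exists_pattern' (Reduced Q) h1 h2 h3
  rw [← h.det3_perm e]
  rcases he with ⟨ha, hb, hc⟩ | ⟨ha, hb, hc⟩ | ⟨ha, hb, hc⟩ | ⟨ha, hb, hc⟩ | ⟨ha, hb, hc⟩ | ⟨ha, hb, hc⟩
  · exact det3_ge_short_m0 (h.perm e) (hs.perm e) ha.perm hb.perm hc.perm
  · exact det3_ge_short_m1 (h.perm e) (hs.perm e) ha.perm hb.perm hc.perm
  · exact det3_ge_short_m3 (h.perm e) (hs.perm e) ha.perm hb.perm hc.perm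
  · exact det3_ge_short_m7 (h.perm e) (hs.perm e) ha.perm hb.perm hc.perm
  · exact det3_ge_short_tr (h.perm e) (hs.perm e) ha.perm hb.perm hc.perm
  · exact det3_ge_short_cy (h.perm e) (hs.perm e) ha.perm hb.perm hc.perm

/-! ### Four tips with sum zero -/

namespace Conf

variable {b : Fin 3 → Fin 4 → ℝ} {P : Fin 4 → Fin 4 → ℝ}

/-- By admissibility, `P i + P j` has a large coordinate, which makes a pair light. If there is only
one such coordinate, or if `P i + P j` is not short, comparison with the tip in that coordinate shows
that the pair is reduced. -/
theorem matching (h : Conf b P) (hS : ∀ j, P 0 j + P 1 j + P 2 j + P 3 j = 0) {i j k l : Fin 4}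
    (hij : i ≠ j) (hik : i ≠ k) (hil : i ≠ l) (hjk : j ≠ k) (hjl : j ≠ l) (hkl : k ≠ l) :
    Matching P i j k l := by
  obtain ⟨e, e0, e1, e2, e3⟩ := exists_perm i j k l hij hik hil hjk hjl hkl
  have hrow : ∀ m, P m i + P m j + P m k + P m l = 0 := fun m => by
    have := sum_perm (h.row m) e
    simpa only [Function.comp_apply, e0, e1, e2, e3] using this
  have hcol : ∀ m, P i m + P j m + P k m + P l m = 0 := fun m => by
    have := sum_perm (y := fun i => P i m) (hS m) e
    simpa only [Function.comp_apply, e0, e1, e2, e3] using this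
  have hall : ∀ {p : Fin 4 → Prop}, (∃ m, p m) → p i ∨ p j ∨ p k ∨ p l := by
    rintro p ⟨m, hm⟩
    obtain ⟨m, rfl⟩ := e.surjective m
    fin_cases m
    · exact Or.inl (e0 ▸ hm)
    · exact Or.inr (Or.inl (e1 ▸ hm))
    · exact Or.inr (Or.inr (Or.inl (e2 ▸ hm)))
    · exact Or.inr (Or.inr (Or.inr (e3 ▸ hm)))
  have hall' : ∀ {p : Fin 4 → Prop}, p i → p j → p k → p l → ∀ m, p m := by
    intro p hi hj hk hl m
    by_contra hm
    rcases hall (p := fun m => ¬ p m) ⟨m, hm⟩ with h | h | h | h <;> exact h ‹_›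
  set X : Fin 4 → ℝ := fun m => P i m + P j m with hX
  have hXm : X ∈ lat b := add_mem (h.mem i) (h.mem j)
  have a1 := h.low j i hij.symm
  have a2 := h.low i j hij
  have a3 := h.low l k hkl.symm
  have a4 := h.low k l hkl
  have b1 := h.diag i
  have b2 := h.diag j
  have b3 := h.diag k
  have b4 := h.diag l
  have xi : |X i| = P i i + P j i := abs_of_nonneg (by simp only [hX]; linarith)
  have xj : |X j| = P j j + P i j := by rw [hX, add_comm (P j j)]; exact abs_of_nonneg (by linarith)
  have xk : |X k| = P k k + P l k := by
    rw [abs_of_nonpos (by simp only [hX]; linarith [hcol k])]; simp only [hX]; linarith [hcol k]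
  have xl : |X l| = P l l + P k l := by
    rw [abs_of_nonpos (by simp only [hX]; linarith [hcol l])]; simp only [hX]; linarith [hcol l]
  have hN : nrm X = P i i + P j j + P i j + P j i := by
    rw [← nrm_perm X e, nrm_eq]
    simp only [Function.comp_apply, e0, e1, e2, e3, xi, xj, xk, xl]
    linarith [hrow i, hrow j, hcol k, hcol l]
  have hN' : nrm X = P k k + P l l + P k l + P l k := by
    rw [hN]
    linarith [hrow i, hrow j, hcol k, hcol l]
  have red : ∀ p q, p ≠ q → nrm X = P p p + P q q + P p q + P q p → Light P p q →
      nrm (P q) ≤ nrm X → Reduced P p q := by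
    intro p q hpq hNX hl hle
    refine ⟨hl, by linarith [le_nrm (h.row q) q], fun m hmp hmq => ?_⟩
    linarith [add_le_nrm (h.row q) q m (Ne.symm hmq)]
  obtain ⟨l1, l2, l3, l4⟩ : (Light P j i ↔ 1 ≤ |X i|) ∧ (Light P i j ↔ 1 ≤ |X j|) ∧
      (Light P l k ↔ 1 ≤ |X k|) ∧ (Light P k l ↔ 1 ≤ |X l|) := by
    simp only [xi, xj, xk, xl, Light, and_self]
  have light := hall (h.adm.adm X hXm (fun h0 => by
    rw [h0] at xi
    simp only [Pi.zero_apply, abs_zero] at xi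
    linarith))
  simp only [← l1, ← l2, ← l3, ← l4] at light
  have hNji : nrm X = P j j + P i i + P j i + P i j := by linarith
  have hNlk : nrm X = P l l + P k k + P l k + P k l := by linarith
  by_cases hbig : 11 / 8 ≤ nrm X
  · have hle : ∀ q, nrm (P q) ≤ nrm X := fun q => (h.tip q).lt.le.trans hbig
    left
    rcases light with g | g | g | g
    · exact Or.inr (Or.inl (red j i hij.symm hNji g (hle _)))
    · exact Or.inl (red i j hij hN g (hle _))
    · exact Or.inr (Or.inr (Or.inr (red l k hkl.symm hNlk g (hle _))))
    · exact Or.inr (Or.inr (Or.inl (red k l hkl hN' g (hle _))))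
  push Not at hbig
  have n1 : ¬ (Light P j i ∧ Light P i j) := by
    rintro ⟨g1, g2⟩
    unfold Light at g1 g2
    linarith
  have n2 : ¬ (Light P l k ∧ Light P k l) := by
    rintro ⟨g1, g2⟩
    unfold Light at g1 g2
    linarith
  by_cases hD : (Light P i j ∨ Light P j i) ∧ (Light P k l ∨ Light P l k)
  · exact Or.inr ⟨by linarith, hD.1, hD.2⟩
  left
  have rule : ∀ q, 1 ≤ |X q| → (∀ m, m ≠ q → ¬ 1 ≤ |X m|) → nrm (P q) ≤ nrm X := fun q hq hm =>
    (h.tip q).rule X hXm hq fun m hmq => lt_of_not_ge (hm m hmq)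
  rcases light with g | g | g | g
  · exact Or.inr (Or.inl (red j i hij.symm hNji g (rule i (l1.1 g) (hall' (fun z => (z rfl).elim)
      (fun _ z => n1 ⟨g, l2.2 z⟩) (fun _ z => hD ⟨Or.inr g, Or.inr (l3.2 z)⟩)
      (fun _ z => hD ⟨Or.inr g, Or.inl (l4.2 z)⟩)))))
  · exact Or.inl (red i j hij hN g (rule j (l2.1 g) (hall' (fun _ z => n1 ⟨l1.2 z, g⟩)
      (fun z => (z rfl).elim) (fun _ z => hD ⟨Or.inl g, Or.inr (l3.2 z)⟩)
      (fun _ z => hD ⟨Or.inl g, Or.inl (l4.2 z)⟩))))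
  · exact Or.inr (Or.inr (Or.inr (red l k hkl.symm hNlk g (rule k (l3.1 g) (hall'
      (fun _ z => hD ⟨Or.inr (l1.2 z), Or.inr g⟩) (fun _ z => hD ⟨Or.inl (l2.2 z), Or.inr g⟩)
      (fun z => (z rfl).elim) (fun _ z => n2 ⟨g, l4.2 z⟩))))))
  · exact Or.inr (Or.inr (Or.inl (red k l hkl hN' g (rule l (l4.1 g) (hall'
      (fun _ z => hD ⟨Or.inr (l1.2 z), Or.inl g⟩) (fun _ z => hD ⟨Or.inl (l2.2 z), Or.inl g⟩)
      (fun _ z => n2 ⟨l3.2 z, g⟩) (fun z => (z rfl).elim))))))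

/-- If the four tips sum to zero, any three of them form a basis. -/
theorem covol_eq_of_sum_zero (h : Conf b P) (hS : ∀ j, P 0 j + P 1 j + P 2 j + P 3 j = 0) :
    covol b = |det3 (P 0) (P 1) (P 2)| := by
  refine h.covol_eq (h.mem 0) (h.mem 1) (h.mem 2) (h.tip 0).lt (h.tip 1).lt (h.tip 2).lt ?_ ?_
  · rintro (g | g | g | g | g | g | g)
    · exact h.not_inMul_single le_rfl 0 g
    · exact h.not_inMul_single le_rfl 1 g
    · exact h.not_inMul_single le_rfl 2 g
    · exact h.not_inMul_add le_rfl 0 1 (by decide) g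
    · exact h.not_inMul_add le_rfl 0 2 (by decide) g
    · exact h.not_inMul_add le_rfl 1 2 (by decide) g
    · exact h.not_inMul_single le_rfl 3 (g.neg fun j => by linarith [hS j])
  · have h23 : (2 : ℝ) ≤ 3 := by norm_num
    rintro (g | g | g | g | g | g | g | g | g | g | g | g | g)
    · exact h.not_inMul_single h23 0 g
    · exact h.not_inMul_single h23 1 g
    · exact h.not_inMul_single h23 2 g
    · exact h.not_inMul_add h23 0 1 (by decide) g
    · exact h.not_inMul_three_sub 0 1 (by decide) g
    · exact h.not_inMul_add h23 0 2 (by decide) g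
    · exact h.not_inMul_three_sub 0 2 (by decide) g
    · exact h.not_inMul_add h23 1 2 (by decide) g
    · exact h.not_inMul_three_sub 1 2 (by decide) g
    · exact h.not_inMul_single h23 3 (g.neg fun j => by linarith [hS j])
    -- `P 0 + P 1 - P 2 = (P 2 - P 3) - 3 • P 2`, and similarly below
    · exact h.not_inMul_three_sub 2 3 (by decide)
        (g.congr (h.mem 2) fun j => by linarith [hS j]) |>.elim
    · exact h.not_inMul_three_sub 1 3 (by decide)
        (g.congr (h.mem 1) fun j => by linarith [hS j]) |>.elim
    · exact h.not_inMul_three_sub 3 0 (by decide)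
        (g.congr (neg_mem (h.mem 0)) fun j => by
          simp only [Pi.neg_apply]
          linarith [hS j]) |>.elim

theorem covol_ge_of_sum_zero (h : Conf b P) (hS : ∀ j, P 0 j + P 1 j + P 2 j + P 3 j = 0) :
    19 / 27 ≤ covol b := by
  rw [h.covol_eq_of_sum_zero hS]
  refine le_trans (det3_ge_short ⟨h.row, hS, h.diag, fun i j hij => (h.low i j hij).le⟩
    (fun i j hij => (h.pair i j hij).le) ?_ ?_ ?_) (le_abs_self _)
  all_goals exact h.matching hS (by decide) (by decide) (by decide) (by decide) (by decide) (by decide)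

end Conf

/-! ### Three tips with sum zero: setting -/

namespace Conf

variable {b : Fin 3 → Fin 4 → ℝ} {P : Fin 4 → Fin 4 → ℝ}

theorem col_perm_tri {e : Equiv.Perm (Fin 4)} {i j k : Fin 4} (e0 : e 0 = i) (e1 : e 1 = j)
    (e2 : e 2 = k) (hS : ∀ m, P i m + P j m + P k m = 0) :
    ∀ m, (P (e 0) ∘ e) m + (P (e 1) ∘ e) m + (P (e 2) ∘ e) m = 0 := fun m => by
  simp only [Function.comp_apply, e0, e1, e2]
  exact hS (e m)

theorem tri_three_le (h : Conf b P) (hS : ∀ j, P 0 j + P 1 j + P 2 j = 0)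
    (g : InMul b 3 (fun j => P 0 j - P 1 j + P 3 j)) : 3 ≤ -P 0 1 + P 1 1 - P 3 1 := by
  have a1 := h.low 2 0 (by decide)
  have a2 := h.low 3 0 (by decide)
  have a3 := h.up 3 0 (by decide)
  have a4 := h.diag 0
  have a5 := h.diag_lt 0
  have a6 := h.low 1 0 (by decide)
  rcases h.adm.inMul (by norm_num) g with g | g
  · linarith [g 0, hS 0]
  rw [exists_fin_four] at g
  rcases g with g | g | g | g <;> rw [le_abs] at g
  · rcases g with g | g <;> linarith [hS 0]
  · rcases g with g | g
    · linarith [h.up 0 1 (by decide), h.diag 1, h.up 3 1 (by decide)]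
    · linarith
  · rcases g with g | g <;> linarith [h.up 0 2 (by decide), h.low 0 2 (by decide),
      h.up 1 2 (by decide), h.low 1 2 (by decide), h.up 3 2 (by decide), h.low 3 2 (by decide)]
  · rcases g with g | g <;> linarith [h.up 0 3 (by decide), h.low 0 3 (by decide),
      h.up 1 3 (by decide), h.low 1 3 (by decide), h.diag 3, h.diag_lt 3]

theorem tri_not_inMul_three (h : Conf b P) (hS : ∀ j, P 0 j + P 1 j + P 2 j = 0) :
    ¬ InMul b 3 (fun j => P 0 j - P 1 j + P 3 j) := by
  intro g
  have g1 : InMul b 3 (fun j => P 1 j - P 2 j + P 3 j) := g.congr (h.mem 1) fun j => by linarith [hS j]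
  have g2 : InMul b 3 (fun j => P 2 j - P 0 j + P 3 j) :=
    g.congr (neg_mem (h.mem 0)) fun j => by simp only [Pi.neg_apply]; linarith [hS j]
  have k0 := h.tri_three_le hS g
  obtain ⟨e, e0, e1, e2, e3⟩ := exists_perm 1 2 0 3 (by decide) (by decide) (by decide) (by decide)
    (by decide) (by decide)
  have k1 := (h.perm e).tri_three_le (col_perm_tri e0 e1 e2 fun m => by linarith [hS m]) (by
    have := g1.perm e
    simpa only [Function.comp_def, e0, e1, e2, e3] using this)
  obtain ⟨f, f0, f1, f2, f3⟩ := exists_perm 2 0 1 3 (by decide) (by decide) (by decide) (by decide)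
    (by decide) (by decide)
  have k2 := (h.perm f).tri_three_le (col_perm_tri f0 f1 f2 fun m => by linarith [hS m]) (by
    have := g2.perm f
    simpa only [Function.comp_def, f0, f1, f2, f3] using this)
  simp only [Function.comp_apply, e0, e1, e2, e3, f0, f1, f2, f3] at k1 k2
  linarith [h.row 3, h.diag_lt 0, h.diag_lt 1, h.diag_lt 2, h.diag_lt 3, h.low 0 1 (by decide),
    h.low 1 2 (by decide), h.low 2 0 (by decide)]

/-- The tips `P 0`, `P 1`, `P 3` form a basis of the lattice. -/
theorem covol_eq_tri (h : Conf b P) (hS : ∀ j, P 0 j + P 1 j + P 2 j = 0) :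
    covol b = |det3 (P 0) (P 1) (P 3)| := by
  refine h.covol_eq (h.mem 0) (h.mem 1) (h.mem 3) (h.tip 0).lt (h.tip 1).lt (h.tip 3).lt ?_ ?_
  · rintro (g | g | g | g | g | g | g)
    · exact h.not_inMul_single le_rfl 0 g
    · exact h.not_inMul_single le_rfl 1 g
    · exact h.not_inMul_single le_rfl 3 g
    · exact h.not_inMul_add le_rfl 0 1 (by decide) g
    · exact h.not_inMul_add le_rfl 0 3 (by decide) g
    · exact h.not_inMul_add le_rfl 1 3 (by decide) g
    · exact h.not_inMul_two_sub 3 2 (by decide) (g.congr (zero_mem _) fun j => by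
        simp only [Pi.zero_apply]
        linarith [hS j])
  · have h23 : (2 : ℝ) ≤ 3 := by norm_num
    rintro (g | g | g | g | g | g | g | g | g | g | g | g | g)
    · exact h.not_inMul_single h23 0 g
    · exact h.not_inMul_single h23 1 g
    · exact h.not_inMul_single h23 3 g
    · exact h.not_inMul_add h23 0 1 (by decide) g
    · exact h.not_inMul_three_sub 0 1 (by decide) g
    · exact h.not_inMul_add h23 0 3 (by decide) g
    · exact h.not_inMul_three_sub 0 3 (by decide) g
    · exact h.not_inMul_add h23 1 3 (by decide) g
    · exact h.not_inMul_three_sub 1 3 (by decide) g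
    · exact h.not_inMul_three_sub 3 2 (by decide) (g.congr (zero_mem _) fun j => by
        simp only [Pi.zero_apply]
        linarith [hS j])
    · exact h.not_inMul_add h23 2 3 (by decide) (g.neg fun j => by linarith [hS j])
    · exact h.tri_not_inMul_three hS g
    · obtain ⟨e, e0, e1, e2, e3⟩ := exists_perm 1 0 2 3 (by decide) (by decide) (by decide) (by decide)
        (by decide) (by decide)
      have g1 : InMul b 3 (fun j => P 1 j - P 0 j + P 3 j) := g.neg fun j => by ring
      refine (h.perm e).tri_not_inMul_three (col_perm_tri e0 e1 e2 fun m => by linarith [hS m]) ?_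
      have := g1.perm e
      simpa only [Function.comp_def, e0, e1, e2, e3] using this

/-- Entries of the tips `P 0`, `P 1`, `P 2`, `P 3` that determine all the others when
`P 0 + P 1 + P 2 = 0`, with their signs reversed. -/
def triEntries (P : Fin 4 → Fin 4 → ℝ) : List ℝ :=
  [-P 3 0, -P 3 1, -P 3 2, -P 0 1, -P 0 2, -P 1 0, -P 1 2, -P 2 0, -P 2 1]

/-- The cubic `-M * det3 (P 0) (P 1) (P 3) - T` in terms of `triEntries`. -/
def triGoal (M T : ℕ) : List (ℤ × List ℤ × List ℤ × List ℤ) :=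
  [(-(T : ℤ), [1], [1], [1]),
    ((M : ℤ), [0, 1], [0, 0, 0, 0, 1], [0, 0, 0, 0, 0, 1, 0, 1]),
    ((M : ℤ), [0, 1], [0, 0, 0, 0, 0, 0, 0, 0, 0, 1], [0, 0, 0, 0, 0, 1]),
    ((M : ℤ), [0, 0, 1], [0, 0, 0, 0, 0, 0, 1], [0, 0, 0, 0, 0, 1, 0, 1]),
    ((M : ℤ), [0, 0, 1], [0, 0, 0, 0, 0, 0, 0, 0, 1], [0, 0, 0, 0, 0, 0, 0, 1]),
    ((M : ℤ), [0, 0, 0, 1], [0, 0, 0, 0, 0, 0, 0, 0, 1], [0, 0, 0, 0, 1, 0, 0, 0, 0, 1]),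
    ((M : ℤ), [0, 0, 0, 1], [0, 0, 0, 0, 0, 0, 1], [0, 0, 0, 0, 0, 0, 0, 0, 0, 1])]

theorem tri_ge_of_check (h : Conf b P) (hS : ∀ j, P 0 j + P 1 j + P 2 j = 0) {L : List (List ℤ)}
    (c : List (ℕ × List (ℕ × List (ℕ × ℕ)))) (s : List (List ℤ × ℕ × ℕ)) (e : ℕ) (M T : ℕ)
    (hc : Cubic.check L (triGoal M T) c s e = true) (hM : 0 < M) (hT : 19 * M ≤ 27 * T)
    (hL : ∀ l ∈ L, 0 ≤ Cubic.evL l (1 :: triEntries P)) : 19 / 27 ≤ covol b := by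
  have hP : ∀ i j, i ≠ j → |P i j| ≤ 2 := fun i j hij => by
    rw [abs_le]
    constructor <;> linarith [h.low i j hij, h.up i j hij]
  have key := Cubic.nonneg_of_check hc hL (by
    simp only [triEntries, List.forall_mem_cons, abs_neg]
    refine ⟨hP _ _ ?_, hP _ _ ?_, hP _ _ ?_, hP _ _ ?_, hP _ _ ?_, hP _ _ ?_, hP _ _ ?_, hP _ _ ?_,
      hP _ _ ?_, by simp⟩ <;> decide)
  have hg : Cubic.evS (triGoal M T) (1 :: triEntries P) = M * -det3 (P 0) (P 1) (P 3) - T := by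
    have c0 : P 0 0 = -(P 1 0 + P 2 0) := by linarith [hS 0]
    have c1 : P 1 1 = -(P 0 1 + P 2 1) := by linarith [hS 1]
    simp only [Cubic.evS, triGoal, triEntries, Cubic.evL, det3, c0, c1]
    push_cast
    ring
  rw [hg] at key
  have hM' : (0 : ℝ) < M := by exact_mod_cast hM
  have hT' : (19 : ℝ) * M ≤ 27 * T := by exact_mod_cast hT
  have : (M : ℝ) * (19 / 27) ≤ M * -det3 (P 0) (P 1) (P 3) := by linarith
  have h2 := le_of_mul_le_mul_left this hM'
  rw [h.covol_eq_tri hS]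
  exact h2.trans (neg_le_abs _)

end Conf

/-! ### Three tips with sum zero: certificates -/

namespace Conf

variable {b : Fin 3 → Fin 4 → ℝ} {P : Fin 4 → Fin 4 → ℝ}

/-- The constant form `1` followed by affine forms in `triEntries` that are nonnegative whenever
`P 0 + P 1 + P 2 = 0`. -/
def triForms : List (List ℤ) :=
    [[1], [0,0,0,0,1], [0,0,0,0,0,1], [0,0,0,0,0,0,1], [0,0,0,0,0,0,0,1], [0,0,0,0,0,0,0,0,1],
    [0,0,0,0,0,0,0,0,0,1], [1,0,0,0,-1], [1,0,0,0,0,-1], [1,0,0,0,0,0,-1], [1,0,0,0,0,0,0,-1],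
    [1,0,0,0,0,0,0,0,-1], [1,0,0,0,0,0,0,0,0,-1], [-1,0,0,0,0,0,1,0,1], [-1,0,0,0,1,0,0,0,0,1],
    [-1,0,0,0,0,1,0,1], [-1,1,1,1], [1,-1], [1,0,-1], [1,0,0,-1], [0,1,1], [0,0,1,1],
    [11,0,0,0,-8,-8], [11,0,0,0,0,0,-8,-8], [11,0,0,0,0,0,0,0,-8,-8], [11,-8,-8,-8], [11,-8,0,-8],
    [11,0,0,0,0,0,-8,0,-8], [11,0,0,0,-8,0,0,0,0,-8], [11,0,0,0,0,-8,0,-8]]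

theorem triForms_nonneg (h : Conf b P) (hS : ∀ j, P 0 j + P 1 j + P 2 j = 0) :
    ∀ l ∈ triForms, 0 ≤ Cubic.evL l (1 :: triEntries P) := by
  have r0 := h.row 0
  have r1 := h.row 1
  have r2 := h.row 2
  have r3 := h.row 3
  have c0 := hS 0
  have c1 := hS 1
  have c2 := hS 2
  unfold triForms
  simp only [triEntries, List.forall_mem_cons, Cubic.evL, Int.cast_neg, Int.cast_one,
    Int.cast_zero, Int.cast_ofNat]
  exact ⟨by norm_num, by linarith [h.diag 1, h.low 2 1 (by decide)],
    by linarith [h.diag 2, h.low 1 2 (by decide)], by linarith [h.diag 0, h.low 2 0 (by decide)],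
    by linarith [h.diag 2, h.low 0 2 (by decide)], by linarith [h.diag 0, h.low 1 0 (by decide)],
    by linarith [h.diag 1, h.low 0 1 (by decide)], by linarith [h.low 0 1 (by decide)],
    by linarith [h.low 0 2 (by decide)], by linarith [h.low 1 0 (by decide)],
    by linarith [h.low 1 2 (by decide)], by linarith [h.low 2 0 (by decide)],
    by linarith [h.low 2 1 (by decide)], by linarith [h.diag 0], by linarith [h.diag 1],
    by linarith [h.diag 2], by linarith [h.diag 3], by linarith [h.low 3 0 (by decide)],
    by linarith [h.low 3 1 (by decide)], by linarith [h.low 3 2 (by decide)],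
    by linarith [h.diag 3, h.low 3 2 (by decide)], by linarith [h.diag 3, h.low 3 0 (by decide)],
    by linarith [h.pair 0 3 (by decide)], by linarith [h.pair 1 3 (by decide)],
    by linarith [h.pair 2 3 (by decide)], by linarith [h.diag_lt 3],
    by linarith [h.pair 3 1 (by decide)], by linarith [h.diag_lt 0], by linarith [h.diag_lt 1],
    by linarith [h.diag_lt 2], by simp⟩

/-!
The names refer to the cases of the argument: `pos` if `P 3 0`, `P 3 1`, `P 3 2` are nonpositive and `neg` if `P 3 1` is
nonnegative; `I` if `P 1 3`, `P 2 3` are nonnegative and `II` if `P 0 3`, `P 1 3` are nonpositive. The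
Roman numerals `i` to `iv` stand for the four alternatives of `tri_opt`, and `d` indicates that
`P 3 - P 1` competes with the tip `P 1`.
-/

theorem tri_posI_iii (h : Conf b P) (hS : ∀ j, P 0 j + P 1 j + P 2 j = 0) (h_a : P 3 0 ≤ 0)
    (h_b : P 3 1 ≤ 0) (h_c : P 3 2 ≤ 0) (h_u2 : 0 ≤ P 1 3) (h_u3 : 0 ≤ P 2 3)
    (h_o : 1 ≤ P 0 0 + P 3 0) :
    19 / 27 ≤ covol b := by
  have r0 := h.row 0
  have r1 := h.row 1
  have r2 := h.row 2
  have r3 := h.row 3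
  have c0 := hS 0
  have c1 := hS 1
  have c2 := hS 2
  refine h.tri_ge_of_check hS (L :=
    triForms ++ [[0,1], [0,0,1], [0,0,0,1], [0,0,0,0,-1,0,1,1,0,-1], [0,0,0,0,0,-1,0,-1,1,1],
    [-1,-1,0,0,0,0,1,0,1]])
    [(30,[(0,[(23,6042), (35,62585), (16,319548), (14,48338), (15,502476)]), (11,[(23,71745),
    (16,254417), (34,319546), (14,573965), (11,454134)]), (15,[(16,87516), (14,166898),
    (12,254414), (31,166897)]), (24,[(27,2608), (33,71746), (34,31802), (12,31802)]),
    (32,[(23,20862), (34,384269), (14,166897)]), (30,[(23,20862), (14,166897)]),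
    (16,[(33,166897)])]), (0,[(15,[(16,182418), (35,407068), (14,407066), (11,573964),
    (0,62586)]), (35,[(34,166897), (16,319549), (11,573968), (32,62590)]), (14,[(12,573967),
    (31,62590)]), (16,[(34,62586), (0,317127)]), (32,[(34,8549)])]), (31,[(33,[(27,20863),
    (35,166898), (34,407065), (15,407065), (12,573966)]), (34,[(27,2850), (14,407066)]),
    (15,[(35,166896)]), (23,[(24,2608)])]), (16,[(11,[(35,254417), (15,573966), (11,119829)]),
    (12,[(27,39943), (14,573967)]), (15,[(35,87517), (14,407066)]), (27,[(34,37094)])]),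
    (32,[(34,[(35,384269), (14,573963), (11,573967)]), (14,[(15,166897)]), (24,[(27,2608)])]),
    (27,[(34,[(27,6004), (35,48032)])])]
    [([-1,0,0,0,0,0,0,0,2],32,113530), ([-1,0,0,0,0,0,0,0,2],31,113534),
    ([-1,0,0,0,0,0,0,0,2],0,29956)]
    3089 573964 403901 (by decide +kernel) (by norm_num) (by norm_num)
    (List.forall_mem_append.2 ⟨h.triForms_nonneg hS, ?_⟩)
  simp only [triEntries, List.forall_mem_cons, Cubic.evL, Int.cast_neg, Int.cast_one,
    Int.cast_zero, Int.cast_ofNat]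
  exact ⟨by linarith [h_a], by linarith [h_b], by linarith [h_c], by linarith [h_u2],
    by linarith [h_u3], by linarith [h_o], by simp⟩

theorem tri_posI_iv (h : Conf b P) (hS : ∀ j, P 0 j + P 1 j + P 2 j = 0) (h_b : P 3 1 ≤ 0)
    (h_u2 : 0 ≤ P 1 3) (h_u3 : 0 ≤ P 2 3) (h_o : 1 ≤ P 0 3 + P 3 3) :
    19 / 27 ≤ covol b := by
  have r0 := h.row 0
  have r1 := h.row 1
  have r2 := h.row 2
  have r3 := h.row 3
  have c0 := hS 0
  have c1 := hS 1
  have c2 := hS 2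
  refine h.tri_ge_of_check hS (L :=
    triForms ++ [[0,0,1], [0,0,0,0,-1,0,1,1,0,-1], [0,0,0,0,0,-1,0,-1,1,1],
    [-1,1,1,1,1,1,-1,0,-1]])
    [(15,[(0,[(24,2304), (33,3705844), (32,45525), (14,11858699), (18,4447011), (6,1049902)]),
    (24,[(24,178885), (33,741169), (30,452291), (6,1379820)]), (14,[(33,11858701), (31,11858700),
    (32,11858702)]), (6,[(6,36322), (30,6633016)]), (12,[(31,11858700), (13,11858701)]),
    (30,[(31,11858700)])]), (32,[(14,[(33,11858701), (32,11858702), (31,11858701), (17,11858701),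
    (12,11858700)]), (0,[(33,3705844), (32,45524), (17,11858701)]), (18,[(24,1030046),
    (13,11858701), (6,5225680)]), (31,[(12,11858701), (30,11858700)]), (24,[(33,741169)])]),
    (6,[(13,[(33,11858701), (31,11858701), (6,5929354), (0,5929347)]), (6,[(33,2964675)]),
    (12,[(24,322530)]), (17,[(31,11858701)])]), (12,[(14,[(33,11858701), (31,11858700),
    (0,11858703)]), (12,[(33,2964676), (31,11858701)]), (30,[(31,11858700)])]),
    (0,[(0,[(33,7411689), (13,92644), (18,42446)]), (13,[(24,185294)])]), (24,[(24,[(24,9691),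
    (13,92646), (30,4716)])])]
    [([-1,0,0,0,0,0,0,0,2],24,202713), ([-1,0,0,0,0,0,0,0,2],27,185292),
    ([-1,0,0,0,0,0,0,0,2],33,1482338), ([-1,0,0,0,0,0,0,0,2],32,2862160),
    ([-1,0,0,0,0,0,0,0,0,2],32,111600), ([-1,0,0,0,0,0,0,0,2],12,483787),
    ([-1,0,0,0,0,0,0,0,0,2],18,829127), ([-1,0,0,0,0,0,0,0,0,2],6,483792),
    ([-1,0,0,0,0,0,0,0,2],30,829127), ([-1,0,0,0,0,0,0,0,2],0,729636)]
    3003 11858701 8345012 (by decide +kernel) (by norm_num) (by norm_num)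
    (List.forall_mem_append.2 ⟨h.triForms_nonneg hS, ?_⟩)
  simp only [triEntries, List.forall_mem_cons, Cubic.evL, Int.cast_neg, Int.cast_one,
    Int.cast_zero, Int.cast_ofNat]
  exact ⟨by linarith [h_b], by linarith [h_u2], by linarith [h_u3], by linarith [h_o], by simp⟩

theorem tri_posII_m3 (h : Conf b P) (hS : ∀ j, P 0 j + P 1 j + P 2 j = 0) (h_b : P 3 1 ≤ 0)
    (h_c : P 3 2 ≤ 0) (h_m1 : P 0 3 ≤ 0) (h_m2 : P 1 3 ≤ 0) (h_o : 1 ≤ P 3 3 - P 2 3) :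
    19 / 27 ≤ covol b := by
  have r0 := h.row 0
  have r1 := h.row 1
  have r2 := h.row 2
  have r3 := h.row 3
  have c0 := hS 0
  have c1 := hS 1
  have c2 := hS 2
  refine h.tri_ge_of_check hS (L :=
    triForms ++ [[0,0,1], [0,0,0,1], [0,0,0,0,-1,-1,1,0,1], [0,0,0,0,1,0,-1,-1,0,1],
    [-1,1,1,1,0,1,0,1,-1,-1]])
    [(12,[(15,[(24,3403), (34,21305), (32,27224), (33,33943), (13,54448), (18,1951), (6,41901),
    (0,389)]), (32,[(32,5919), (33,5919), (14,54449), (12,12548), (30,72913), (31,21305)]),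
    (33,[(24,840), (14,54449), (17,20505), (31,33943)]), (12,[(34,33439), (13,17263)]),
    (14,[(34,54448), (0,54448)]), (13,[(27,3403)])]), (0,[(13,[(27,917), (33,17515), (32,17514),
    (15,2128), (18,3816), (0,5226)]), (15,[(24,917), (34,33143), (32,33143), (14,54449),
    (0,12428)]), (33,[(24,917), (34,20505), (18,22457), (6,768)]), (0,[(34,21009)]),
    (31,[(32,33143)])]), (6,[(34,[(24,4143), (33,12638), (13,54448), (6,21010)]), (6,[(33,12547),
    (13,37185)]), (18,[(33,31104), (13,2836)]), (15,[(30,888)]), (17,[(32,21305)])]),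
    (14,[(15,[(34,54448), (32,54448), (33,54448)]), (30,[(33,54448), (32,54447)]),
    (31,[(33,54448), (32,54448)])]), (24,[(30,[(24,196), (33,1746), (15,1746)]), (18,[(27,196),
    (32,5060)])]), (13,[(18,[(33,39062), (32,39063)]), (30,[(27,177), (15,15385)])])]
    [([-1,0,0,0,0,0,0,0,0,2],24,392), ([-1,0,0,0,0,0,2],12,6806), ([-1,0,0,0,0,0,0,0,0,2],18,354),
    ([-1,0,0,0,0,0,2],30,354), ([-1,0,0,0,0,0,0,0,0,2],6,6805), ([-1,0,0,0,0,0,2],0,1834),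
    ([-1,0,0,0,0,0,0,0,0,2],0,3442)]
    756 54448 38316 (by decide +kernel) (by norm_num) (by norm_num)
    (List.forall_mem_append.2 ⟨h.triForms_nonneg hS, ?_⟩)
  simp only [triEntries, List.forall_mem_cons, Cubic.evL, Int.cast_neg, Int.cast_one,
    Int.cast_zero, Int.cast_ofNat]
  exact ⟨by linarith [h_b], by linarith [h_c], by linarith [h_m1], by linarith [h_m2],
    by linarith [h_o], by simp⟩

theorem tri_posII_i (h : Conf b P) (hS : ∀ j, P 0 j + P 1 j + P 2 j = 0) (h_b : P 3 1 ≤ 0)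
    (h_c : P 3 2 ≤ 0) (h_m1 : P 0 3 ≤ 0) (h_m2 : P 1 3 ≤ 0) (h_a31 : P 3 0 ≤ P 2 0)
    (h_o : P 0 1 + P 3 1 ≤ -1) :
    19 / 27 ≤ covol b := by
  have r0 := h.row 0
  have r1 := h.row 1
  have r2 := h.row 2
  have r3 := h.row 3
  have c0 := hS 0
  have c1 := hS 1
  have c2 := hS 2
  refine h.tri_ge_of_check hS (L :=
    triForms ++ [[0,0,1], [0,0,0,1], [0,0,0,0,-1,-1,1,0,1], [0,0,0,0,1,0,-1,-1,0,1],
    [0,1,0,0,0,0,0,0,-1], [-1,0,1,0,1]])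
    [(0,[(15,[(33,40019), (16,53360), (35,13341), (14,53360), (13,93380), (34,53360), (31,53358),
    (0,63364)]), (31,[(25,1668), (33,133398), (32,106719), (13,93377), (34,106721), (31,53360)]),
    (33,[(32,53359), (33,40020), (18,15008), (34,106719)]), (34,[(25,1668), (13,93379),
    (34,53361)]), (14,[(28,6670), (0,1664)]), (35,[(32,26680), (35,13343)]), (13,[(30,51691)]),
    (16,[(25,5002)])]), (18,[(35,[(28,5003), (27,1668), (32,26681), (16,160077), (15,40021),
    (35,40021), (18,106719)]), (18,[(28,2501), (16,20012), (15,63365), (34,7501), (31,7502)]),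
    (33,[(25,1667), (33,13340), (15,13340), (13,93380), (31,80040)]), (32,[(28,6670), (13,93379),
    (34,53359), (31,53358)]), (16,[(28,11673), (27,5558), (15,93380)]), (13,[(25,6114),
    (14,13341)])]), (30,[(34,[(25,3335), (28,5003), (33,26682), (13,13342), (15,40020),
    (34,40019), (30,69201), (31,80036)]), (31,[(25,3335), (28,5002), (13,13339), (15,40017),
    (31,40016), (30,69204)]), (15,[(32,13340), (13,13340), (30,43355)]), (33,[(16,13341),
    (35,53360), (14,13339)]), (25,[(16,1667), (30,2502)]), (32,[(32,13340), (14,40020)]),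
    (13,[(30,73373)])]), (16,[(35,[(27,13340), (32,106719), (15,106719), (35,106719)]),
    (13,[(14,106720)]), (28,[(32,13340)])]), (14,[(25,[(35,13340)]), (31,[(32,106719)])]),
    (31,[(33,[(35,106719)])])]
    [([-1,0,2],27,2293), ([-1,0,2],28,2710), ([-1,0,2],34,7503), ([-1,0,2],31,7501),
    ([-1,0,2],0,7920)]
    1183 106719 75099 (by decide +kernel) (by norm_num) (by norm_num)
    (List.forall_mem_append.2 ⟨h.triForms_nonneg hS, ?_⟩)
  simp only [triEntries, List.forall_mem_cons, Cubic.evL, Int.cast_neg, Int.cast_one,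
    Int.cast_zero, Int.cast_ofNat]
  exact ⟨by linarith [h_b], by linarith [h_c], by linarith [h_m1], by linarith [h_m2],
    by linarith [h_a31], by linarith [h_o], by simp⟩

theorem tri_posII_ii (h : Conf b P) (hS : ∀ j, P 0 j + P 1 j + P 2 j = 0) (h_a : P 3 0 ≤ 0)
    (h_b : P 3 1 ≤ 0) (h_c : P 3 2 ≤ 0) (h_m1 : P 0 3 ≤ 0) (h_m2 : P 1 3 ≤ 0) (h_u3 : 0 ≤ P 2 3)
    (h_Sa : 0 ≤ -P 3 2 - P 3 0 + P 2 0 - P 2 3) (h_a31 : P 3 0 ≤ P 2 0) (h_o : P 0 2 + P 3 2 ≤ -1) :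
    19 / 27 ≤ covol b := by
  have r0 := h.row 0
  have r1 := h.row 1
  have r2 := h.row 2
  have r3 := h.row 3
  have c0 := hS 0
  have c1 := hS 1
  have c2 := hS 2
  refine h.tri_ge_of_check hS (L :=
    triForms ++ [[0,1], [0,0,1], [0,0,0,1], [0,0,0,0,-1,-1,1,0,1], [0,0,0,0,1,0,-1,-1,0,1],
    [0,0,0,0,0,-1,0,-1,1,1], [0,1,0,1,0,1,0,1,-2,-1], [0,1,0,0,0,0,0,0,-1], [-1,0,0,1,0,1]])
    [(0,[(13,[(36,1938), (16,3168), (15,2507), (6,3740), (31,749), (4,3674), (0,10630)]),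
    (16,[(25,9), (19,1171), (17,4126), (1,588), (5,1031), (0,6225)]), (37,[(24,362), (34,3422),
    (38,5653), (37,4334), (2,1563), (31,4540)]), (38,[(33,11603), (35,1710), (38,1288), (31,5201),
    (6,3149)]), (15,[(36,10296), (1,18820), (31,14246), (2,3051)]), (14,[(7,2209), (5,8673),
    (0,10658)]), (31,[(33,11691), (31,72)]), (34,[(34,2017)])]), (15,[(30,[(23,59), (29,11),
    (34,115), (31,1905), (1,6992), (2,5448), (30,29)]), (12,[(29,4), (7,22), (32,3415)]),
    (19,[(33,147), (35,146), (2,1909)]), (31,[(33,2430), (7,67), (3,10454)]), (1,[(36,22),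
    (16,4389)]), (15,[(22,3), (17,45)]), (2,[(2,62)]), (3,[(16,3629)]), (8,[(36,17)]),
    (13,[(17,2938)]), (18,[(34,11865)])]), (16,[(2,[(25,28), (36,142), (14,13105), (4,724),
    (3,785), (6,6406)]), (1,[(7,541), (6,284), (5,7598), (4,18040)]), (18,[(19,1889), (12,3632),
    (3,7060)]), (5,[(4,5118), (3,1410)]), (6,[(13,4613), (17,165)]), (12,[(25,17)]),
    (13,[(32,1906)]), (14,[(38,2732)]), (35,[(35,90)])]), (31,[(31,[(19,1889), (12,3768), (2,224),
    (3,7060)]), (4,[(33,8351), (35,2900), (38,16)]), (13,[(36,104), (12,948), (2,434)]),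
    (1,[(37,3633), (1,631)]), (14,[(8,338), (30,3323)]), (33,[(27,11), (9,3576)]), (36,[(10,8965),
    (2,187)]), (3,[(3,1411)])]), (14,[(32,[(33,378), (35,19645), (13,542), (10,879)]),
    (17,[(35,6252), (33,541), (12,19)]), (30,[(2,4440), (3,707), (6,590)]), (18,[(13,1502),
    (19,2318)]), (19,[(36,2836)])]), (34,[(18,[(34,90), (13,2343), (38,5154), (2,477),
    (30,7060)]), (19,[(23,17), (34,101), (37,6281)]), (12,[(17,4922), (32,22081)]),
    (2,[(37,199)]), (13,[(32,783)]), (30,[(30,661)])]), (38,[(18,[(35,3796), (38,1890),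
    (37,1890)]), (2,[(19,1), (5,388)]), (11,[(33,242), (4,34)]), (3,[(5,44)]), (6,[(6,4291)]),
    (8,[(36,60)]), (12,[(38,30)]), (30,[(35,6913)])]), (17,[(13,[(5,2049), (2,588), (1,166)]),
    (33,[(11,430), (17,765), (32,6177)]), (35,[(36,632)])]), (32,[(33,[(29,40), (33,1020)]),
    (6,[(13,8252)]), (24,[(35,585)])]), (36,[(2,[(36,39), (37,43)]), (13,[(19,1802)]),
    (25,[(33,13)])]), (12,[(4,[(4,31)]), (8,[(12,4330)]), (9,[(30,39)])]), (37,[(2,[(2,585)]),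
    (7,[(10,2979)]), (11,[(37,29)])]), (5,[(1,[(4,3023)]), (5,[(5,29)])])]
    []
    861 38892 27369 (by decide +kernel) (by norm_num) (by norm_num)
    (List.forall_mem_append.2 ⟨h.triForms_nonneg hS, ?_⟩)
  simp only [triEntries, List.forall_mem_cons, Cubic.evL, Int.cast_neg, Int.cast_one,
    Int.cast_zero, Int.cast_ofNat]
  exact ⟨by linarith [h_a], by linarith [h_b], by linarith [h_c], by linarith [h_m1],
    by linarith [h_m2], by linarith [h_u3], by linarith [h_Sa], by linarith [h_a31],
    by linarith [h_o], by simp⟩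

theorem tri_posII_iii (h : Conf b P) (hS : ∀ j, P 0 j + P 1 j + P 2 j = 0) (h_a : P 3 0 ≤ 0)
    (h_m1 : P 0 3 ≤ 0) (h_m2 : P 1 3 ≤ 0) (h_Sa : 0 ≤ -P 3 2 - P 3 0 + P 2 0 - P 2 3)
    (h_a31 : P 3 0 ≤ P 2 0) (h_o : 1 ≤ P 0 0 + P 3 0) :
    19 / 27 ≤ covol b := by
  have r0 := h.row 0
  have r1 := h.row 1
  have r2 := h.row 2
  have r3 := h.row 3
  have c0 := hS 0
  have c1 := hS 1
  have c2 := hS 2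
  refine h.tri_ge_of_check hS (L :=
    triForms ++ [[0,1], [0,0,0,0,-1,-1,1,0,1], [0,0,0,0,1,0,-1,-1,0,1], [0,1,0,1,0,1,0,1,-2,-1],
    [0,1,0,0,0,0,0,0,-1], [-1,-1,0,0,0,0,1,0,1]])
    [(0,[(34,[(28,2480), (24,824), (27,2481), (16,4958), (35,32240), (32,13227), (15,26455),
    (34,12404)]), (35,[(27,1550), (32,7441), (31,7440), (35,12402), (16,27281), (15,19842),
    (0,12403)]), (16,[(27,930), (24,930), (31,7440), (15,27282), (0,14261)]), (15,[(14,7440),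
    (30,7437), (0,17051)]), (31,[(33,19843), (31,19842), (32,39685)]), (32,[(33,19842),
    (32,19843)]), (14,[(30,12400)])]), (34,[(15,[(24,4410), (32,17639), (35,19842), (16,19842),
    (15,17639), (34,19841)]), (16,[(28,2480), (27,2481), (32,19840), (35,39687), (34,19844)]),
    (24,[(24,276), (35,2481), (32,2205), (34,2479)]), (31,[(33,19842), (32,2204), (31,2204),
    (30,19840)]), (32,[(34,19841)])]), (35,[(15,[(28,2480), (27,2480), (35,19841), (16,19842)]),
    (32,[(33,19841), (32,19842), (31,39684), (16,19841)]), (24,[(27,310), (35,2480)]),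
    (31,[(33,19841), (31,19842)])]), (30,[(32,[(33,19842), (31,39683), (32,39684), (15,19842)]),
    (16,[(27,2480), (14,19841), (30,19843)]), (14,[(24,2482)])]), (27,[(15,[(28,310)]),
    (16,[(32,2480)])])]
    []
    5878 19842 13963 (by decide +kernel) (by norm_num) (by norm_num)
    (List.forall_mem_append.2 ⟨h.triForms_nonneg hS, ?_⟩)
  simp only [triEntries, List.forall_mem_cons, Cubic.evL, Int.cast_neg, Int.cast_one,
    Int.cast_zero, Int.cast_ofNat]
  exact ⟨by linarith [h_a], by linarith [h_m1], by linarith [h_m2], by linarith [h_Sa],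
    by linarith [h_a31], by linarith [h_o], by simp⟩

theorem tri_posII_iv (h : Conf b P) (hS : ∀ j, P 0 j + P 1 j + P 2 j = 0) (h_b : P 3 1 ≤ 0)
    (h_c : P 3 2 ≤ 0) (h_m1 : P 0 3 ≤ 0) (h_m2 : P 1 3 ≤ 0)
    (h_Sa : 0 ≤ -P 3 2 - P 3 0 + P 2 0 - P 2 3) (h_a31 : P 3 0 ≤ P 2 0) (h_o : 1 ≤ P 0 3 + P 3 3) :
    19 / 27 ≤ covol b := by
  have r0 := h.row 0
  have r1 := h.row 1
  have r2 := h.row 2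
  have r3 := h.row 3
  have c0 := hS 0
  have c1 := hS 1
  have c2 := hS 2
  refine h.tri_ge_of_check hS (L :=
    triForms ++ [[0,0,1], [0,0,0,1], [0,0,0,0,-1,-1,1,0,1], [0,0,0,0,1,0,-1,-1,0,1],
    [0,1,0,1,0,1,0,1,-2,-1], [0,1,0,0,0,0,0,0,-1], [-1,1,1,1,1,1,-1,0,-1]])
    [(15,[(0,[(36,1149274), (32,403744), (33,852436), (13,2204940), (14,2204938), (35,852434),
    (12,1334951), (31,619949)]), (32,[(14,2204941), (15,340461), (13,2204940), (12,2080484),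
    (17,1778034), (30,767367)]), (36,[(36,178849), (34,241259), (14,2204940), (13,2204940),
    (12,482517), (31,619955)]), (15,[(25,77494), (15,126231), (12,619953), (30,619952)]),
    (34,[(33,675785), (17,241258), (35,193267), (30,861212)]), (12,[(12,861212), (30,619951)]),
    (17,[(25,77495), (13,1102470)]), (31,[(33,47989), (35,47990)]), (25,[(25,975)]),
    (30,[(30,861215)]), (33,[(33,917044)]), (35,[(35,47991)])]), (32,[(31,[(25,10674),
    (13,2204940), (14,2204939), (12,1110092), (17,1562458), (30,495070), (0,125725)]),
    (12,[(36,1357103), (32,1350526), (14,2204940), (12,2049905), (30,1257503)]), (17,[(32,248054),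
    (33,537767), (13,1102468), (35,947433), (0,937103)]), (30,[(36,409667), (33,409666),
    (14,2204940), (0,10332)]), (35,[(36,409668), (34,332411), (13,2204940)]), (0,[(36,1233699),
    (13,2204937)]), (32,[(34,185520), (32,2296)]), (25,[(25,8613)]), (36,[(36,509058)])]),
    (33,[(31,[(33,947435), (13,2204939), (14,2204939), (12,2204941), (35,2227280), (31,1481132)]),
    (30,[(36,2204938), (34,2204939), (14,2204939)]), (33,[(34,252649), (33,511354),
    (35,1067391)]), (0,[(13,2204939)]), (34,[(34,108785)]), (35,[(35,1361173)])]),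
    (36,[(12,[(36,1102470), (14,2204940), (12,1102471)]), (0,[(25,155035), (0,637363)]),
    (13,[(35,2204939), (17,1102468)]), (25,[(36,45936)]), (34,[(34,119956)])]),
    (34,[(17,[(34,119957), (13,1102470)]), (30,[(34,982513), (30,1102467)]), (31,[(31,247535)]),
    (35,[(35,367490)])]), (13,[(17,[(12,1102469), (30,1102466), (0,1102470)]),
    (0,[(35,2204940)])]), (12,[(0,[(14,2204940)]), (12,[(12,367490)])]), (31,[(35,[(35,615024),
    (31,615023)])]), (30,[(30,[(30,367488)])])]
    [([-1,0,0,0,0,0,0,0,0,2],32,77518), ([-1,0,0,0,0,0,0,0,0,2],0,275618)]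
    10208 2204940 1551625 (by decide +kernel) (by norm_num) (by norm_num)
    (List.forall_mem_append.2 ⟨h.triForms_nonneg hS, ?_⟩)
  simp only [triEntries, List.forall_mem_cons, Cubic.evL, Int.cast_neg, Int.cast_one,
    Int.cast_zero, Int.cast_ofNat]
  exact ⟨by linarith [h_b], by linarith [h_c], by linarith [h_m1], by linarith [h_m2],
    by linarith [h_Sa], by linarith [h_a31], by linarith [h_o], by simp⟩

end Conf

namespace Conf

variable {b : Fin 3 → Fin 4 → ℝ} {P : Fin 4 → Fin 4 → ℝ}

theorem tri_neg_uu (h : Conf b P) (hS : ∀ j, P 0 j + P 1 j + P 2 j = 0) (h_mb : 0 ≤ P 3 1)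
    (h_u1 : 0 ≤ P 0 3) (h_u3 : 0 ≤ P 2 3) :
    19 / 27 ≤ covol b := by
  have r0 := h.row 0
  have r1 := h.row 1
  have r2 := h.row 2
  have r3 := h.row 3
  have c0 := hS 0
  have c1 := hS 1
  have c2 := hS 2
  refine h.tri_ge_of_check hS (L :=
    triForms ++ [[0,0,-1], [0,0,0,0,1,1,-1,0,-1], [0,0,0,0,0,-1,0,-1,1,1]])
    [(0,[(12,[(14,960), (15,960)]), (30,[(32,960), (31,960)]), (0,[(16,480)]), (6,[(13,960)]),
    (14,[(15,960)])]), (16,[(12,[(14,960), (15,960), (12,480)]), (6,[(13,960), (6,480)]),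
    (14,[(15,960)])]), (32,[(21,[(14,960), (12,960)]), (30,[(31,960), (13,960)])]),
    (31,[(6,[(20,960)]), (15,[(30,960)])])]
    [([-1,0,0,0,0,0,0,0,0,2],0,240)]
    44 960 676 (by decide +kernel) (by norm_num) (by norm_num)
    (List.forall_mem_append.2 ⟨h.triForms_nonneg hS, ?_⟩)
  simp only [triEntries, List.forall_mem_cons, Cubic.evL, Int.cast_neg, Int.cast_one,
    Int.cast_zero, Int.cast_ofNat]
  exact ⟨by linarith [h_mb], by linarith [h_u1], by linarith [h_u3], by simp⟩

theorem tri_neg_iii (h : Conf b P) (hS : ∀ j, P 0 j + P 1 j + P 2 j = 0) (h_mb : 0 ≤ P 3 1)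
    (h_m1 : P 0 3 ≤ 0) (h_m2iv : 1 ≤ P 3 3 - P 1 3) (h_o : 1 ≤ P 0 0 + P 3 0) :
    19 / 27 ≤ covol b := by
  have r0 := h.row 0
  have r1 := h.row 1
  have r2 := h.row 2
  have r3 := h.row 3
  have c0 := hS 0
  have c1 := hS 1
  have c2 := hS 2
  refine h.tri_ge_of_check hS (L :=
    triForms ++ [[0,0,-1], [0,0,0,0,-1,-1,1,0,1], [-1,1,1,1,1,0,-1,-1,0,1], [-1,-1,0,0,0,0,1,0,1]])
    [(0,[(14,[(27,930), (32,19842), (31,19842), (33,7440), (15,19842), (12,8681)]),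
    (16,[(32,12672), (31,5503), (15,12673), (19,12672), (6,14359)]), (30,[(32,20113), (33,7441),
    (19,7440), (30,7441), (6,12595)]), (0,[(32,4753), (33,2793), (15,4753)]), (19,[(24,896),
    (15,7170), (6,12799)]), (31,[(27,1584), (33,12672), (12,2064)]), (6,[(33,12591)]),
    (12,[(15,4752)])]), (12,[(12,[(27,245), (32,13131), (31,13129), (14,11163), (15,13129),
    (19,105), (30,3)]), (31,[(27,896), (16,14338), (33,7168), (19,7169)]), (16,[(14,7441),
    (15,7169)]), (32,[(27,1584), (33,12672)])]), (6,[(6,[(24,245), (33,5291), (16,12003),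
    (19,5187), (30,5289)]), (16,[(28,1550), (24,1584), (16,7169), (33,19842)]), (30,[(32,7169),
    (31,12672)]), (19,[(32,7169)])]), (14,[(15,[(16,19842), (19,19842), (30,19842)]),
    (24,[(19,2480), (30,2480)])]), (30,[(24,[(27,310), (31,2480)]), (15,[(27,2480)])])]
    [([-1,0,0,0,0,0,0,0,0,2],28,349), ([-1,0,0,0,0,0,0,0,0,2],27,104),
    ([-1,0,0,0,0,0,0,0,0,2],24,349), ([-1,0,0,0,0,0,0,0,0,2],0,2187)]
    552 19842 13963 (by decide +kernel) (by norm_num) (by norm_num)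
    (List.forall_mem_append.2 ⟨h.triForms_nonneg hS, ?_⟩)
  simp only [triEntries, List.forall_mem_cons, Cubic.evL, Int.cast_neg, Int.cast_one,
    Int.cast_zero, Int.cast_ofNat]
  exact ⟨by linarith [h_mb], by linarith [h_m1], by linarith [h_m2iv], by linarith [h_o], by simp⟩

theorem tri_neg_iv (h : Conf b P) (hS : ∀ j, P 0 j + P 1 j + P 2 j = 0) (h_mb : 0 ≤ P 3 1)
    (h_m1 : P 0 3 ≤ 0) (h_m2iv : 1 ≤ P 3 3 - P 1 3) (h_o : 1 ≤ P 0 3 + P 3 3) :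
    19 / 27 ≤ covol b := by
  have r0 := h.row 0
  have r1 := h.row 1
  have r2 := h.row 2
  have r3 := h.row 3
  have c0 := hS 0
  have c1 := hS 1
  have c2 := hS 2
  refine h.tri_ge_of_check hS (L :=
    triForms ++ [[0,0,-1], [0,0,0,0,-1,-1,1,0,1], [-1,1,1,1,1,0,-1,-1,0,1],
    [-1,1,1,1,1,1,-1,0,-1]])
    [(31,[(12,[(26,140621), (32,1124968), (31,1124969), (14,281242), (15,1124968), (12,703106)]),
    (0,[(26,4393), (33,1195279), (31,35154), (14,843728), (13,70312)]), (6,[(13,1124970),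
    (17,1124969)]), (14,[(32,1124969), (15,1124968)]), (27,[(26,1465), (31,11719)]),
    (30,[(29,140621), (33,1124970)])]), (33,[(6,[(26,140621), (28,35155), (33,1124968),
    (13,1124968), (6,597640)]), (14,[(32,1124969), (15,1124968), (19,1124969), (30,1124971)]),
    (12,[(32,1124969), (15,1124968), (19,1124969)]), (13,[(26,11718), (33,93751)]),
    (30,[(27,117184), (32,1124968)])]), (0,[(26,[(13,4393), (30,43944), (0,16479)]),
    (12,[(15,1124969), (14,175776)]), (30,[(32,703107), (30,351553)]), (6,[(13,1072234)]),
    (14,[(15,1124969)])]), (30,[(13,[(26,11718), (32,1124972), (30,93751)]), (32,[(26,140621),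
    (30,1124968)]), (6,[(14,843725)])]), (14,[(6,[(26,105466)]), (12,[(12,1265594)]),
    (17,[(32,1124969)])]), (6,[(6,[(13,52735)])]), (12,[(17,[(32,1124969)])])]
    [([-1,0,0,0,0,0,0,0,0,2],28,39550), ([-1,0,0,0,0,0,0,0,0,2],27,1648),
    ([-1,0,0,0,0,0,0,0,0,2],33,131832), ([-1,0,0,0,0,0,0,0,0,2],31,105466),
    ([-1,0,0,0,0,0,0,0,0,2],0,157647)]
    2639 1124969 791645 (by decide +kernel) (by norm_num) (by norm_num)
    (List.forall_mem_append.2 ⟨h.triForms_nonneg hS, ?_⟩)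
  simp only [triEntries, List.forall_mem_cons, Cubic.evL, Int.cast_neg, Int.cast_one,
    Int.cast_zero, Int.cast_ofNat]
  exact ⟨by linarith [h_mb], by linarith [h_m1], by linarith [h_m2iv], by linarith [h_o], by simp⟩

theorem tri_neg_ii_a (h : Conf b P) (hS : ∀ j, P 0 j + P 1 j + P 2 j = 0) (h_mb : 0 ≤ P 3 1)
    (h_m1 : P 0 3 ≤ 0) (h_m2iv : 1 ≤ P 3 3 - P 1 3) (h_o : P 0 2 + P 3 2 ≤ -1)
    (h_R : P 2 2 + P 2 3 ≤ -(P 0 2 + P 3 2)) :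
    19 / 27 ≤ covol b := by
  have r0 := h.row 0
  have r1 := h.row 1
  have r2 := h.row 2
  have r3 := h.row 3
  have c0 := hS 0
  have c1 := hS 1
  have c2 := hS 2
  refine h.tri_ge_of_check hS (L :=
    triForms ++ [[0,0,-1], [0,0,0,0,-1,-1,1,0,1], [-1,1,1,1,1,0,-1,-1,0,1], [-1,0,0,1,0,1],
    [0,0,0,1,0,1,0,0,-1,-1]])
    [(32,[(3,[(22,245), (16,7244), (34,86135), (33,297798), (7,1504), (0,957181), (6,20418)]),
    (30,[(15,47589), (13,184686), (5,179933), (2,963286), (0,1350009)]), (6,[(28,1843), (31,4634),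
    (13,41488), (20,508)]), (1,[(21,706691), (17,407385), (5,40409)]), (7,[(20,292164), (7,1533),
    (10,27165)]), (8,[(12,309582), (17,320722), (5,410208)]), (33,[(20,40979), (10,87860),
    (0,2209)]), (4,[(31,26088), (12,119134)]), (11,[(31,20471), (20,351733)]), (13,[(32,31939),
    (0,745673)]), (34,[(24,217), (34,18734)]), (2,[(16,632099)]), (12,[(21,53307)]),
    (15,[(29,298)]), (19,[(32,40978)]), (23,[(23,37)])]), (31,[(6,[(34,44231), (31,150889),
    (33,338280), (14,37614), (17,405325)]), (14,[(33,207648), (21,525478), (17,641227),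
    (8,146368)]), (26,[(9,17767), (12,48274), (4,150878), (5,99001)]), (34,[(7,65880), (20,58056),
    (0,1264519), (2,4189)]), (3,[(23,3560), (33,243425)]), (13,[(0,915007), (1,28474)]),
    (21,[(15,5041), (4,418397)]), (11,[(33,414126)]), (17,[(31,5038)]), (20,[(23,760)]),
    (22,[(22,24)])]), (34,[(15,[(11,363137), (0,52922), (6,252451), (3,115924)]), (5,[(26,46961),
    (14,95209), (11,5726)]), (8,[(23,17266), (14,1539), (19,9129)]), (1,[(27,107), (23,13460)]),
    (4,[(19,33542), (4,3057)]), (6,[(7,36585), (20,8273)]), (9,[(9,110069), (30,475469)]),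
    (34,[(34,5725), (16,2040)]), (2,[(7,5513)]), (28,[(33,638)])]), (13,[(4,[(33,118847),
    (21,571063), (20,477308), (6,8061)]), (0,[(22,121265), (8,602519), (6,177887)]),
    (17,[(19,7371), (30,368304), (2,109437)]), (6,[(21,141601), (30,47480)]), (24,[(26,8432),
    (19,20771)]), (5,[(21,118297)]), (20,[(27,7785)]), (26,[(26,29)]), (29,[(30,38989)])]),
    (16,[(5,[(16,318850), (14,8062), (8,57), (4,630699)]), (21,[(23,27620), (15,268548),
    (7,467326), (2,69250)]), (6,[(26,6663), (33,235398), (2,137979)]), (19,[(3,364567),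
    (1,734289)]), (26,[(7,80844), (2,124225)]), (0,[(20,368233)]), (15,[(29,6243)]),
    (33,[(33,14479)])]), (15,[(20,[(14,113924), (3,776050), (0,691966), (1,764466)]),
    (2,[(10,121776), (11,40936), (6,43737)]), (0,[(24,14311), (1,2155743)]), (3,[(21,396031)]),
    (7,[(26,3022)]), (9,[(30,40342)]), (11,[(15,808)]), (17,[(28,32397)]), (19,[(19,10595)])]),
    (14,[(0,[(28,8540), (33,1381745), (20,801519), (5,1655891), (30,45993), (0,122836)]),
    (2,[(20,358281), (30,310300), (4,226400)]), (19,[(24,12930)]), (20,[(20,52798)]),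
    (23,[(23,17)]), (28,[(30,7817)])]), (30,[(9,[(26,5128), (19,3901)]), (23,[(23,743),
    (2,37359)]), (1,[(1,14946)]), (3,[(6,5714)]), (12,[(12,2263)])]), (1,[(12,[(9,29551),
    (1,29550)]), (24,[(19,114628), (4,1126)]), (10,[(26,1431)])]), (26,[(10,[(24,3263),
    (12,5577)]), (3,[(24,1996)]), (9,[(33,1730)])]), (20,[(33,[(23,88), (33,5725)]),
    (11,[(20,900)])]), (4,[(24,[(24,48)])]), (9,[(23,[(23,17)])]), (11,[(29,[(29,31)])])]
    [([-1,0,0,0,0,0,0,0,0,2],22,923), ([-1,0,0,2],31,20875), ([-1,0,2],13,91616),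
    ([-1,0,0,0,0,0,0,2],20,12484), ([-1,0,0,0,0,2],20,18611), ([-1,0,0,0,2],20,15457),
    ([-1,0,0,0,0,0,2],19,494), ([-1,0,0,0,0,0,0,2],12,29292), ([-1,0,0,0,0,0,0,0,0,2],8,3545),
    ([-1,2],9,10257), ([-1,0,0,0,0,0,0,0,2],10,91551), ([-1,0,0,0,0,0,0,0,2],19,1790),
    ([-1,0,0,0,0,0,0,0,0,2],4,93560), ([-1,0,0,0,0,0,0,0,2],2,10936),
    ([-1,0,0,0,0,0,0,0,0,2],30,1742), ([-1,0,0,0,2],4,114), ([-1,0,0,0,0,0,2],0,205027),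
    ([-1,0,0,0,2],0,54198), ([-1,0,0,0,0,2],0,315082), ([-1,0,0,0,0,0,0,0,2],0,58576),
    ([-1,0,0,0,0,0,0,0,0,2],0,59909)]
    19231 3086917 2172275 (by decide +kernel) (by norm_num) (by norm_num)
    (List.forall_mem_append.2 ⟨h.triForms_nonneg hS, ?_⟩)
  simp only [triEntries, List.forall_mem_cons, Cubic.evL, Int.cast_neg, Int.cast_one,
    Int.cast_zero, Int.cast_ofNat]
  exact ⟨by linarith [h_mb], by linarith [h_m1], by linarith [h_m2iv], by linarith [h_o],
    by linarith [h_R], by simp⟩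

theorem tri_neg_ii_b (h : Conf b P) (hS : ∀ j, P 0 j + P 1 j + P 2 j = 0) (h_mb : 0 ≤ P 3 1)
    (h_m1 : P 0 3 ≤ 0) (h_m2iv : 1 ≤ P 3 3 - P 1 3) (h_o : P 0 2 + P 3 2 ≤ -1)
    (h_R : P 2 2 + P 2 3 ≤ -(P 0 2 + P 3 2) - (P 0 1 + P 3 1)) :
    19 / 27 ≤ covol b := by
  have r0 := h.row 0
  have r1 := h.row 1
  have r2 := h.row 2
  have r3 := h.row 3
  have c0 := hS 0
  have c1 := hS 1
  have c2 := hS 2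
  refine h.tri_ge_of_check hS (L :=
    triForms ++ [[0,0,-1], [0,0,0,0,-1,-1,1,0,1], [-1,1,1,1,1,0,-1,-1,0,1], [-1,0,0,1,0,1],
    [0,0,1,1,1,1,0,0,-1,-1]])
    [(32,[(0,[(34,100163), (16,48880), (33,63249), (13,68122), (15,24258), (3,98846),
    (30,609682)]), (2,[(16,107243), (8,1326), (20,52390), (11,216216), (30,201667), (3,22160)]),
    (20,[(11,7504), (7,112543), (30,31478), (6,6152)]), (4,[(12,134294), (4,27127), (1,107834)]),
    (21,[(32,3700), (21,1223), (1,333605)]), (30,[(34,33354), (13,110482), (5,128709)]),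
    (8,[(34,107966), (5,33424)]), (26,[(32,469), (14,300)]), (33,[(34,27258), (3,125588)]),
    (11,[(15,27125)])]), (15,[(21,[(22,38), (29,463), (34,12457), (16,11988), (8,5869)]),
    (1,[(20,539367), (0,186121), (4,80707), (30,194305)]), (11,[(34,55059), (33,9567), (15,27126),
    (2,145032)]), (3,[(34,106357), (15,27128), (20,45493)]), (30,[(15,3746), (9,105078),
    (19,102972)]), (0,[(34,262912), (20,285452)]), (8,[(33,1329)]), (14,[(20,13555)]),
    (16,[(29,2922)]), (22,[(34,6596)]), (26,[(28,2115)])]), (13,[(0,[(22,23169), (31,23482),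
    (21,84568), (8,195720), (6,196193)]), (30,[(29,39340), (13,18459), (17,24634), (10,27001),
    (6,18459)]), (4,[(31,26461), (13,27124), (21,189424), (20,168386)]), (16,[(27,479), (20,6900),
    (19,154100)]), (6,[(33,170250), (8,175752)]), (8,[(14,38588)]), (9,[(21,10279)]),
    (20,[(22,11521)]), (23,[(33,1792)]), (24,[(26,2107)])]), (14,[(0,[(16,174261), (33,338473),
    (20,99040), (30,13656), (5,604862), (0,37869)]), (19,[(27,19718), (24,2908), (34,48400),
    (11,111996)]), (2,[(16,135620), (20,287810), (30,190069)]), (31,[(21,259175), (8,134142),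
    (17,68534)]), (5,[(16,11253), (33,133632)]), (20,[(27,2487), (20,41082)]), (4,[(28,3308)]),
    (14,[(29,82)]), (30,[(34,5840)])]), (16,[(20,[(10,19586), (1,15613), (0,150757), (5,87859),
    (2,25311)]), (26,[(26,40), (5,5042), (2,8241), (0,64861)]), (21,[(7,167466), (9,36550),
    (5,90706)]), (31,[(33,400), (9,97188)]), (2,[(6,82588)]), (4,[(5,76011)]), (19,[(19,1854)])]),
    (33,[(30,[(26,83), (23,6434), (5,8519), (6,1214), (2,5814)]), (31,[(8,53435), (11,237446),
    (6,185589), (3,162082), (0,220112)]), (19,[(9,36863), (5,5328)]), (33,[(33,663), (17,654)]),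
    (3,[(6,31956)]), (26,[(34,4188)])]), (34,[(19,[(24,5245), (8,135408), (3,30056), (1,50835)]),
    (31,[(20,50161), (0,167188), (30,25591), (4,27938)]), (30,[(9,36721), (4,180100)]),
    (20,[(20,31527)])]), (26,[(31,[(9,11149), (5,9565), (4,25800)]), (2,[(24,1211), (30,2466)]),
    (3,[(30,3160)]), (10,[(24,287)])]), (20,[(20,[(24,1924), (10,2198), (3,788)])]),
    (21,[(31,[(21,50227), (4,22690)])]), (30,[(2,[(23,16412)]), (3,[(6,2141)])]),
    (19,[(19,[(24,3223)])])]
    [([-1,0,0,0,0,0,0,0,2],26,136), ([-1,0,2],32,7096), ([-1,0,0,2],31,9002), ([-1,0,0,2],15,983),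
    ([-1,0,2],15,37402), ([-1,0,0,0,0,0,0,0,2],33,45597), ([-1,2],14,2397),
    ([-1,0,0,0,2],20,25082), ([-1,2],20,298), ([-1,0,0,0,0,0,2],20,3894),
    ([-1,0,0,0,0,2],20,47532), ([-1,0,0,0,0,0,0,0,2],21,11715), ([-1,0,0,0,0,0,2],10,13396),
    ([-1,0,0,0,0,0,0,0,0,2],8,20013), ([-1,0,0,0,0,0,0,0,2],10,20176), ([-1,2],9,3798),
    ([-1,2],8,37636), ([-1,2],19,7912), ([-1,0,0,0,0,0,0,2],12,40355),
    ([-1,0,0,0,0,0,0,0,0,2],30,12262), ([-1,2],4,3570), ([-1,0,0,0,2],30,538),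
    ([-1,0,0,0,0,0,0,2],4,6782), ([-1,0,0,0,0,2],6,20178), ([-1,0,0,0,0,0,0,0,0,2],4,40354),
    ([-1,2],1,6162), ([-1,0,0,0,2],0,6904), ([-1,0,0,0,0,0,2],0,32130),
    ([-1,0,0,0,0,0,0,0,0,2],0,30291), ([-1,0,0,0,0,0,0,2],0,5712), ([-1,2],0,3042),
    ([-1,0,0,0,0,2],0,55404), ([-1,0,0,0,0,0,0,0,2],0,22859)]
    6193 1124969 791645 (by decide +kernel) (by norm_num) (by norm_num)
    (List.forall_mem_append.2 ⟨h.triForms_nonneg hS, ?_⟩)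
  simp only [triEntries, List.forall_mem_cons, Cubic.evL, Int.cast_neg, Int.cast_one,
    Int.cast_zero, Int.cast_ofNat]
  exact ⟨by linarith [h_mb], by linarith [h_m1], by linarith [h_m2iv], by linarith [h_o],
    by linarith [h_R], by simp⟩

theorem tri_neg_d_u1 (h : Conf b P) (hS : ∀ j, P 0 j + P 1 j + P 2 j = 0) (h_mb : 0 ≤ P 3 1)
    (h_u1 : 0 ≤ P 0 3) (h_u2 : 0 ≤ P 1 3) (h_o : 1 ≤ P 1 1 - P 3 1)
    (h_R : 0 ≤ -P 3 0 + P 1 0 - P 3 1 - P 1 3) :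
    19 / 27 ≤ covol b := by
  have r0 := h.row 0
  have r1 := h.row 1
  have r2 := h.row 2
  have r3 := h.row 3
  have c0 := hS 0
  have c1 := hS 1
  have c2 := hS 2
  refine h.tri_ge_of_check hS (L :=
    triForms ++ [[0,0,-1], [0,0,0,0,1,1,-1,0,-1], [0,0,0,0,-1,0,1,1,0,-1], [-1,0,1,0,1,0,0,0,0,1],
    [0,1,1,0,1,0,-2,-1,0,1]])
    [(13,[(6,[(34,2969121), (16,3603653), (31,3797089), (33,1148323), (32,5938246), (15,1322712),
    (13,1659485), (21,353500), (6,1901446), (30,489304)]), (21,[(28,251311), (34,2615623),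
    (33,2680081), (16,1059910), (32,909565), (31,347689), (13,347689), (15,282568), (0,3319975)]),
    (31,[(26,1936), (34,3660045), (31,1895640), (32,10248311), (33,4800421), (13,1653676),
    (15,1328525), (30,498989)]), (34,[(29,291632), (26,194464), (34,2615623), (32,10462495),
    (33,669588), (13,2963314), (30,4023194)]), (26,[(28,10483), (32,388928), (16,113196),
    (15,77261), (30,557147)]), (13,[(32,5926626), (33,1163815), (15,1221355), (13,470571)]),
    (29,[(32,583263), (33,356840), (15,403019), (30,332288)]), (0,[(33,3954840), (30,8559103),
    (0,6011)]), (28,[(33,168049), (30,301567)]), (16,[(30,6526711)]), (32,[(32,10462496)])]),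
    (30,[(31,[(26,539760), (29,154330), (34,6880770), (32,11571587), (31,498990), (33,5481316),
    (6,966989), (30,5041126), (0,4051893)]), (16,[(26,1336268), (34,6131846), (33,9809431),
    (32,15988396), (15,3245045), (21,7994196), (0,504265), (30,18093688)]), (34,[(29,99497),
    (34,4146706), (32,12862111), (33,3296164), (21,6431057), (6,1862354), (30,1862352)]),
    (15,[(32,2132766), (33,5312267), (15,2215755), (21,1066382), (30,6909786)]), (6,[(29,154329),
    (26,449829), (33,540242), (6,498984)]), (21,[(33,3296165), (32,494034), (21,2284352),
    (0,2160843)]), (30,[(26,141509), (33,1319996), (0,2692545)]), (32,[(32,9137401),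
    (33,5253160)]), (28,[(28,2493)])]), (31,[(6,[(34,696729), (31,2137604), (33,3621115),
    (32,4321684), (16,3593966), (15,214337), (0,11618), (6,2137604)]), (32,[(26,366027),
    (29,540211), (34,5715148), (32,8643368), (31,4321684), (33,7304195), (0,1602970)]),
    (34,[(29,87092), (34,696731), (33,4321685), (31,696731), (21,696733), (0,3363677)]),
    (15,[(29,293991), (28,394440), (16,27664), (31,107169)]), (33,[(28,94343), (29,271500),
    (26,372646), (31,3636608)]), (16,[(26,67799), (21,696731)]), (31,[(26,1936), (31,712535)])]),
    (33,[(21,[(34,3037525), (32,414196), (33,889397), (16,2724561), (15,2113563), (21,1518762),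
    (6,669589)]), (32,[(34,4735883), (33,1778788), (16,6788298), (32,3396713), (15,5566302),
    (0,1339175)]), (34,[(34,1518764), (16,2724562), (33,889398), (15,2113561), (6,669586)]),
    (26,[(29,13556), (28,20647), (16,530416), (6,211525)]), (28,[(28,12784), (29,46868),
    (6,94340)]), (6,[(29,209429)])]), (16,[(29,[(26,8527), (34,87507), (32,175013), (15,1522),
    (21,87507), (6,55221)]), (21,[(26,441354), (34,1524332), (32,7370345), (21,762168)]),
    (6,[(28,244821), (16,154343), (6,3609461)]), (26,[(26,32006), (34,441354), (32,882708)]),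
    (32,[(34,3048661), (32,3048658)]), (34,[(34,762165)])]), (15,[(29,[(28,26420), (29,23941),
    (6,293991), (0,35983)]), (6,[(26,394438), (6,107164)]), (21,[(32,4321683)])]),
    (34,[(21,[(34,2160842), (32,4321683), (21,2160842)]), (32,[(34,4321684), (32,8643368)]),
    (34,[(34,720281)])]), (6,[(6,[(28,1937), (6,712532)])]), (21,[(21,[(21,720281)])]),
    (32,[(32,[(32,5762245)])])]
    [([-1,0,0,0,0,0,0,2],29,73645), ([-1,0,0,0,0,0,0,2],26,72341), ([-1,0,0,0,0,0,0,2],28,25568),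
    ([-1,0,0,0,0,0,0,2],34,26031), ([-1,0,0,0,0,0,0,2],31,27970), ([-1,0,0,0,0,0,0,2],32,52065),
    ([-1,0,0,0,0,0,0,2],13,175380), ([-1,0,0,0,0,0,0,2],21,26030), ([-1,0,0,0,0,0,0,2],30,661429),
    ([-1,0,0,0,0,0,0,2],6,27964)]
    19564 4321684 3041186 (by decide +kernel) (by norm_num) (by norm_num)
    (List.forall_mem_append.2 ⟨h.triForms_nonneg hS, ?_⟩)
  simp only [triEntries, List.forall_mem_cons, Cubic.evL, Int.cast_neg, Int.cast_one,
    Int.cast_zero, Int.cast_ofNat]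
  exact ⟨by linarith [h_mb], by linarith [h_u1], by linarith [h_u2], by linarith [h_o],
    by linarith [h_R], by simp⟩

theorem tri_neg_d_ii (h : Conf b P) (hS : ∀ j, P 0 j + P 1 j + P 2 j = 0) (h_mb : 0 ≤ P 3 1)
    (h_m1 : P 0 3 ≤ 0) (h_u2 : 0 ≤ P 1 3) (h_o : 1 ≤ P 1 1 - P 3 1) (h_p : P 0 2 + P 3 2 ≤ -1)
    (h_R : 0 ≤ -P 3 0 + P 1 0 - P 3 1 - P 1 3) :
    19 / 27 ≤ covol b := by
  have r0 := h.row 0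
  have r1 := h.row 1
  have r2 := h.row 2
  have r3 := h.row 3
  have c0 := hS 0
  have c1 := hS 1
  have c2 := hS 2
  refine h.tri_ge_of_check hS (L :=
    triForms ++ [[0,0,-1], [0,0,0,0,-1,-1,1,0,1], [0,0,0,0,-1,0,1,1,0,-1], [-1,0,1,0,1,0,0,0,0,1],
    [-1,0,0,1,0,1], [0,1,1,0,1,0,-2,-1,0,1]])
    [(30,[(0,[(24,143023), (35,843550), (33,145419), (16,819623), (15,1460327), (13,2196244),
    (30,330187), (0,344005)]), (19,[(27,26641), (29,181914), (33,674908), (16,238501),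
    (31,265109), (34,1753458), (30,198238)]), (34,[(29,14267), (33,296338), (31,1073724),
    (34,296337), (13,171675), (30,273132)]), (35,[(26,16570), (24,70310), (35,281242),
    (15,721515), (21,1398678), (30,136855)]), (15,[(24,107552), (16,912845), (15,711449),
    (21,185086)]), (26,[(27,5837), (16,18587), (30,12215)]), (13,[(16,13777), (21,2291231)]),
    (21,[(21,506000)]), (27,[(32,109709)])]), (0,[(33,[(24,2402), (35,423128), (32,827038),
    (16,342699), (34,232869), (13,882884), (15,320418), (0,834763)]), (32,[(24,145425),
    (26,34633), (35,548324), (32,529105), (13,1518475), (21,203607)]), (35,[(24,72713), (26,468),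
    (35,141886), (15,393843), (13,882885)]), (24,[(16,558), (15,30667), (19,26)]),
    (16,[(26,17268)]), (34,[(34,232869)])]), (19,[(34,[(29,141880), (27,61294), (31,562482),
    (32,562485), (33,1135033), (16,1247458), (34,853791), (19,795354)]), (16,[(29,124051),
    (31,265106), (33,695038), (19,484898)]), (13,[(26,92203), (32,247294), (15,387335)]),
    (33,[(24,70310), (33,281243), (19,321965)]), (15,[(35,10062), (15,165077)]), (29,[(29,1815),
    (31,37243)]), (24,[(26,4646)])]), (21,[(35,[(26,88138), (24,70310), (35,853791), (32,1165230),
    (33,572550), (13,490340), (21,369724)]), (13,[(26,12875), (24,12876), (33,490341),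
    (31,103008), (21,1324327)]), (32,[(26,2516), (32,40262), (33,20131), (15,542351),
    (21,465738)]), (21,[(26,19411), (33,253000), (15,81055)]), (15,[(31,264549)]),
    (16,[(26,18587)])]), (16,[(15,[(26,66364), (24,132726), (35,530903), (33,381936), (15,530907),
    (13,737632)]), (34,[(29,35577), (27,57869), (31,1073723), (33,848758), (34,848761)]),
    (29,[(31,7894)])]), (26,[(34,[(26,4316), (24,800), (35,34527), (32,62648), (13,82752),
    (15,10560)]), (29,[(33,2328), (13,6052)])])]
    [([-1,0,0,2],29,27388), ([-1,0,0,2],27,41385), ([-1,0,0,2],35,106410), ([-1,0,0,2],33,55095),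
    ([-1,0,0,2],30,111157), ([-1,0,0,2],0,60369)]
    8422 1124969 791645 (by decide +kernel) (by norm_num) (by norm_num)
    (List.forall_mem_append.2 ⟨h.triForms_nonneg hS, ?_⟩)
  simp only [triEntries, List.forall_mem_cons, Cubic.evL, Int.cast_neg, Int.cast_one,
    Int.cast_zero, Int.cast_ofNat]
  exact ⟨by linarith [h_mb], by linarith [h_m1], by linarith [h_u2], by linarith [h_o],
    by linarith [h_p], by linarith [h_R], by simp⟩

theorem tri_neg_d_iii (h : Conf b P) (hS : ∀ j, P 0 j + P 1 j + P 2 j = 0) (h_mb : 0 ≤ P 3 1)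
    (h_m1 : P 0 3 ≤ 0) (h_u2 : 0 ≤ P 1 3) (h_o : 1 ≤ P 1 1 - P 3 1) (h_p : 1 ≤ P 0 0 + P 3 0)
    (h_R : 0 ≤ -P 3 0 + P 1 0 - P 3 1 - P 1 3) :
    19 / 27 ≤ covol b := by
  have r0 := h.row 0
  have r1 := h.row 1
  have r2 := h.row 2
  have r3 := h.row 3
  have c0 := hS 0
  have c1 := hS 1
  have c2 := hS 2
  refine h.tri_ge_of_check hS (L :=
    triForms ++ [[0,0,-1], [0,0,0,0,-1,-1,1,0,1], [0,0,0,0,-1,0,1,1,0,-1], [-1,0,1,0,1,0,0,0,0,1],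
    [-1,-1,0,0,0,0,1,0,1], [0,1,1,0,1,0,-2,-1,0,1]])
    [(0,[(30,[(24,165), (35,2520), (33,960), (16,2640), (32,1920), (34,960), (15,360), (30,960),
    (0,1785)]), (35,[(24,120), (27,120), (35,960), (34,1920), (32,1920), (33,960), (16,240),
    (0,240)]), (16,[(31,360), (32,240), (33,1320), (34,1320), (15,360), (0,690)]), (32,[(24,120),
    (33,960), (32,1320), (34,960), (0,105)]), (33,[(24,45), (34,960), (15,360), (0,825)]),
    (27,[(24,15), (31,120), (20,120)]), (34,[(24,120), (31,960), (0,960)]), (0,[(15,360)]),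
    (20,[(20,960)])]), (16,[(32,[(27,120), (24,120), (35,1920), (33,960), (32,960), (34,960),
    (30,1920)]), (35,[(24,120), (27,120), (35,960), (33,960), (34,1920), (30,2880)]),
    (20,[(27,120), (23,120), (20,960)]), (24,[(27,15), (34,120), (30,120)]), (23,[(27,15)])]),
    (32,[(20,[(24,120), (35,960), (34,960)]), (23,[(27,15), (34,120)]), (24,[(30,120)])]),
    (30,[(31,[(23,120), (33,960)]), (35,[(24,120), (15,960)])]), (31,[(33,[(27,120), (34,960)])])]
    []
    149 960 676 (by decide +kernel) (by norm_num) (by norm_num)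
    (List.forall_mem_append.2 ⟨h.triForms_nonneg hS, ?_⟩)
  simp only [triEntries, List.forall_mem_cons, Cubic.evL, Int.cast_neg, Int.cast_one,
    Int.cast_zero, Int.cast_ofNat]
  exact ⟨by linarith [h_mb], by linarith [h_m1], by linarith [h_u2], by linarith [h_o],
    by linarith [h_p], by linarith [h_R], by simp⟩

theorem tri_neg_d_iv (h : Conf b P) (hS : ∀ j, P 0 j + P 1 j + P 2 j = 0) (h_mb : 0 ≤ P 3 1)
    (h_m1 : P 0 3 ≤ 0) (h_u2 : 0 ≤ P 1 3) (h_o : 1 ≤ P 1 1 - P 3 1) (h_p : 1 ≤ P 0 3 + P 3 3)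
    (h_R : 0 ≤ -P 3 0 + P 1 0 - P 3 1 - P 1 3) :
    19 / 27 ≤ covol b := by
  have r0 := h.row 0
  have r1 := h.row 1
  have r2 := h.row 2
  have r3 := h.row 3
  have c0 := hS 0
  have c1 := hS 1
  have c2 := hS 2
  refine h.tri_ge_of_check hS (L :=
    triForms ++ [[0,0,-1], [0,0,0,0,-1,-1,1,0,1], [0,0,0,0,-1,0,1,1,0,-1], [-1,0,1,0,1,0,0,0,0,1],
    [-1,1,1,1,1,1,-1,0,-1], [0,1,1,0,1,0,-2,-1,0,1]])
    [(30,[(17,[(29,46642), (34,787478), (35,860028), (31,1420333), (33,393741), (13,793878),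
    (17,860028), (30,616581), (0,449782), (6,188842)]), (31,[(34,787479), (35,194704),
    (31,244580), (33,1181219), (15,24937), (13,1616171), (12,832447), (30,194705), (0,896626)]),
    (12,[(34,1574957), (35,153490), (33,393739), (15,548137), (12,186242), (0,665437),
    (30,153490)]), (13,[(29,19186), (35,153490), (34,787477), (13,153490), (30,153490),
    (0,720993)]), (32,[(35,828692), (33,787478), (32,2726401), (15,584386), (30,828692)]),
    (0,[(35,778551), (15,1435458), (0,65484), (30,778552)]), (34,[(35,787478), (33,787479),
    (15,787479), (30,787479)]), (15,[(33,393739)])]), (15,[(0,[(26,45646), (29,34235),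
    (34,365171), (35,273878), (33,639828), (13,273882), (12,70462), (17,169195)]),
    (12,[(26,24666), (29,63038), (34,984803), (35,504304), (13,504303), (12,193420)]),
    (32,[(29,60862), (26,115773), (34,926182), (35,486896), (13,47612), (17,1460687)]),
    (33,[(29,49217), (34,787478), (35,393740), (13,393739), (6,787481)]), (17,[(29,30431),
    (13,219643), (6,13393)]), (31,[(26,27455), (34,219643)])]), (31,[(17,[(26,2976), (29,60862),
    (34,23806), (33,2362435), (32,1413078), (13,219643), (12,750282), (0,1392371)]),
    (31,[(26,27455), (34,219642), (35,219642), (33,393739), (13,219641)]), (0,[(26,494),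
    (34,91292), (35,8927), (13,1276904)]), (33,[(34,787478), (35,1181218), (13,1181218)]),
    (6,[(26,10917), (13,306980)]), (12,[(34,700140), (35,1267977)]), (32,[(35,439284)])]),
    (13,[(32,[(35,439285), (32,1852361), (33,787478), (13,439286), (12,82429), (0,17854)]),
    (17,[(35,267254), (33,393740), (13,23806), (17,267253), (12,250441)]), (0,[(34,787479),
    (6,1026462), (0,274251)]), (6,[(34,787477), (6,278711)]), (33,[(34,787478), (12,393739)])]),
    (35,[(12,[(34,787478), (33,393739), (32,521713), (12,274247), (17,30799)]), (17,[(35,243448),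
    (33,393740), (17,486896)]), (32,[(32,973792), (33,787478), (0,17855)]), (6,[(6,4462)]),
    (33,[(34,787478)])]), (17,[(17,[(33,393740), (12,30800), (17,243448)]), (6,[(32,17857),
    (6,4462)]), (34,[(33,787478), (12,787479)])]), (32,[(32,[(26,11903), (34,95224), (33,1574957),
    (32,1947585), (12,69632)])]), (6,[(6,[(26,7628), (34,848500), (6,242246)]),
    (12,[(33,393739)])]), (0,[(0,[(34,787478)]), (12,[(33,1181216)])]), (12,[(33,[(34,787478)])])]
    [([-1,0,0,0,0,0,0,0,0,2],29,30514), ([-1,0,0,0,0,0,0,0,0,2],32,8928),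
    ([-1,0,0,0,0,0,0,0,0,2],31,22322), ([-1,0,0,0,0,0,0,0,0,2],6,9117),
    ([-1,0,0,0,0,0,0,0,0,2],0,98790)]
    2073 1574957 1108304 (by decide +kernel) (by norm_num) (by norm_num)
    (List.forall_mem_append.2 ⟨h.triForms_nonneg hS, ?_⟩)
  simp only [triEntries, List.forall_mem_cons, Cubic.evL, Int.cast_neg, Int.cast_one,
    Int.cast_zero, Int.cast_ofNat]
  exact ⟨by linarith [h_mb], by linarith [h_m1], by linarith [h_u2], by linarith [h_o],
    by linarith [h_p], by linarith [h_R], by simp⟩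

end Conf

/-! ### Three tips with sum zero: the bound -/

namespace Conf

variable {b : Fin 3 → Fin 4 → ℝ} {P : Fin 4 → Fin 4 → ℝ}

/-- Off-diagonal entries of three tips with sum zero are nonpositive in the first three columns. -/
theorem tri_nonpos (h : Conf b P) (hS : ∀ j, P 0 j + P 1 j + P 2 j = 0) :
    P 0 1 ≤ 0 ∧ P 0 2 ≤ 0 ∧ P 1 0 ≤ 0 ∧ P 1 2 ≤ 0 ∧ P 2 0 ≤ 0 ∧ P 2 1 ≤ 0 := by
  have d0 := h.diag 0
  have d1 := h.diag 1
  have d2 := h.diag 2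
  have l01 := h.low 0 1 (by decide)
  have l02 := h.low 0 2 (by decide)
  have l10 := h.low 1 0 (by decide)
  have l12 := h.low 1 2 (by decide)
  have l20 := h.low 2 0 (by decide)
  have l21 := h.low 2 1 (by decide)
  have c0 := hS 0
  have c1 := hS 1
  have c2 := hS 2
  refine ⟨?_, ?_, ?_, ?_, ?_, ?_⟩ <;> linarith

/-- Admissibility of `P 0 + P 3`. -/
theorem tri_opt (h : Conf b P) (hS : ∀ j, P 0 j + P 1 j + P 2 j = 0) :
    P 0 1 + P 3 1 ≤ -1 ∨ P 0 2 + P 3 2 ≤ -1 ∨ 1 ≤ P 0 0 + P 3 0 ∨ 1 ≤ P 0 3 + P 3 3 := by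
  obtain ⟨w01, w02, -, -, -, -⟩ := h.tri_nonpos hS
  have hx := h.adm.adm (fun j => P 0 j + P 3 j) (add_mem (h.mem 0) (h.mem 3)) (fun h0 => by
    have := congrFun h0 0
    simp only [Pi.zero_apply] at this
    linarith [h.diag 0, h.low 3 0 (by decide)])
  rw [exists_fin_four] at hx
  simp only [le_abs] at hx
  rcases hx with (g | g) | (g | g) | (g | g) | (g | g)
  · exact Or.inr (Or.inr (Or.inl g))
  · linarith [h.diag 0, h.low 3 0 (by decide)]
  · linarith [h.up 3 1 (by decide)]
  · exact Or.inl (by linarith)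
  · linarith [h.up 3 2 (by decide)]
  · exact Or.inr (Or.inl (by linarith))
  · exact Or.inr (Or.inr (Or.inr g))
  · linarith [h.diag 3, h.low 0 3 (by decide)]

theorem tri_opt' (h : Conf b P) (hS : ∀ j, P 0 j + P 1 j + P 2 j = 0) :
    P 1 0 + P 3 0 ≤ -1 ∨ P 1 2 + P 3 2 ≤ -1 ∨ 1 ≤ P 1 1 + P 3 1 ∨ 1 ≤ P 1 3 + P 3 3 := by
  obtain ⟨e, e0, e1, e2, e3⟩ := exists_perm 1 0 2 3 (by decide) (by decide) (by decide) (by decide)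
    (by decide) (by decide)
  have := (h.perm e).tri_opt (col_perm_tri e0 e1 e2 fun m => by linarith [hS m])
  simpa only [Function.comp_apply, e0, e1, e2, e3] using this

/-- This case contains configurations of covolume exactly `19/27`. With `t1 = P₁₁P₂₂ - P₁₂P₂₁` and
`t2 = P₀₀P₂₂ - P₀₂P₂₀`, the determinant is, up to its sign, at least `y * t2 + (1 - y) * t1` for
`y = 1 + P 0 1`. -/
theorem tri_posI_i (h : Conf b P) (hS : ∀ j, P 0 j + P 1 j + P 2 j = 0)
    (h_c : P 3 2 ≤ 0) (h_u2 : 0 ≤ P 1 3) (h_u3 : 0 ≤ P 2 3)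
    (h_o : P 0 1 + P 3 1 ≤ -1) : 19 / 27 ≤ covol b := by
  rw [h.covol_eq_tri hS]
  refine le_trans ?_ (neg_le_abs _)
  obtain ⟨w01, w02, w10, w12, w20, w21⟩ := h.tri_nonpos hS
  have l01 := h.low 0 1 (by decide)
  have l12 := h.low 1 2 (by decide)
  have hd0 := h.diag 0
  have hd1 := h.diag 1
  have hd2 := h.diag 2
  have hd3 := h.diag 3
  have r1 := h.row 1
  have r2 := h.row 2
  have r3 := h.row 3
  have c0 := hS 0
  have c1 := hS 1
  have c2 := hS 2
  obtain ⟨y, hy⟩ : ∃ y, y = 1 + P 0 1 := ⟨_, rfl⟩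
  obtain ⟨z, hz⟩ : ∃ z, z = 1 + P 1 2 := ⟨_, rfl⟩
  obtain ⟨t1, ht1⟩ : ∃ t, t = P 1 1 * P 2 2 - P 1 2 * P 2 1 := ⟨_, rfl⟩
  obtain ⟨t2, ht2⟩ : ∃ t, t = P 0 0 * P 2 2 - P 0 2 * P 2 0 := ⟨_, rfl⟩
  obtain ⟨A, hA⟩ : ∃ t, t = P 2 2 * P 1 3 - P 1 2 * P 2 3 := ⟨_, rfl⟩
  obtain ⟨B, hB⟩ : ∃ t, t = P 1 1 * P 2 3 - P 2 1 * P 1 3 := ⟨_, rfl⟩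
  have hA0 : 0 ≤ A := by
    rw [hA]
    nlinarith [mul_nonneg (by linarith : (0 : ℝ) ≤ P 2 2) h_u2,
      mul_nonneg (by linarith : (0 : ℝ) ≤ -P 1 2) h_u3]
  have hB0 : 0 ≤ B := by
    rw [hB]
    nlinarith [mul_nonneg (by linarith : (0 : ℝ) ≤ P 1 1) h_u3,
      mul_nonneg (by linarith : (0 : ℝ) ≤ -P 2 1) h_u2]
  have e00 : P 0 0 = -P 1 0 - P 2 0 := by linarith
  have e11 : P 1 1 = -P 0 1 - P 2 1 := by linarith
  have e22 : P 2 2 = -P 0 2 - P 1 2 := by linarith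
  have e13 : P 1 3 = -P 1 0 - P 1 1 - P 1 2 := by linarith
  have e23 : P 2 3 = -P 2 0 - P 2 1 - P 2 2 := by linarith
  have hAt : A = t2 - t1 := by
    rw [hA, ht1, ht2, e13, e23, e00, e11, e22]
    ring
  have hdet : -det3 (P 0) (P 1) (P 3) = P 3 3 * t1 + -P 3 1 * A + -P 3 2 * B := by
    rw [hA, hB, ht1, det3, show P 3 3 = -P 3 0 - P 3 1 - P 3 2 by linarith, e13, e23, e00, e11, e22]
    ring
  have k1 : 1 - y + y * z ≤ t1 := by
    have g1 := mul_nonneg (by linarith : (0 : ℝ) ≤ -P 0 1) (by linarith : (0 : ℝ) ≤ P 2 2 - 1)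
    have g2 := mul_nonneg (by linarith : (0 : ℝ) ≤ -P 2 1) (by linarith : (0 : ℝ) ≤ -P 0 2 - z)
    have g3 := mul_nonneg (by linarith : (0 : ℝ) ≤ -P 2 1 - y) (by linarith : (0 : ℝ) ≤ z)
    rw [ht1, e11]
    rw [e22] at g1 ⊢
    rw [hy, hz] at *
    linarith
  have k2 : 1 - z + z * z ≤ t2 := by
    have g1 := mul_nonneg (by linarith : (0 : ℝ) ≤ -P 1 0) (by linarith : (0 : ℝ) ≤ P 2 2 - 1)
    have g2 := mul_nonneg (by linarith : (0 : ℝ) ≤ -P 2 0 - 1 - P 1 0)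
      (by linarith : (0 : ℝ) ≤ -P 1 2)
    have g3 := mul_nonneg (by linarith : (0 : ℝ) ≤ -P 1 0 - z) (by linarith : (0 : ℝ) ≤ z)
    rw [ht2, e00]
    rw [e22] at g1 ⊢
    rw [hz] at *
    linarith
  have y0 : 0 ≤ y := by linarith
  have y1 : y ≤ 1 := by linarith
  have z0 : 0 ≤ z := by linarith
  have t10 : 0 ≤ t1 := by
    have := mul_nonneg y0 z0
    linarith
  have s1 : 0 ≤ (P 3 3 - 1) * t1 := mul_nonneg (by linarith) t10
  have s2 : 0 ≤ (-P 3 1 - y) * A := mul_nonneg (by linarith) hA0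
  have s3 : 0 ≤ -P 3 2 * B := mul_nonneg (by linarith) hB0
  have s4 : 0 ≤ y * (t2 - (1 - z + z * z)) := mul_nonneg y0 (by linarith)
  have s5 : 0 ≤ (1 - y) * (t1 - (1 - y + y * z)) := mul_nonneg (by linarith) (by linarith)
  have s6 : 0 ≤ y * (z - y / 2) ^ 2 := mul_nonneg y0 (sq_nonneg _)
  have s7 : 0 ≤ (y - 2 / 3) ^ 2 * (2 / 3 - y / 4) := mul_nonneg (sq_nonneg _) (by linarith)
  rw [hdet]
  rw [hAt] at s2 ⊢
  linarith

theorem tri_posI (h : Conf b P) (hS : ∀ j, P 0 j + P 1 j + P 2 j = 0) (h_a : P 3 0 ≤ 0)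
    (h_b : P 3 1 ≤ 0) (h_c : P 3 2 ≤ 0) (h_u2 : 0 ≤ P 1 3) (h_u3 : 0 ≤ P 2 3) :
    19 / 27 ≤ covol b := by
  rcases h.tri_opt hS with g | g | g | g
  · exact h.tri_posI_i hS h_c h_u2 h_u3 g
  · obtain ⟨e, e0, e1, e2, e3⟩ := exists_perm 0 2 1 3 (by decide) (by decide) (by decide) (by decide)
      (by decide) (by decide)
    rw [← covol_perm b h.adm.sum0 e]
    apply (h.perm e).tri_posI_i (col_perm_tri e0 e1 e2 fun m => by linarith [hS m]) <;>
      simpa only [Function.comp_apply, e0, e1, e2, e3]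
  · exact h.tri_posI_iii hS h_a h_b h_c h_u2 h_u3 g
  · exact h.tri_posI_iv hS h_b h_u2 h_u3 g

theorem tri_posII_a (h : Conf b P) (hS : ∀ j, P 0 j + P 1 j + P 2 j = 0) (h_a : P 3 0 ≤ 0)
    (h_b : P 3 1 ≤ 0) (h_c : P 3 2 ≤ 0) (h_m1 : P 0 3 ≤ 0) (h_m2 : P 1 3 ≤ 0)
    (h_a31 : P 3 0 ≤ P 2 0) : 19 / 27 ≤ covol b := by
  by_cases hm : 1 ≤ P 3 3 - P 2 3
  · exact h.tri_posII_m3 hS h_b h_c h_m1 h_m2 hm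
  push Not at hm
  obtain ⟨w01, w02, w10, w12, w20, w21⟩ := h.tri_nonpos hS
  have r2 := h.row 2
  have r3 := h.row 3
  have c3 := hS 3
  have hd2 := h.diag 2
  have hd3 := h.diag 3
  have hu := h.up 2 3 (by decide)
  have v0 := h.low 2 0 (by decide)
  have v1 := h.low 2 1 (by decide)
  have v2 := h.low 3 0 (by decide)
  have v3 := h.low 3 1 (by decide)
  have hY := (h.tip 2).rule (P 2 - P 3) (sub_mem (h.mem 2) (h.mem 3)) (by
    simp only [Pi.sub_apply]
    exact le_abs.2 (Or.inl (by linarith))) (by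
    rw [forall_fin_four]
    simp only [Pi.sub_apply, abs_lt]
    refine ⟨fun _ => ⟨?_, ?_⟩, fun _ => ⟨?_, ?_⟩, fun k => (k rfl).elim, fun _ => ⟨?_, ?_⟩⟩ <;> linarith)
  have hN := add_le_nrm (h.row 2) 2 3 (by decide)
  rw [nrm_eq (P 2 - P 3)] at hY
  simp only [Pi.sub_apply] at hY
  rw [abs_of_nonneg (by linarith : 0 ≤ P 2 0 - P 3 0), abs_of_nonneg (by linarith : 0 ≤ P 2 2 - P 3 2),
    abs_of_nonpos (by linarith : P 2 3 - P 3 3 ≤ 0)] at hY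
  have hSa : 0 ≤ -P 3 2 - P 3 0 + P 2 0 - P 2 3 := by
    rcases le_total 0 (P 2 1 - P 3 1) with g | g
    · linarith
    · rw [abs_of_nonpos g] at hY
      linarith
  rcases h.tri_opt hS with g | g | g | g
  · exact h.tri_posII_i hS h_b h_c h_m1 h_m2 h_a31 g
  · exact h.tri_posII_ii hS h_a h_b h_c h_m1 h_m2 (by linarith) hSa h_a31 g
  · exact h.tri_posII_iii hS h_a h_m1 h_m2 hSa h_a31 g
  · exact h.tri_posII_iv hS h_b h_c h_m1 h_m2 hSa h_a31 g

/-- In the remaining case `P 0`, `P 1`, `P 2 - P 3`, `P 3` is an obtuse superbase. -/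
theorem tri_posII_base (h : Conf b P) (hS : ∀ j, P 0 j + P 1 j + P 2 j = 0) (h_a : P 3 0 ≤ 0)
    (h_b : P 3 1 ≤ 0) (h_c : P 3 2 ≤ 0) (h_m1 : P 0 3 ≤ 0) (h_m2 : P 1 3 ≤ 0)
    (h_a31 : P 2 0 ≤ P 3 0) (h_b32 : P 2 1 ≤ P 3 1) : 19 / 27 ≤ covol b := by
  by_cases hm : 1 ≤ P 3 3 - P 2 3
  · exact h.tri_posII_m3 hS h_b h_c h_m1 h_m2 hm
  push Not at hm
  obtain ⟨w01, w02, w10, w12, w20, w21⟩ := h.tri_nonpos hS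
  have v1 := h.low 2 0 (by decide)
  have v2 := h.low 2 1 (by decide)
  have v3 := h.low 3 2 (by decide)
  have v4 := h.up 2 3 (by decide)
  have d2 := h.diag 2
  have d3 := h.diag 3
  have hc0 := hS 0
  have hc1 := hS 1
  have hc2 := hS 2
  have hr2 := h.row 2
  have hr3 := h.row 3
  rw [h.covol_eq_tri hS]
  have key := det3_ge_nonpos (Q := ![P 0, P 1, P 2 - P 3, P 3]) ⟨?_, ?_, ?_, ?_⟩ ?_ ?_ ?_ ?_
  · refine le_trans key (le_trans (le_of_eq ?_) (neg_le_abs _))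
    have e0 : P 2 0 = -P 0 0 - P 1 0 := by linarith
    have e1 : P 2 1 = -P 0 1 - P 1 1 := by linarith
    have e2 : P 2 2 = -P 0 2 - P 1 2 := by linarith
    simp [det3, e0, e1, e2]
    ring
  · rw [forall_fin_four]
    refine ⟨h.row 0, h.row 1, ?_, h.row 3⟩
    simp
    linarith
  · intro j
    have := hS j
    simp
    linarith
  · rw [forall_fin_four]
    refine ⟨h.diag 0, h.diag 1, ?_, h.diag 3⟩
    simp
    linarith
  · intro i j hij
    fin_cases i
    · exact (h.low 0 j hij).le
    · exact (h.low 1 j hij).le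
    · fin_cases j <;> simp at hij ⊢ <;> linarith
    · exact (h.low 3 j hij).le
  · intro i j hij
    fin_cases i <;> fin_cases j <;> simp at hij ⊢ <;> linarith
  · exact Or.inr (Or.inr (Or.inr (by simp [Light]; linarith)))
  · rcases h.tri_opt' hS with g | g | g | g
    · exact Or.inr (Or.inl (by simp [Light]; linarith))
    · exact Or.inl (by simp [Light]; linarith)
    · exact Or.inr (Or.inr (Or.inr (by simp [Light]; linarith)))
    · exact Or.inr (Or.inr (Or.inl (by simp [Light]; linarith)))
  · rcases h.tri_opt hS with g | g | g | g
    · exact Or.inr (Or.inr (Or.inr (by simp [Light]; linarith)))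
    · exact Or.inr (Or.inr (Or.inl (by simp [Light]; linarith)))
    · exact Or.inr (Or.inl (by simp [Light]; linarith))
    · exact Or.inl (by simp [Light]; linarith)

theorem tri_posII (h : Conf b P) (hS : ∀ j, P 0 j + P 1 j + P 2 j = 0) (h_a : P 3 0 ≤ 0)
    (h_b : P 3 1 ≤ 0) (h_c : P 3 2 ≤ 0) (h_m1 : P 0 3 ≤ 0) (h_m2 : P 1 3 ≤ 0) :
    19 / 27 ≤ covol b := by
  rcases le_total (P 3 0) (P 2 0) with ha | ha
  · exact h.tri_posII_a hS h_a h_b h_c h_m1 h_m2 ha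
  rcases le_total (P 3 1) (P 2 1) with hb | hb
  · obtain ⟨e, e0, e1, e2, e3⟩ := exists_perm 1 0 2 3 (by decide) (by decide) (by decide) (by decide)
      (by decide) (by decide)
    rw [← covol_perm b h.adm.sum0 e]
    apply (h.perm e).tri_posII_a (col_perm_tri e0 e1 e2 fun m => by linarith [hS m]) <;>
      simpa only [Function.comp_apply, e0, e1, e2, e3]
  · exact h.tri_posII_base hS h_a h_b h_c h_m1 h_m2 ha hb

theorem tri_pos (h : Conf b P) (hS : ∀ j, P 0 j + P 1 j + P 2 j = 0) (h_a : P 3 0 ≤ 0)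
    (h_b : P 3 1 ≤ 0) (h_c : P 3 2 ≤ 0) : 19 / 27 ≤ covol b := by
  obtain ⟨e, e0, e1, e2, e3⟩ := exists_perm 1 2 0 3 (by decide) (by decide) (by decide) (by decide)
    (by decide) (by decide)
  obtain ⟨f, f0, f1, f2, f3⟩ := exists_perm 2 0 1 3 (by decide) (by decide) (by decide) (by decide)
    (by decide) (by decide)
  have hSe := col_perm_tri e0 e1 e2 fun m => by linarith [hS m]
  have hSf := col_perm_tri f0 f1 f2 fun m => by linarith [hS m]
  rcases le_total (P 0 3) 0 with u0 | u0 <;> rcases le_total (P 1 3) 0 with u1 | u1 <;>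
    rcases le_total (P 2 3) 0 with u2 | u2
  · exact h.tri_posII hS h_a h_b h_c u0 u1
  · exact h.tri_posII hS h_a h_b h_c u0 u1
  · rw [← covol_perm b h.adm.sum0 f]
    apply (h.perm f).tri_posII hSf <;> simpa only [Function.comp_apply, f0, f1, f2, f3]
  · exact h.tri_posI hS h_a h_b h_c u1 u2
  · rw [← covol_perm b h.adm.sum0 e]
    apply (h.perm e).tri_posII hSe <;> simpa only [Function.comp_apply, e0, e1, e2, e3]
  · rw [← covol_perm b h.adm.sum0 e]
    apply (h.perm e).tri_posI hSe <;> simpa only [Function.comp_apply, e0, e1, e2, e3]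
  · rw [← covol_perm b h.adm.sum0 f]
    apply (h.perm f).tri_posI hSf <;> simpa only [Function.comp_apply, f0, f1, f2, f3]
  · exact h.tri_posI hS h_a h_b h_c u1 u2

/-- The first alternative of `tri_opt` is impossible here. In the second, `P 0 + P 3` competes with the
tip `P 2`. -/
theorem tri_negA (h : Conf b P) (hS : ∀ j, P 0 j + P 1 j + P 2 j = 0) (h_mb : 0 ≤ P 3 1)
    (h_m1 : P 0 3 ≤ 0) (h_m2iv : 1 ≤ P 3 3 - P 1 3) : 19 / 27 ≤ covol b := by
  by_cases g3 : 1 ≤ P 0 0 + P 3 0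
  · exact h.tri_neg_iii hS h_mb h_m1 h_m2iv g3
  by_cases g4 : 1 ≤ P 0 3 + P 3 3
  · exact h.tri_neg_iv hS h_mb h_m1 h_m2iv g4
  push Not at g3 g4
  obtain ⟨w01, w02, w10, w12, w20, w21⟩ := h.tri_nonpos hS
  have l01 := h.low 0 1 (by decide)
  have d0 := h.diag 0
  have d3 := h.diag 3
  have l30 := h.low 3 0 (by decide)
  have l03 := h.low 0 3 (by decide)
  have u31 := h.up 3 1 (by decide)
  have g2 : P 0 2 + P 3 2 ≤ -1 := by
    rcases h.tri_opt hS with g | g | g | g <;> linarith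
  have r0 := h.row 0
  have r3 := h.row 3
  have hY := (h.tip 2).rule (P 0 + P 3) (add_mem (h.mem 0) (h.mem 3)) (by
    simp only [Pi.add_apply]
    exact le_abs.2 (Or.inr (by linarith))) (by
    rw [forall_fin_four]
    simp only [Pi.add_apply, abs_lt]
    refine ⟨fun _ => ⟨?_, ?_⟩, fun _ => ⟨?_, ?_⟩, fun k => (k rfl).elim, fun _ => ⟨?_, ?_⟩⟩ <;> linarith)
  have hN := add_le_nrm (h.row 2) 2 3 (by decide)
  rw [nrm_eq (P 0 + P 3)] at hY
  simp only [Pi.add_apply] at hY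
  rw [abs_of_nonneg (by linarith : 0 ≤ P 0 0 + P 3 0), abs_of_nonpos (by linarith : P 0 2 + P 3 2 ≤ 0),
    abs_of_nonneg (by linarith : 0 ≤ P 0 3 + P 3 3)] at hY
  rcases le_total 0 (P 0 1 + P 3 1) with g | g
  · rw [abs_of_nonneg g] at hY
    exact h.tri_neg_ii_a hS h_mb h_m1 h_m2iv g2 (by linarith)
  · rw [abs_of_nonpos g] at hY
    exact h.tri_neg_ii_b hS h_mb h_m1 h_m2iv g2 (by linarith)

theorem tri_negB (h : Conf b P) (hS : ∀ j, P 0 j + P 1 j + P 2 j = 0) (h_mb : 0 ≤ P 3 1)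
    (h_u2 : 0 ≤ P 1 3) (h_o : 1 ≤ P 1 1 - P 3 1)
    (h_R : 0 ≤ -P 3 0 + P 1 0 - P 3 1 - P 1 3) : 19 / 27 ≤ covol b := by
  rcases le_total 0 (P 0 3) with u | u
  · exact h.tri_neg_d_u1 hS h_mb u h_u2 h_o h_R
  rcases h.tri_opt hS with g | g | g | g
  · linarith [h.low 0 1 (by decide)]
  · exact h.tri_neg_d_ii hS h_mb u h_u2 h_o g h_R
  · exact h.tri_neg_d_iii hS h_mb u h_u2 h_o g h_R
  · exact h.tri_neg_d_iv hS h_mb u h_u2 h_o g h_R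

/-- Either `P 3 - P 1` is large in column `3`, or it competes with the tip `P 1`. -/
theorem tri_neg (h : Conf b P) (hS : ∀ j, P 0 j + P 1 j + P 2 j = 0) (h_mb : 0 ≤ P 3 1) :
    19 / 27 ≤ covol b := by
  obtain ⟨e, e0, e1, e2, e3⟩ := exists_perm 2 1 0 3 (by decide) (by decide) (by decide) (by decide)
    (by decide) (by decide)
  have hSe := col_perm_tri e0 e1 e2 fun m => by linarith [hS m]
  by_cases hm : 1 ≤ P 3 3 - P 1 3
  · rcases le_total (P 0 3) 0 with u0 | u0
    · exact h.tri_negA hS h_mb u0 hm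
    rcases le_total (P 2 3) 0 with u2 | u2
    · rw [← covol_perm b h.adm.sum0 e]
      apply (h.perm e).tri_negA hSe <;> simpa only [Function.comp_apply, e0, e1, e2, e3]
    · exact h.tri_neg_uu hS h_mb u0 u2
  push Not at hm
  obtain ⟨w01, w02, w10, w12, w20, w21⟩ := h.tri_nonpos hS
  have d1 := h.diag 1
  have d3 := h.diag 3
  have u13 := h.up 1 3 (by decide)
  have u31 := h.up 3 1 (by decide)
  have l10 := h.low 1 0 (by decide)
  have l12 := h.low 1 2 (by decide)
  have l30 := h.low 3 0 (by decide)
  have l32 := h.low 3 2 (by decide)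
  have r1 := h.row 1
  have r3 := h.row 3
  have hX := sub_mem (h.mem 3) (h.mem 1)
  have h_u2 : 0 ≤ P 1 3 := by linarith
  have h_o : 1 ≤ P 1 1 - P 3 1 := by
    have hx := h.adm.adm _ hX (fun h0 => by
      have := congrFun h0 3
      simp only [Pi.zero_apply, Pi.sub_apply] at this
      linarith)
    rw [exists_fin_four] at hx
    simp only [le_abs, Pi.sub_apply] at hx
    rcases hx with (g | g) | (g | g) | (g | g) | (g | g) <;> linarith
  have hY := (h.tip 1).rule (P 3 - P 1) hX (by
    simp only [Pi.sub_apply]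
    exact le_abs.2 (Or.inr (by linarith))) (by
    rw [forall_fin_four]
    simp only [Pi.sub_apply, abs_lt]
    refine ⟨fun _ => ⟨?_, ?_⟩, fun k => (k rfl).elim, fun _ => ⟨?_, ?_⟩, fun _ => ⟨?_, ?_⟩⟩ <;> linarith)
  have hN := add_le_nrm (h.row 1) 1 3 (by decide)
  rw [nrm_eq (P 3 - P 1)] at hY
  simp only [Pi.sub_apply] at hY
  rw [abs_of_nonpos (by linarith : P 3 1 - P 1 1 ≤ 0),
    abs_of_nonneg (by linarith : 0 ≤ P 3 3 - P 1 3)] at hY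
  rcases le_total 0 (P 3 0 - P 1 0) with ga | ga <;> rcases le_total 0 (P 3 2 - P 1 2) with gc | gc <;>
    simp only [abs_of_nonneg, abs_of_nonpos, ga, gc] at hY
  · linarith
  · rw [← covol_perm b h.adm.sum0 e]
    apply (h.perm e).tri_negB hSe <;> simp only [Function.comp_apply, e0, e1, e2, e3] <;> linarith
  · exact h.tri_negB hS h_mb h_u2 h_o (by linarith)
  · linarith

/-- The bound when three of the four tips sum to zero. -/
theorem covol_ge_tri (h : Conf b P) (hS : ∀ j, P 0 j + P 1 j + P 2 j = 0) : 19 / 27 ≤ covol b := by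
  rcases le_total 0 (P 3 1) with g1 | g1
  · exact h.tri_neg hS g1
  rcases le_total 0 (P 3 0) with g0 | g0
  · obtain ⟨e, e0, e1, e2, e3⟩ := exists_perm 1 0 2 3 (by decide) (by decide) (by decide) (by decide)
      (by decide) (by decide)
    rw [← covol_perm b h.adm.sum0 e]
    apply (h.perm e).tri_neg (col_perm_tri e0 e1 e2 fun m => by linarith [hS m])
    simpa only [Function.comp_apply, e0, e1, e2, e3]
  rcases le_total 0 (P 3 2) with g2 | g2
  · obtain ⟨e, e0, e1, e2, e3⟩ := exists_perm 0 2 1 3 (by decide) (by decide) (by decide) (by decide)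
      (by decide) (by decide)
    rw [← covol_perm b h.adm.sum0 e]
    apply (h.perm e).tri_neg (col_perm_tri e0 e1 e2 fun m => by linarith [hS m])
    simpa only [Function.comp_apply, e0, e1, e2, e3]
  · exact h.tri_pos hS g0 g1 g2

end Conf

/-! ### Certificates for an index-two triple of tips -/

/-- The cubic `M * det - T`, where `det` is the determinant of the matrix with rows
`(d₁, -w₁₂, -w₁₃)`, `(-w₂₁, d₂, -w₂₃)`, `(-w₃₁, -w₃₂, d₃)`, in the variables
`d₁, d₂, d₃, w₁₂, w₁₃, w₂₁, w₂₃, w₃₁, w₃₂`. -/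
def tripleGoal (M T : ℕ) : List (ℤ × List ℤ × List ℤ × List ℤ) :=
  [(-(T : ℤ), [1], [1], [1]),
    ((M : ℤ), [0,1], [0,0,1], [0,0,0,1]),
    (-(M : ℤ), [0,0,1], [0,0,0,0,0,0,0,0,1], [0,0,0,0,0,1]),
    (-(M : ℤ), [0,0,0,1], [0,0,0,0,1], [0,0,0,0,0,0,1]),
    (-(M : ℤ), [0,1], [0,0,0,0,0,0,0,1], [0,0,0,0,0,0,0,0,0,1]),
    (-(M : ℤ), [0,0,0,0,0,0,1], [0,0,0,0,0,0,0,0,0,1], [0,0,0,0,0,1]),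
    (-(M : ℤ), [0,0,0,0,0,0,0,0,1], [0,0,0,0,1], [0,0,0,0,0,0,0,1])]

theorem det_ge_of_check {d1 d2 d3 a12 a13 a21 a23 a31 a32 : ℝ}
    (hb : ∀ v ∈ [d1, d2, d3, a12, a13, a21, a23, a31, a32], |v| ≤ 2) {L : List (List ℤ)}
    (c : List (ℕ × List (ℕ × List (ℕ × ℕ)))) (s : List (List ℤ × ℕ × ℕ)) (e : ℕ) (M T : ℕ)
    (hc : Cubic.check L (tripleGoal M T) c s e = true) (hM : 0 < M) (hT : 38 * M ≤ 27 * T)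
    (hL : ∀ l ∈ L, 0 ≤ Cubic.evL l [1, d1, d2, d3, a12, a13, a21, a23, a31, a32]) :
    38 / 27 ≤ d1 * d2 * d3 - d2 * a31 * a13 - d3 * a12 * a21 - d1 * a23 * a32 - a21 * a32 * a13 -
      a31 * a12 * a23 := by
  have key := Cubic.nonneg_of_check hc hL hb
  have hg : Cubic.evS (tripleGoal M T) [1, d1, d2, d3, a12, a13, a21, a23, a31, a32] =
      M * (d1 * d2 * d3 - d2 * a31 * a13 - d3 * a12 * a21 - d1 * a23 * a32 - a21 * a32 * a13 -
      a31 * a12 * a23) - T := by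
    simp only [Cubic.evS, tripleGoal, Cubic.evL]
    push_cast
    ring
  rw [hg] at key
  have hM' : (0 : ℝ) < M := by exact_mod_cast hM
  have hT' : (38 : ℝ) * M ≤ 27 * T := by exact_mod_cast hT
  refine le_of_mul_le_mul_left ?_ hM'
  linarith

/-- The determinant bound that follows from the inequalities of `Conf.col_sums`, where all
three maxima turn out to be positive. -/
theorem det_ge_of_col_sums {d1 d2 d3 a12 a13 a21 a23 a31 a32 : ℝ}
    (hb : ∀ v ∈ [d1, d2, d3, a12, a13, a21, a23, a31, a32], |v| ≤ 2)
    (h_O1 : 2 ≤ d1 + (a21 + a31)) (h_a21 : 0 ≤ a21) (h_a31 : 0 ≤ a31) (h_D2 : d2 ≤ 11 / 8)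
    (h_O2 : 2 ≤ d2 + (a12 + a32)) (h_o2 : a12 + a32 ≤ d2 - 1 / 2) (h_a12 : 0 ≤ a12)
    (h_a32 : 0 ≤ a32) (h_D3 : d3 ≤ 11 / 8) (h_O3 : 2 ≤ d3 + (a13 + a23))
    (h_o3 : a13 + a23 ≤ d3 - 1 / 2) (h_a13 : 0 ≤ a13) (h_a23 : 0 ≤ a23)
    (h_E : 2 ≤ d1 + d2 + d3 - (a21 + a31) - (a12 + a32) - (a13 + a23)) :
    38 / 27 ≤ d1 * d2 * d3 - d2 * a31 * a13 - d3 * a12 * a21 - d1 * a23 * a32 - a21 * a32 * a13 -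
      a31 * a12 * a23 := by
  refine det_ge_of_check hb (L :=
    [[1], [-2,1,0,0,0,0,1,0,1], [0,0,0,0,0,0,1], [0,0,0,0,0,0,0,0,1], [11,0,-8],
    [-2,0,1,0,1,0,0,0,0,1], [-1,0,2,0,-2,0,0,0,0,-2], [0,0,0,0,1], [0,0,0,0,0,0,0,0,0,1],
    [11,0,0,-8], [-2,0,0,1,0,1,0,1], [-1,0,0,2,0,-2,0,-2], [0,0,0,0,0,1], [0,0,0,0,0,0,0,1],
    [-2,1,1,1,-1,-1,-1,-1,-1,-1]])
    [(0,[(10,[(9,439), (14,1792), (5,439), (2,3413), (7,8651), (12,6730), (13,3513), (0,2110)]),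
    (1,[(9,157), (4,65), (6,3922), (11,3236), (13,3218), (8,2522), (0,1175)]), (4,[(11,97),
    (6,317), (5,744), (12,735), (3,722), (7,630)]), (14,[(6,3810), (11,2756), (5,1881), (12,4995),
    (7,12691), (0,7479)]), (9,[(6,88), (11,578), (2,788), (12,804), (7,1404)]), (3,[(11,426),
    (5,3107), (13,87), (7,5042)]), (5,[(7,8471), (12,6110), (8,5949)]), (2,[(6,533), (12,6434)]),
    (8,[(11,2043), (12,6073)]), (13,[(6,2318), (7,6341)])]), (11,[(8,[(14,1319), (11,1036),
    (6,1036), (1,2072), (2,2638), (13,7966)]), (5,[(9,314), (14,1552), (1,516), (3,879)]),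
    (6,[(1,886), (13,296)]), (3,[(7,4144)]), (4,[(10,129)])]), (6,[(10,[(4,129), (14,2431),
    (1,1256), (2,878)]), (13,[(6,296), (1,593), (8,7966), (3,2637)]), (2,[(12,1185)]),
    (5,[(9,314)])]), (7,[(2,[(9,592), (10,4126)]), (13,[(14,2369), (3,3517)]), (10,[(14,6781)])]),
    (12,[(3,[(4,2072), (5,10046)]), (8,[(14,13563), (2,3517)]), (5,[(14,1185)])]),
    (4,[(10,[(14,110), (3,220)])]), (1,[(8,[(13,1759)])]), (2,[(5,[(9,220)])])]
    []
    934 14173 19948 (by decide +kernel) (by norm_num) (by norm_num) ?_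
  simp only [List.forall_mem_cons, Cubic.evL, Int.cast_neg, Int.cast_one, Int.cast_zero,
    Int.cast_ofNat]
  exact ⟨by norm_num, by linarith, by linarith, by linarith, by linarith, by linarith,
    by linarith, by linarith, by linarith, by linarith, by linarith, by linarith, by linarith,
    by linarith, by linarith, by simp⟩

namespace Conf

variable {b : Fin 3 → Fin 4 → ℝ} {P : Fin 4 → Fin 4 → ℝ}

theorem det3_ge_of_check (h : Conf b P) {L : List (List ℤ)}
    (c : List (ℕ × List (ℕ × List (ℕ × ℕ)))) (s : List (List ℤ × ℕ × ℕ)) (e : ℕ) (M T : ℕ)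
    (hc : Cubic.check L (tripleGoal M T) c s e = true) (hM : 0 < M) (hT : 38 * M ≤ 27 * T)
    (hL : ∀ l ∈ L, 0 ≤ Cubic.evL l [1, P 0 0, P 1 1, P 2 2, -P 0 1, -P 0 2, -P 1 0, -P 1 2, -P 2 0,
      -P 2 1]) : 38 / 27 ≤ det3 (P 0) (P 1) (P 2) := by
  have hP : ∀ i j, i ≠ j → |P i j| ≤ 2 := fun i j hij => by
    rw [abs_le]
    constructor <;> linarith [h.low i j hij, h.up i j hij]
  have hD : ∀ i, |P i i| ≤ 2 := fun i => by
    rw [abs_le]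
    constructor <;> linarith [h.diag i, h.diag_lt i]
  refine (det_ge_of_check ?_ c s e M T hc hM hT hL).trans_eq ?_
  · simp only [List.forall_mem_cons, abs_neg]
    exact ⟨hD 0, hD 1, hD 2, hP 0 1 (by decide), hP 0 2 (by decide), hP 1 0 (by decide),
      hP 1 2 (by decide), hP 2 0 (by decide), hP 2 1 (by decide), by simp⟩
  · rw [det3]
    ring

/-- The constant form `1` followed by the inequalities valid for the first three tips of every
configuration, as affine forms in the variables of `tripleGoal`. -/
def tripleForms : List (List ℤ) :=
    [[1], [-1,1], [11,-8], [1,0,0,0,-1], [11,-8,0,0,8], [1,0,0,0,0,-1], [11,-8,0,0,0,8],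
    [1,-1,0,0,1,1], [11,0,0,0,-8,-8], [-1,0,1], [11,0,-8], [1,0,0,0,0,0,-1], [11,0,-8,0,0,0,8],
    [1,0,0,0,0,0,0,-1], [11,0,-8,0,0,0,0,8], [1,0,-1,0,0,0,1,1], [11,0,0,0,0,0,-8,-8], [-1,0,0,1],
    [11,0,0,-8], [1,0,0,0,0,0,0,0,-1], [11,0,0,-8,0,0,0,0,8], [1,0,0,0,0,0,0,0,0,-1],
    [11,0,0,-8,0,0,0,0,0,8], [1,0,0,-1,0,0,0,0,1,1], [11,0,0,0,0,0,0,0,-8,-8]]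

theorem tripleForms_nonneg (h : Conf b P) : ∀ l ∈ tripleForms, 0 ≤ Cubic.evL l
    [1, P 0 0, P 1 1, P 2 2, -P 0 1, -P 0 2, -P 1 0, -P 1 2, -P 2 0, -P 2 1] := by
  have r0 := h.row 0
  have r1 := h.row 1
  have r2 := h.row 2
  unfold tripleForms
  simp only [List.forall_mem_cons, Cubic.evL, Int.cast_neg, Int.cast_one, Int.cast_zero,
    Int.cast_ofNat]
  exact ⟨by norm_num, by linarith [h.diag 0], by linarith [h.diag_lt 0],
    by linarith [h.low 0 1 (by decide)], by linarith [h.pair 0 1 (by decide)],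
    by linarith [h.low 0 2 (by decide)], by linarith [h.pair 0 2 (by decide)],
    by linarith [h.low 0 3 (by decide)], by linarith [h.pair 0 3 (by decide)],
    by linarith [h.diag 1], by linarith [h.diag_lt 1], by linarith [h.low 1 0 (by decide)],
    by linarith [h.pair 1 0 (by decide)], by linarith [h.low 1 2 (by decide)],
    by linarith [h.pair 1 2 (by decide)], by linarith [h.low 1 3 (by decide)],
    by linarith [h.pair 1 3 (by decide)], by linarith [h.diag 2], by linarith [h.diag_lt 2],
    by linarith [h.low 2 0 (by decide)], by linarith [h.pair 2 0 (by decide)],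
    by linarith [h.low 2 1 (by decide)], by linarith [h.pair 2 1 (by decide)],
    by linarith [h.low 2 3 (by decide)], by linarith [h.pair 2 3 (by decide)], by simp⟩

/-- Column `0` is large for both `P 0 - P 1 ± P 2`, column `3` for the sum, and column `1` for
`P 0 + P 1 - P 2`. -/
theorem det3_ge_of_double_one (h : Conf b P) (h_A : 2 ≤ P 0 0 - P 1 0 + P 2 0)
    (h_B : 2 ≤ P 0 0 - P 1 0 - P 2 0) (h_p : 2 ≤ -P 0 3 - P 1 3 - P 2 3)
    (h_q : 2 ≤ P 1 1 + P 0 1 - P 2 1) : 38 / 27 ≤ det3 (P 0) (P 1) (P 2) := by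
  have r0 := h.row 0
  have r1 := h.row 1
  have r2 := h.row 2
  refine h.det3_ge_of_check (L :=
    tripleForms ++ [[-2,1,0,0,0,0,1,0,-1], [-2,1,0,0,0,0,1,0,1], [-2,1,1,1,-1,-1,-1,-1,-1,-1],
    [-2,0,1,0,-1,0,0,0,0,1]])
    [(25,[(6,[(4,2954), (14,4302), (8,1153), (2,3879), (27,194569), (28,107787), (7,19974),
    (26,149135), (11,29137)]), (20,[(4,8120), (24,4134), (25,74259), (7,171421), (26,209152),
    (11,29252)]), (8,[(14,8119), (10,8030), (2,3129), (28,16586), (11,17798)]), (26,[(24,641),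
    (22,88034), (25,593416), (9,994894), (13,278389)]), (27,[(25,566291), (23,1408487),
    (9,1130385), (17,420660)]), (28,[(4,251866), (18,118834), (28,1311915), (13,692076)]),
    (10,[(22,12619), (9,76754), (11,197056)]), (4,[(4,3771), (24,3576)]), (7,[(22,276739),
    (7,3434485)]), (14,[(14,5342), (24,13278)]), (16,[(23,29871), (13,3130)]), (11,[(11,621117)]),
    (17,[(17,120368)]), (22,[(22,2)]), (25,[(25,253922)])]), (27,[(27,[(4,51192), (6,32497),
    (24,66003), (8,30897), (18,188144), (28,46057), (26,92648)]), (14,[(20,16327), (6,32711),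
    (22,22520), (8,20650), (9,286008), (13,12935)]), (16,[(28,52278), (23,5419), (15,103967),
    (17,197923), (5,2533)]), (9,[(22,118807), (28,16989), (9,493367), (17,2213259)]),
    (12,[(4,2003), (12,1110), (2,9761), (7,100974)]), (6,[(24,3483), (28,100108), (5,52003)]),
    (22,[(7,196402), (26,40126), (21,23169)]), (8,[(28,73690), (17,46569)]), (26,[(5,36199),
    (3,1322335)]), (1,[(1,2195518)]), (7,[(24,232059)]), (11,[(11,2841861)]), (17,[(17,290629)]),
    (18,[(28,107738)]), (20,[(20,10232)])]), (28,[(26,[(24,42303), (16,22924), (20,4781),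
    (12,118290), (26,812603), (3,736692)]), (14,[(24,3514), (14,8226), (22,30988), (7,126039),
    (3,90354)]), (17,[(16,212389), (6,26008), (20,131917), (8,82408), (28,846712)]),
    (28,[(28,11358), (7,105227), (23,796686), (21,656179)]), (6,[(10,9289), (7,37788), (5,1418)]),
    (9,[(16,51235), (9,193174), (11,415425)]), (1,[(24,58926), (1,2246380)]), (11,[(16,246379),
    (18,53323)]), (12,[(4,8934), (12,3209)]), (21,[(5,221614), (21,144749)]), (0,[(7,2104341)]),
    (2,[(8,13848)])]), (26,[(26,[(14,295171), (8,18568), (16,255444), (20,26000), (26,509944),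
    (7,423221), (9,788881)]), (7,[(24,88975), (16,244031), (22,33230), (12,27659)]),
    (14,[(6,46505), (22,21188), (18,20760), (13,162396)]), (17,[(22,116487), (24,192823),
    (17,1036124), (5,68708)]), (3,[(4,101794), (9,126819)]), (5,[(4,4420), (6,19742)]),
    (11,[(19,1732344), (11,2252893)]), (2,[(8,16797)]), (9,[(9,159957)]), (16,[(16,5736)]),
    (21,[(21,980238)])]), (7,[(7,[(16,193550), (14,237292), (4,101021), (8,110748), (7,457155),
    (9,593628)]), (14,[(22,57917), (24,35962), (13,92742)]), (21,[(6,68431), (24,17763)]),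
    (2,[(12,11188)]), (4,[(16,9556)]), (5,[(10,5117)]), (8,[(13,81)]), (9,[(9,652475)]),
    (11,[(11,4908509)]), (15,[(15,243204)]), (17,[(22,24959)])]), (17,[(4,[(23,244369), (9,9367),
    (13,117186), (3,80364)]), (20,[(12,2922), (16,10212), (20,8745), (24,2328)]), (13,[(6,2458),
    (10,158887), (18,163477)]), (5,[(8,374), (18,8222)]), (16,[(16,3356), (24,721)]),
    (0,[(10,3388)]), (2,[(11,282739)])]), (14,[(14,[(6,1746), (20,3517), (8,1076), (14,2326),
    (16,4153), (9,38879)]), (2,[(6,393), (8,153), (10,4822), (2,7476)]), (4,[(6,660), (9,2242),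
    (13,5915)]), (3,[(24,9)]), (9,[(9,71637)])]), (4,[(1,[(8,9629), (9,134168), (1,334629)]),
    (11,[(6,14769), (13,16011), (11,286482)])]), (11,[(11,[(20,164267), (10,732166)])]),
    (1,[(1,[(16,87501)])]), (2,[(2,[(2,1367)])])]
    []
    158067 1574957 2216607 (by decide +kernel) (by norm_num) (by norm_num)
    (List.forall_mem_append.2 ⟨h.tripleForms_nonneg, ?_⟩)
  simp only [List.forall_mem_cons, Cubic.evL, Int.cast_neg, Int.cast_one, Int.cast_zero,
    Int.cast_ofNat]
  exact ⟨by linarith, by linarith, by linarith, by linarith, by simp⟩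

/-- Column `0` is large for both `P 0 - P 1 ± P 2`, column `3` for the sum, and column `2` for
`P 0 + P 1 - P 2`. -/
theorem det3_ge_of_double_two (h : Conf b P) (h_A : 2 ≤ P 0 0 - P 1 0 + P 2 0)
    (h_B : 2 ≤ P 0 0 - P 1 0 - P 2 0) (h_p : 2 ≤ -P 0 3 - P 1 3 - P 2 3)
    (h_q : 2 ≤ P 2 2 - P 0 2 - P 1 2) : 38 / 27 ≤ det3 (P 0) (P 1) (P 2) := by
  have r0 := h.row 0
  have r1 := h.row 1
  have r2 := h.row 2
  refine h.det3_ge_of_check (L :=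
    tripleForms ++ [[-2,1,0,0,0,0,1,0,-1], [-2,1,0,0,0,0,1,0,1], [-2,1,1,1,-1,-1,-1,-1,-1,-1],
    [-2,0,0,1,0,1,0,1]])
    [(26,[(26,[(4,19331), (6,7441), (8,8510), (10,15878), (27,240859), (26,17728), (28,70491),
    (19,33146), (21,26379)]), (24,[(4,1548), (8,254), (14,1318), (27,6042), (28,11339),
    (25,19648), (23,10447), (9,17709)]), (27,[(14,35770), (22,52731), (8,64782), (27,222860),
    (25,255438), (13,225132)]), (6,[(16,150), (14,1488), (28,47731), (25,23680), (5,21358)]),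
    (8,[(8,3811), (25,13448), (5,510), (9,7764)]), (22,[(4,3405), (22,697), (12,2261),
    (10,2929)]), (28,[(4,18382), (16,13775), (28,195289), (5,388596)]), (9,[(14,12869),
    (25,71325), (17,230074)]), (16,[(2,3211), (7,2240)]), (23,[(5,884779), (3,13016)]),
    (4,[(4,4218)]), (12,[(12,174)])]), (25,[(25,[(22,10561), (20,4224), (6,7712), (14,35610),
    (27,253778), (25,121973), (7,307075), (9,333663)]), (16,[(22,7381), (8,206), (16,493),
    (6,2924), (27,111113), (9,31313)]), (28,[(4,10536), (8,5894), (14,28555), (6,26777),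
    (27,512577), (9,443475)]), (23,[(6,74848), (4,84456), (15,604055), (21,176421)]),
    (7,[(14,52780), (7,190119), (21,465918)]), (9,[(4,3598), (8,5702), (24,13056)]),
    (27,[(6,48775), (24,29693), (18,41994)]), (2,[(21,61619), (19,108177)]), (5,[(8,2604),
    (6,4738)]), (20,[(20,1235), (22,4061)]), (3,[(4,5138)]), (12,[(17,16867)]), (13,[(13,53116)]),
    (22,[(22,997)])]), (27,[(8,[(22,13975), (8,34), (24,127), (16,1885), (4,9277), (6,4093)]),
    (27,[(22,12106), (20,51422), (10,56511), (27,227839), (3,263655), (5,231334)]),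
    (28,[(28,140841), (23,164480), (15,139594), (13,828028), (9,499405), (11,563845)]),
    (24,[(4,3211), (2,471), (23,97230), (9,42756), (17,16592)]), (16,[(6,8229), (22,520),
    (16,4942), (9,3803)]), (4,[(4,1975), (1,181555), (13,101341)]), (6,[(20,3311), (14,6543)]),
    (9,[(14,10025)]), (12,[(23,32079)])]), (28,[(4,[(24,2455), (4,1552), (16,5493), (28,47901),
    (9,28642)]), (22,[(14,598), (7,86017), (13,24940), (21,19597)]), (24,[(16,2402), (14,98),
    (9,52028), (17,19931)]), (28,[(16,34479), (8,1294), (28,68263), (9,207067)]), (5,[(20,11200),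
    (5,142193)]), (6,[(6,1148), (14,6846)]), (8,[(16,69), (9,45996)]), (1,[(23,758497)]),
    (12,[(18,834)]), (13,[(13,204086)]), (20,[(20,1425)])]), (9,[(4,[(20,3532), (22,2977),
    (24,4289), (4,3016), (15,4650)]), (10,[(24,2296), (14,4776), (22,1363), (9,25448)]),
    (14,[(15,25297), (11,10879), (21,17662)]), (5,[(9,10591), (1,29669)]), (17,[(22,13308),
    (16,39310)]), (20,[(12,1646), (6,2595)]), (2,[(23,13843)]), (21,[(24,17677)])]),
    (7,[(4,[(22,6428), (4,412), (14,7056), (16,8781)]), (8,[(10,496), (23,59937), (11,3039)]),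
    (13,[(24,1111), (10,26320), (13,646)]), (14,[(24,496), (16,9), (7,8344)]), (20,[(17,25961),
    (3,14336)]), (23,[(12,31400), (24,27157)]), (5,[(5,66662)])]), (2,[(3,[(10,1348), (23,47045),
    (17,48842), (3,1916)]), (2,[(8,1165), (1,11459)]), (6,[(24,358), (6,37)]), (14,[(23,30935),
    (17,4343)]), (8,[(22,223)]), (16,[(21,4127)]), (20,[(20,332)]), (24,[(24,7)])]),
    (23,[(4,[(16,7159), (8,5858), (24,6790), (5,13770)]), (17,[(22,70379), (24,11766),
    (17,418475)]), (23,[(6,7493), (8,58043), (24,80855)]), (16,[(16,7819)])])]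
    []
    99102 803549 1130921 (by decide +kernel) (by norm_num) (by norm_num)
    (List.forall_mem_append.2 ⟨h.tripleForms_nonneg, ?_⟩)
  simp only [List.forall_mem_cons, Cubic.evL, Int.cast_neg, Int.cast_one, Int.cast_zero,
    Int.cast_ofNat]
  exact ⟨by linarith, by linarith, by linarith, by linarith, by simp⟩

end Conf

/-! ### The sum of the four tips is twice a lattice vector -/

namespace Conf

variable {b : Fin 3 → Fin 4 → ℝ} {P : Fin 4 → Fin 4 → ℝ}

/-- The tips `P 0`, `P 1`, `P 2` form a basis of the lattice. -/
theorem covol_eq_of_sum_eq (h : Conf b P) (hV : ∀ j, P 3 j = P 0 j + P 1 j + P 2 j) :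
    covol b = |det3 (P 0) (P 1) (P 2)| := by
  refine h.covol_eq (h.mem 0) (h.mem 1) (h.mem 2) (h.tip 0).lt (h.tip 1).lt (h.tip 2).lt ?_ ?_
  · rintro (g | g | g | g | g | g | g)
    · exact h.not_inMul_single le_rfl 0 g
    · exact h.not_inMul_single le_rfl 1 g
    · exact h.not_inMul_single le_rfl 2 g
    · exact h.not_inMul_add le_rfl 0 1 (by decide) g
    · exact h.not_inMul_add le_rfl 0 2 (by decide) g
    · exact h.not_inMul_add le_rfl 1 2 (by decide) g
    · exact h.not_inMul_single le_rfl 3 (g.congr (zero_mem _) fun j => by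
        simp only [Pi.zero_apply]
        linarith [hV j])
  · have h23 : (2 : ℝ) ≤ 3 := by norm_num
    rintro (g | g | g | g | g | g | g | g | g | g | g | g | g)
    · exact h.not_inMul_single h23 0 g
    · exact h.not_inMul_single h23 1 g
    · exact h.not_inMul_single h23 2 g
    · exact h.not_inMul_add h23 0 1 (by decide) g
    · exact h.not_inMul_three_sub 0 1 (by decide) g
    · exact h.not_inMul_add h23 0 2 (by decide) g
    · exact h.not_inMul_three_sub 0 2 (by decide) g
    · exact h.not_inMul_add h23 1 2 (by decide) g
    · exact h.not_inMul_three_sub 1 2 (by decide) g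
    · exact h.not_inMul_single h23 3 (g.congr (zero_mem _) fun j => by
        simp only [Pi.zero_apply]
        linarith [hV j])
    -- modulo `3`, each remaining combination is congruent to `± (P 3 + P i)`
    · exact h.not_inMul_add h23 3 2 (by decide) (g.congr (h.mem 2) fun j => by linarith [hV j])
    · exact h.not_inMul_add h23 3 1 (by decide) (g.congr (h.mem 1) fun j => by linarith [hV j])
    · have g1 : InMul b 3 (fun j => -P 0 j + P 1 j + P 2 j) := g.neg fun j => by ring
      exact h.not_inMul_add h23 3 0 (by decide) (g1.congr (h.mem 0) fun j => by linarith [hV j])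

/-- If `P 3 = P 0 + P 1 + P 2`, then `P 0 + P 1` has a large coordinate only in column `2`, so it
competes with `P 2` for being the shortest tip there. -/
theorem add_competes (h : Conf b P) (hV : ∀ j, P 3 j = P 0 j + P 1 j + P 2 j) :
    P 2 2 + P 2 3 ≤ -P 0 2 - P 1 2 := by
  have r0 := h.row 0
  have r1 := h.row 1
  have r2 := h.row 2
  have v3 := hV 3
  have d0 := h.diag 0
  have d1 := h.diag 1
  have d2 := h.diag 2
  have d3 := h.diag 3
  have e0 := h.pair 0 3 (by decide)
  have e1 := h.pair 1 3 (by decide)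
  have e2 := h.pair 2 3 (by decide)
  have l01 := h.low 0 1 (by decide)
  have l02 := h.low 0 2 (by decide)
  have l10 := h.low 1 0 (by decide)
  have l12 := h.low 1 2 (by decide)
  have hmem : P 0 + P 1 ∈ lat b := add_mem (h.mem 0) (h.mem 1)
  have b0 : |(P 0 + P 1) 0| < 1 := by
    rw [abs_lt, Pi.add_apply]
    constructor <;> linarith
  have b1 : |(P 0 + P 1) 1| < 1 := by
    rw [abs_lt, Pi.add_apply]
    constructor <;> linarith
  have b3 : |(P 0 + P 1) 3| < 1 := by
    rw [abs_lt, Pi.add_apply]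
    constructor <;> linarith
  have b2 : 1 ≤ |(P 0 + P 1) 2| := by
    by_contra hlt
    push Not at hlt
    refine h.adm.not_inMul one_pos (x := P 0 + P 1) ?_ 0 ?_ ⟨P 0 + P 1, hmem, fun j => by ring⟩
    · rw [forall_fin_four]
      exact ⟨b0, b1, hlt, b3⟩
    · rw [Pi.add_apply]
      linarith
  have hr := (h.tip 2).rule _ hmem b2 (by
    rw [forall_fin_four]
    exact ⟨fun _ => b0, fun _ => b1, fun hh => absurd rfl hh, fun _ => b3⟩)
  have hn : nrm (P 0 + P 1) = -P 0 2 - P 1 2 := by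
    simp only [nrm_eq, Pi.add_apply]
    rw [abs_of_nonneg (by linarith : 0 ≤ P 0 0 + P 1 0), abs_of_nonneg (by linarith : 0 ≤ P 0 1 + P 1 1),
      abs_of_nonneg (by linarith : 0 ≤ P 0 3 + P 1 3), abs_of_nonpos (by linarith : P 0 2 + P 1 2 ≤ 0)]
    linarith
  linarith [add_le_nrm r2 2 3 (by decide)]

/-- The determinant inequality behind `covol_ge_of_sum_eq`. -/
theorem neg_det_ge {n₁ n₂ n₃ p₁ p₂ p₃ x : ℝ} (hn₁ : n₁ ≤ 11 / 8) (hn₂ : n₂ ≤ 11 / 8)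
    (hn₃ : n₃ ≤ 11 / 8) (h₁ : 1 + p₁ ≤ n₁) (h₂ : 1 + p₂ ≤ n₂) (h₃ : 1 + p₃ ≤ n₃)
    (hp : 1 ≤ p₁ + p₂ + p₃) :
    19 / 27 ≤ (n₁ * n₂ - x * (n₁ + n₂ - n₃ - x)) * (p₁ + p₂ + p₃) -
      (p₁ * p₂ * n₃ + p₁ * p₃ * n₂ + p₂ * p₃ * n₁) + p₁ * p₂ * p₃ := by
  have k : 13 / 10 ≤ n₁ * n₂ - x * (n₁ + n₂ - n₃ - x) := by
    have a1 : (n₁ - n₂) ^ 2 ≤ 1 / 64 := by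
      have : |n₁ - n₂| ≤ 1 / 8 := abs_le.2 ⟨by linarith, by linarith⟩
      calc (n₁ - n₂) ^ 2 = |n₁ - n₂| ^ 2 := (sq_abs _).symm
        _ ≤ (1 / 8) ^ 2 := by gcongr
        _ = 1 / 64 := by norm_num
    nlinarith [sq_nonneg (x - (n₁ + n₂ - n₃) / 2),
      mul_nonneg (by linarith : 0 ≤ n₁ + n₂ + n₃ - 4) (by linarith : 0 ≤ n₃),
      mul_nonneg (by linarith : 0 ≤ n₃ - 5 / 4) (by linarith : 0 ≤ 11 / 8 - n₃)]
  have q1 : 0 ≤ p₁ := by linarith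
  have q2 : 0 ≤ p₂ := by linarith
  have q3 : 0 ≤ p₃ := by linarith
  have m1 := mul_le_mul_of_nonneg_left hn₃ (mul_nonneg q1 q2)
  have m2 := mul_le_mul_of_nonneg_left hn₂ (mul_nonneg q1 q3)
  have m3 := mul_le_mul_of_nonneg_left hn₁ (mul_nonneg q2 q3)
  have m4 := mul_le_mul_of_nonneg_right k (by linarith : 0 ≤ p₁ + p₂ + p₃)
  have m5 := mul_nonneg (mul_nonneg q1 q2) q3
  nlinarith [sq_nonneg (p₁ - p₂), sq_nonneg (p₁ - p₃), sq_nonneg (p₂ - p₃),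
    mul_nonneg (by linarith : 0 ≤ p₁ + p₂ + p₃ - 1) (by linarith : 0 ≤ 9 / 8 - (p₁ + p₂ + p₃))]

theorem covol_ge_of_sum_eq (h : Conf b P) (hV : ∀ j, P 3 j = P 0 j + P 1 j + P 2 j) :
    19 / 27 ≤ covol b := by
  have k2 := h.add_competes hV
  have k0 : P 0 0 + P 0 3 ≤ -P 1 0 - P 2 0 := by
    obtain ⟨e, e0, e1, e2, e3⟩ := exists_perm 1 2 0 3 (by decide) (by decide) (by decide) (by decide)
      (by decide) (by decide)
    have := (h.perm e).add_competes (fun j => by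
      simp only [Function.comp_apply, e0, e1, e2, e3]
      linarith [hV (e j)])
    simpa only [Function.comp_apply, e0, e1, e2, e3] using this
  have k1 : P 1 1 + P 1 3 ≤ -P 2 1 - P 0 1 := by
    obtain ⟨e, e0, e1, e2, e3⟩ := exists_perm 2 0 1 3 (by decide) (by decide) (by decide) (by decide)
      (by decide) (by decide)
    have := (h.perm e).add_competes (fun j => by
      simp only [Function.comp_apply, e0, e1, e2, e3]
      linarith [hV (e j)])
    simpa only [Function.comp_apply, e0, e1, e2, e3] using this
  have r0 := h.row 0
  have r1 := h.row 1
  have r2 := h.row 2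
  have v3 := hV 3
  -- the three inequalities add up to an identity, so each of them is an equality
  have a02 : P 0 2 = -(P 0 0 + P 0 3) - P 0 1 := by linarith
  have a21 : P 2 1 = -(P 1 1 + P 1 3) - P 0 1 := by linarith
  have a20 : P 2 0 = -(P 2 2 + P 2 3) + (P 1 1 + P 1 3) + P 0 1 := by linarith
  have a10 : P 1 0 = -(P 0 0 + P 0 3) + (P 2 2 + P 2 3) - (P 1 1 + P 1 3) - P 0 1 := by linarith
  have a12 : P 1 2 = -(P 2 2 + P 2 3) + (P 0 0 + P 0 3) + P 0 1 := by linarith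
  have key := neg_det_ge (n₁ := P 0 0 + P 0 3) (n₂ := P 1 1 + P 1 3) (n₃ := P 2 2 + P 2 3)
    (p₁ := P 0 3) (p₂ := P 1 3) (p₃ := P 2 3) (x := -P 0 1) (h.pair 0 3 (by decide)).le
    (h.pair 1 3 (by decide)).le (h.pair 2 3 (by decide)).le (by linarith [h.diag 0])
    (by linarith [h.diag 1]) (by linarith [h.diag 2]) (by linarith [h.diag 3])
  rw [h.covol_eq_of_sum_eq hV]
  refine (key.trans_eq ?_).trans (neg_le_abs _)
  rw [det3, a02, a21, a20, a10, a12]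
  ring

/-- If column `3` is large for the sum of the tips, then no column is large for
`P 0 + P 1 + P 2 - P 3`, so this vector vanishes. -/
theorem covol_ge_of_inMul_sum_aux (h : Conf b P)
    (g : InMul b 2 (fun j => P 0 j + P 1 j + P 2 j + P 3 j))
    (hl : 2 ≤ |P 0 3 + P 1 3 + P 2 3 + P 3 3|) : 19 / 27 ≤ covol b := by
  have g' : InMul b 2 (fun j => P 0 j + P 1 j + P 2 j - P 3 j) :=
    g.congr (neg_mem (h.mem 3)) fun j => by simp only [Pi.neg_apply]; ring
  have r0 := h.row 0
  have r1 := h.row 1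
  have r2 := h.row 2
  have d0 := h.diag 0
  have d1 := h.diag 1
  have d2 := h.diag 2
  have d3 := h.diag 3
  have D3 := h.diag_lt 3
  have e0 := h.pair 0 3 (by decide)
  have e1 := h.pair 1 3 (by decide)
  have e2 := h.pair 2 3 (by decide)
  have l01 := h.low 0 1 (by decide)
  have l02 := h.low 0 2 (by decide)
  have l03 := h.low 0 3 (by decide)
  have l10 := h.low 1 0 (by decide)
  have l12 := h.low 1 2 (by decide)
  have l13 := h.low 1 3 (by decide)
  have l20 := h.low 2 0 (by decide)
  have l21 := h.low 2 1 (by decide)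
  have l23 := h.low 2 3 (by decide)
  have l30 := h.low 3 0 (by decide)
  have l31 := h.low 3 1 (by decide)
  have l32 := h.low 3 2 (by decide)
  have u30 := h.up 3 0 (by decide)
  have u31 := h.up 3 1 (by decide)
  have u32 := h.up 3 2 (by decide)
  have hl' : 2 ≤ P 0 3 + P 1 3 + P 2 3 + P 3 3 := by
    rcases le_abs.1 hl with hl | hl <;> linarith
  rcases h.adm.inMul two_pos g' with g0 | g0
  · exact h.covol_ge_of_sum_eq fun j => by linarith [g0 j]
  · exfalso
    rw [exists_fin_four] at g0
    rcases g0 with g0 | g0 | g0 | g0 <;> rcases le_abs.1 g0 with g0 | g0 <;> linarith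

theorem covol_ge_of_inMul_sum (h : Conf b P)
    (g : InMul b 2 (fun j => P 0 j + P 1 j + P 2 j + P 3 j)) : 19 / 27 ≤ covol b := by
  rcases h.adm.inMul two_pos g with g0 | ⟨l, hl⟩
  · exact h.covol_ge_of_sum_zero g0
  obtain ⟨e, he⟩ : ∃ e : Equiv.Perm (Fin 4), e 3 = l := ⟨Equiv.swap 3 l, Equiv.swap_apply_left _ _⟩
  have hs : ∀ j, (P (e 0) ∘ e) j + (P (e 1) ∘ e) j + (P (e 2) ∘ e) j + (P (e 3) ∘ e) j =
      P 0 (e j) + P 1 (e j) + P 2 (e j) + P 3 (e j) := fun j => by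
    have := Equiv.sum_comp e fun i => P i (e j)
    simpa only [Fin.sum_univ_four, Function.comp_apply] using this
  rw [← covol_perm b h.adm.sum0 e]
  refine (h.perm e).covol_ge_of_inMul_sum_aux ?_ ?_
  · have g1 := g.perm e
    simp only [hs]
    exact g1
  · rw [hs, he]
    exact hl

end Conf

/-! ### The sum of three tips is twice a nonzero lattice vector -/

/-- The sum of the first three tips is twice a nonzero vector of the lattice. -/
structure Half (b : Fin 3 → Fin 4 → ℝ) (P : Fin 4 → Fin 4 → ℝ) : Prop where
  mem : InMul b 2 (fun j => P 0 j + P 1 j + P 2 j)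
  ne : ¬ ∀ j, P 0 j + P 1 j + P 2 j = 0

theorem Half.perm {b : Fin 3 → Fin 4 → ℝ} {P : Fin 4 → Fin 4 → ℝ} (g : Half b P)
    (e : Equiv.Perm (Fin 4)) (he : e 3 = 3) :
    Half (fun k => b k ∘ e) (fun i => P (e i) ∘ e) := by
  have hs : ∀ j, (P (e 0) ∘ e) j + (P (e 1) ∘ e) j + (P (e 2) ∘ e) j =
      P 0 (e j) + P 1 (e j) + P 2 (e j) := fun j => by
    have := Equiv.sum_comp e fun i => P i (e j)
    simp only [Fin.sum_univ_four, he] at this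
    simp only [Function.comp_apply]
    linarith
  constructor
  · have g1 := g.mem.perm e
    simp only [hs]
    exact g1
  · intro h0
    refine g.ne fun j => ?_
    have := h0 (e.symm j)
    rwa [hs, Equiv.apply_symm_apply] at this

namespace Conf

variable {b : Fin 3 → Fin 4 → ℝ} {P : Fin 4 → Fin 4 → ℝ} {s t s' t' : ℝ}

theorem signed_ne (h : Conf b P) (g : Half b P) (hs : s = 1 ∨ s = -1) (ht : t = 1 ∨ t = -1) :
    ¬ ∀ j, P 0 j + s * P 1 j + t * P 2 j = 0 := by
  intro h0
  rcases hs with rfl | rfl <;> rcases ht with rfl | rfl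
  · exact g.ne fun j => by linarith [h0 j]
  · linarith [h0 2, h.diag 2, h.up 0 2 (by decide), h.up 1 2 (by decide)]
  · linarith [h0 1, h.diag 1, h.up 0 1 (by decide), h.up 2 1 (by decide)]
  · linarith [h0 0, h.diag 0, h.up 1 0 (by decide), h.up 2 0 (by decide)]

theorem signed_inMul (h : Conf b P) (g : Half b P) (hs : s = 1 ∨ s = -1) (ht : t = 1 ∨ t = -1) :
    InMul b 2 (fun j => P 0 j + s * P 1 j + t * P 2 j) := by
  rcases hs with rfl | rfl <;> rcases ht with rfl | rfl
  · exact g.mem.congr (zero_mem _) fun j => by simp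
  · exact g.mem.congr (neg_mem (h.mem 2)) fun j => by simp only [Pi.neg_apply]; ring
  · exact g.mem.congr (neg_mem (h.mem 1)) fun j => by simp only [Pi.neg_apply]; ring
  · exact g.mem.congr (neg_mem (add_mem (h.mem 1) (h.mem 2))) fun j => by
      simp only [Pi.neg_apply, Pi.add_apply]; ring

theorem abs_signed_lt (h : Conf b P) (hs : s = 1 ∨ s = -1) (ht : t = 1 ∨ t = -1) (j : Fin 4) :
    |P 0 j + s * P 1 j + t * P 2 j| < 4 := by
  have d0 := h.diag 0
  have d1 := h.diag 1
  have d2 := h.diag 2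
  have D0 := h.diag_lt 0
  have D1 := h.diag_lt 1
  have D2 := h.diag_lt 2
  have l : ∀ i j, i ≠ j → -1 < P i j ∧ P i j < 3 / 8 := fun i j hij => ⟨h.low i j hij, h.up i j hij⟩
  have l01 := l 0 1 (by decide)
  have l02 := l 0 2 (by decide)
  have l03 := l 0 3 (by decide)
  have l10 := l 1 0 (by decide)
  have l12 := l 1 2 (by decide)
  have l13 := l 1 3 (by decide)
  have l20 := l 2 0 (by decide)
  have l21 := l 2 1 (by decide)
  have l23 := l 2 3 (by decide)
  clear l
  rw [abs_lt]
  revert j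
  rw [forall_fin_four]
  rcases hs with rfl | rfl <;> rcases ht with rfl | rfl <;> refine ⟨?_, ?_, ?_, ?_⟩ <;>
    constructor <;> linarith

theorem signed_not_inMul_four (h : Conf b P) (g : Half b P) (hs : s = 1 ∨ s = -1)
    (ht : t = 1 ∨ t = -1) : ¬ InMul b 4 (fun j => P 0 j + s * P 1 j + t * P 2 j) := by
  intro hx
  rcases h.adm.inMul (by norm_num) hx with h0 | ⟨j, hj⟩
  · exact h.signed_ne g hs ht h0
  · linarith [h.abs_signed_lt hs ht j]

/-- The first three tips span a sublattice of index exactly two. -/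
theorem two_mul_covol (h : Conf b P) (g : Half b P) : 2 * covol b = |det3 (P 0) (P 1) (P 2)| := by
  obtain ⟨q, hq, hPq⟩ := g.mem
  obtain ⟨m, hm, m2, -⟩ := exists_index (h.mem 0) (h.mem 1) hq
  have hdet : det3 (P 0) (P 1) (P 2) = 2 * det3 (P 0) (P 1) q := by
    have e0 : P 2 0 = 2 * q 0 - P 0 0 - P 1 0 := by linarith [hPq 0]
    have e1 : P 2 1 = 2 * q 1 - P 0 1 - P 1 1 := by linarith [hPq 1]
    have e2 : P 2 2 = 2 * q 2 - P 0 2 - P 1 2 := by linarith [hPq 2]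
    rw [det3, det3, e0, e1, e2]
    ring
  have hlt : |det3 (P 0) (P 1) (P 2)| < 8 / 3 := by
    have hn : ∀ x, 0 ≤ nrm x := fun x =>
      div_nonneg (Finset.sum_nonneg fun _ _ => abs_nonneg _) two_pos.le
    have h1 : nrm (P 2) * nrm (P 1) ≤ 11 / 8 * (11 / 8) :=
      mul_le_mul (h.tip 2).lt.le (h.tip 1).lt.le (hn _) (by norm_num)
    have h4 : nrm (P 2) * nrm (P 1) * nrm (P 0) ≤ 11 / 8 * (11 / 8) * (11 / 8) :=
      mul_le_mul h1 (h.tip 0).lt.le (hn _) (by norm_num)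
    have h5 : (11 : ℝ) / 8 * (11 / 8) * (11 / 8) < 8 / 3 := by norm_num
    linarith [abs_det3_le _ _ _ (h.row 0) (h.row 1) (h.row 2)]
  have habs : |det3 (P 0) (P 1) q| = (|m| : ℤ) * covol b := by
    rw [hm, abs_mul, covol, Int.cast_abs]
  have hodd : ¬ 2 ∣ m := by
    intro hdvd
    -- halving `P 0 ± P 1 ± P 2` twice would give a lattice vector with all coordinates below `1`
    have four : ∀ {s t : ℝ}, (s = 1 ∨ s = -1) → (t = 1 ∨ t = -1) → ∀ {x z : Fin 4 → ℝ},
        z ∈ lat b → (∀ j, 2 * x j = P 0 j + s * P 1 j + t * P 2 j + 4 * z j) → ¬ InMul b 2 x := by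
      rintro s t hs ht x z hz hx ⟨y, hy, hxy⟩
      refine h.signed_not_inMul_four g hs ht ⟨y - z, sub_mem hy hz, fun j => ?_⟩
      have := hx j
      rw [hxy] at this
      rw [Pi.sub_apply]
      linarith
    rcases m2 hdvd with k | k | k | k | k | k | k
    · exact h.not_inMul_single le_rfl 0 k
    · exact h.not_inMul_single le_rfl 1 k
    · exact four (Or.inl rfl) (Or.inl rfl) (zero_mem _)
        (fun j => by simp only [Pi.zero_apply]; linarith [hPq j]) k
    · exact h.not_inMul_add le_rfl 0 1 (by decide) k
    · exact four (Or.inr rfl) (Or.inr rfl) hq (fun j => by linarith [hPq j]) k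
    · exact four (Or.inr rfl) (Or.inl rfl) (h.mem 1) (fun j => by linarith [hPq j]) k
    · exact four (Or.inl rfl) (Or.inr rfl) hq (fun j => by linarith [hPq j]) k
  have hm2 : |m| < 2 := by
    by_contra hc
    push Not at hc
    have hc' : (2 : ℝ) ≤ (|m| : ℤ) := by exact_mod_cast hc
    have := h.vol
    rw [hdet, abs_mul, habs, abs_two] at hlt
    nlinarith
  have hm1 : |m| = 1 := by
    rw [abs_lt] at hm2
    obtain ⟨h5, h6⟩ := hm2
    interval_cases m <;> simp_all
  rw [hdet, abs_mul, abs_two, habs, hm1, Int.cast_one, one_mul]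

theorem signed_large (h : Conf b P) (g : Half b P) (hs : s = 1 ∨ s = -1) (ht : t = 1 ∨ t = -1) :
    ∃ j, 2 ≤ |P 0 j + s * P 1 j + t * P 2 j| :=
  (h.adm.inMul two_pos (h.signed_inMul g hs ht)).resolve_left (h.signed_ne g hs ht)

/-- Column `0` is large for both `P 0 - P 1 ± P 2`. -/
theorem covol_ge_of_double (h : Conf b P) (g : Half b P) (h_A : 2 ≤ P 0 0 - P 1 0 + P 2 0)
    (h_B : 2 ≤ P 0 0 - P 1 0 - P 2 0) : 19 / 27 ≤ covol b := by
  suffices hd : 38 / 27 ≤ det3 (P 0) (P 1) (P 2) by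
    linarith [h.two_mul_covol g, le_abs_self (det3 (P 0) (P 1) (P 2))]
  obtain ⟨j, hj⟩ := h.signed_large g (Or.inl rfl) (Or.inl rfl)
  obtain ⟨k, hk⟩ := h.signed_large g (Or.inl rfl) (Or.inr rfl)
  have d0 := h.diag 0
  have d1 := h.diag 1
  have d2 := h.diag 2
  have D0 := h.diag_lt 0
  have D1 := h.diag_lt 1
  have D2 := h.diag_lt 2
  have r0 := h.row 0
  have r1 := h.row 1
  have r2 := h.row 2
  have l01 := h.low 0 1 (by decide)
  have l02 := h.low 0 2 (by decide)
  have l03 := h.low 0 3 (by decide)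
  have l10 := h.low 1 0 (by decide)
  have l12 := h.low 1 2 (by decide)
  have l13 := h.low 1 3 (by decide)
  have l20 := h.low 2 0 (by decide)
  have l21 := h.low 2 1 (by decide)
  have l23 := h.low 2 3 (by decide)
  have p01 := h.pair 0 1 (by decide)
  have p02 := h.pair 0 2 (by decide)
  have p03 := h.pair 0 3 (by decide)
  have p10 := h.pair 1 0 (by decide)
  have p12 := h.pair 1 2 (by decide)
  have p13 := h.pair 1 3 (by decide)
  have p20 := h.pair 2 0 (by decide)
  have p21 := h.pair 2 1 (by decide)
  have p23 := h.pair 2 3 (by decide)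
  revert hj hk
  simp only [one_mul, neg_one_mul, ← sub_eq_add_neg]
  intro hj hk
  have hj' : 2 ≤ P 0 1 + P 1 1 + P 2 1 ∨ 2 ≤ P 0 2 + P 1 2 + P 2 2 ∨ 2 ≤ -P 0 3 - P 1 3 - P 2 3 := by
    revert j
    simp only [← exists_imp, exists_fin_four]
    rintro (hj | hj | hj | hj) <;> rcases le_abs.1 hj with hj | hj <;>
      first
        | (exfalso; linarith)
        | (left; linarith)
        | (right; left; linarith)
        | (right; right; linarith)
  have hk' : 2 ≤ P 1 1 + P 0 1 - P 2 1 ∨ 2 ≤ P 2 2 - P 0 2 - P 1 2 := by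
    revert k
    simp only [← exists_imp, exists_fin_four]
    rintro (hk | hk | hk | hk) <;> rcases le_abs.1 hk with hk | hk <;>
      first
        | (exfalso; linarith)
        | (left; linarith)
        | (right; linarith)
  rcases hj' with hj' | hj' | hj' <;> rcases hk' with hk' | hk' <;>
    first
      | (exfalso; linarith)
      | exact h.det3_ge_of_double_one h_A h_B hj' hk'
      | exact h.det3_ge_of_double_two h_A h_B hj' hk'

theorem col_zero_inj (h : Conf b P) (g : Half b P) (hc : covol b < 19 / 27) (hs : s = 1 ∨ s = -1)
    (ht : t = 1 ∨ t = -1) (hs' : s' = 1 ∨ s' = -1) (ht' : t' = 1 ∨ t' = -1)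
    (h1 : 2 ≤ |P 0 0 + s * P 1 0 + t * P 2 0|) (h2 : 2 ≤ |P 0 0 + s' * P 1 0 + t' * P 2 0|) :
    s = s' ∧ t = t' := by
  have k1 : 2 ≤ P 0 0 - P 1 0 + P 2 0 → 2 ≤ P 0 0 - P 1 0 - P 2 0 → False := fun h_A h_B =>
    hc.not_ge (h.covol_ge_of_double g h_A h_B)
  have k2 : 2 ≤ P 0 0 - P 2 0 + P 1 0 → 2 ≤ P 0 0 - P 2 0 - P 1 0 → False := fun h_A h_B => by
    obtain ⟨e, e0, e1, e2, e3⟩ := exists_perm 0 2 1 3 (by decide) (by decide) (by decide) (by decide)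
      (by decide) (by decide)
    rw [← covol_perm b h.adm.sum0 e] at hc
    refine hc.not_ge ((h.perm e).covol_ge_of_double (g.perm e e3) ?_ ?_) <;>
      simpa only [Function.comp_apply, e0, e1, e2, e3]
  have d0 := h.diag 0
  have D0 := h.diag_lt 0
  have l10 := h.low 1 0 (by decide)
  have l20 := h.low 2 0 (by decide)
  have u10 := h.up 1 0 (by decide)
  have u20 := h.up 2 0 (by decide)
  have h1' : 2 ≤ P 0 0 + s * P 1 0 + t * P 2 0 := by
    rcases le_abs.1 h1 with h1 | h1
    · exact h1
    · rcases hs with rfl | rfl <;> rcases ht with rfl | rfl <;> linarith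
  have h2' : 2 ≤ P 0 0 + s' * P 1 0 + t' * P 2 0 := by
    rcases le_abs.1 h2 with h2 | h2
    · exact h2
    · rcases hs' with rfl | rfl <;> rcases ht' with rfl | rfl <;> linarith
  rcases hs with rfl | rfl <;> rcases ht with rfl | rfl <;> rcases hs' with rfl | rfl <;>
    rcases ht' with rfl | rfl <;>
    first
      | exact ⟨rfl, rfl⟩
      | (exfalso; linarith)
      | exact (k1 (by linarith) (by linarith)).elim
      | exact (k2 (by linarith) (by linarith)).elim

/-- Below the critical covolume, no column is large for two of the vectors `P 0 ± P 1 ± P 2`. -/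
theorem col_inj (h : Conf b P) (g : Half b P) (hc : covol b < 19 / 27) (hs : s = 1 ∨ s = -1)
    (ht : t = 1 ∨ t = -1) (hs' : s' = 1 ∨ s' = -1) (ht' : t' = 1 ∨ t' = -1) (j : Fin 4)
    (h1 : 2 ≤ |P 0 j + s * P 1 j + t * P 2 j|) (h2 : 2 ≤ |P 0 j + s' * P 1 j + t' * P 2 j|) :
    s = s' ∧ t = t' := by
  revert j
  rw [forall_fin_four]
  refine ⟨h.col_zero_inj g hc hs ht hs' ht', fun h1 h2 => ?_, fun h1 h2 => ?_, fun h1 h2 => ?_⟩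
  · obtain ⟨e, e0, e1, e2, e3⟩ := exists_perm 1 0 2 3 (by decide) (by decide) (by decide) (by decide)
      (by decide) (by decide)
    rw [← covol_perm b h.adm.sum0 e] at hc
    have flip : ∀ {s t : ℝ}, (s = 1 ∨ s = -1) → 2 ≤ |P 0 1 + s * P 1 1 + t * P 2 1| →
        2 ≤ |P 1 1 + s * P 0 1 + s * t * P 2 1| := by
      rintro s t (rfl | rfl) hh
      · convert hh using 2
        ring
      · rw [← abs_neg]
        convert hh using 2
        ring
    have hm : ∀ {s t : ℝ}, (s = 1 ∨ s = -1) → (t = 1 ∨ t = -1) → s * t = 1 ∨ s * t = -1 := by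
      rintro s t (rfl | rfl) (rfl | rfl) <;> norm_num
    obtain ⟨rfl, k⟩ := (h.perm e).col_zero_inj (g.perm e e3) hc hs (hm hs ht) hs' (hm hs' ht')
      (by simpa only [Function.comp_apply, e0, e1, e2] using flip hs h1)
      (by simpa only [Function.comp_apply, e0, e1, e2] using flip hs' h2)
    exact ⟨rfl, mul_left_cancel₀ (by rcases hs with rfl | rfl <;> norm_num) k⟩
  · obtain ⟨e, e0, e1, e2, e3⟩ := exists_perm 2 1 0 3 (by decide) (by decide) (by decide) (by decide)
      (by decide) (by decide)
    rw [← covol_perm b h.adm.sum0 e] at hc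
    have flip : ∀ {s t : ℝ}, (t = 1 ∨ t = -1) → 2 ≤ |P 0 2 + s * P 1 2 + t * P 2 2| →
        2 ≤ |P 2 2 + t * s * P 1 2 + t * P 0 2| := by
      rintro s t (rfl | rfl) hh
      · convert hh using 2
        ring
      · rw [← abs_neg]
        convert hh using 2
        ring
    have hm : ∀ {s t : ℝ}, (s = 1 ∨ s = -1) → (t = 1 ∨ t = -1) → t * s = 1 ∨ t * s = -1 := by
      rintro s t (rfl | rfl) (rfl | rfl) <;> norm_num
    obtain ⟨k, rfl⟩ := (h.perm e).col_zero_inj (g.perm e e3) hc (hm hs ht) ht (hm hs' ht') ht'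
      (by simpa only [Function.comp_apply, e0, e1, e2] using flip ht h1)
      (by simpa only [Function.comp_apply, e0, e1, e2] using flip ht' h2)
    exact ⟨mul_left_cancel₀ (by rcases ht with rfl | rfl <;> norm_num) k, rfl⟩
  · have l0 := h.low 0 3 (by decide)
    have l1 := h.low 1 3 (by decide)
    have l2 := h.low 2 3 (by decide)
    have u0 := h.up 0 3 (by decide)
    have u1 := h.up 1 3 (by decide)
    have u2 := h.up 2 3 (by decide)
    rcases hs with rfl | rfl <;> rcases ht with rfl | rfl <;> rcases hs' with rfl | rfl <;>
      rcases ht' with rfl | rfl <;>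
      first
        | exact ⟨rfl, rfl⟩
        | (exfalso
           rcases le_abs.1 h1 with h1 | h1 <;> rcases le_abs.1 h2 with h2 | h2 <;> linarith)

end Conf

/-! ### Comparing the tips with the half-sums -/

theorem exists_perm_of_injective_rel (S : Fin 4 → Fin 4 → Prop) (hS : ∀ σ, ∃ j, S σ j)
    (hinj : ∀ σ σ' j, S σ j → S σ' j → σ = σ') :
    ∃ f : Equiv.Perm (Fin 4), ∀ σ j, S σ j ↔ j = f σ := by
  choose f hf using hS
  have hi : Function.Injective f := fun σ σ' hh => hinj σ σ' (f σ) (hf σ) (hh ▸ hf σ')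
  refine ⟨Equiv.ofBijective f (Finite.injective_iff_bijective.1 hi), fun σ j => ?_⟩
  constructor
  · intro hs
    obtain ⟨σ', rfl⟩ := (Finite.injective_iff_surjective.1 hi) j
    rw [hinj σ σ' _ hs (hf σ')]
    rfl
  · rintro rfl
    exact hf σ

/-- The four sums `|x ± y ± z|` add up to `2 * (|x| + |y| + |z|)`, plus twice the amount by which
the largest of `|x|`, `|y|`, `|z|` exceeds the sum of the other two, if it does. -/
theorem sum_abs_signed_le {x y z t : ℝ} (h0 : 0 ≤ t) (hx : |x| - |y| - |z| ≤ t)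
    (hy : |y| - |x| - |z| ≤ t) (hz : |z| - |x| - |y| ≤ t) :
    |x + y + z| + |x + y - z| + |x - y + z| + |x - y - z| ≤ 2 * (|x| + |y| + |z|) + 2 * t := by
  rcases abs_cases x with ⟨ex, _⟩ | ⟨ex, _⟩ <;> rcases abs_cases y with ⟨ey, _⟩ | ⟨ey, _⟩ <;>
    rcases abs_cases z with ⟨ez, _⟩ | ⟨ez, _⟩ <;> rw [ex, ey, ez] at hx hy hz ⊢ <;>
    rcases abs_cases (x + y + z) with ⟨e1, _⟩ | ⟨e1, _⟩ <;>
    rcases abs_cases (x + y - z) with ⟨e2, _⟩ | ⟨e2, _⟩ <;>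
    rcases abs_cases (x - y + z) with ⟨e3, _⟩ | ⟨e3, _⟩ <;>
    rcases abs_cases (x - y - z) with ⟨e4, _⟩ | ⟨e4, _⟩ <;> linarith

/-- For given absolute values of the off-diagonal entries, the determinant is smallest when these
entries are nonpositive. -/
theorem det3_ge_abs {u v w : Fin 4 → ℝ} (h0 : 0 ≤ u 0) (h1 : 0 ≤ v 1) (h2 : 0 ≤ w 2) :
    u 0 * v 1 * w 2 - v 1 * |w 0| * |u 2| - w 2 * |u 1| * |v 0| - u 0 * |v 2| * |w 1| -
      |v 0| * |w 1| * |u 2| - |w 0| * |u 1| * |v 2| ≤ det3 u v w := by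
  have a1 := mul_le_mul_of_nonneg_left (le_abs_self (w 0 * u 2)) h1
  have a2 := mul_le_mul_of_nonneg_left (le_abs_self (u 1 * v 0)) h2
  have a3 := mul_le_mul_of_nonneg_left (le_abs_self (v 2 * w 1)) h0
  have a4 := neg_abs_le (v 0 * w 1 * u 2)
  have a5 := neg_abs_le (w 0 * u 1 * v 2)
  simp only [abs_mul] at a1 a2 a3 a4 a5
  rw [det3]
  linarith

/-- First coefficient of the four sign patterns `(1, 1)`, `(1, -1)`, `(-1, 1)`, `(-1, -1)`. -/
def signOne : Fin 4 → ℝ := ![1, 1, -1, -1]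

/-- Second coefficient of the four sign patterns `(1, 1)`, `(1, -1)`, `(-1, 1)`, `(-1, -1)`. -/
def signTwo : Fin 4 → ℝ := ![1, -1, 1, -1]

theorem signOne_eq (σ : Fin 4) : signOne σ = 1 ∨ signOne σ = -1 := by
  fin_cases σ <;> simp [signOne]

theorem signTwo_eq (σ : Fin 4) : signTwo σ = 1 ∨ signTwo σ = -1 := by
  fin_cases σ <;> simp [signTwo]

theorem sign_injective {σ τ : Fin 4} (h : signOne σ = signOne τ ∧ signTwo σ = signTwo τ) :
    σ = τ := by
  revert h
  fin_cases σ <;> fin_cases τ <;> norm_num [signOne, signTwo]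

namespace Conf

variable {b : Fin 3 → Fin 4 → ℝ} {P : Fin 4 → Fin 4 → ℝ}

/-- The halves of the four vectors `P 0 ± P 1 ± P 2` compete with the four tips, one for each
column; comparing the sums of their norms gives the first inequality. -/
theorem col_sums (h : Conf b P) (g : Half b P) (hc : covol b < 19 / 27) :
    2 ≤ max (P 0 0 - |P 1 0| - |P 2 0|) 0 + max (P 1 1 - |P 0 1| - |P 2 1|) 0 +
        max (P 2 2 - |P 0 2| - |P 1 2|) 0 ∧
      2 ≤ P 0 0 + (|P 1 0| + |P 2 0|) ∧ 2 ≤ P 1 1 + (|P 0 1| + |P 2 1|) ∧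
      2 ≤ P 2 2 + (|P 0 2| + |P 1 2|) := by
  obtain ⟨f, hf⟩ := exists_perm_of_injective_rel
    (fun σ j => 2 ≤ |P 0 j + signOne σ * P 1 j + signTwo σ * P 2 j|)
    (fun σ => h.signed_large g (signOne_eq σ) (signTwo_eq σ))
    (fun σ τ j h1 h2 => sign_injective (h.col_inj g hc (signOne_eq σ) (signTwo_eq σ)
      (signOne_eq τ) (signTwo_eq τ) j h1 h2))
  choose q hq hPq' using fun σ => h.signed_inMul g (signOne_eq σ) (signTwo_eq σ)
  have hPq : ∀ σ j, P 0 j + signOne σ * P 1 j + signTwo σ * P 2 j = 2 * q σ j := hPq'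
  have hle : ∀ σ, nrm (P (f σ)) ≤ nrm (q σ) := fun σ => by
    refine (h.tip (f σ)).rule _ (hq σ) ?_ fun j hj => ?_
    · have := (hf σ (f σ)).2 rfl
      rw [hPq, abs_mul, abs_two] at this
      linarith
    · by_contra hlt
      push Not at hlt
      refine hj ((hf σ j).1 ?_)
      rw [hPq, abs_mul, abs_two]
      linarith
  have hsum : ∑ l, nrm (P l) ≤ ∑ σ, nrm (q σ) := by
    rw [← Equiv.sum_comp f]
    exact Finset.sum_le_sum fun σ _ => hle σ
  have hcol : ∀ j, 2 ≤ |P 0 j| + |P 1 j| + |P 2 j| := fun j => by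
    have h1 := (hf (f.symm j) j).2 (f.apply_symm_apply j).symm
    have h2 := abs_add_three (P 0 j) (signOne (f.symm j) * P 1 j) (signTwo (f.symm j) * P 2 j)
    have e1 : |signOne (f.symm j) * P 1 j| = |P 1 j| := by
      rcases signOne_eq (f.symm j) with e | e <;> rw [e] <;> simp
    have e2 : |signTwo (f.symm j) * P 2 j| = |P 2 j| := by
      rcases signTwo_eq (f.symm j) with e | e <;> rw [e] <;> simp
    rw [e1, e2] at h2
    linarith
  have hq' : ∀ σ j, |q σ j| = |P 0 j + signOne σ * P 1 j + signTwo σ * P 2 j| / 2 := fun σ j => by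
    rw [hPq, abs_mul, abs_two]
    ring
  simp only [Fin.sum_univ_four, nrm_eq, hq'] at hsum
  simp only [signOne, signTwo, Matrix.cons_val, one_mul, neg_one_mul, ← sub_eq_add_neg] at hsum
  have d0 : |P 0 0| = P 0 0 := abs_of_nonneg (by linarith [h.diag 0])
  have d1 : |P 1 1| = P 1 1 := abs_of_nonneg (by linarith [h.diag 1])
  have d2 : |P 2 2| = P 2 2 := abs_of_nonneg (by linarith [h.diag 2])
  have hoff : ∀ i j, i ≠ j → |P i j| < 1 := fun i j hij => (h.tip i).off j hij.symm
  have n3 := le_nrm (h.row 3) 3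
  rw [nrm_eq] at n3
  have c0 := sum_abs_signed_le (x := P 0 0) (y := P 1 0) (z := P 2 0)
    (t := max (P 0 0 - |P 1 0| - |P 2 0|) 0) (le_max_right _ _)
    (by rw [d0]; exact le_max_left _ _)
    (le_trans (by linarith [h.diag 0, hoff 1 0 (by decide), abs_nonneg (P 2 0)]) (le_max_right _ _))
    (le_trans (by linarith [h.diag 0, hoff 2 0 (by decide), abs_nonneg (P 1 0)]) (le_max_right _ _))
  have c1 := sum_abs_signed_le (x := P 0 1) (y := P 1 1) (z := P 2 1)
    (t := max (P 1 1 - |P 0 1| - |P 2 1|) 0) (le_max_right _ _)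
    (le_trans (by linarith [h.diag 1, hoff 0 1 (by decide), abs_nonneg (P 2 1)]) (le_max_right _ _))
    (by rw [d1]; exact le_max_left _ _)
    (le_trans (by linarith [h.diag 1, hoff 2 1 (by decide), abs_nonneg (P 0 1)]) (le_max_right _ _))
  have c2 := sum_abs_signed_le (x := P 0 2) (y := P 1 2) (z := P 2 2)
    (t := max (P 2 2 - |P 0 2| - |P 1 2|) 0) (le_max_right _ _)
    (le_trans (by linarith [h.diag 2, hoff 0 2 (by decide), abs_nonneg (P 1 2)]) (le_max_right _ _))
    (le_trans (by linarith [h.diag 2, hoff 1 2 (by decide), abs_nonneg (P 0 2)]) (le_max_right _ _))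
    (by rw [d2]; exact le_max_left _ _)
  have c3 := sum_abs_signed_le (x := P 0 3) (y := P 1 3) (z := P 2 3) le_rfl
    (by linarith [hcol 3, hoff 0 3 (by decide)])
    (by linarith [hcol 3, hoff 1 3 (by decide)])
    (by linarith [hcol 3, hoff 2 3 (by decide)])
  refine ⟨?_, by linarith [hcol 0], by linarith [hcol 1], by linarith [hcol 2]⟩
  linarith [h.diag 3]

theorem covol_ge_of_half (h : Conf b P) (g : Half b P) : 19 / 27 ≤ covol b := by
  by_contra hc
  push Not at hc
  obtain ⟨hE, h0, h1, h2⟩ := h.col_sums g hc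
  have D0 := h.diag_lt 0
  have D1 := h.diag_lt 1
  have D2 := h.diag_lt 2
  have d0 := h.diag 0
  have d1 := h.diag 1
  have d2 := h.diag 2
  have m0 : max (P 0 0 - |P 1 0| - |P 2 0|) 0 ≤ 3 / 4 := max_le (by linarith) (by norm_num)
  have m1 : max (P 1 1 - |P 0 1| - |P 2 1|) 0 ≤ 3 / 4 := max_le (by linarith) (by norm_num)
  have m2 : max (P 2 2 - |P 0 2| - |P 1 2|) 0 ≤ 3 / 4 := max_le (by linarith) (by norm_num)
  have e : ∀ x : ℝ, 1 / 2 ≤ max x 0 → max x 0 = x := fun x hx => by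
    rcases max_choice x 0 with e | e
    · exact e
    · rw [e] at hx
      norm_num at hx
  have k0 := e _ (by linarith : 1 / 2 ≤ max (P 0 0 - |P 1 0| - |P 2 0|) 0)
  have k1 := e _ (by linarith : 1 / 2 ≤ max (P 1 1 - |P 0 1| - |P 2 1|) 0)
  have k2 := e _ (by linarith : 1 / 2 ≤ max (P 2 2 - |P 0 2| - |P 1 2|) 0)
  rw [k0] at m0 hE
  rw [k1] at m1 hE
  rw [k2] at m2 hE
  have hoff : ∀ i j, i ≠ j → |(|P i j|)| ≤ 2 := fun i j hij => by
    rw [abs_abs]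
    linarith [(h.tip i).off j hij.symm]
  have hD : ∀ i, |P i i| ≤ 2 := fun i => by
    rw [abs_le]
    constructor <;> linarith [h.diag i, h.diag_lt i]
  have key := det_ge_of_col_sums (d1 := P 0 0) (d2 := P 1 1) (d3 := P 2 2) (a12 := |P 0 1|)
    (a13 := |P 0 2|) (a21 := |P 1 0|) (a23 := |P 1 2|) (a31 := |P 2 0|) (a32 := |P 2 1|) (by
      simp only [List.forall_mem_cons]
      exact ⟨hD 0, hD 1, hD 2, hoff 0 1 (by decide), hoff 0 2 (by decide), hoff 1 0 (by decide),
        hoff 1 2 (by decide), hoff 2 0 (by decide), hoff 2 1 (by decide), by simp⟩)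
    (by linarith) (abs_nonneg _) (abs_nonneg _) (by linarith) (by linarith) (by linarith)
    (abs_nonneg _) (abs_nonneg _) (by linarith) (by linarith) (by linarith)
    (abs_nonneg _) (abs_nonneg _) (by linarith)
  have hd := det3_ge_abs (u := P 0) (v := P 1) (w := P 2) (by linarith) (by linarith) (by linarith)
  linarith [h.two_mul_covol g, le_abs_self (det3 (P 0) (P 1) (P 2))]

theorem covol_ge_of_inMul_triple (h : Conf b P)
    (g : InMul b 2 (fun j => P 0 j + P 1 j + P 2 j)) : 19 / 27 ≤ covol b := by
  by_cases hS : ∀ j, P 0 j + P 1 j + P 2 j = 0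
  · exact h.covol_ge_tri hS
  · exact h.covol_ge_of_half ⟨g, hS⟩

theorem covol_ge_of_inMul_triple_of (h : Conf b P) (i j k l : Fin 4) (hij : i ≠ j) (hik : i ≠ k)
    (hil : i ≠ l) (hjk : j ≠ k) (hjl : j ≠ l) (hkl : k ≠ l)
    (g : InMul b 2 (fun m => P i m + P j m + P k m)) : 19 / 27 ≤ covol b := by
  obtain ⟨e, e0, e1, e2, e3⟩ := exists_perm i j k l hij hik hil hjk hjl hkl
  rw [← covol_perm b h.adm.sum0 e]
  apply (h.perm e).covol_ge_of_inMul_triple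
  have := g.perm e
  simpa only [Function.comp_def, e0, e1, e2, e3] using this

theorem covol_ge (h : Conf b P) : 19 / 27 ≤ covol b := by
  obtain ⟨c, ⟨i, hi⟩, g⟩ := exists_relation_four h.mem
  simp only [Fin.sum_univ_four] at g
  rcases h0 : c 0 with _ | _ <;> rcases h1 : c 1 with _ | _ <;> rcases h2 : c 2 with _ | _ <;>
    rcases h3 : c 3 with _ | _ <;>
    simp only [h0, h1, h2, h3, if_true, if_false, Bool.false_eq_true, add_zero, zero_add] at g
  · fin_cases i <;> simp_all
  · exact (h.not_inMul_single le_rfl 3 g).elim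
  · exact (h.not_inMul_single le_rfl 2 g).elim
  · exact (h.not_inMul_add le_rfl 2 3 (by decide) g).elim
  · exact (h.not_inMul_single le_rfl 1 g).elim
  · exact (h.not_inMul_add le_rfl 1 3 (by decide) g).elim
  · exact (h.not_inMul_add le_rfl 1 2 (by decide) g).elim
  · exact h.covol_ge_of_inMul_triple_of 1 2 3 0 (by decide) (by decide) (by decide) (by decide)
      (by decide) (by decide) g
  · exact (h.not_inMul_single le_rfl 0 g).elim
  · exact (h.not_inMul_add le_rfl 0 3 (by decide) g).elim
  · exact (h.not_inMul_add le_rfl 0 2 (by decide) g).elim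
  · exact h.covol_ge_of_inMul_triple_of 0 2 3 1 (by decide) (by decide) (by decide) (by decide)
      (by decide) (by decide) g
  · exact (h.not_inMul_add le_rfl 0 1 (by decide) g).elim
  · exact h.covol_ge_of_inMul_triple_of 0 1 3 2 (by decide) (by decide) (by decide) (by decide)
      (by decide) (by decide) g
  · exact h.covol_ge_of_inMul_triple g
  · exact h.covol_ge_of_inMul_sum g

end Conf

/-- Minkowski: the lattice packing density of the regular octahedron is `18/19`,
attained by the packing lattice `2·B·ℤ³`. -/
theorem stmt_14 :
    packDensity octa = 18 / 19 ∧
    IsUnit octaB.det ∧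
    IsPackingLattice octa (latticeOf octaB) ∧
    (volume octa).toReal / |octaB.det| = 18 / 19 :=
  main_of_core fun _ _ h => h.covol_ge
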